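/- Let d ≥ 1, let a_0, …, a_{d−1} be rationals with a_0 ≠ 0, and set P(X) = X^d − a_{d−1}X^{d−1} − ⋯ − a_1X − a_0. Suppose f : ℤ → ℤ satisfies f(n+d) = a_{d−1}·f(n+d−1) + ⋯ + a_0·f(n) for all n ∈ ℤ and f satisfies no linear recurrence of order smaller than d with constant complex coefficients. Assume that for any two distinct complex roots α, β of P the quotient α/β is not a root of unity, and that no complex root of P is a root of unity. If the set of triples (m,n,k) of pairwise distinct positive integers with f(n) ≠ 0 and f(m) + f(k) = 2·f(n) is infinite, then there exist integers a > b > 0 such that (X^{gcd(a,b)} − 1)·P(X) divides X^a − 2X^b + 1 in ℚ[X]. -/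

import Mathlib

/-!
# Three-term progressions in integer linear recurrences

**From the subspace theorem to the criterion.**  Let `K` be a splitting field of `P`.  Over `K` the
sequence is `f(n) = ∑ α, α ^ n p_α(n)` with nonzero polynomials `p_α` (`spectral`), and since `f` is
integer valued on all of `ℤ`, every root `α` is an algebraic unit (`root_integral`).  Given
infinitely many progressions, with indices `n_h` (`h = 0, 1, 2`), pass to a subsequence along which
`n_h / q → τ_h`, where `q` is the largest index (`exists_ratio_subseq`).  The component
`α ^ n_h p_α(n_h)` then has size `exp (q (τ_h log ‖φ α‖ + o(1)))` at each embedding `φ`, and these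
exponents add up to zero over `φ`.  The subspace theorem, applied at every embedding to the integral
vectors formed by windows of `f`, shows that the relation `f(m) + f(k) - 2 f(n) = 0` splits into
separate relations, one for each growth vector `(τ_h log ‖φ α‖)_φ` (`split_relation`,
`component_relations`).  By Kronecker's theorem and non-degeneracy, the growth vector of a pair
`(α, φ)` with `‖φ α‖` maximal is attained only by the `h` with `τ_h = 1`.  A relation with one or two
such terms is impossible (`one_term`, `two_term`), so all `τ_h` are `1`, every component satisfies
the progression relation by itself, and the differences of the indices stay bounded
(`three_term_bounded`).  Hence one pair of differences `x, y` occurs infinitely often, which forces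
the identity `f(t + x) + f(t + y) = 2 f(t)` for all `t` (`exists_shift_identity`).  Since there are
roots inside and outside the unit circle, `x` and `y` have opposite signs; the identity then says
that `P` divides `X ^ A - 2 X ^ B + 1` for some `A > B > 0`.  The factor `X ^ gcd(A, B) - 1` divides
this polynomial as well and is coprime to `P`, because no root of `P` is a root of unity.

**The subspace theorem.**  The version needed (`subspace_real`, `subspace_complex`,
`subspace_field`) concerns one archimedean absolute value and is proved following Schmidt.  The
auxiliary polynomial comes from Siegel's lemma and a Chernoff bound for the number of unfavourable
monomials (`aux_poly`); it vanishes to high order along the hyperplanes spanned by the first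
`N - 1` reduced basis vectors (`vanish`), which contradicts Roth's lemma (`roth`, proved with
generalised Wronskians) after restriction to lines (`reduce`).  This gives the theorem of the
penultimate minimum (`pt`).  Hermite reduction (`hermite_lattice`), Davenport's lemma
(`davenport`), and compound matrices (`compound`) transfer it to an arbitrary gap between consecutive
minima (`subspace_core`), and a small integral solution produces such a gap.
-/

set_option linter.unusedSectionVars false
set_option linter.unusedVariables false
set_option linter.unusedSimpArgs false

namespace APC

open MvPolynomial

/-! ### The `ℓ¹` norm of a polynomial -/

section L1
variable {σ τ R S : Type*} [CommRing R] [CommRing S]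

/-- The sum of the sizes, measured by the ring seminorm `ν`, of the coefficients of `p`. -/
noncomputable def l1 (ν : RingSeminorm R) (p : MvPolynomial σ R) : ℝ :=
  ∑ s ∈ p.support, ν (coeff s p)

variable (ν : RingSeminorm R)

lemma l1_eq {p : MvPolynomial σ R} {F : Finset (σ →₀ ℕ)} (h : p.support ⊆ F) :
    l1 ν p = ∑ s ∈ F, ν (coeff s p) := by
  refine Finset.sum_subset h fun s _ hs => ?_
  rw [notMem_support_iff.1 hs, map_zero]

lemma l1_nonneg (p : MvPolynomial σ R) : 0 ≤ l1 ν p :=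
  Finset.sum_nonneg fun _ _ => apply_nonneg _ _

lemma l1_zero : l1 ν (0 : MvPolynomial σ R) = 0 := by simp [l1]

lemma l1_add (p q : MvPolynomial σ R) : l1 ν (p + q) ≤ l1 ν p + l1 ν q := by
  classical
  rw [l1_eq ν (F := p.support ∪ q.support) support_add,
    l1_eq ν (p := p) (F := p.support ∪ q.support) Finset.subset_union_left,
    l1_eq ν (p := q) (F := p.support ∪ q.support) Finset.subset_union_right,
    ← Finset.sum_add_distrib]
  refine Finset.sum_le_sum fun s _ => ?_
  rw [coeff_add]
  exact map_add_le_add _ _ _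

lemma l1_sum {ι : Type*} (F : Finset ι) (p : ι → MvPolynomial σ R) :
    l1 ν (∑ i ∈ F, p i) ≤ ∑ i ∈ F, l1 ν (p i) := by
  classical
  induction F using Finset.induction_on with
  | empty => simp [l1_zero]
  | insert a F ha ih =>
    rw [Finset.sum_insert ha, Finset.sum_insert ha]
    exact (l1_add ν _ _).trans (by linarith)

lemma l1_monomial (s : σ →₀ ℕ) (a : R) : l1 ν (monomial s a) = ν a := by
  classical
  rw [l1_eq ν (F := {s}) support_monomial_subset]
  simp

lemma l1_C (a : R) : l1 ν (C a : MvPolynomial σ R) = ν a := l1_monomial ν 0 a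

lemma coeff_le_l1 (p : MvPolynomial σ R) (s : σ →₀ ℕ) : ν (coeff s p) ≤ l1 ν p := by
  by_cases h : s ∈ p.support
  · exact Finset.single_le_sum (f := fun s => ν (coeff s p))
      (fun _ _ => apply_nonneg _ _) h
  · rw [notMem_support_iff.1 h, map_zero]; exact l1_nonneg ν p

lemma l1_mul (p q : MvPolynomial σ R) : l1 ν (p * q) ≤ l1 ν p * l1 ν q := by
  conv_lhs => rw [as_sum p, as_sum q]
  rw [Finset.sum_mul_sum]
  refine (l1_sum ν _ _).trans ?_
  unfold l1
  rw [Finset.sum_mul_sum]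
  refine Finset.sum_le_sum fun s _ => (l1_sum ν _ _).trans ?_
  refine Finset.sum_le_sum fun t _ => ?_
  rw [monomial_mul, l1_monomial]
  exact map_mul_le_mul _ _ _

lemma l1_pow (h1 : ν 1 ≤ 1) (p : MvPolynomial σ R) (n : ℕ) : l1 ν (p ^ n) ≤ l1 ν p ^ n := by
  induction n with
  | zero => rw [pow_zero, pow_zero, ← C_1, l1_C]; exact h1
  | succ n ih =>
    rw [pow_succ, pow_succ]
    exact (l1_mul ν _ _).trans (mul_le_mul_of_nonneg_right ih (l1_nonneg ν _))

lemma l1_prod (h1 : ν 1 ≤ 1) {ι : Type*} (F : Finset ι) (p : ι → MvPolynomial σ R) :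
    l1 ν (∏ i ∈ F, p i) ≤ ∏ i ∈ F, l1 ν (p i) := by
  classical
  induction F using Finset.induction_on with
  | empty => rw [Finset.prod_empty, Finset.prod_empty, ← C_1, l1_C]; exact h1
  | insert a F ha ih =>
    rw [Finset.prod_insert ha, Finset.prod_insert ha]
    exact (l1_mul ν _ _).trans (mul_le_mul_of_nonneg_left ih (l1_nonneg ν _))

lemma l1_neg (p : MvPolynomial σ R) : l1 ν (-p) = l1 ν p := by
  unfold l1
  rw [support_neg]
  refine Finset.sum_congr rfl fun s _ => ?_
  rw [coeff_neg]; exact map_neg_eq_map _ _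

lemma l1_det {n : ℕ} (h1 : ν 1 ≤ 1) (A : Matrix (Fin n) (Fin n) (MvPolynomial σ R)) {B : ℝ}
    (hA : ∀ i j, l1 ν (A i j) ≤ B) : l1 ν A.det ≤ n.factorial * B ^ n := by
  rw [Matrix.det_apply]
  refine (l1_sum ν _ _).trans ?_
  have : ∀ g ∈ (Finset.univ : Finset (Equiv.Perm (Fin n))),
      l1 ν (Equiv.Perm.sign g • ∏ i, A (g i) i) ≤ B ^ n := by
    intro g _
    have h2 : l1 ν (∏ i, A (g i) i) ≤ B ^ n := by
      refine (l1_prod ν h1 _ _).trans ?_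
      calc ∏ i, l1 ν (A (g i) i) ≤ ∏ _i : Fin n, B :=
            Finset.prod_le_prod (fun i _ => l1_nonneg ν _) fun i _ => hA _ _
        _ = B ^ n := by simp
    rcases Int.units_eq_one_or (Equiv.Perm.sign g) with h | h
    · rw [h, one_smul]; exact h2
    · rw [h, Units.neg_smul, one_smul, l1_neg]; exact h2
  refine (Finset.sum_le_sum this).trans ?_
  simp [Finset.card_univ, Fintype.card_perm]

end L1

/-! ### Lower bounds for weights of monomials -/

section Low
variable {σ R : Type*} [Fintype σ] [CommRing R]

/-- Every monomial of `p` has `w`-weight at least `c`. -/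
def Low (w : σ → ℝ) (c : ℝ) (p : MvPolynomial σ R) : Prop :=
  ∀ s, coeff s p ≠ 0 → c ≤ ∑ h, (s h : ℝ) * w h

variable {w : σ → ℝ}

lemma Low.mono {c c' : ℝ} {p : MvPolynomial σ R} (h : Low w c p) (hc : c' ≤ c) : Low w c' p :=
  fun s hs => hc.trans (h s hs)

lemma Low.zero (c : ℝ) : Low w c (0 : MvPolynomial σ R) := fun s hs => by simp at hs

lemma Low.of_nonneg (hw : ∀ h, 0 ≤ w h) (p : MvPolynomial σ R) : Low w 0 p :=
  fun s _ => Finset.sum_nonneg fun h _ => mul_nonneg (Nat.cast_nonneg _) (hw h)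

lemma Low.add {c : ℝ} {p q : MvPolynomial σ R} (hp : Low w c p) (hq : Low w c q) :
    Low w c (p + q) := by
  intro s hs
  rw [coeff_add] at hs
  by_cases h : coeff s p = 0
  · exact hq s (by simpa [h] using hs)
  · exact hp s h

lemma Low.neg {c : ℝ} {p : MvPolynomial σ R} (hp : Low w c p) : Low w c (-p) := by
  intro s hs
  rw [coeff_neg] at hs
  exact hp s (by simpa using hs)

lemma Low.sum {ι : Type*} {c : ℝ} (F : Finset ι) {p : ι → MvPolynomial σ R}
    (hp : ∀ i ∈ F, Low w c (p i)) : Low w c (∑ i ∈ F, p i) := by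
  classical
  induction F using Finset.induction_on with
  | empty => simpa using Low.zero c
  | insert a F ha ih =>
    rw [Finset.sum_insert ha]
    exact (hp a (by simp)).add (ih fun i hi => hp i (by simp [hi]))

lemma Low.mul {c c' : ℝ} {p q : MvPolynomial σ R} (hp : Low w c p) (hq : Low w c' q) :
    Low w (c + c') (p * q) := by
  classical
  intro s hs
  rw [coeff_mul] at hs
  obtain ⟨x, hx, hne⟩ := Finset.exists_ne_zero_of_sum_ne_zero hs
  rw [Finset.HasAntidiagonal.mem_antidiagonal] at hx
  have h1 := hp x.1 (left_ne_zero_of_mul hne)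
  have h2 := hq x.2 (right_ne_zero_of_mul hne)
  rw [← hx]
  simp only [Finsupp.add_apply, Nat.cast_add, add_mul, Finset.sum_add_distrib]
  linarith

lemma Low.one : Low w 0 (1 : MvPolynomial σ R) := by
  classical
  intro s hs
  rw [coeff_one] at hs
  have : (0 : σ →₀ ℕ) = s := by by_contra h; simp [h] at hs
  simp [← this]

lemma Low.prod {ι : Type*} {c : ι → ℝ} (F : Finset ι) {p : ι → MvPolynomial σ R}
    (hp : ∀ i ∈ F, Low w (c i) (p i)) : Low w (∑ i ∈ F, c i) (∏ i ∈ F, p i) := by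
  classical
  induction F using Finset.induction_on with
  | empty => simpa using Low.one
  | insert a F ha ih =>
    rw [Finset.sum_insert ha, Finset.prod_insert ha]
    exact (hp a (by simp)).mul (ih fun i hi => hp i (by simp [hi]))

/-- Column-wise lower bounds for the weights add up in the determinant. -/
lemma Low.det {n : ℕ} {c : Fin n → ℝ} (A : Matrix (Fin n) (Fin n) (MvPolynomial σ R))
    (hA : ∀ i j, Low w (c j) (A i j)) : Low w (∑ j, c j) A.det := by
  rw [Matrix.det_apply]
  refine Low.sum _ fun g _ => ?_
  have h2 : Low w (∑ j, c j) (∏ i, A (g i) i) := Low.prod _ fun i _ => hA _ _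
  rcases Int.units_eq_one_or (Equiv.Perm.sign g) with h | h
  · rw [h, one_smul]; exact h2
  · rw [h, Units.neg_smul, one_smul]; exact h2.neg

end Low

/-! ### Divided (Hasse) derivatives -/

section Hasse
variable {σ R : Type*} [Fintype σ] [CommRing R]

/-- `p(x) ↦ p(z + x)`, a polynomial in `z` whose coefficients are polynomials in `x`. -/
noncomputable def tay : MvPolynomial σ R →ₐ[R] MvPolynomial σ (MvPolynomial σ R) :=
  aeval fun i => X i + C (X i)

/-- The divided derivative `Δ_μ p`: the coefficient of `z^μ` in `p(z + x)`. -/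
noncomputable def hasse (μ : σ →₀ ℕ) (p : MvPolynomial σ R) : MvPolynomial σ R :=
  coeff μ (tay p)

/-- The product of binomial coefficients `∏ h, (s h).choose (μ h)`. -/
def mchoose (s μ : σ →₀ ℕ) : ℕ := ∏ h, (s h).choose (μ h)

/-- Translation of the variables, `p(x) ↦ p(x + ξ)`. -/
noncomputable def shift (ξ : σ → R) : MvPolynomial σ R →ₐ[R] MvPolynomial σ R :=
  aeval fun i => X i + C (ξ i)

lemma hasse_add (μ : σ →₀ ℕ) (p q : MvPolynomial σ R) :
    hasse μ (p + q) = hasse μ p + hasse μ q := by simp [hasse]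

lemma hasse_sum {ι : Type*} (μ : σ →₀ ℕ) (F : Finset ι) (p : ι → MvPolynomial σ R) :
    hasse μ (∑ i ∈ F, p i) = ∑ i ∈ F, hasse μ (p i) := by simp [hasse, coeff_sum]

lemma hasse_C_mul (μ : σ →₀ ℕ) (a : R) (p : MvPolynomial σ R) :
    hasse μ (C a * p) = C a * hasse μ p := by
  rw [hasse, hasse, map_mul]
  have : tay (C a : MvPolynomial σ R) = C (C a) := by
    simp [tay, algebraMap_eq, MvPolynomial.algebraMap_apply]
  rw [this, coeff_C_mul]

lemma hasse_shift (ξ : σ → R) (μ : σ →₀ ℕ) (p : MvPolynomial σ R) :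
    hasse μ (shift ξ p) = shift ξ (hasse μ p) := by
  have key : (tay (R := R)).comp (shift ξ) =
      (mapAlgHom (σ := σ) (shift ξ)).comp tay := by
    apply algHom_ext
    intro i
    simp [tay, shift, algebraMap_eq, MvPolynomial.algebraMap_apply, add_assoc, add_comm]
    ring
  have := congrArg (coeff μ) (DFunLike.congr_fun key p)
  simpa [hasse, coeff_map] using this

lemma mchoose_eq (s μ : σ →₀ ℕ) (j : σ) [DecidableEq σ] :
    mchoose s μ = (s j).choose (μ j) * ∏ h ∈ Finset.univ.erase j, (s h).choose (μ h) :=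
  (Finset.mul_prod_erase _ _ (Finset.mem_univ j)).symm

lemma mchoose_congr {s μ s' μ' : σ →₀ ℕ} {j : σ} [DecidableEq σ]
    (h : ∀ h, h ≠ j → s h = s' h ∧ μ h = μ' h) :
    ∏ h ∈ Finset.univ.erase j, (s h).choose (μ h) =
      ∏ h ∈ Finset.univ.erase j, (s' h).choose (μ' h) := by
  refine Finset.prod_congr rfl fun i hi => ?_
  obtain ⟨h1, h2⟩ := h i (Finset.ne_of_mem_erase hi)
  rw [h1, h2]

lemma coeff_hasse (μ t : σ →₀ ℕ) (p : MvPolynomial σ R) :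
    coeff t (hasse μ p) = mchoose (t + μ) μ * coeff (t + μ) p := by
  classical
  induction p using MvPolynomial.induction_on generalizing μ t with
  | C a =>
    have : tay (C a : MvPolynomial σ R) = C (C a) := by
      simp [tay, algebraMap_eq, MvPolynomial.algebraMap_apply]
    rw [hasse, this, coeff_C]
    split_ifs with h
    · subst h; simp [mchoose]
    · rw [coeff_zero, coeff_C, if_neg, mul_zero]
      intro h0
      exact h (by ext i; have := DFunLike.congr_fun h0 i; simp at this ⊢; omega)
  | add p q hp hq => rw [hasse_add, coeff_add, hp, hq, coeff_add, mul_add]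
  | mul_X p j ih =>
    have h1 : hasse μ (p * X j) =
        (if j ∈ μ.support then hasse (μ - Finsupp.single j 1) p else 0) + hasse μ p * X j := by
      have : tay (p * X j) = tay p * X j + tay p * C (X j) := by
        rw [map_mul, ← mul_add]; simp [tay]
      rw [hasse, this, coeff_add, coeff_mul_X', mul_comm (tay p) (C _),
        coeff_C_mul, mul_comm (X j)]; rfl
    rw [h1, coeff_add, coeff_mul_X', coeff_mul_X', apply_ite (coeff t), coeff_zero, ih]
    by_cases hμ : μ j = 0
    · by_cases ht : t j = 0
      · simp [hμ, ht]
      · have e : t - Finsupp.single j 1 + μ = t + μ - Finsupp.single j 1 := by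
          ext i; by_cases hi : j = i
          · subst hi; simp; omega
          · simp [hi]
        simp only [Finsupp.mem_support_iff, hμ, ht, ne_eq, not_true_eq_false, if_false, not_false_eq_true, if_true,
          zero_add, Finsupp.add_apply, add_zero, ih, e]
        congr 2
        rw [mchoose_eq _ _ j, mchoose_eq _ _ j, hμ, Nat.choose_zero_right, Nat.choose_zero_right]
        rw [mchoose_congr]
        intro h hh
        simp [Ne.symm hh]
    · have e1 : t + (μ - Finsupp.single j 1) = t + μ - Finsupp.single j 1 := by
        ext i; by_cases hi : j = i
        · subst hi; simp; omega
        · simp [hi]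
      have hp : ∏ h ∈ Finset.univ.erase j, ((t + μ - Finsupp.single j 1 : σ →₀ ℕ) h).choose
            ((μ - Finsupp.single j 1 : σ →₀ ℕ) h) =
          ∏ h ∈ Finset.univ.erase j, ((t + μ : σ →₀ ℕ) h).choose (μ h) :=
        mchoose_congr fun h hh => by simp [Ne.symm hh]
      have hp' : ∏ h ∈ Finset.univ.erase j, ((t + μ - Finsupp.single j 1 : σ →₀ ℕ) h).choose
            (μ h) =
          ∏ h ∈ Finset.univ.erase j, ((t + μ : σ →₀ ℕ) h).choose (μ h) :=
        mchoose_congr fun h hh => by simp [Ne.symm hh]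
      have hs : t j + μ j ≠ 0 := by omega
      by_cases ht : t j = 0
      · simp only [Finsupp.mem_support_iff, hμ, ht, ne_eq, not_true_eq_false, if_false, not_false_eq_true, if_true,
          add_zero, Finsupp.add_apply, zero_add, e1]
        congr 2
        rw [mchoose_eq _ _ j, mchoose_eq _ _ j, hp]
        simp [ht]
      · have e : t - Finsupp.single j 1 + μ = t + μ - Finsupp.single j 1 := by
          ext i; by_cases hi : j = i
          · subst hi; simp; omega
          · simp [hi]
        simp only [Finsupp.mem_support_iff, hμ, ht, hs, ne_eq, if_false, not_false_eq_true, if_true,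
          Finsupp.add_apply, ih, e, e1]
        rw [← add_mul, ← Nat.cast_add]
        congr 2
        rw [mchoose_eq _ _ j, mchoose_eq _ _ j, mchoose_eq _ _ j, hp, hp', ← add_mul]
        congr 1
        simp only [Finsupp.add_apply, Finsupp.tsub_apply, Finsupp.single_eq_same]
        obtain ⟨k, hk⟩ : ∃ k, μ j = k + 1 := ⟨μ j - 1, by omega⟩
        have : t j + (k + 1) - 1 = t j + k := by omega
        rw [hk, this, Nat.add_sub_cancel, ← add_assoc, Nat.choose_succ_succ]

lemma Low.hasse {w : σ → ℝ} {c : ℝ} {p : MvPolynomial σ R} (hp : Low w c p) (μ : σ →₀ ℕ) :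
    Low w (c - ∑ h, (μ h : ℝ) * w h) (hasse μ p) := by
  intro t ht
  rw [coeff_hasse] at ht
  have := hp _ (right_ne_zero_of_mul ht)
  simp only [Finsupp.add_apply, Nat.cast_add, add_mul, Finset.sum_add_distrib] at this
  linarith

lemma degreeOf_hasse_le (μ : σ →₀ ℕ) (p : MvPolynomial σ R) (h : σ) :
    degreeOf h (hasse μ p) ≤ degreeOf h p := by
  rw [degreeOf_le_iff]
  intro t ht
  rw [mem_support_iff, coeff_hasse] at ht
  have h1 := right_ne_zero_of_mul ht
  have := (degreeOf_le_iff.1 (le_refl (degreeOf h p))) _ (mem_support_iff.2 h1)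
  simp at this
  omega

lemma mchoose_le {s μ : σ →₀ ℕ} {r : σ → ℕ} (h : ∀ i, s i ≤ r i) :
    mchoose s μ ≤ 2 ^ ∑ i, r i := by
  rw [mchoose, ← Finset.prod_pow_eq_pow_sum]
  refine Finset.prod_le_prod' fun i _ => (Nat.choose_le_two_pow _ _).trans ?_
  exact Nat.pow_le_pow_right (by norm_num) (h i)

lemma l1_hasse_le (ν : RingSeminorm R) (h1 : ν 1 ≤ 1) (μ : σ →₀ ℕ) {p : MvPolynomial σ R}
    {r : σ → ℕ} (hr : ∀ h, degreeOf h p ≤ r h) :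
    l1 ν (hasse μ p) ≤ 2 ^ (∑ i, r i) * l1 ν p := by
  classical
  have hn : ∀ n : ℕ, ν (n : R) ≤ n := by
    intro n
    induction n with
    | zero => simp
    | succ n ih => push_cast; exact (map_add_le_add ν _ _).trans (by linarith)
  calc l1 ν (hasse μ p) ≤ ∑ t ∈ (hasse μ p).support, 2 ^ (∑ i, r i) * ν (coeff (t + μ) p) := by
        refine Finset.sum_le_sum fun t ht => ?_
        rw [mem_support_iff, coeff_hasse] at ht
        rw [coeff_hasse]
        refine (map_mul_le_mul ν _ _).trans ?_
        refine mul_le_mul_of_nonneg_right ((hn _).trans ?_) (apply_nonneg _ _)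
        have : mchoose (t + μ) μ ≤ 2 ^ ∑ i, r i := mchoose_le fun i =>
          (degreeOf_le_iff.1 (hr i)) _ (mem_support_iff.2 (right_ne_zero_of_mul ht))
        exact_mod_cast this
    _ = 2 ^ (∑ i, r i) * ∑ t ∈ (hasse μ p).support, ν (coeff (t + μ) p) := by
        rw [Finset.mul_sum]
    _ ≤ _ := by
        refine mul_le_mul_of_nonneg_left ?_ (by positivity)
        rw [← Finset.sum_image (f := fun s => ν (coeff s p)) (g := fun t => t + μ)
          (s := (hasse μ p).support) (by intro a _ b _ h; simpa using h)]
        refine Finset.sum_le_sum_of_subset_of_nonneg ?_ fun _ _ _ => apply_nonneg _ _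
        intro s hs
        obtain ⟨t, ht, rfl⟩ := Finset.mem_image.1 hs
        rw [mem_support_iff, coeff_hasse] at ht
        exact mem_support_iff.2 (right_ne_zero_of_mul ht)

end Hasse

end APC

namespace APC

open MvPolynomial

/-! ### Generalised Wronskians -/

section GW

/-- Gaussian elimination on leading monomials. -/
lemma echelon {m : ℕ} (o : MonomialOrder (Fin m)) : ∀ {l : ℕ} (φ : Fin l → MvPolynomial (Fin m) ℚ),
    LinearIndependent ℚ φ → ∃ ψ : Fin l → MvPolynomial (Fin m) ℚ,
      (∀ j, ψ j ∈ Submodule.span ℚ (Set.range φ)) ∧ (∀ j, ψ j ≠ 0) ∧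
      Function.Injective fun j => o.degree (ψ j) := by
  intro l
  induction l with
  | zero => exact fun φ _ => ⟨φ, fun j => j.elim0, fun j => j.elim0, fun j => j.elim0⟩
  | succ l ih =>
    intro φ hφ
    set s := o.degree (φ 0) with hs
    have h0 : coeff s (φ 0) ≠ 0 := o.coeff_degree_ne_zero_iff.2 (hφ.ne_zero 0)
    set c : Fin l → ℚ := fun i => coeff s (φ i.succ) / coeff s (φ 0) with hc
    set φ' : Fin l → MvPolynomial (Fin m) ℚ := fun i => φ i.succ - c i • φ 0 with hφ'
    have hind : LinearIndependent ℚ φ' := by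
      rw [Fintype.linearIndependent_iff] at hφ ⊢
      intro g hg i
      have := hφ (Fin.cons (-∑ i, g i * c i) g) (by
        rw [Fin.sum_univ_succ]
        simp only [Fin.cons_zero, Fin.cons_succ]
        rw [← hg]
        simp only [hφ', smul_sub, Finset.sum_sub_distrib, smul_smul, neg_smul, Finset.sum_smul]
        abel) i.succ
      simpa using this
    obtain ⟨ψ, h1, h2, h3⟩ := ih φ' hind
    have hle : Submodule.span ℚ (Set.range φ') ≤ Submodule.span ℚ (Set.range φ) := by
      rw [Submodule.span_le]
      rintro _ ⟨i, rfl⟩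
      exact Submodule.sub_mem _ (Submodule.subset_span ⟨_, rfl⟩)
        (Submodule.smul_mem _ _ (Submodule.subset_span ⟨_, rfl⟩))
    have hz : ∀ x ∈ Submodule.span ℚ (Set.range φ'), coeff s x = 0 := by
      intro x hx
      induction hx using Submodule.span_induction with
      | mem x h =>
        obtain ⟨i, rfl⟩ := h
        simp only [hφ', hc, coeff_sub, coeff_smul, smul_eq_mul]
        field_simp
        ring
      | zero => simp
      | add x y _ _ hx hy => rw [coeff_add, hx, hy, add_zero]
      | smul a x _ hx => rw [coeff_smul, hx, smul_zero]
    have hne : ∀ j, o.degree (ψ j) ≠ s := by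
      intro j hj
      have := o.coeff_degree_ne_zero_iff.2 (h2 j)
      rw [hj] at this
      exact this (hz _ (h1 j))
    refine ⟨Fin.cons (φ 0) ψ, ?_, ?_, ?_⟩
    · intro j
      refine Fin.cases ?_ (fun i => ?_) j
      · exact Submodule.subset_span ⟨0, rfl⟩
      · exact hle (h1 i)
    · intro j
      refine Fin.cases ?_ (fun i => ?_) j
      · exact hφ.ne_zero 0
      · exact h2 i
    · intro i j
      refine Fin.cases ?_ (fun i => ?_) i <;> refine Fin.cases ?_ (fun j => ?_) j
      · simp
      · intro h; exact absurd h.symm (hne j)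
      · intro h; exact absurd h (hne i)
      · intro h; exact congrArg Fin.succ (h3 h)

/-- The span, among functions on exponent vectors, of the products of binomial coefficients
`s ↦ mchoose s μ` with `|μ| ≤ k`. -/
def binSpan (m k : ℕ) : Submodule ℚ ((Fin m →₀ ℕ) → ℚ) :=
  Submodule.span ℚ {F | ∃ μ : Fin m →₀ ℕ, ∑ h, μ h ≤ k ∧ F = fun s => (mchoose s μ : ℚ)}

/-- Multiplication of binomial coefficients by a coordinate, which keeps the span of the products
of binomial coefficients stable. -/
lemma mul_mchoose {m : ℕ} (s μ : Fin m →₀ ℕ) (h : Fin m) :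
    (s h : ℚ) * mchoose s μ =
      μ h * mchoose s μ + (μ h + 1) * mchoose s (μ + Finsupp.single h 1) := by
  rw [mchoose_eq s μ h, mchoose_eq s (μ + Finsupp.single h 1) h]
  have e : ∏ x ∈ Finset.univ.erase h, (s x).choose ((μ + Finsupp.single h 1 : Fin m →₀ ℕ) x) =
      ∏ x ∈ Finset.univ.erase h, (s x).choose (μ x) :=
    mchoose_congr fun x hx => by simp [Ne.symm hx]
  rw [e]
  have h1 : (s h : ℚ) * (s h).choose (μ h) =
      μ h * (s h).choose (μ h) + (μ h + 1) * (s h).choose (μ h + 1) := by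
    have h2 := Nat.choose_succ_right_eq (s h) (μ h)
    rcases le_or_gt (μ h) (s h) with hl | hl
    · have h3 : ((s h).choose (μ h + 1) : ℚ) * (μ h + 1) =
          (s h).choose (μ h) * ((s h : ℚ) - μ h) := by
        rw [← Nat.cast_sub hl]; exact_mod_cast h2
      linarith
    · rw [Nat.choose_eq_zero_of_lt hl, Nat.choose_eq_zero_of_lt (by omega)]; simp
  simp only [Finsupp.add_apply, Finsupp.single_eq_same, Nat.cast_mul]
  rw [← mul_assoc, h1]; ring

lemma binSpan_mul {m k : ℕ} {F : (Fin m →₀ ℕ) → ℚ} (hF : F ∈ binSpan m k) (h : Fin m) (c : ℚ) :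
    (fun s => ((s h : ℚ) - c) * F s) ∈ binSpan m (k + 1) := by
  induction hF using Submodule.span_induction with
  | mem F hF =>
    obtain ⟨μ, hμ, rfl⟩ := hF
    have : (fun s : Fin m →₀ ℕ => ((s h : ℚ) - c) * (mchoose s μ : ℚ)) =
        ((μ h : ℚ) - c) • (fun s => (mchoose s μ : ℚ)) +
        ((μ h : ℚ) + 1) • (fun s => (mchoose s (μ + Finsupp.single h 1) : ℚ)) := by
      funext s
      simp only [Pi.add_apply, Pi.smul_apply, smul_eq_mul]
      rw [sub_mul, mul_mchoose]; ring
    rw [this]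
    refine Submodule.add_mem _ (Submodule.smul_mem _ _ (Submodule.subset_span ⟨μ, by omega, rfl⟩))
      (Submodule.smul_mem _ _ (Submodule.subset_span ⟨_, ?_, rfl⟩))
    simp only [Finsupp.add_apply, Finset.sum_add_distrib]
    have : ∑ x, (Finsupp.single h 1 : Fin m →₀ ℕ) x = 1 := by
      simp [Finsupp.single_apply]
    omega
  | zero => convert Submodule.zero_mem (binSpan m (k + 1)) using 1; funext s; simp
  | add x y _ _ hx hy => convert Submodule.add_mem _ hx hy using 1; funext s; simp; ring
  | smul a x _ hx => convert Submodule.smul_mem _ a hx using 1; funext s; simp; ring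

/-- Lagrange interpolation: the products of at most `l - 1` linear factors separate `l` points. -/
lemma exists_bin_det_ne_zero {m l : ℕ} (s : Fin l → Fin m →₀ ℕ) (hs : Function.Injective s) :
    ∃ μ : Fin l → Fin m →₀ ℕ, (∀ i, ∑ h, μ i h < l) ∧
      (Matrix.of fun i j => (mchoose (s j) (μ i) : ℚ)).det ≠ 0 := by
  classical
  set V : Set (Fin l → ℚ) := {v | ∃ μ : Fin m →₀ ℕ, ∑ h, μ h < l ∧ v = fun j => (mchoose (s j) μ : ℚ)}
    with hV
  -- evaluation at the points maps `binSpan` into the span of `V`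
  have hmap : ∀ F ∈ binSpan m (l - 1), 0 < l → (fun j => F (s j)) ∈ Submodule.span ℚ V := by
    intro F hF hl
    induction hF using Submodule.span_induction with
    | mem F hF =>
      obtain ⟨μ, hμ, rfl⟩ := hF
      exact Submodule.subset_span ⟨μ, by omega, rfl⟩
    | zero => exact Submodule.zero_mem _
    | add x y _ _ hx hy => exact Submodule.add_mem _ hx hy
    | smul a x _ hx => exact Submodule.smul_mem _ a hx
  have hsep : ∀ j (T : Finset (Fin l)), j ∉ T → ∃ F ∈ binSpan m T.card, F (s j) ≠ 0 ∧
      ∀ i ∈ T, F (s i) = 0 := by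
    intro j T
    induction T using Finset.induction_on with
    | empty =>
      intro _
      refine ⟨fun s => (mchoose s 0 : ℚ), Submodule.subset_span ⟨0, by simp, rfl⟩, ?_, by simp⟩
      simp [mchoose]
    | insert i T hi ih =>
      intro hj
      rw [Finset.mem_insert, not_or] at hj
      obtain ⟨F, hF, h1, h2⟩ := ih hj.2
      obtain ⟨h, hh⟩ : ∃ h, s j h ≠ s i h := by
        by_contra hcon
        push Not at hcon
        exact hj.1 (hs (Finsupp.ext hcon))
      refine ⟨fun x => ((x h : ℚ) - s i h) * F x, ?_, ?_, ?_⟩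
      · rw [Finset.card_insert_of_notMem hi]; exact binSpan_mul hF _ _
      · exact mul_ne_zero (sub_ne_zero.2 (by exact_mod_cast hh)) h1
      · intro x hx
        rcases Finset.mem_insert.1 hx with rfl | hx
        · simp
        · simp [h2 x hx]
  have htop : Submodule.span ℚ V = ⊤ := by
    rw [eq_top_iff, ← (Pi.basisFun ℚ (Fin l)).span_eq, Submodule.span_le]
    rintro _ ⟨j, rfl⟩
    obtain ⟨F, hF, h1, h2⟩ := hsep j (Finset.univ.erase j) (by simp)
    rw [Finset.card_erase_of_mem (Finset.mem_univ _), Finset.card_univ, Fintype.card_fin] at hF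
    have h3 := hmap F hF j.pos
    have : (Pi.basisFun ℚ (Fin l)) j = (F (s j))⁻¹ • fun j => F (s j) := by
      funext i
      by_cases hij : i = j
      · subst hij; simp [h1]
      · simp [hij, h2 i (by simp [hij])]
    rw [this]
    exact Submodule.smul_mem _ _ h3
  obtain ⟨b, hb, hspan, hli⟩ := exists_linearIndependent ℚ V
  let B : Module.Basis b ℚ (Fin l → ℚ) := Module.Basis.mk hli (by
    rw [Subtype.range_coe, hspan, htop])
  have : Fintype b := FiniteDimensional.fintypeBasisIndex B
  have hcard : Fintype.card b = l := by
    rw [← Module.finrank_eq_card_basis B]; simp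
  let e : Fin l ≃ b := (Fintype.equivFinOfCardEq hcard).symm
  have hmem : ∀ i, ∃ μ : Fin m →₀ ℕ, ∑ h, μ h < l ∧ (e i : Fin l → ℚ) = fun j => (mchoose (s j) μ : ℚ) :=
    fun i => hb (e i).2
  choose μ h1 h2 using hmem
  refine ⟨μ, h1, ?_⟩
  have : (Matrix.of fun i j => (mchoose (s j) (μ i) : ℚ)) = Matrix.of fun i => (e i : Fin l → ℚ) := by
    ext i j; simp [h2]
  rw [this]
  have hli2 : LinearIndependent ℚ (Matrix.of fun i => (e i : Fin l → ℚ)).row := hli.comp e e.injective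
  rw [Matrix.linearIndependent_rows_iff_isUnit, Matrix.isUnit_iff_isUnit_det] at hli2
  exact hli2.ne_zero

lemma coeff_prod_of_le {m : ℕ} (o : MonomialOrder (Fin m)) {ι : Type*} (F : Finset ι)
    (p : ι → MvPolynomial (Fin m) ℚ) (a : ι → Fin m →₀ ℕ)
    (h : ∀ i ∈ F, o.toSyn (o.degree (p i)) ≤ o.toSyn (a i)) :
    o.toSyn (o.degree (∏ i ∈ F, p i)) ≤ o.toSyn (∑ i ∈ F, a i) ∧
    coeff (∑ i ∈ F, a i) (∏ i ∈ F, p i) = ∏ i ∈ F, coeff (a i) (p i) := by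
  classical
  induction F using Finset.induction_on with
  | empty => simp
  | insert i F hi ih =>
    obtain ⟨h1, h2⟩ := ih fun j hj => h j (by simp [hj])
    have h3 := h i (by simp)
    rw [Finset.prod_insert hi, Finset.sum_insert hi, Finset.prod_insert hi]
    refine ⟨o.degree_mul_le.trans ?_, ?_⟩
    · rw [map_add, map_add]; exact add_le_add h3 h1
    · rw [o.coeff_mul_of_add_of_degree_le h3 h1, h2]

/-- Linearly independent polynomials have a nonvanishing generalised Wronskian.  On leading
monomials the operators `x^μ Δ_μ` act diagonally, through products of binomial coefficients. -/
theorem exists_wronskian_ne_zero {m l : ℕ} (φ : Fin l → MvPolynomial (Fin m) ℚ)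
    (hφ : LinearIndependent ℚ φ) :
    ∃ μ : Fin l → Fin m →₀ ℕ, (∀ i, ∑ h, μ i h < l) ∧
      (Matrix.of fun i j => hasse (μ i) (φ j)).det ≠ 0 := by
  classical
  let o : MonomialOrder (Fin m) := MonomialOrder.lex
  obtain ⟨ψ, h1, h2, h3⟩ := echelon o φ hφ
  obtain ⟨μ, h4, h5⟩ := exists_bin_det_ne_zero _ h3
  refine ⟨μ, h4, fun h6 => ?_⟩
  have hg : ∀ j, ∃ g : Fin l → ℚ, ∑ i, g i • φ i = ψ j := fun j =>
    Submodule.mem_span_range_iff_exists_fun ℚ |>.1 (h1 j)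
  choose g hg using hg
  have h7 : (Matrix.of fun i j => hasse (μ i) (ψ j)).det = 0 := by
    have : (Matrix.of fun i j => hasse (μ i) (ψ j)) =
        (Matrix.of fun i j => hasse (μ i) (φ j)) * (Matrix.of fun i j => C (g j i)) := by
      ext1 i j
      rw [Matrix.mul_apply, Matrix.of_apply, ← hg, hasse_sum]
      refine Finset.sum_congr rfl fun k _ => ?_
      rw [smul_eq_C_mul, hasse_C_mul, Matrix.of_apply, Matrix.of_apply, mul_comm]
    rw [this, Matrix.det_mul, h6, zero_mul]
  set D : Matrix (Fin l) (Fin l) (MvPolynomial (Fin m) ℚ) :=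
    Matrix.of fun i j => monomial (μ i) 1 * hasse (μ i) (ψ j) with hD
  have hD0 : D.det = 0 := by
    have : D = Matrix.of fun i j => (monomial (μ i) (1 : ℚ)) * (Matrix.of fun i j => hasse (μ i) (ψ j)) i j := rfl
    rw [this, Matrix.det_mul_column, h7, mul_zero]
  have hcoeff : ∀ i j s, coeff s (D i j) = mchoose s (μ i) * coeff s (ψ j) := by
    intro i j s
    rw [hD, Matrix.of_apply, coeff_monomial_mul']
    split_ifs with h
    · rw [coeff_hasse, one_mul, tsub_add_cancel_of_le h]
    · have : mchoose s (μ i) = 0 := by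
        rw [Finsupp.le_def] at h
        push Not at h
        obtain ⟨x, hx⟩ := h
        exact Finset.prod_eq_zero (Finset.mem_univ x) (Nat.choose_eq_zero_of_lt hx)
      simp [this]
  have hdeg : ∀ i j, o.toSyn (o.degree (D i j)) ≤ o.toSyn (o.degree (ψ j)) := by
    intro i j
    rw [o.degree_le_iff]
    intro s hs
    rw [mem_support_iff, hcoeff] at hs
    exact o.le_degree (mem_support_iff.2 (right_ne_zero_of_mul hs))
  have h8 := congrArg (coeff (∑ j, o.degree (ψ j))) hD0
  rw [Matrix.det_apply, coeff_sum, coeff_zero] at h8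
  have h9 : (Matrix.of fun i j => (mchoose (o.degree (ψ j)) (μ i) : ℚ) *
      coeff (o.degree (ψ j)) (ψ j)).det = 0 := by
    rw [Matrix.det_apply, ← h8]
    refine Finset.sum_congr rfl fun σ _ => ?_
    have : coeff (∑ j, o.degree (ψ j)) (∏ i, D (σ i) i) =
        ∏ i, (mchoose (o.degree (ψ i)) (μ (σ i)) : ℚ) * coeff (o.degree (ψ i)) (ψ i) := by
      rw [(coeff_prod_of_le o Finset.univ (fun i => D (σ i) i) _ fun i _ => hdeg _ _).2]
      exact Finset.prod_congr rfl fun i _ => hcoeff _ _ _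
    rcases Int.units_eq_one_or (Equiv.Perm.sign σ) with h | h
    · rw [h, one_smul, one_smul, this]; rfl
    · rw [h, Units.neg_smul, one_smul, Units.neg_smul, one_smul, coeff_neg, this]; rfl
  have h10 : (Matrix.of fun i j => (mchoose (o.degree (ψ j)) (μ i) : ℚ) *
      coeff (o.degree (ψ j)) (ψ j)) = Matrix.of fun i j => coeff (o.degree (ψ j)) (ψ j) *
        (Matrix.of fun i j => (mchoose (o.degree (ψ j)) (μ i) : ℚ)) i j := by
    ext i j; simp [mul_comm]
  rw [h10, Matrix.det_mul_row] at h9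
  rcases mul_eq_zero.1 h9 with h | h
  · rw [Finset.prod_eq_zero_iff] at h
    obtain ⟨j, _, hj⟩ := h
    exact o.coeff_degree_ne_zero_iff.2 (h2 j) hj
  · exact h5 h

end GW

end APC

namespace APC

/-! ### Roth's lemma: preparations -/

section OneVar
open Polynomial

lemma fin1_ext {u v : Fin 1 →₀ ℕ} (h : u 0 = v 0) : u = v :=
  Finsupp.ext fun j => by rw [Subsingleton.elim j 0, h]

/-- By Gauss's lemma, the order `i` of vanishing of an integer polynomial at a rational number `ξ` is
limited by its height: the `i`-th power of the denominator of `ξ` divides the leading coefficient. -/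
lemma one_var (U : MvPolynomial (Fin 1) ℤ) (hU : U ≠ 0) (ξ : ℚ) :
    ∃ i : ℕ, MvPolynomial.coeff (Finsupp.single 0 i)
      (shift (fun _ => ξ) (MvPolynomial.map (Int.castRingHom ℚ) U)) ≠ 0 ∧
      (ξ.den : ℝ) ^ i ≤ l1 (normRingSeminorm ℤ) U := by
  have toP : ∀ (S : Type) [CommRing S] (q : MvPolynomial (Fin 1) S) (i : ℕ),
      (MvPolynomial.aeval (fun _ => (Polynomial.X : S[X])) q).coeff i =
        MvPolynomial.coeff (Finsupp.single 0 i) q := by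
    intro S _ q i
    classical
    induction q using MvPolynomial.induction_on' with
    | add p q hp hq => simp [hp, hq]
    | monomial u b =>
      have e : u = Finsupp.single 0 (u 0) := by
        exact fin1_ext (by simp)
      rw [e, MvPolynomial.aeval_monomial, MvPolynomial.coeff_monomial]
      simp only [Polynomial.algebraMap_eq]
      simp [Polynomial.coeff_X_pow, Finsupp.single_left_inj, eq_comm]
  set u : ℤ[X] := MvPolynomial.aeval (fun _ => (Polynomial.X : ℤ[X])) U with hu
  have hu0 : u ≠ 0 := by
    intro h
    apply hU
    ext s
    have e : s = Finsupp.single 0 (s 0) := by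
      exact fin1_ext (by simp)
    rw [e, ← toP, ← hu, h]; simp
  set v : ℚ[X] := u.map (Int.castRingHom ℚ) with hv
  have hv0 : v ≠ 0 := by
    rw [hv, Ne, Polynomial.map_eq_zero_iff (Int.cast_injective)]; exact hu0
  have hcomp : v.comp (Polynomial.X + Polynomial.C ξ) = MvPolynomial.aeval (fun _ => (Polynomial.X : ℚ[X]))
      (shift (fun _ => ξ) (MvPolynomial.map (Int.castRingHom ℚ) U)) := by
    have gen : ∀ q : MvPolynomial (Fin 1) ℤ,
        ((MvPolynomial.aeval (fun _ => (Polynomial.X : ℤ[X])) q).map (Int.castRingHom ℚ)).comp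
          (Polynomial.X + Polynomial.C ξ) = MvPolynomial.aeval (fun _ => (Polynomial.X : ℚ[X]))
      (shift (fun _ => ξ) (MvPolynomial.map (Int.castRingHom ℚ) q)) := by
      intro q
      induction q using MvPolynomial.induction_on with
      | C a => simp [shift]
      | add p q hp hq => simp only [map_add, Polynomial.map_add, Polynomial.add_comp, hp, hq]
      | mul_X p j h =>
        simp only [map_mul, Polynomial.map_mul, Polynomial.mul_comp, h]
        simp [shift]
    exact gen U
  refine ⟨v.rootMultiplicity ξ, ?_, ?_⟩
  · rw [← toP, ← hcomp, rootMultiplicity_eq_natTrailingDegree]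
    rw [← Polynomial.trailingCoeff, Polynomial.trailingCoeff_nonzero_iff_nonzero]
    intro h
    have h2 : (v.comp (X + C ξ)).comp (X - C ξ) = v := by
      rw [Polynomial.comp_assoc]; simp
    exact hv0 (by rw [← h2, h]; simp)
  · set i := v.rootMultiplicity ξ
    set L : ℤ[X] := C (ξ.den : ℤ) * X + C (-ξ.num) with hL
    have hden : (ξ.den : ℤ) ≠ 0 := by exact_mod_cast ξ.den_ne_zero
    have hprim : L.IsPrimitive := by
      intro c hc
      rw [Polynomial.C_dvd_iff_dvd_coeff] at hc
      have h1 := hc 1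
      have h0 := hc 0
      simp only [hL, Polynomial.coeff_add, Polynomial.coeff_C_mul, Polynomial.coeff_X_one,
        Polynomial.coeff_C_succ, Polynomial.coeff_C_zero, Polynomial.coeff_X_zero, mul_one, mul_zero,
        add_zero, zero_add, dvd_neg] at h1 h0
      have hco : IsCoprime (ξ.den : ℤ) ξ.num := by
        rw [Int.isCoprime_iff_gcd_eq_one, Int.gcd_comm]
        simpa [Int.gcd] using ξ.reduced
      exact hco.isUnit_of_dvd' h1 h0
    have hpow : ∀ n, (L ^ n).IsPrimitive := by
      intro n
      induction n with
      | zero => simp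
      | succ n ih => rw [pow_succ]; exact ih.mul hprim
    have hdvd : L ^ i ∣ u := by
      rw [Polynomial.IsPrimitive.Int.dvd_iff_map_cast_dvd_map_cast _ _ (hpow i)]
      have h1 : (X - C ξ) ^ i ∣ v := Polynomial.pow_rootMultiplicity_dvd v ξ
      have h2 : (L ^ i).map (Int.castRingHom ℚ) = C ((ξ.den : ℚ) ^ i) * (X - C ξ) ^ i := by
        rw [Polynomial.map_pow, map_pow, ← mul_pow]
        congr 1
        simp only [hL, Polynomial.map_add, Polynomial.map_mul, Polynomial.map_C, Polynomial.map_X, mul_sub, ← C_mul]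
        rw [Rat.den_mul_eq_num]
        simp [sub_eq_add_neg]
      rw [h2]
      have h3 : IsUnit (C ((ξ.den : ℚ) ^ i)) := by
        rw [Polynomial.isUnit_C]
        exact (IsUnit.mk0 _ (by exact_mod_cast ξ.den_ne_zero)).pow i
      exact h3.mul_left_dvd.2 h1
    have hlc : (ξ.den : ℤ) ^ i ∣ u.leadingCoeff := by
      have := Polynomial.leadingCoeff_dvd_leadingCoeff hdvd
      rw [Polynomial.leadingCoeff_pow, hL, Polynomial.leadingCoeff_linear hden] at this
      exact this
    have h4 : (ξ.den : ℤ) ^ i ≤ |u.leadingCoeff| :=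
      Int.le_of_dvd (abs_pos.2 (Polynomial.leadingCoeff_ne_zero.2 hu0)) ((dvd_abs _ _).2 hlc)
    have h5 : u.leadingCoeff = MvPolynomial.coeff (Finsupp.single 0 u.natDegree) U := by
      rw [← toP]; rfl
    rw [h5] at h4
    refine le_trans ?_ (coeff_le_l1 _ U (Finsupp.single 0 u.natDegree))
    change _ ≤ ‖MvPolynomial.coeff _ U‖
    rw [Int.norm_eq_abs]
    exact_mod_cast h4

end OneVar

end APC

namespace APC

open MvPolynomial

section Prep

lemma low_deg_iff {σ R : Type*} [Fintype σ] [DecidableEq σ] [CommRing R] (h : σ) (r : ℕ)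
    (p : MvPolynomial σ R) :
    Low (fun i => if i = h then (-1 : ℝ) else 0) (-r) p ↔ degreeOf h p ≤ r := by
  rw [degreeOf_le_iff]
  simp only [Low, mem_support_iff, mul_ite, mul_neg, mul_one, mul_zero, Finset.sum_ite_eq',
    Finset.mem_univ, if_true, neg_le_neg_iff, Nat.cast_le]

lemma degreeOf_det_le {σ R : Type*} [Fintype σ] [CommRing R] {n : ℕ}
    (A : Matrix (Fin n) (Fin n) (MvPolynomial σ R)) (h : σ) (r : ℕ)
    (hA : ∀ i j, degreeOf h (A i j) ≤ r) : degreeOf h A.det ≤ n * r := by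
  classical
  rw [← low_deg_iff]
  have := Low.det (w := fun i => if i = h then (-1 : ℝ) else 0) (c := fun _ => -(r : ℝ)) A
    fun i j => (low_deg_iff h r _).2 (hA i j)
  simpa using this

/-- Extraction of those coefficients of `W` whose exponents are of the form `g s`. -/
lemma exists_slice {σ τ R : Type*} [CommRing R] (g : (σ →₀ ℕ) → (τ →₀ ℕ))
    (hg : Function.Injective g) (W : MvPolynomial τ R) :
    ∃ q : MvPolynomial σ R, ∀ s, coeff s q = coeff (g s) W := by
  classical
  refine ⟨∑ s ∈ W.support.preimage g hg.injOn, monomial s (coeff (g s) W), fun s => ?_⟩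
  rw [coeff_sum]
  simp only [coeff_monomial]
  rw [Finset.sum_ite_eq']
  split_ifs with h
  · rfl
  · simp only [Finset.mem_preimage, mem_support_iff, not_not] at h
    exact h.symm

lemma l1_slice_le {σ τ R : Type*} [CommRing R] (ν : RingSeminorm R) (g : (σ →₀ ℕ) → (τ →₀ ℕ))
    (hg : Function.Injective g) {W : MvPolynomial τ R} {q : MvPolynomial σ R}
    (h : ∀ s, coeff s q = coeff (g s) W) : l1 ν q ≤ l1 ν W := by
  classical
  unfold l1
  simp only [h]
  rw [← Finset.sum_image (f := fun s => ν (coeff s W)) (g := g) (s := q.support) hg.injOn]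
  refine Finset.sum_le_sum_of_subset_of_nonneg ?_ fun _ _ _ => apply_nonneg _ _
  intro s hs
  obtain ⟨t, ht, rfl⟩ := Finset.mem_image.1 hs
  rw [mem_support_iff, h] at ht
  exact mem_support_iff.2 ht

lemma shift_shift {σ R : Type*} [Fintype σ] [CommRing R] (ξ : σ → R) (p : MvPolynomial σ R) :
    shift (-ξ) (shift ξ p) = p := by
  have : (shift (-ξ)).comp (shift ξ) = AlgHom.id R (MvPolynomial σ R) := by
    apply algHom_ext; intro i
    simp [shift, algebraMap_eq]
  exact DFunLike.congr_fun this p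

lemma shift_ne_zero {σ R : Type*} [Fintype σ] [CommRing R] (ξ : σ → R) {p : MvPolynomial σ R}
    (hp : p ≠ 0) : shift ξ p ≠ 0 := fun h => hp (by rw [← shift_shift ξ p, h, map_zero])

lemma one_le_l1 {σ : Type*} {p : MvPolynomial σ ℤ} (hp : p ≠ 0) : 1 ≤ l1 (normRingSeminorm ℤ) p := by
  obtain ⟨s, hs⟩ := MvPolynomial.ne_zero_iff.1 hp
  refine le_trans ?_ (coeff_le_l1 _ p s)
  change 1 ≤ ‖coeff s p‖
  rw [Int.norm_eq_abs]
  exact_mod_cast Int.one_le_abs hs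

variable {m : ℕ} {R : Type*} [CommRing R]

/-- The product of a polynomial in the variables `1, …, m` and a polynomial in the variable `0`. -/
noncomputable def ten (φ : MvPolynomial (Fin m) R) (ψ : MvPolynomial (Fin 1) R) :
    MvPolynomial (Fin (m + 1)) R :=
  rename Fin.succ φ * rename (fun _ => 0) ψ

lemma coeff_ten (φ : MvPolynomial (Fin m) R) (ψ : MvPolynomial (Fin 1) R) (t : Fin (m + 1) →₀ ℕ) :
    coeff t (ten φ ψ) = coeff t.tail φ * coeff (Finsupp.single 0 (t 0)) ψ := by
  classical
  induction φ using MvPolynomial.induction_on' with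
  | add p q hp hq =>
    rw [ten, map_add, add_mul, coeff_add, coeff_add, add_mul, ← hp, ← hq]; rfl
  | monomial s a =>
    induction ψ using MvPolynomial.induction_on' with
    | add p q hp hq =>
      rw [ten, map_add, mul_add, coeff_add, coeff_add, mul_add, ← hp, ← hq]; rfl
    | monomial u b =>
      have h1 : s.mapDomain Fin.succ + u.mapDomain (fun _ => 0) = Finsupp.cons (u 0) s := by
        ext i
        have e : u = Finsupp.single 0 (u 0) := by
          exact fin1_ext (by simp)
        refine Fin.cases ?_ (fun i => ?_) i
        · rw [Finsupp.add_apply, Finsupp.mapDomain_of_notMem_range, e]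
          · simp
          · simp
        · rw [Finsupp.add_apply, Finsupp.mapDomain_apply (Fin.succ_injective m), e]
          simp
      rw [ten, rename_monomial, rename_monomial, monomial_mul, coeff_monomial, coeff_monomial,
        coeff_monomial, h1]
      by_cases h2 : s = t.tail
      · by_cases h3 : u = Finsupp.single 0 (t 0)
        · have : Finsupp.cons (u 0) s = t := by
            rw [h2, h3]; simp
          rw [if_pos this, if_pos h2, if_pos h3]
        · rw [if_neg h3, if_neg, mul_zero]
          intro h
          apply h3
          exact fin1_ext (by rw [← h]; simp)
      · rw [if_neg h2, if_neg, zero_mul]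
        intro h
        apply h2
        rw [← h]; simp

lemma shift_ten (ξ : Fin (m + 1) → R) (φ : MvPolynomial (Fin m) R) (ψ : MvPolynomial (Fin 1) R) :
    shift ξ (ten φ ψ) = ten (shift (fun i => ξ i.succ) φ) (shift (fun _ => ξ 0) ψ) := by
  rw [ten, ten, map_mul]
  congr 1
  · have : (shift ξ).comp (rename Fin.succ) = (rename Fin.succ).comp (shift fun i => ξ i.succ) := by
      apply algHom_ext; intro i
      simp [shift]
    exact DFunLike.congr_fun this φ
  · have : (shift ξ).comp (rename (fun _ : Fin 1 => 0)) =
        (rename (fun _ => 0)).comp (shift fun _ => ξ 0) := by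
      apply algHom_ext; intro i
      simp [shift]
    exact DFunLike.congr_fun this ψ

lemma hasse_ten (κ μ) (φ : MvPolynomial (Fin m) R) (ψ : MvPolynomial (Fin 1) R) :
    hasse (Finsupp.cons (κ 0) μ) (ten φ ψ) = ten (hasse μ φ) (hasse κ ψ) := by
  ext t
  rw [coeff_hasse, coeff_ten, coeff_ten, coeff_hasse, coeff_hasse]
  have h1 : (t + Finsupp.cons (κ 0) μ).tail = t.tail + μ := by
    ext i; simp [Finsupp.tail_apply]
  have h2 : Finsupp.single 0 ((t + Finsupp.cons (κ 0) μ) 0) =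
      Finsupp.single 0 (t 0) + κ := by
    exact fin1_ext (by simp)
  have h3 : mchoose (t + Finsupp.cons (κ 0) μ) (Finsupp.cons (κ 0) μ) =
      mchoose (t.tail + μ) μ * mchoose (Finsupp.single 0 (t 0) + κ) κ := by
    simp [mchoose, Fin.prod_univ_succ, Finsupp.tail_apply, mul_comm]
  rw [h1, h2, h3]
  push_cast
  ring

/-- A decomposition of `p` as a sum of products separating the variable `0` from the others, with
as few terms as possible, so that the factors on both sides are linearly independent. -/
lemma exists_ten_decomp {p : MvPolynomial (Fin (m + 1)) ℚ} (hp : p ≠ 0) {r : ℕ}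
    (hr : degreeOf 0 p ≤ r) :
    ∃ (l : ℕ) (φ : Fin l → MvPolynomial (Fin m) ℚ) (ψ : Fin l → MvPolynomial (Fin 1) ℚ),
      0 < l ∧ l ≤ r + 1 ∧ LinearIndependent ℚ φ ∧ LinearIndependent ℚ ψ ∧
      p = ∑ j, ten (φ j) (ψ j) := by
  classical
  have hs : ∀ k : ℕ, ∃ q : MvPolynomial (Fin m) ℚ, ∀ s, coeff s q = coeff (Finsupp.cons k s) p :=
    fun k => exists_slice _ (Finsupp.cons_right_injective k) p
  choose c hc using hs
  let cc : Fin (r + 1) → MvPolynomial (Fin m) ℚ := fun k => c k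
  let V := Submodule.span ℚ (Set.range cc)
  have hfin : FiniteDimensional ℚ V := FiniteDimensional.span_of_finite ℚ (Set.finite_range cc)
  let b := Module.finBasis ℚ V
  have hmem : ∀ k, cc k ∈ V := fun k => Submodule.subset_span ⟨k, rfl⟩
  let T : Fin (Module.finrank ℚ V) → Fin (r + 1) → ℚ := fun j k => b.repr ⟨cc k, hmem k⟩ j
  have hT : ∀ k, cc k = ∑ j, T j k • (b j : MvPolynomial (Fin m) ℚ) := by
    intro k
    have := congrArg (Subtype.val) (b.sum_repr ⟨cc k, hmem k⟩)
    change ((∑ i, (b.repr ⟨cc k, hmem k⟩) i • b i : V) : MvPolynomial (Fin m) ℚ) = cc k at this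
    refine this.symm.trans ?_
    rw [AddSubmonoidClass.coe_finsetSum]
    rfl
  let ψ : Fin (Module.finrank ℚ V) → MvPolynomial (Fin 1) ℚ := fun j =>
    ∑ k : Fin (r + 1), monomial (Finsupp.single 0 (k : ℕ)) (T j k)
  have hψ : ∀ j k, coeff (Finsupp.single 0 (k : ℕ)) (ψ j) = if h : k < r + 1 then T j ⟨k, h⟩ else 0 := by
    intro j k
    simp only [ψ, coeff_sum, coeff_monomial]
    split_ifs with h
    · rw [Finset.sum_eq_single ⟨k, h⟩]
      · simp
      · intro i _ hi
        rw [if_neg]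
        intro h'
        apply hi
        have := DFunLike.congr_fun h' 0
        ext; simpa using this
      · simp
    · refine Finset.sum_eq_zero fun i _ => if_neg fun h' => h ?_
      have := DFunLike.congr_fun h' 0
      simp at this
      omega
  have hdec : p = ∑ j, ten (b j : MvPolynomial (Fin m) ℚ) (ψ j) := by
    ext t
    rw [coeff_sum]
    simp only [coeff_ten, hψ]
    split_ifs with h
    · have h1 := congrArg (coeff t.tail) (hT ⟨t 0, h⟩)
      simp only [cc, hc, Finsupp.cons_tail, coeff_sum, coeff_smul, smul_eq_mul] at h1
      rw [h1]
      exact Finset.sum_congr rfl fun j _ => mul_comm _ _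
    · simp only [mul_zero, Finset.sum_const_zero]
      by_contra h'
      have := (degreeOf_le_iff.1 hr) t (mem_support_iff.2 h')
      omega
  refine ⟨_, fun j => (b j : MvPolynomial (Fin m) ℚ), ψ, ?_, ?_, ?_, ?_, hdec⟩
  · rcases Nat.eq_zero_or_pos (Module.finrank ℚ V) with h | h
    · exfalso
      apply hp
      rw [hdec]
      have : IsEmpty (Fin (Module.finrank ℚ V)) := by rw [h]; infer_instance
      simp
    · exact h
  · have := finrank_range_le_card (R := ℚ) cc
    simpa [Set.finrank] using this
  · exact b.linearIndependent.map' V.subtype (Submodule.ker_subtype V)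
  · rw [Fintype.linearIndependent_iff]
    intro g hg
    have h1 : ∀ k, ∑ j, g j * T j k = 0 := by
      intro k
      have := congrArg (coeff (Finsupp.single 0 (k : ℕ))) hg
      simp only [coeff_sum, coeff_smul, hψ, Fin.is_lt, dif_pos, smul_eq_mul, coeff_zero] at this
      exact this
    let L : V →ₗ[ℚ] ℚ := b.constr ℚ g
    have hL : L = 0 := by
      have h2 : ∀ x (hx : x ∈ V), L ⟨x, hx⟩ = 0 := by
        intro x hx
        induction hx using Submodule.span_induction with
        | mem x h =>
          obtain ⟨k, rfl⟩ := h
          have : L ⟨cc k, hmem k⟩ = ∑ j, g j * T j k := by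
            rw [← b.sum_repr ⟨cc k, hmem k⟩, map_sum]
            simp [L, T, mul_comm]
          rw [this, h1]
        | zero => exact map_zero L
        | add x y hx hy h3 h4 =>
          have := map_add L ⟨x, hx⟩ ⟨y, hy⟩
          rw [h3, h4, add_zero] at this; exact this
        | smul a x hx h3 =>
          have := map_smul L a ⟨x, hx⟩
          rw [h3, smul_zero] at this; exact this
      ext x; exact h2 x x.2
    intro j
    have : L (b j) = g j := by simp [L]
    rw [← this, hL]; rfl

/-- The contribution of the derivatives in the variable `0` to the index of the Wronskian. -/
lemma sum_max_ge {l r : ℕ} {η : ℝ} (hη : 0 < η) (hη1 : η ≤ 1) (hr : 1 ≤ r) (hl : l ≤ r + 1) :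
    l * η ^ 2 / 8 ≤ ∑ k ∈ Finset.range l, max 0 (η - k / r) := by
  have hr0 : (0 : ℝ) < r := by exact_mod_cast hr
  set n := min l (⌊η * r / 2⌋₊ + 1) with hn
  have h1 : (n : ℝ) * (η / 2) ≤ ∑ k ∈ Finset.range n, max 0 (η - k / r) := by
    have : ∀ k ∈ Finset.range n, η / 2 ≤ max 0 (η - k / r) := by
      intro k hk
      refine le_max_of_le_right ?_
      have h2 : k ≤ ⌊η * r / 2⌋₊ := by
        have := Finset.mem_range.1 hk; omega
      have h3 : (k : ℝ) ≤ η * r / 2 := (Nat.le_floor_iff (by positivity)).1 h2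
      have h4 : (k : ℝ) / r ≤ η / 2 := by rw [div_le_iff₀ hr0]; linarith
      linarith
    have := Finset.sum_le_sum this
    simpa using this
  have h2 : ∑ k ∈ Finset.range n, max 0 (η - k / r) ≤ ∑ k ∈ Finset.range l, max 0 (η - k / r) :=
    Finset.sum_le_sum_of_subset_of_nonneg (Finset.range_subset_range.2 (min_le_left _ _))
      fun _ _ _ => le_max_left _ _
  have h3 : η * l / 4 ≤ (n : ℝ) := by
    have hl' : (l : ℝ) ≤ 2 * r := by exact_mod_cast (by omega : l ≤ 2 * r)
    rcases min_choice l (⌊η * r / 2⌋₊ + 1) with h | h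
    · rw [hn, h]; have : (0 : ℝ) ≤ l := Nat.cast_nonneg _; nlinarith
    · rw [hn, h]; push_cast
      have := (Nat.lt_floor_add_one (η * r / 2)).le
      nlinarith
  nlinarith

end Prep

end APC

namespace APC

open MvPolynomial

/-! ### Roth's lemma -/

lemma hasse_map {σ R S : Type*} [Fintype σ] [CommRing R] [CommRing S] (g : R →+* S) (μ : σ →₀ ℕ)
    (p : MvPolynomial σ R) : hasse μ (map g p) = map g (hasse μ p) := by
  ext t; simp [coeff_hasse, coeff_map]

set_option maxHeartbeats 2000000 in
/-- Roth's lemma: a nonzero integer polynomial of small height and rapidly varying degrees `r h`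
has small index, relative to the degrees, at a rational point with large denominators. -/
theorem roth (m : ℕ) : ∀ ε : ℝ, 0 < ε → ∃ ω K : ℝ, 0 < ω ∧ 0 < K ∧
    ∀ (p : MvPolynomial (Fin m) ℤ) (r : Fin m → ℕ) (ξ : Fin m → ℚ) (a R : ℝ), p ≠ 0 →
      (∀ h, 1 ≤ r h) → (∀ h, degreeOf h p ≤ r h) →
      (∀ h h', h < h' → (r h : ℝ) ≤ ω * r h') → (∀ h, (r h : ℝ) ≤ R) → 1 ≤ R →
      (∀ h, a ≤ r h * Real.log (ξ h).den) →
      K * R + Real.log (l1 (normRingSeminorm ℤ) p) ≤ ω * a →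
      ¬ Low (fun h => 1 / (r h : ℝ)) ε (shift ξ (map (Int.castRingHom ℚ) p)) := by
  induction m with
  | zero =>
    intro ε hε
    refine ⟨1, 1, one_pos, one_pos, ?_⟩
    intro p r ξ a R hp _ _ _ _ _ _ _ hlow
    have h1 : map (Int.castRingHom ℚ) p ≠ 0 := by
      rw [Ne, map_eq_zero_iff _ (map_injective _ Int.cast_injective)]; exact hp
    obtain ⟨s, hs⟩ := MvPolynomial.ne_zero_iff.1 (shift_ne_zero ξ h1)
    have := hlow s hs
    simp at this
    linarith
  | succ m ih =>
    intro ε hε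
    set ε1 := min ε 1 with hε1
    have hε1p : 0 < ε1 := lt_min hε one_pos
    have hε11 : ε1 ≤ 1 := min_le_right _ _
    obtain ⟨ω', K', hω', hK', IH⟩ := ih (ε1 ^ 2 / 64) (by positivity)
    set ω := min ω' (ε1 ^ 2 / 64) with hω
    have hωp : 0 < ω := lt_min hω' (by positivity)
    have hω2 : ω ≤ ε1 ^ 2 / 64 := min_le_right _ _
    have hω3 : ω ≤ ε1 / 2 := by nlinarith
    refine ⟨ω, K' + (m + 2), hωp, by positivity, ?_⟩
    intro p r ξ a R hp hr1 hdeg hord hrR hR1 ha hK hlow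
    replace hlow := hlow.mono (min_le_left ε 1)
    rw [← hε1] at hlow
    set pQ := map (Int.castRingHom ℚ) p with hpQ
    have hpQ0 : pQ ≠ 0 := by
      rw [Ne, map_eq_zero_iff _ (map_injective _ Int.cast_injective)]; exact hp
    have hdeg0 : degreeOf 0 pQ ≤ r 0 := by
      refine le_trans ?_ (hdeg 0)
      rw [degreeOf_le_iff]
      intro t ht
      exact (degreeOf_le_iff.1 le_rfl) t (support_map_subset _ _ ht)
    obtain ⟨l, φ, ψ, hl0, hl1, hφ, hψ, hdec⟩ := exists_ten_decomp hpQ0 hdeg0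
    obtain ⟨μ, hμ, hV⟩ := exists_wronskian_ne_zero φ hφ
    obtain ⟨κ, hκ, hU⟩ := exists_wronskian_ne_zero ψ hψ
    simp only [Finset.univ_unique, Fin.default_eq_zero, Finset.sum_singleton] at hκ
    set V := (Matrix.of fun i j => hasse (μ i) (φ j)).det with hVdef
    set U := (Matrix.of fun i j => hasse (κ i) (ψ j)).det with hUdef
    set Wm : Matrix (Fin l) (Fin l) (MvPolynomial (Fin (m + 1)) ℤ) :=
      Matrix.of fun i k => hasse (Finsupp.cons (κ k 0) (μ i)) p with hWm
    set W := Wm.det with hW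
    have hWUV : map (Int.castRingHom ℚ) W = ten V U := by
      rw [hW, RingHom.map_det]
      have : (map (Int.castRingHom ℚ)).mapMatrix Wm =
          ((rename Fin.succ).mapMatrix (Matrix.of fun i j => hasse (μ i) (φ j))) *
          ((rename (fun _ : Fin 1 => (0 : Fin (m + 1)))).mapMatrix
            (Matrix.of fun i j => hasse (κ i) (ψ j))).transpose := by
        ext1 i k
        rw [RingHom.mapMatrix_apply, Matrix.map_apply, Matrix.mul_apply, hWm, Matrix.of_apply,
          ← hasse_map, ← hpQ, hdec, hasse_sum]
        refine Finset.sum_congr rfl fun j _ => ?_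
        rw [hasse_ten]; rfl
      rw [this, Matrix.det_mul, Matrix.det_transpose, ← AlgHom.map_det, ← AlgHom.map_det]
      rfl
    obtain ⟨sV, hsV⟩ := MvPolynomial.ne_zero_iff.1 hV
    obtain ⟨tU, htU⟩ := MvPolynomial.ne_zero_iff.1 hU
    have htU' : tU = Finsupp.single 0 (tU 0) := fin1_ext (by simp)
    -- integral multiples of `V` and `U` occur among the slices of `W`
    obtain ⟨V', hV'⟩ := exists_slice _ (Finsupp.cons_right_injective (n := m) (tU 0)) W
    have hginj : Function.Injective fun u : Fin 1 →₀ ℕ => Finsupp.cons (u 0) sV := by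
      intro u v h
      have := DFunLike.congr_fun h 0
      exact fin1_ext (by simpa using this)
    obtain ⟨U', hU'⟩ := exists_slice _ hginj W
    have hWc : ∀ t, ((coeff t W : ℤ) : ℚ) = coeff t.tail V * coeff (Finsupp.single 0 (t 0)) U := by
      intro t
      rw [← coeff_ten, ← hWUV, coeff_map]; rfl
    have hVV : map (Int.castRingHom ℚ) V' = C (coeff tU U) * V := by
      ext s
      rw [coeff_map, hV', coeff_C_mul, eq_intCast, hWc]
      simp only [Finsupp.tail_cons, Finsupp.cons_zero]
      rw [← htU', mul_comm]
    have hUU : map (Int.castRingHom ℚ) U' = C (coeff sV V) * U := by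
      ext u
      rw [coeff_map, hU', coeff_C_mul, eq_intCast, hWc]
      simp only [Finsupp.tail_cons, Finsupp.cons_zero]
      rw [← fin1_ext (u := u) (v := Finsupp.single 0 (u 0)) (by simp)]
    have hV'0 : V' ≠ 0 := by
      intro h
      rw [h, map_zero] at hVV
      exact mul_ne_zero (C_ne_zero.2 htU) hV hVV.symm
    have hU'0 : U' ≠ 0 := by
      intro h
      rw [h, map_zero] at hUU
      exact mul_ne_zero (C_ne_zero.2 hsV) hU hUU.symm
    have hW0 : W ≠ 0 := by
      intro h
      apply hV'0
      ext s; rw [hV', h]; simp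
    -- the height of `W`
    have hlR : (0 : ℝ) < l := by exact_mod_cast hl0
    have hlp : 0 ≤ Real.log (l1 (normRingSeminorm ℤ) p) := Real.log_nonneg (one_le_l1 hp)
    have hν1 : (normRingSeminorm ℤ) 1 ≤ 1 := by
      change ‖(1 : ℤ)‖ ≤ 1; simp
    have hWh : Real.log (l1 (normRingSeminorm ℤ) W) ≤
        l * ((m + 2) * R + Real.log (l1 (normRingSeminorm ℤ) p)) := by
      have h1 : l1 (normRingSeminorm ℤ) W ≤
          l.factorial * (2 ^ (∑ i, r i) * l1 (normRingSeminorm ℤ) p) ^ l :=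
        l1_det _ hν1 Wm fun i k => l1_hasse_le _ hν1 _ hdeg
      have hpos : 0 < l1 (normRingSeminorm ℤ) p := lt_of_lt_of_le one_pos (one_le_l1 hp)
      have h2 := Real.log_le_log (lt_of_lt_of_le one_pos (one_le_l1 hW0)) h1
      rw [Real.log_mul (by positivity) (by positivity), Real.log_pow,
        Real.log_mul (by positivity) (by positivity), Real.log_pow] at h2
      have h3 : Real.log l.factorial ≤ l * R := by
        have h4 : (l.factorial : ℝ) ≤ (l : ℝ) ^ l := by exact_mod_cast Nat.factorial_le_pow l
        have h5 := Real.log_le_log (by positivity) h4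
        rw [Real.log_pow] at h5
        have h6 : Real.log l ≤ l - 1 := Real.log_le_sub_one_of_pos hlR
        have h7 : (l : ℝ) - 1 ≤ r 0 := by
          have : (l : ℝ) ≤ r 0 + 1 := by exact_mod_cast hl1
          linarith
        have := hrR 0
        nlinarith
      have h8 : ((∑ i, r i : ℕ) : ℝ) ≤ (m + 1) * R := by
        push_cast
        refine (Finset.sum_le_sum fun i _ => hrR i).trans ?_
        simp
      have h9 : Real.log 2 ≤ 1 := by
        have := Real.log_two_lt_d9; linarith
      have h10 : ((∑ i, r i : ℕ) : ℝ) * Real.log 2 ≤ (m + 1) * R := by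
        have : (0 : ℝ) ≤ ((∑ i, r i : ℕ) : ℝ) := Nat.cast_nonneg _
        nlinarith
      nlinarith
    have hWa : Real.log (l1 (normRingSeminorm ℤ) W) ≤ l * (ω * a - K' * R) := by
      refine hWh.trans (mul_le_mul_of_nonneg_left ?_ hlR.le)
      linarith
    have ha0 : 0 < a := by
      have : 0 < ω * a := lt_of_lt_of_le (by positivity) hK
      exact pos_of_mul_pos_right this hωp.le
    have hl1le : ∀ {x y : ℝ}, 1 ≤ x → x ≤ y → Real.log x ≤ Real.log y := fun hx hxy =>
      Real.log_le_log (by linarith) hxy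
    -- induction hypothesis for `V'`
    have hlowV := IH V' (fun h => l * r h.succ) (fun h => ξ h.succ) (l * a) (l * R) hV'0
      (fun h => Nat.mul_pos hl0 (hr1 _))
      (fun h => by
        have h1 : degreeOf h.succ W ≤ l * r h.succ :=
          degreeOf_det_le Wm _ _ fun i k => (degreeOf_hasse_le _ _ _).trans (hdeg _)
        rw [degreeOf_le_iff] at h1 ⊢
        intro s hs
        rw [mem_support_iff, hV'] at hs
        simpa using h1 _ (mem_support_iff.2 hs))
      (fun h h' hh => by
        push_cast
        have h1 := hord h.succ h'.succ (Fin.succ_lt_succ_iff.2 hh)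
        have h2 : ω * r h'.succ ≤ ω' * r h'.succ :=
          mul_le_mul_of_nonneg_right (min_le_left _ _) (Nat.cast_nonneg _)
        nlinarith)
      (fun h => by push_cast; exact mul_le_mul_of_nonneg_left (hrR _) hlR.le)
      (by have : (1 : ℝ) ≤ l := by exact_mod_cast hl0
          nlinarith)
      (fun h => by push_cast; rw [mul_assoc]; exact mul_le_mul_of_nonneg_left (ha _) hlR.le)
      (by
        have h1 := hl1le (one_le_l1 hV'0)
          (l1_slice_le (normRingSeminorm ℤ) _ (Finsupp.cons_right_injective (n := m) (tU 0)) hV')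
        have h2 : ω * a ≤ ω' * a := mul_le_mul_of_nonneg_right (min_le_left _ _) ha0.le
        nlinarith)
    unfold Low at hlowV
    push Not at hlowV
    obtain ⟨s, hs0, hs⟩ := hlowV
    rw [hVV, map_mul] at hs0
    have hs1 : coeff s (shift (fun h => ξ h.succ) V) ≠ 0 := by
      intro h
      apply hs0
      have : shift (fun h => ξ h.succ) (C (coeff tU U) : MvPolynomial (Fin m) ℚ) = C (coeff tU U) := by
        simp [shift]
      rw [this, coeff_C_mul, h, mul_zero]
    -- one variable estimate for `U'`
    obtain ⟨i, hi0, hi⟩ := one_var U' hU'0 (ξ 0)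
    rw [hUU, map_mul] at hi0
    have hi1 : coeff (Finsupp.single 0 i) (shift (fun _ => ξ 0) U) ≠ 0 := by
      intro h
      apply hi0
      have : shift (fun _ => ξ 0) (C (coeff sV V) : MvPolynomial (Fin 1) ℚ) = C (coeff sV V) := by
        simp [shift]
      rw [this, coeff_C_mul, h, mul_zero]
    have hr0 : (0 : ℝ) < r 0 := by exact_mod_cast hr1 0
    have hib : (i : ℝ) ≤ l * ω * r 0 := by
      have hden : (1 : ℝ) ≤ (ξ 0).den := by exact_mod_cast (ξ 0).den_pos
      have h1 := hl1le (one_le_pow₀ hden) (hi.trans (l1_slice_le (normRingSeminorm ℤ) _ hginj hU'))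
      rw [Real.log_pow] at h1
      have h2 : 0 < Real.log (ξ 0).den := by
        have := ha 0
        exact pos_of_mul_pos_right (lt_of_lt_of_le ha0 this) hr0.le
      have h3 : (i : ℝ) * Real.log (ξ 0).den ≤ (l * ω * r 0) * Real.log (ξ 0).den := by
        have h4 := ha 0
        have h5 : 0 ≤ K' * R := by positivity
        have h6 : l * (ω * a) ≤ l * (ω * (r 0 * Real.log (ξ 0).den)) := by gcongr
        nlinarith
      exact le_of_mul_le_mul_right h3 h2
    -- lower bound for the index of `W`
    set w : Fin (m + 1) → ℝ := fun h => 1 / (r h : ℝ) with hw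
    have hwn : ∀ h, 0 ≤ w h := fun h => by positivity
    have hent : ∀ j k, Low w (max 0 (ε1 / 2 - (κ k 0 : ℝ) / r 0))
        (hasse (Finsupp.cons (κ k 0) (μ j)) (shift ξ pQ)) := by
      intro j k
      rcases max_choice 0 (ε1 / 2 - (κ k 0 : ℝ) / r 0) with h | h
      · rw [h]; exact Low.of_nonneg hwn _
      · rw [h]
        refine (hlow.hasse _).mono ?_
        rw [Fin.sum_univ_succ]
        simp only [Finsupp.cons_zero, Finsupp.cons_succ]
        have h1 : ∑ x : Fin m, (μ j x : ℝ) * w x.succ ≤ ω := by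
          have h2 : ∀ x ∈ (Finset.univ : Finset (Fin m)),
              (μ j x : ℝ) * w x.succ ≤ (μ j x : ℝ) * (ω / r 0) := by
            intro x _
            refine mul_le_mul_of_nonneg_left ?_ (Nat.cast_nonneg _)
            have h3 := hord 0 x.succ (Fin.succ_pos x)
            have h4 : (0 : ℝ) < r x.succ := by exact_mod_cast hr1 x.succ
            rw [hw, div_le_div_iff₀ h4 hr0]; linarith
          refine (Finset.sum_le_sum h2).trans ?_
          rw [← Finset.sum_mul]
          have h5 : (∑ x, (μ j x : ℝ)) ≤ r 0 := by
            have := hμ j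
            exact_mod_cast (by omega : ∑ x, μ j x ≤ r 0)
          calc _ ≤ (r 0 : ℝ) * (ω / r 0) := by gcongr
            _ = ω := by field_simp
        have h6 : (κ k 0 : ℝ) * w 0 = (κ k 0 : ℝ) / r 0 := by rw [hw]; ring
        linarith
    have hlowW : Low w (∑ k, max 0 (ε1 / 2 - (κ k 0 : ℝ) / r 0))
        (shift ξ (map (Int.castRingHom ℚ) W)) := by
      have : shift ξ (map (Int.castRingHom ℚ) W) =
          (Matrix.of fun j k => hasse (Finsupp.cons (κ k 0) (μ j)) (shift ξ pQ)).det := by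
        rw [hW, RingHom.map_det, AlgHom.map_det]
        congr 1
        ext1 j k
        simp only [AlgHom.mapMatrix_apply, RingHom.mapMatrix_apply, Matrix.map_apply, hWm,
          Matrix.of_apply]
        rw [← hasse_map, ← hpQ, hasse_shift]
      rw [this]
      exact Low.det _ hent
    have hfin := hlowW (Finsupp.cons i s) (by
      rw [hWUV, shift_ten, coeff_ten]
      simp only [Finsupp.tail_cons, Finsupp.cons_zero]
      exact mul_ne_zero hs1 hi1)
    rw [Fin.sum_univ_succ] at hfin
    simp only [Finsupp.cons_zero, Finsupp.cons_succ] at hfin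
    have hs2 : ∑ x : Fin m, (s x : ℝ) * w x.succ < l * (ε1 ^ 2 / 64) := by
      have h1 : ∑ x : Fin m, (s x : ℝ) * (1 / ((l * r x.succ : ℕ) : ℝ)) =
          (∑ x : Fin m, (s x : ℝ) * w x.succ) / l := by
        rw [Finset.sum_div]
        refine Finset.sum_congr rfl fun x _ => ?_
        rw [hw]; push_cast
        have h4 : (0 : ℝ) < r x.succ := by exact_mod_cast hr1 x.succ
        field_simp
      rw [h1, div_lt_iff₀ hlR] at hs
      linarith
    have hi2 : (i : ℝ) * w 0 ≤ l * ω := by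
      rw [hw]
      have : (i : ℝ) * (1 / (r 0 : ℝ)) = i / r 0 := by ring
      rw [this, div_le_iff₀ hr0]; exact hib
    have hκinj : Function.Injective fun k => (⟨κ k 0, hκ k⟩ : Fin l) := by
      intro k k' h
      by_contra hne
      have h1 : κ k = κ k' := fin1_ext (by simpa using h)
      apply hU
      exact Matrix.det_zero_of_row_eq hne (by ext1 j; simp [h1])
    have hbij := Finite.injective_iff_bijective.1 hκinj
    have hsum : ∑ k, max 0 (ε1 / 2 - (κ k 0 : ℝ) / r 0) =
        ∑ k ∈ Finset.range l, max 0 (ε1 / 2 - (k : ℝ) / r 0) := by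
      rw [Finset.sum_range fun k : ℕ => max 0 (ε1 / 2 - (k : ℝ) / r 0)]
      exact hbij.sum_comp fun k : Fin l => max 0 (ε1 / 2 - ((k : ℕ) : ℝ) / r 0)
    have hge := sum_max_ge (l := l) (r := r 0) (η := ε1 / 2) (by positivity) (by linarith) (hr1 0) hl1
    rw [hsum] at hfin
    have e1 : (l : ℝ) * ω ≤ l * (ε1 ^ 2 / 64) := mul_le_mul_of_nonneg_left hω2 hlR.le
    have e2 : (l : ℝ) * (ε1 / 2) ^ 2 / 8 = l * (ε1 ^ 2 / 64) + l * (ε1 ^ 2 / 64) := by ring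
    linarith

end APC

namespace APC

open MvPolynomial

/-! ### Orders in the real algebraic integers -/

section Order

attribute [local instance] Matrix.linftyOpNormedRing Matrix.linftyOpNormedAddCommGroup in
/-- The ring seminorm obtained from an integral matrix representation. -/
noncomputable def opSem {O : Type*} [CommRing O] {D : ℕ}
    (ρ : O →+* Matrix (Fin D) (Fin D) ℤ) : RingSeminorm O where
  toFun x := ‖ρ x‖
  map_zero' := by simp
  add_le' x y := by rw [map_add]; exact norm_add_le _ _
  neg' x := by rw [map_neg]; exact norm_neg _
  mul_le' x y := by rw [map_mul]; exact norm_mul_le _ _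

attribute [local instance] Matrix.linftyOpNormedRing Matrix.linftyOpNormedAddCommGroup in
lemma opSem_one {O : Type*} [CommRing O] {D : ℕ}
    (ρ : O →+* Matrix (Fin D) (Fin D) ℤ) : opSem ρ 1 ≤ 1 := by
  change ‖ρ 1‖ ≤ 1
  rw [map_one]
  rcases Nat.eq_zero_or_pos D with rfl | h
  · rw [Matrix.linfty_opNorm_def]; simp
  · have : Nonempty (Fin D) := ⟨⟨0, h⟩⟩
    rw [Matrix.linfty_opNormOneClass.norm_one]

attribute [local instance] Matrix.linftyOpNormedRing Matrix.linftyOpNormedAddCommGroup in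
lemma entry_le_opSem {O : Type*} [CommRing O] {D : ℕ}
    (ρ : O →+* Matrix (Fin D) (Fin D) ℤ) (x : O) (i j : Fin D) :
    ((|ρ x i j| : ℤ) : ℝ) ≤ opSem ρ x := by
  change _ ≤ ‖ρ x‖
  rw [Matrix.linfty_opNorm_def]
  have h1 : ‖ρ x i j‖₊ ≤ ∑ j, ‖ρ x i j‖₊ :=
    Finset.single_le_sum (f := fun j => ‖ρ x i j‖₊) (fun _ _ => zero_le) (Finset.mem_univ j)
  have h2 : ∑ j, ‖ρ x i j‖₊ ≤ Finset.univ.sup fun i => ∑ j, ‖ρ x i j‖₊ :=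
    Finset.le_sup (f := fun i => ∑ j, ‖ρ x i j‖₊) (Finset.mem_univ i)
  have h3 := h1.trans h2
  have h4 : (‖ρ x i j‖₊ : ℝ) ≤ ((Finset.univ.sup fun i => ∑ j, ‖ρ x i j‖₊ : NNReal) : ℝ) := by
    exact_mod_cast h3
  rw [coe_nnnorm, Int.norm_eq_abs] at h4
  exact_mod_cast h4

/-- Finitely many real algebraic integers lie in a subring with a faithful integral matrix
representation. -/
lemma exists_order {S : Set ℝ} (hS : S.Finite) (hinteg : ∀ x ∈ S, IsIntegral ℤ x) :
    ∃ (O : Subalgebra ℤ ℝ) (D : ℕ) (ρ : O →+* Matrix (Fin D) (Fin D) ℤ),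
      0 < D ∧ Function.Injective ρ ∧ S ⊆ O := by
  have h1 := Algebra.finite_adjoin_of_finite_of_isIntegral hS hinteg
  have h2 : Module.Free ℤ (Algebra.adjoin ℤ S) := Module.free_of_finite_type_torsion_free'
  exact ⟨Algebra.adjoin ℤ S, Module.finrank ℤ (Algebra.adjoin ℤ S),
    (Algebra.leftMulMatrix (Module.finBasis ℤ (Algebra.adjoin ℤ S))).toRingHom,
    Module.finrank_pos, Algebra.leftMulMatrix_injective _, Algebra.subset_adjoin⟩

end Order

/-! ### Counting monomials -/

section Count
variable {ι : Type*} [Fintype ι] [DecidableEq ι]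

lemma sum_coord_eq (r : ℕ) (k k' : ι) :
    ∑ j ∈ Finset.piAntidiag (Finset.univ : Finset ι) r, (j k : ℝ) =
      ∑ j ∈ Finset.piAntidiag (Finset.univ : Finset ι) r, (j k' : ℝ) := by
  refine Finset.sum_nbij' (fun j => j ∘ Equiv.swap k k') (fun j => j ∘ Equiv.swap k k') ?_ ?_ ?_ ?_ ?_
  · intro j hj
    rw [Finset.mem_piAntidiag] at hj ⊢
    refine ⟨?_, by simp⟩
    rw [← hj.1]
    exact Equiv.sum_comp (Equiv.swap k k') j
  · intro j hj
    rw [Finset.mem_piAntidiag] at hj ⊢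
    refine ⟨?_, by simp⟩
    rw [← hj.1]
    exact Equiv.sum_comp (Equiv.swap k k') j
  · intro j _; ext x; simp
  · intro j _; ext x; simp
  · intro j _; simp

/-- By symmetry, the average of `∑ k, e k * j k / r` over all exponents `j` of degree `r` is the mean
of `e`. -/
lemma mean_eq (e : ι → ℝ) {r : ℕ} (hr : 1 ≤ r) :
    (Fintype.card ι : ℝ) * ∑ j ∈ Finset.piAntidiag (Finset.univ : Finset ι) r,
      ∑ k, e k * j k / r = (Finset.piAntidiag (Finset.univ : Finset ι) r).card * ∑ k, e k := by
  have hr0 : (r : ℝ) ≠ 0 := by positivity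
  rw [Finset.sum_comm, Finset.mul_sum, Finset.mul_sum]
  refine Finset.sum_congr rfl fun k _ => ?_
  have h1 : ∑ k', ∑ j ∈ Finset.piAntidiag (Finset.univ : Finset ι) r, (j k' : ℝ) =
      (Finset.piAntidiag (Finset.univ : Finset ι) r).card * r := by
    rw [Finset.sum_comm, ← nsmul_eq_mul]
    refine Finset.sum_eq_card_nsmul fun j hj => ?_
    rw [Finset.mem_piAntidiag] at hj
    exact_mod_cast hj.1
  rw [Finset.sum_congr rfl fun k' _ => sum_coord_eq r k' k, Finset.sum_const, nsmul_eq_mul,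
    Finset.card_univ] at h1
  rw [← Finset.sum_div, ← Finset.mul_sum]
  field_simp
  linear_combination e k * h1

/-- A Chernoff bound: choosing a monomial of degree `r h` in each of `m` blocks at random, the
average of `e` has negative mean, so the proportion of monomials violating a fixed negative bound
decays exponentially in `m`. -/
lemma exists_bad_count (e : ι → ℝ) (he : ∑ k, e k < 0) :
    ∃ c θ : ℝ, 0 < c ∧ 0 < θ ∧ θ < 1 ∧ ∀ (m : ℕ) (r : Fin m → ℕ), (∀ h, 1 ≤ r h) →
      (((Fintype.piFinset fun h => Finset.piAntidiag (Finset.univ : Finset ι) (r h)).filter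
        fun j => -c * m < ∑ h, ∑ k, e k * j h k / r h).card : ℝ) ≤
      θ ^ m * (Fintype.piFinset fun h => Finset.piAntidiag (Finset.univ : Finset ι) (r h)).card := by
  have hne : Nonempty ι := by
    by_contra h
    rw [not_nonempty_iff] at h
    simp at he
  set N : ℝ := (Fintype.card ι : ℝ) with hN
  have hNp : 0 < N := by rw [hN]; exact_mod_cast Fintype.card_pos
  set δ := -(∑ k, e k) / N with hδ
  have hδp : 0 < δ := div_pos (by linarith) hNp
  set E := 1 + ∑ k, |e k| with hE
  have hEp : 1 ≤ E := by
    have : 0 ≤ ∑ k, |e k| := Finset.sum_nonneg fun _ _ => abs_nonneg _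
    linarith
  have heE : ∀ k, |e k| ≤ E := fun k => by
    have := Finset.single_le_sum (f := fun k => |e k|) (fun _ _ => abs_nonneg _) (Finset.mem_univ k)
    linarith
  set l := min (1 / E) (δ / (2 * E ^ 2)) with hl
  have hlp : 0 < l := lt_min (by positivity) (by positivity)
  have hl1 : l * E ≤ 1 := by
    have := min_le_left (1 / E) (δ / (2 * E ^ 2))
    rw [← hl, le_div_iff₀ (by linarith)] at this
    exact this
  have hl2 : l * E ^ 2 ≤ δ / 2 := by
    have := min_le_right (1 / E) (δ / (2 * E ^ 2))
    rw [← hl, le_div_iff₀ (by positivity)] at this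
    linarith
  refine ⟨δ / 4, Real.exp (-(l * δ / 4)), by positivity, Real.exp_pos _,
    Real.exp_lt_one_iff.2 (by have := mul_pos hlp hδp; linarith), ?_⟩
  intro m r hr
  set J := fun h => Finset.piAntidiag (Finset.univ : Finset ι) (r h) with hJ
  set F : Fin m → (ι → ℕ) → ℝ := fun h j => ∑ k, e k * j k / r h with hF
  have hFE : ∀ h, ∀ j ∈ J h, |F h j| ≤ E := by
    intro h j hj
    rw [hJ] at hj
    simp only [Finset.mem_piAntidiag] at hj
    have hr0 : (0 : ℝ) < r h := by exact_mod_cast hr h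
    refine (Finset.abs_sum_le_sum_abs _ _).trans ?_
    calc ∑ k, |e k * j k / r h| ≤ ∑ k, E * (j k / r h) := by
          refine Finset.sum_le_sum fun k _ => ?_
          rw [mul_div_assoc, abs_mul, abs_of_nonneg (by positivity : 0 ≤ (j k : ℝ) / r h)]
          exact mul_le_mul_of_nonneg_right (heE k) (by positivity)
      _ = E := by
          rw [← Finset.mul_sum, ← Finset.sum_div]
          have : (∑ k, (j k : ℝ)) = r h := by exact_mod_cast hj.1
          rw [this, div_self hr0.ne', mul_one]
  have hexp : ∀ h, ∑ j ∈ J h, Real.exp (l * F h j) ≤ (J h).card * Real.exp (-(l * δ / 2)) := by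
    intro h
    have h1 : ∀ j ∈ J h, Real.exp (l * F h j) ≤ 1 + l * F h j + l ^ 2 * E ^ 2 := by
      intro j hj
      have h2 := hFE h j hj
      have h3 : |l * F h j| ≤ 1 := by
        rw [abs_mul, abs_of_pos hlp]
        exact (mul_le_mul_of_nonneg_left h2 hlp.le).trans hl1
      have h4 := (abs_le.1 (Real.abs_exp_sub_one_sub_id_le h3)).2
      have h5 : (F h j) ^ 2 ≤ E ^ 2 := sq_le_sq' (abs_le.1 h2).1 (abs_le.1 h2).2
      have h6 : l ^ 2 * F h j ^ 2 ≤ l ^ 2 * E ^ 2 := by gcongr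
      nlinarith
    refine (Finset.sum_le_sum h1).trans ?_
    rw [Finset.sum_add_distrib, Finset.sum_add_distrib, ← Finset.mul_sum]
    simp only [Finset.sum_const, nsmul_eq_mul, mul_one]
    have h7 : ∑ j ∈ J h, F h j = -δ * (J h).card := by
      have h8 := mean_eq e (hr h)
      have h9 : N * ∑ j ∈ J h, F h j = N * (-δ * (J h).card) := by
        have : N * (-δ * (J h).card) = (J h).card * ∑ k, e k := by
          rw [hδ]; field_simp
        rw [this]; exact h8
      exact mul_left_cancel₀ hNp.ne' h9
    rw [h7]
    have h10 : 1 - l * δ / 2 ≤ Real.exp (-(l * δ / 2)) := by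
      have := Real.add_one_le_exp (-(l * δ / 2)); linarith
    have h11 : (0 : ℝ) ≤ (J h).card := Nat.cast_nonneg _
    have h12 : l ^ 2 * E ^ 2 ≤ l * (δ / 2) := by
      have := mul_le_mul_of_nonneg_left hl2 hlp.le; nlinarith
    nlinarith [mul_le_mul_of_nonneg_left h10 h11, mul_le_mul_of_nonneg_left h12 h11]
  calc (((Fintype.piFinset J).filter fun j => -(δ / 4) * m < ∑ h, F h (j h)).card : ℝ)
      = ∑ j ∈ (Fintype.piFinset J).filter fun j => -(δ / 4) * m < ∑ h, F h (j h), (1 : ℝ) := by simp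
    _ ≤ ∑ j ∈ (Fintype.piFinset J).filter fun j => -(δ / 4) * m < ∑ h, F h (j h),
          Real.exp (l * (δ / 4) * m) * ∏ h, Real.exp (l * F h (j h)) := by
        refine Finset.sum_le_sum fun j hj => ?_
        rw [← Real.exp_sum, ← Real.exp_add]
        refine Real.one_le_exp ?_
        rw [← Finset.mul_sum]
        have := mul_le_mul_of_nonneg_left (Finset.mem_filter.1 hj).2.le hlp.le
        nlinarith
    _ ≤ ∑ j ∈ Fintype.piFinset J, Real.exp (l * (δ / 4) * m) * ∏ h, Real.exp (l * F h (j h)) := by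
        refine Finset.sum_le_sum_of_subset_of_nonneg (Finset.filter_subset _ _) fun j _ _ => ?_
        positivity
    _ = Real.exp (l * (δ / 4) * m) * ∏ h, ∑ j ∈ J h, Real.exp (l * F h j) := by
        rw [← Finset.mul_sum, Finset.prod_univ_sum]
    _ ≤ Real.exp (l * (δ / 4) * m) * ∏ h, ((J h).card * Real.exp (-(l * δ / 2))) := by
        gcongr with h _
        exact hexp h
    _ = Real.exp (-(l * δ / 4)) ^ m * (Fintype.piFinset J).card := by
        rw [Finset.prod_mul_distrib, Fintype.card_piFinset, Finset.prod_const, Finset.card_univ,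
          Fintype.card_fin, ← Real.exp_nat_mul, ← Real.exp_nat_mul]
        push_cast
        rw [mul_comm (∏ h, _) (Real.exp _), ← mul_assoc, ← Real.exp_add]
        congr 2
        ring

end Count

/-! ### The auxiliary polynomial -/

section Aux
variable {ι : Type*} [Fintype ι] [DecidableEq ι]

lemma l1_aeval_le {σ τ R : Type*} [CommRing R] (ν : RingSeminorm R) (h1 : ν 1 ≤ 1)
    (g : σ → MvPolynomial τ R) {B : ℝ} (hB : 1 ≤ B) (hg : ∀ x, l1 ν (g x) ≤ B)
    (hinteg : ∀ n : ℤ, ν (n : R) ≤ ‖n‖)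
    (p : MvPolynomial σ ℤ) {n : ℕ} (hn : ∀ s ∈ p.support, (s.sum fun _ k => k) ≤ n) :
    l1 ν (aeval g p) ≤ l1 (normRingSeminorm ℤ) p * B ^ n := by
  have e0 : l1 (normRingSeminorm ℤ) p * B ^ n =
      ∑ s ∈ p.support, (normRingSeminorm ℤ) (coeff s p) * B ^ n := by rw [l1, Finset.sum_mul]
  rw [aeval_def, eval₂_eq, e0]
  refine (l1_sum _ _ _).trans (Finset.sum_le_sum fun s hs => ?_)
  refine (l1_mul _ _ _).trans ?_
  have e1 : algebraMap ℤ (MvPolynomial τ R) (coeff s p) = C ((coeff s p : ℤ) : R) := by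
    simp
  rw [e1, l1_C]
  refine mul_le_mul (hinteg _) ?_ (l1_nonneg _ _) (apply_nonneg _ _)
  refine (l1_prod ν h1 _ _).trans ?_
  calc ∏ i ∈ s.support, l1 ν (g i ^ s i) ≤ ∏ i ∈ s.support, B ^ s i := by
        refine Finset.prod_le_prod (fun _ _ => l1_nonneg _ _) fun i _ => ?_
        exact (l1_pow ν h1 _ _).trans (pow_le_pow_left₀ (l1_nonneg _ _) (hg i) _)
    _ = B ^ (s.sum fun _ k => k) := by rw [Finset.prod_pow_eq_pow_sum]; rfl
    _ ≤ B ^ n := pow_le_pow_right₀ hB (hn s hs)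

/-- The multidegree weights: the variable `(h, i)` has degree one in block `h`. -/
def blk (m : ℕ) (ι : Type*) : Fin m × ι → (Fin m → ℕ) := fun x => Pi.single x.1 1

lemma weight_blk {m : ℕ} (s : Fin m × ι →₀ ℕ) (h : Fin m) :
    Finsupp.weight (blk m ι) s h = ∑ i, s (h, i) := by
  rw [Finsupp.weight_apply, Finsupp.sum_fintype _ _ (by simp), Finset.sum_apply,
    Fintype.sum_prod_type]
  rw [Finset.sum_eq_single h]
  · simp [blk]
  · intro b _ hb
    simp [blk, Pi.single_apply, Ne.symm hb]
  · simp

lemma sum_blk {m : ℕ} (s : Fin m × ι →₀ ℕ) :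
    (s.sum fun _ k => k) = ∑ h, ∑ i, s (h, i) := by
  rw [Finsupp.sum_fintype _ _ (by simp), Fintype.sum_prod_type]

/-- The linear substitution given by `M` in each block of variables. -/
noncomputable def lsub {R : Type*} [CommRing R] (m : ℕ) (M : Matrix ι ι R) :
    MvPolynomial (Fin m × ι) ℤ →ₐ[ℤ] MvPolynomial (Fin m × ι) R :=
  aeval fun x => ∑ k, C (M x.2 k) * X (x.1, k)

lemma lsub_homog {R : Type*} [CommRing R] {m : ℕ} (M : Matrix ι ι R) {r : Fin m → ℕ}
    (p : MvPolynomial (Fin m × ι) ℤ) (hp : IsWeightedHomogeneous (blk m ι) p r) :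
    IsWeightedHomogeneous (blk m ι) (lsub m M p) r := by
  rw [lsub, aeval_def, eval₂_eq]
  refine IsWeightedHomogeneous.sum _ _ _ fun s hs => ?_
  have e1 : algebraMap ℤ (MvPolynomial (Fin m × ι) R) (coeff s p) = C ((coeff s p : ℤ) : R) := by
    simp
  rw [e1]
  refine IsWeightedHomogeneous.C_mul ?_ _
  have h1 := IsWeightedHomogeneous.prod s.support
    (fun x => (∑ k, C (M x.2 k) * X (x.1, k) : MvPolynomial (Fin m × ι) R) ^ s x)
    (fun x => s x • blk m ι x) (w := blk m ι) fun x _ => by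
      refine IsWeightedHomogeneous.pow ?_ _
      refine IsWeightedHomogeneous.sum _ _ _ fun k _ => ?_
      refine IsWeightedHomogeneous.C_mul ?_ _
      exact isWeightedHomogeneous_X R (blk m ι) (x.1, k)
  have h2 : ∑ x ∈ s.support, s x • blk m ι x = r := hp (mem_support_iff.1 hs)
  rwa [h2] at h1

/-- The exponent vector attached to a family of blocks. -/
noncomputable def expo {m : ℕ} (j : Fin m → ι → ℕ) : Fin m × ι →₀ ℕ :=
  Finsupp.equivFunOnFinite.symm fun x => j x.1 x.2

lemma expo_apply {m : ℕ} (j : Fin m → ι → ℕ) (h i) : expo j (h, i) = j h i := rfl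

lemma expo_inj {m : ℕ} : Function.Injective (expo (ι := ι) (m := m)) := by
  intro j j' h
  ext a b
  rw [← expo_apply j a b, h, expo_apply]

lemma expo_surj {m : ℕ} (s : Fin m × ι →₀ ℕ) : expo (fun h i => s (h, i)) = s := by
  ext ⟨h, i⟩; rfl

lemma card_piAntidiag_le (r : ℕ) :
    ((Finset.piAntidiag (Finset.univ : Finset ι) r).card : ℝ) ≤ (2 ^ Fintype.card ι) ^ r := by
  have h1 : Finset.piAntidiag (Finset.univ : Finset ι) r ⊆
      Fintype.piFinset fun _ => Finset.range (r + 1) := by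
    intro j hj
    rw [Finset.mem_piAntidiag] at hj
    rw [Fintype.mem_piFinset]
    intro i
    have := Finset.single_le_sum (f := j) (fun _ _ => Nat.zero_le _) (Finset.mem_univ i)
    exact Finset.mem_range.2 (Nat.lt_succ_of_le (this.trans hj.1.le))
  have h2 := Finset.card_le_card h1
  rw [Fintype.card_piFinset] at h2
  simp only [Finset.card_range, Finset.prod_const, Finset.card_univ] at h2
  have h3 : r + 1 ≤ 2 ^ r := Nat.lt_two_pow_self
  have h4 := h2.trans (Nat.pow_le_pow_left h3 _)
  rw [← pow_mul, mul_comm, pow_mul]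
  rw [← pow_mul] at h4 ⊢
  exact_mod_cast h4

attribute [local instance] Matrix.seminormedAddCommGroup in
/-- The auxiliary polynomial: a nonzero integral multihomogeneous polynomial of controlled height
which, in the coordinates given by `M`, involves only monomials of very negative `e`-weight.  It
comes from Siegel's lemma, since by `exists_bad_count` the unwanted monomials impose few conditions. -/
theorem aux_poly (M : Matrix ι ι ℝ) (hM : ∀ i k, IsIntegral ℤ (M i k)) (e : ι → ℝ)
    (he : ∑ k, e k < 0) :
    ∃ (m : ℕ) (c C : ℝ), 0 < m ∧ 0 < c ∧ 1 ≤ C ∧ ∀ r : Fin m → ℕ, (∀ h, 1 ≤ r h) →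
      ∃ p : MvPolynomial (Fin m × ι) ℤ, p ≠ 0 ∧ IsWeightedHomogeneous (blk m ι) p r ∧
        l1 (normRingSeminorm ℤ) p ≤ C ^ (∑ h, r h) ∧
        l1 (normRingSeminorm ℝ) (lsub m M p) ≤ C ^ (∑ h, r h) ∧
        ∀ s ∈ (lsub m M p).support, ∑ h, ∑ k, e k * s (h, k) / r h ≤ -c * m := by
  obtain ⟨O, D, ρ, hD, hρ, hMO⟩ := exists_order (S := Set.range fun x : ι × ι => M x.1 x.2)
    (Set.finite_range _) (by rintro _ ⟨x, rfl⟩; exact hM _ _)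
  have hMO' : ∀ i k, M i k ∈ O := fun i k => hMO ⟨(i, k), rfl⟩
  set MO : Matrix ι ι O := fun i k => ⟨M i k, hMO' i k⟩ with hMOdef
  set ν := opSem ρ with hν
  have hν1 : ν 1 ≤ 1 := opSem_one ρ
  have hνint : ∀ n : ℤ, ν (n : O) ≤ ‖n‖ := by
    intro n
    have h1 : ∀ n : ℕ, ν (n : O) ≤ n := by
      intro n
      induction n with
      | zero => simp
      | succ n ih =>
        push_cast
        exact (map_add_le_add _ _ _).trans (add_le_add ih hν1)
    rw [Int.norm_eq_abs]
    rcases le_total 0 n with h | h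
    · lift n to ℕ using h
      simpa using h1 n
    · obtain ⟨k, hk⟩ : ∃ k : ℕ, n = -k := ⟨n.natAbs, by omega⟩
      subst hk
      simpa using h1 k
  -- the height of a linear form in `O`
  set B : ℝ := 1 + ∑ i, ∑ k, (ν (MO i k) + |M i k|) with hB
  have hterm : ∀ i k, 0 ≤ ν (MO i k) + |M i k| := fun i k =>
    add_nonneg (apply_nonneg _ _) (abs_nonneg _)
  have hB1 : 1 ≤ B := by
    have : 0 ≤ ∑ i, ∑ k, (ν (MO i k) + |M i k|) :=
      Finset.sum_nonneg fun i _ => Finset.sum_nonneg fun k _ => hterm i k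
    linarith
  have hBi : ∀ i, ∑ k, (ν (MO i k) + |M i k|) ≤ B := by
    intro i
    have := Finset.single_le_sum (f := fun i => ∑ k, (ν (MO i k) + |M i k|))
      (fun i _ => Finset.sum_nonneg fun k _ => hterm i k) (Finset.mem_univ i)
    linarith
  have hlin : ∀ {R : Type} [CommRing R] (ν' : RingSeminorm R) (h1 : ν' 1 ≤ 1) (A : Matrix ι ι R)
      (hA : ∀ i k, ν' (A i k) ≤ ν (MO i k) + |M i k|) (m : ℕ) (x : Fin m × ι),
      l1 ν' (∑ k, C (A x.2 k) * X (x.1, k) : MvPolynomial (Fin m × ι) R) ≤ B := by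
    intro R _ ν' h1 A hA m x
    refine (l1_sum _ _ _).trans (le_trans (Finset.sum_le_sum fun k _ => ?_) (hBi x.2))
    refine le_trans ?_ (hA x.2 k)
    rw [C_mul_X_eq_monomial, l1_monomial]
  obtain ⟨c, θ, hc, hθ, hθ1, hbad⟩ := exists_bad_count e he
  obtain ⟨m, hm⟩ := exists_pow_lt_of_lt_one (show (0 : ℝ) < 1 / (2 * D ^ 2) by positivity) hθ1
  have hm' : θ ^ (m + 1) ≤ 1 / (2 * D ^ 2) := by
    rw [pow_succ]
    have : 0 < θ ^ m := by positivity
    nlinarith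
  set n0 := m + 1 with hn0
  clear_value n0
  set C1 : ℝ := (2 ^ Fintype.card ι) * ((2 ^ Fintype.card ι) * B) with hC1
  have h2N : (1 : ℝ) ≤ 2 ^ Fintype.card ι := one_le_pow₀ (by norm_num)
  have hC11 : 1 ≤ C1 := by
    have := one_le_mul_of_one_le_of_one_le h2N hB1
    exact one_le_mul_of_one_le_of_one_le h2N this
  refine ⟨n0, c, C1 * B, by omega, hc, one_le_mul_of_one_le_of_one_le hC11 hB1, ?_⟩
  intro r hr
  set S := Fintype.piFinset fun h => Finset.piAntidiag (Finset.univ : Finset ι) (r h) with hS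
  set Bd := S.filter fun j => -c * n0 < ∑ h, ∑ k, e k * j h k / r h with hBd
  have hSmem : ∀ j, j ∈ S ↔ ∀ h, ∑ i, j h i = r h := by
    intro j
    simp [hS, Fintype.mem_piFinset, Finset.mem_piAntidiag]
  have hScard : (S.card : ℝ) ≤ (2 ^ Fintype.card ι) ^ (∑ h, r h) := by
    rw [hS, Fintype.card_piFinset, ← Finset.prod_pow_eq_pow_sum]
    push_cast
    exact Finset.prod_le_prod (fun _ _ => Nat.cast_nonneg _) fun h _ => card_piAntidiag_le _
  have hbad' : (2 * D ^ 2 * Bd.card : ℝ) ≤ S.card := by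
    have h1 := hbad n0 r hr
    have h2 : (Bd.card : ℝ) ≤ 1 / (2 * D ^ 2) * S.card :=
      h1.trans (mul_le_mul_of_nonneg_right hm' (Nat.cast_nonneg _))
    have hDp : (0 : ℝ) < 2 * D ^ 2 := by positivity
    rw [one_div, inv_mul_eq_div, le_div_iff₀ hDp] at h2
    linarith
  have hne : Nonempty ι := by
    by_contra h
    rw [not_nonempty_iff] at h
    simp at he
  have hSne : S.Nonempty := by
    rw [hS, Fintype.piFinset_nonempty]
    intro h
    obtain ⟨i0⟩ := hne
    exact ⟨Pi.single i0 (r h), by simp [Finset.mem_piAntidiag]⟩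
  -- coefficients of the auxiliary polynomial, from Siegel's lemma
  set mon : (Fin n0 → ι → ℕ) → MvPolynomial (Fin n0 × ι) O :=
    fun j => lsub n0 MO (monomial (expo j) 1) with hmon
  have htot : ∀ j ∈ S, ((expo j).sum fun _ k => k) = ∑ h, r h := by
    intro j hj
    rw [sum_blk]
    exact Finset.sum_congr rfl fun h _ => (hSmem j).1 hj h
  have hmonl : ∀ j ∈ S, l1 ν (mon j) ≤ B ^ (∑ h, r h) := by
    intro j hj
    have h1 := l1_aeval_le ν hν1 _ hB1 (hlin ν hν1 MO (fun i k => by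
      have := abs_nonneg (M i k); linarith) n0) hνint (monomial (expo j) (1 : ℤ))
      (n := ∑ h, r h) (fun s hs => by
        rw [support_monomial] at hs
        simp only [one_ne_zero, if_false, Finset.mem_singleton] at hs
        rw [hs, htot j hj])
    rw [l1_monomial] at h1
    have h2 : (normRingSeminorm ℤ) 1 = 1 := by change ‖(1 : ℤ)‖ = 1; simp
    rw [h2, one_mul] at h1
    exact h1
  have hsiegel : ∃ t : S → ℤ, t ≠ 0 ∧ (∀ j, ‖t j‖ ≤ ((2 ^ Fintype.card ι) * B) ^ (∑ h, r h)) ∧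
      ∀ b ∈ Bd, ∑ j : S, (t j : O) * coeff (expo b) (mon j) = 0 := by
    have h1C : (1 : ℝ) ≤ (2 ^ Fintype.card ι * B) ^ (∑ h, r h) :=
      one_le_pow₀ (one_le_mul_of_one_le_of_one_le h2N hB1)
    rcases Bd.eq_empty_or_nonempty with hB0 | hB0
    · obtain ⟨j0, hj0⟩ := hSne
      refine ⟨Pi.single ⟨j0, hj0⟩ 1, by simp, fun j => ?_, by simp [hB0]⟩
      refine le_trans ?_ h1C
      by_cases h : j = ⟨j0, hj0⟩
      · subst h; simp
      · simp [h]
    · set A : Matrix (Bd × (Fin D × Fin D)) S ℤ :=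
        fun b j => ρ (coeff (expo b.1) (mon j)) b.2.1 b.2.2 with hA
      have hcα : Fintype.card (Bd × (Fin D × Fin D)) = Bd.card * D ^ 2 := by
        simp [Fintype.card_prod, sq]
      have hcβ : Fintype.card S = S.card := by simp
      have hBp : 0 < Bd.card := Finset.card_pos.2 hB0
      have hnat : 2 * (Bd.card * D ^ 2) ≤ S.card := by
        have : (2 * (Bd.card * D ^ 2) : ℝ) ≤ S.card := by linarith
        exact_mod_cast this
      have hpos : 0 < Bd.card * D ^ 2 := by positivity
      obtain ⟨t, ht0, htA, htn⟩ := Int.Matrix.exists_ne_zero_int_vec_norm_le A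
        (by rw [hcα, hcβ]; omega) (by rw [hcα]; exact hpos)
      refine ⟨t, ht0, fun j => ?_, fun b hb => ?_⟩
      · refine (norm_le_pi_norm t j).trans (htn.trans ?_)
        rw [hcα, hcβ]
        have hA1 : max 1 ‖A‖ ≤ B ^ (∑ h, r h) := by
          refine max_le (one_le_pow₀ hB1) ?_
          rw [Matrix.norm_le_iff (by positivity)]
          rintro ⟨b, x, y⟩ j
          rw [Int.norm_eq_abs]
          have h1 := entry_le_opSem ρ (coeff (expo (b : Fin n0 → ι → ℕ)) (mon j)) x y
          push_cast at h1
          exact h1.trans ((coeff_le_l1 ν _ _).trans (hmonl j j.2))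
        have hbase : (S.card : ℝ) * max 1 ‖A‖ ≤ (2 ^ Fintype.card ι * B) ^ (∑ h, r h) := by
          rw [mul_pow]
          exact mul_le_mul hScard hA1 (by positivity) (by positivity)
        have hbase1 : 1 ≤ (S.card : ℝ) * max 1 ‖A‖ := by
          have : (1 : ℝ) ≤ S.card := by exact_mod_cast hSne.card_pos
          exact one_le_mul_of_one_le_of_one_le this (le_max_left _ _)
        refine le_trans ?_ hbase
        calc _ ≤ ((S.card : ℝ) * max 1 ‖A‖) ^ (1 : ℝ) := by
              refine Real.rpow_le_rpow_of_exponent_le hbase1 ?_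
              have h1 : (2 * ((Bd.card * D ^ 2 : ℕ) : ℝ)) ≤ S.card := by exact_mod_cast hnat
              have h2 : (0 : ℝ) < ((Bd.card * D ^ 2 : ℕ) : ℝ) := by exact_mod_cast hpos
              rw [div_le_one (by linarith)]
              linarith
          _ = _ := Real.rpow_one _
      · apply hρ
        rw [map_sum, map_zero]
        ext1 x y
        have h1 := congrFun htA (⟨b, hb⟩, x, y)
        rw [Matrix.mulVec, dotProduct] at h1
        rw [Matrix.sum_apply]
        simp only [Pi.zero_apply] at h1
        rw [Matrix.zero_apply, ← h1]
        refine Finset.sum_congr rfl fun j _ => ?_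
        rw [map_mul, map_intCast, ← zsmul_eq_mul, Matrix.smul_apply, hA, smul_eq_mul, mul_comm]
  obtain ⟨t, ht0, htn, htB⟩ := hsiegel
  set p : MvPolynomial (Fin n0 × ι) ℤ := ∑ j : S, monomial (expo j) (t j) with hp
  have hpc : ∀ j : S, coeff (expo j) p = t j := by
    intro j
    rw [hp, coeff_sum, Finset.sum_eq_single j]
    · simp
    · intro b _ hb
      rw [coeff_monomial, if_neg]
      intro h
      exact hb (Subtype.ext (expo_inj h))
    · simp
  have hph : IsWeightedHomogeneous (blk n0 ι) p r := by
    refine IsWeightedHomogeneous.sum _ _ _ fun j _ => ?_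
    refine isWeightedHomogeneous_monomial _ _ _ ?_
    ext h
    rw [weight_blk]
    exact (hSmem j).1 j.2 h
  have hpl : l1 (normRingSeminorm ℤ) p ≤ C1 ^ (∑ h, r h) := by
    refine (l1_sum _ _ _).trans ?_
    rw [hC1, mul_pow]
    calc ∑ j : S, l1 (normRingSeminorm ℤ) (monomial (expo j.1) (t j)) ≤
          ∑ j : S, ((2 ^ Fintype.card ι) * B) ^ (∑ h, r h) := by
          refine Finset.sum_le_sum fun j _ => ?_
          rw [l1_monomial]; exact htn j
      _ = S.card * ((2 ^ Fintype.card ι) * B) ^ (∑ h, r h) := by simp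
      _ ≤ _ := mul_le_mul_of_nonneg_right hScard (by positivity)
  have hC1C : C1 ^ (∑ h, r h) ≤ (C1 * B) ^ (∑ h, r h) :=
    pow_le_pow_left₀ (by linarith) (le_mul_of_one_le_right (by linarith) hB1) _
  refine ⟨p, ?_, hph, hpl.trans hC1C, ?_, ?_⟩
  · intro h0
    apply ht0
    ext j
    rw [← hpc, h0]; simp
  · have hR1 : (normRingSeminorm ℝ) 1 ≤ 1 := by change ‖(1 : ℝ)‖ ≤ 1; simp
    refine (l1_aeval_le _ hR1 _ hB1 (hlin _ hR1 M (fun i k => ?_) n0) ?_ p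
      (n := ∑ h, r h) ?_).trans ?_
    · change ‖M i k‖ ≤ _
      have : 0 ≤ ν (MO i k) := apply_nonneg _ _
      rw [Real.norm_eq_abs]; linarith
    · intro n
      change ‖(n : ℝ)‖ ≤ _
      rw [Int.norm_eq_abs, Real.norm_eq_abs]
    · intro s hs
      rw [sum_blk]
      refine le_of_eq (Finset.sum_congr rfl fun h _ => ?_)
      rw [← weight_blk, hph (mem_support_iff.1 hs)]
    · rw [mul_pow]
      exact mul_le_mul_of_nonneg_right hpl (by positivity)
  · intro s hs
    by_contra hcon
    push Not at hcon
    have hsr := lsub_homog M p hph (mem_support_iff.1 hs)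
    set b : Fin n0 → ι → ℕ := fun h i => s (h, i) with hb
    have hbS : b ∈ S := by
      rw [hSmem]
      intro h
      rw [← hsr, weight_blk]
    have hbB : b ∈ Bd := Finset.mem_filter.2 ⟨hbS, hcon⟩
    have hmap : lsub n0 M p = map (algebraMap O ℝ) (lsub n0 MO p) := by
      have : lsub n0 M = ((mapAlgHom (IsScalarTower.toAlgHom ℤ O ℝ)).restrictScalars ℤ).comp
          (lsub n0 MO) := by
        apply algHom_ext
        intro x
        simp [lsub, hMOdef]
      rw [this]; rfl
    have hcoef : coeff s (lsub n0 MO p) = 0 := by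
      have h1 : lsub n0 MO p = ∑ j : S, C (t j : O) * mon j := by
        rw [hp, map_sum]
        refine Finset.sum_congr rfl fun j _ => ?_
        have : monomial (expo (j : Fin n0 → ι → ℕ)) (t j) =
            (t j) • monomial (expo (j : Fin n0 → ι → ℕ)) (1 : ℤ) := by
          rw [smul_monomial]; simp
        rw [this, map_zsmul, hmon, zsmul_eq_mul]
        simp
      rw [h1, coeff_sum, ← htB b hbB]
      refine Finset.sum_congr rfl fun j _ => ?_
      rw [coeff_C_mul, hb, expo_surj]
    rw [mem_support_iff, hmap, coeff_map, hcoef, map_zero] at hs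
    exact hs rfl

end Aux

end APC

namespace APC

open MvPolynomial

/-! ### Vanishing of the auxiliary polynomial along hyperplanes -/

section Van
variable {ι : Type*} [Fintype ι] [DecidableEq ι]

lemma coeff_scale {σ R : Type*} [Fintype σ] [CommRing R] (τ : σ → R) (q : MvPolynomial σ R)
    (u : σ →₀ ℕ) :
    coeff u (aeval (fun x => C (τ x) * X x : σ → MvPolynomial σ R) q) =
      (∏ x, τ x ^ u x) * coeff u q := by
  classical
  induction q using MvPolynomial.induction_on' with
  | monomial s a =>
    have : aeval (fun x => C (τ x) * X x : σ → MvPolynomial σ R) (monomial s a) =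
        monomial s (a * ∏ x, τ x ^ s x) := by
      rw [aeval_monomial, Finsupp.prod_fintype _ _ (by simp)]
      simp only [mul_pow, Finset.prod_mul_distrib, ← map_pow, ← map_prod]
      rw [MvPolynomial.algebraMap_eq, ← mul_assoc, ← map_mul, monomial_eq,
        Finsupp.prod_fintype _ _ (by simp)]
    rw [this, coeff_monomial, coeff_monomial]
    split_ifs with h
    · subst h; ring
    · simp
  | add p q hp hq => rw [map_add, coeff_add, coeff_add, hp, hq, mul_add]

/-- The substitution expressing each block of variables through the rows of `Z h`. -/
noncomputable def bsub {m : ℕ} (Z : Fin m → Matrix ι ι ℤ) :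
    MvPolynomial (Fin m × ι) ℤ →ₐ[ℤ] MvPolynomial (Fin m × ι) ℤ :=
  aeval fun x => ∑ l, C (Z x.1 l x.2) * X (x.1, l)

/-- The rows of `Y h` with the row `l0` replaced by a coordinate vector. -/
def hypMat {m : ℕ} (Y : Fin m → Matrix ι ι ℤ) (l0 : ι) (a : Fin m → ι) (h : Fin m) :
    Matrix ι ι ℤ :=
  fun l i => if l = l0 then (if i = a h then 1 else 0) else Y h l i

/-- Restricted to integral points whose linear forms are as small as prescribed by `hY`, the auxiliary
polynomial has low-order coefficients which are integers of absolute value less than one.  Hence it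
vanishes to high order along the hyperplanes spanned by the rows `l ≠ l0` of `Y h`. -/
theorem vanish {m : ℕ} (L M : Matrix ι ι ℝ) (hML : M * L = 1) (e : ι → ℝ) {E Λ : ℝ} (hE : 0 < E)
    (heE : ∀ k, |e k| ≤ E) (hΛ : ∀ k i, |L k i| ≤ Λ) (l0 : ι)
    (r : Fin m → ℕ) (hr : ∀ h, 1 ≤ r h) (q : Fin m → ℝ) (T : ℝ)
    (hq : ∀ h, 0 ≤ q h) (hT : 0 ≤ T) (hqr : ∀ h, q h * r h = T)
    (Y : Fin m → Matrix ι ι ℤ) (a : Fin m → ι)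
    (hY : ∀ h l, l ≠ l0 → ∀ k, |∑ i, (Y h l i : ℝ) * L k i| ≤ Real.exp (q h * e k))
    (p : MvPolynomial (Fin m × ι) ℤ) (hp : IsWeightedHomogeneous (blk m ι) p r)
    {C0 κ : ℝ} (hC0 : l1 (normRingSeminorm ℝ) (lsub m M p) ≤ C0)
    (hsupp : ∀ s ∈ (lsub m M p).support, ∑ h, ∑ k, e k * s (h, k) / r h ≤ -κ)
    (hlt : C0 * (Fintype.card ι + Λ) ^ (∑ h, r h) < Real.exp (T * κ / 2)) :
    Low (fun x : Fin m × ι => if x.2 = l0 then 1 / (r x.1 : ℝ) else 0) (κ / (2 * E))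
      (bsub (hypMat Y l0 a) p) := by
  classical
  intro u hu
  by_contra hcon
  push Not at hcon
  have hr0 : ∀ h, (0 : ℝ) < r h := fun h => by exact_mod_cast hr h
  set τ : Fin m × ι → ℝ := fun x => if x.2 = l0 then Real.exp (-(q x.1 * E)) else 1 with hτ
  have hτ0 : ∀ x, 0 < τ x := by
    intro x; rw [hτ]; dsimp only; split_ifs
    · exact Real.exp_pos _
    · exact one_pos
  set G : Fin m × ι → MvPolynomial (Fin m × ι) ℝ := fun x =>
    ∑ l, C (τ (x.1, l) * ∑ i, (hypMat Y l0 a x.1 l i : ℝ) * L x.2 i) * X (x.1, l) with hG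
  have hΛ0 : 0 ≤ Λ := (abs_nonneg _).trans (hΛ l0 l0)
  have hGl : ∀ x, l1 (normRingSeminorm ℝ) (G x) ≤
      (Fintype.card ι + Λ) * Real.exp (q x.1 * e x.2) := by
    rintro ⟨h, k⟩
    refine (l1_sum _ _ _).trans ?_
    have h1 : ∀ l ∈ (Finset.univ : Finset ι), l1 (normRingSeminorm ℝ)
        (C (τ (h, l) * ∑ i, (hypMat Y l0 a h l i : ℝ) * L k i) * X (h, l) :
          MvPolynomial (Fin m × ι) ℝ) ≤
        (1 + if l = l0 then Λ else 0) * Real.exp (q h * e k) := by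
      intro l _
      rw [C_mul_X_eq_monomial, l1_monomial]
      change ‖(_ : ℝ)‖ ≤ _
      rw [Real.norm_eq_abs, abs_mul, abs_of_pos (hτ0 _)]
      by_cases hl : l = l0
      · subst hl
        simp only [hτ, hypMat, if_true]
        have h2 : ∑ i, (((if i = a h then 1 else 0 : ℤ) : ℝ)) * L k i = L k (a h) := by
          simp
        rw [h2]
        have h3 : Real.exp (-(q h * E)) ≤ Real.exp (q h * e k) := by
          rw [Real.exp_le_exp]
          have := (abs_le.1 (heE k)).1
          nlinarith [hq h]
        have h4 := hΛ k (a h)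
        calc _ ≤ Real.exp (q h * e k) * Λ := mul_le_mul h3 h4 (abs_nonneg _) (Real.exp_pos _).le
          _ ≤ _ := by nlinarith [Real.exp_pos (q h * e k)]
      · simp only [hτ, hypMat, if_neg hl]
        rw [one_mul, add_zero, one_mul]
        exact hY h l hl k
    refine (Finset.sum_le_sum h1).trans ?_
    rw [← Finset.sum_mul, Finset.sum_add_distrib]
    simp
  have hkey : aeval G (lsub m M p) =
      aeval (fun x => C (τ x) * X x : Fin m × ι → MvPolynomial (Fin m × ι) ℝ)
        (map (Int.castRingHom ℝ) (bsub (hypMat Y l0 a) p)) := by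
    have h1 : ((aeval G).restrictScalars ℤ).comp (lsub m M) =
        ((((aeval (fun x => C (τ x) * X x : Fin m × ι → MvPolynomial (Fin m × ι) ℝ)).restrictScalars
          ℤ).comp (mapAlgHom (Algebra.ofId ℤ ℝ))).comp (bsub (hypMat Y l0 a))) := by
      apply algHom_ext
      rintro ⟨h, i⟩
      simp only [AlgHom.comp_apply, lsub, bsub, aeval_X, map_sum, map_mul, hG,
        AlgHom.restrictScalars_apply]
      have hc : ∀ z : ℤ, aeval (fun x => C (τ x) * X x : Fin m × ι → MvPolynomial (Fin m × ι) ℝ)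
          (mapAlgHom (Algebra.ofId ℤ ℝ) (C z : MvPolynomial (Fin m × ι) ℤ)) = C (z : ℝ) := by
        intro z
        simp [mapAlgHom_apply, Algebra.ofId_apply]
      have hx : ∀ x, aeval (fun x => C (τ x) * X x : Fin m × ι → MvPolynomial (Fin m × ι) ℝ)
          (mapAlgHom (Algebra.ofId ℤ ℝ) (X x : MvPolynomial (Fin m × ι) ℤ)) = C (τ x) * X x := by
        intro x
        simp [mapAlgHom_apply]
      simp only [hc, hx, MvPolynomial.aeval_C, MvPolynomial.algebraMap_eq, Finset.mul_sum]
      rw [Finset.sum_comm]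
      refine Finset.sum_congr rfl fun l _ => ?_
      have h2 : ∑ k, M i k * (∑ i', (hypMat Y l0 a h l i' : ℝ) * L k i') = hypMat Y l0 a h l i := by
        simp only [Finset.mul_sum]
        rw [Finset.sum_comm]
        have : ∀ i', ∑ k, M i k * ((hypMat Y l0 a h l i' : ℝ) * L k i') =
            (hypMat Y l0 a h l i' : ℝ) * (M * L) i i' := by
          intro i'
          rw [Matrix.mul_apply, Finset.mul_sum]
          exact Finset.sum_congr rfl fun k _ => by ring
        simp only [this, hML]
        simp [Matrix.one_apply]
      rw [← h2, ← mul_assoc, ← map_mul]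
      simp only [← mul_assoc, ← map_mul, ← Finset.sum_mul, ← map_sum]
      congr 2
      rw [Finset.sum_mul]
      refine Finset.sum_congr rfl fun k _ => ?_
      simp only [Finset.mul_sum, Finset.sum_mul]
      exact Finset.sum_congr rfl fun _ _ => by ring
    exact DFunLike.congr_fun h1 p
  -- the size of the rescaled coefficients
  have hsize : l1 (normRingSeminorm ℝ) (aeval G (lsub m M p)) ≤
      C0 * (Fintype.card ι + Λ) ^ (∑ h, r h) * Real.exp (-(T * κ)) := by
    have hR1 : (normRingSeminorm ℝ) 1 ≤ 1 := by change ‖(1 : ℝ)‖ ≤ 1; simp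
    rw [aeval_def, eval₂_eq]
    refine (l1_sum _ _ _).trans ?_
    have hNΛ : (0 : ℝ) ≤ Fintype.card ι + Λ := by positivity
    have h1 : ∀ s ∈ (lsub m M p).support, l1 (normRingSeminorm ℝ)
        (algebraMap ℝ (MvPolynomial (Fin m × ι) ℝ) (coeff s (lsub m M p)) *
          ∏ i ∈ s.support, G i ^ s i) ≤ (normRingSeminorm ℝ) (coeff s (lsub m M p)) *
          ((Fintype.card ι + Λ) ^ (∑ h, r h) * Real.exp (-(T * κ))) := by
      intro s hs
      refine (l1_mul _ _ _).trans ?_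
      rw [MvPolynomial.algebraMap_eq, l1_C]
      refine mul_le_mul_of_nonneg_left ?_ (apply_nonneg _ _)
      refine (l1_prod _ hR1 _ _).trans ?_
      have hsr := lsub_homog M p hp (mem_support_iff.1 hs)
      have hsr' : ∀ h, ∑ i, s (h, i) = r h := fun h => by rw [← hsr, weight_blk]
      calc ∏ x ∈ s.support, l1 (normRingSeminorm ℝ) (G x ^ s x) ≤
            ∏ x ∈ s.support, ((Fintype.card ι + Λ) * Real.exp (q x.1 * e x.2)) ^ s x := by
            refine Finset.prod_le_prod (fun _ _ => l1_nonneg _ _) fun x _ => ?_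
            exact (l1_pow _ hR1 _ _).trans (pow_le_pow_left₀ (l1_nonneg _ _) (hGl x) _)
        _ = ∏ x, ((Fintype.card ι + Λ) * Real.exp (q x.1 * e x.2)) ^ s x := by
            refine Finset.prod_subset (Finset.subset_univ _) fun x _ hx => ?_
            rw [Finsupp.notMem_support_iff.1 hx, pow_zero]
        _ = (Fintype.card ι + Λ) ^ (∑ h, r h) *
              Real.exp (T * ∑ h, ∑ k, e k * s (h, k) / r h) := by
            simp only [mul_pow, Finset.prod_mul_distrib]
            rw [Finset.prod_pow_eq_pow_sum, Fintype.sum_prod_type]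
            simp only [hsr']
            congr 1
            simp only [← Real.exp_nat_mul]
            rw [← Real.exp_sum, Fintype.sum_prod_type, Finset.mul_sum]
            congr 1
            refine Finset.sum_congr rfl fun h _ => ?_
            rw [Finset.mul_sum]
            refine Finset.sum_congr rfl fun k _ => ?_
            rw [← hqr h]
            have := (hr0 h).ne'
            field_simp
        _ ≤ _ := by
            refine mul_le_mul_of_nonneg_left ?_ (by positivity)
            rw [Real.exp_le_exp]
            have := mul_le_mul_of_nonneg_left (hsupp s hs) hT
            linarith
    refine (Finset.sum_le_sum h1).trans ?_
    rw [← Finset.sum_mul, mul_assoc]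
    exact mul_le_mul_of_nonneg_right hC0 (by positivity)
  have hcu : coeff u (aeval G (lsub m M p)) =
      (∏ x, τ x ^ u x) * ((coeff u (bsub (hypMat Y l0 a) p) : ℤ) : ℝ) := by
    rw [hkey, coeff_scale, coeff_map]; rfl
  have hτu : ∏ x, τ x ^ u x = Real.exp (-(T * E * ∑ h, (u (h, l0) : ℝ) * (1 / r h))) := by
    rw [Fintype.prod_prod_type, Finset.mul_sum, ← Finset.sum_neg_distrib, Real.exp_sum]
    refine Finset.prod_congr rfl fun h _ => ?_
    rw [Finset.prod_eq_single l0]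
    · simp only [hτ, if_true]
      rw [← Real.exp_nat_mul, ← hqr h]
      congr 1
      have := (hr0 h).ne'
      field_simp
    · intro l _ hl
      simp [hτ, hl]
    · simp
  have hsum : ∑ x : Fin m × ι, (u x : ℝ) * (if x.2 = l0 then 1 / (r x.1 : ℝ) else 0) =
      ∑ h, (u (h, l0) : ℝ) * (1 / r h) := by
    rw [Fintype.sum_prod_type]
    refine Finset.sum_congr rfl fun h _ => ?_
    simp
  rw [hsum] at hcon
  have hone : (1 : ℝ) ≤ |((coeff u (bsub (hypMat Y l0 a) p) : ℤ) : ℝ)| := by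
    exact_mod_cast Int.one_le_abs hu
  have hle := (coeff_le_l1 (normRingSeminorm ℝ) (aeval G (lsub m M p)) u).trans hsize
  rw [hcu] at hle
  change ‖(_ : ℝ)‖ ≤ _ at hle
  rw [Real.norm_eq_abs, abs_mul, hτu, abs_of_pos (Real.exp_pos _)] at hle
  have h1 : Real.exp (-(T * κ / 2)) ≤ Real.exp (-(T * E * ∑ h, (u (h, l0) : ℝ) * (1 / r h))) := by
    rw [Real.exp_le_exp]
    rw [lt_div_iff₀ (by positivity)] at hcon
    have := mul_le_mul_of_nonneg_left hcon.le hT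
    linarith
  have h2 : Real.exp (-(T * κ / 2)) * 1 ≤
      C0 * (Fintype.card ι + Λ) ^ (∑ h, r h) * Real.exp (-(T * κ)) :=
    le_trans (mul_le_mul h1 hone zero_le_one (Real.exp_pos _).le) hle
  have h3 := mul_lt_mul_of_pos_right hlt (Real.exp_pos (-(T * κ)))
  rw [← Real.exp_add] at h3
  have h4 : T * κ / 2 + -(T * κ) = -(T * κ / 2) := by ring
  rw [h4] at h3
  linarith

set_option maxHeartbeats 1000000 in
/-- Restricting a polynomial that vanishes to high order along the hyperplanes `w h ⬝ x = 0` to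
planes gives a polynomial in one variable per block, with rational roots of high order. -/
theorem reduce {m : ℕ} (l0 : ι) (r : Fin m → ℕ)
    (Y W : Fin m → Matrix ι ι ℤ) (hYW : ∀ h, W h * Y h = 1) (a b : Fin m → ι)
    (hab : ∀ h, a h ≠ b h) (hw : ∀ h, W h (a h) l0 ≠ 0)
    (p : MvPolynomial (Fin m × ι) ℤ) (hp0 : p ≠ 0) (hp : IsWeightedHomogeneous (blk m ι) p r)
    {κ : ℝ} (hlow : Low (fun x : Fin m × ι => if x.2 = l0 then 1 / (r x.1 : ℝ) else 0) κ
      (bsub (hypMat Y l0 a) p)) :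
    ∃ p' : MvPolynomial (Fin m) ℤ, p' ≠ 0 ∧ (∀ h, degreeOf h p' ≤ r h) ∧
      l1 (normRingSeminorm ℤ) p' ≤ l1 (normRingSeminorm ℤ) p ∧
      Low (fun h => 1 / (r h : ℝ)) κ
        (shift (fun h => -(W h (b h) l0 / W h (a h) l0 : ℚ)) (map (Int.castRingHom ℚ) p')) := by
  classical
  -- the part of an exponent away from the distinguished variables
  set cp : (Fin m × ι →₀ ℕ) → (Fin m × ι →₀ ℕ) := fun s =>
    s.filter fun x => x.2 ≠ a x.1 ∧ x.2 ≠ b x.1 with hcp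
  have hcp_ap : ∀ s h i, cp s (h, i) = if i ≠ a h ∧ i ≠ b h then s (h, i) else 0 := by
    intro s h i; rw [hcp]; exact Finsupp.filter_apply _ _ _
  set ap : (Fin m × ι →₀ ℕ) → (Fin m →₀ ℕ) := fun s =>
    Finsupp.equivFunOnFinite.symm fun h => s (h, a h) with hap
  have hap_ap : ∀ s h, ap s h = s (h, a h) := fun s h => rfl
  have hsum : ∀ s ∈ p.support, ∀ h, ∑ i, s (h, i) = r h := fun s hs h => by
    rw [← weight_blk, hp (mem_support_iff.1 hs)]
  have hinj : ∀ s ∈ p.support, ∀ s' ∈ p.support, cp s = cp s' → ap s = ap s' → s = s' := by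
    intro s hs s' hs' hc ha
    have h1 : ∀ h i, i ≠ b h → s (h, i) = s' (h, i) := by
      intro h i hi
      by_cases hia : i = a h
      · subst hia; exact DFunLike.congr_fun ha h
      · have := DFunLike.congr_fun hc (h, i)
        rwa [hcp_ap, hcp_ap, if_pos ⟨hia, hi⟩, if_pos ⟨hia, hi⟩] at this
    ext ⟨h, i⟩
    by_cases hi : i = b h
    · subst hi
      have e1 := hsum s hs h
      rw [← hsum s' hs' h, ← Finset.add_sum_erase _ _ (Finset.mem_univ (b h)),
        ← Finset.add_sum_erase _ _ (Finset.mem_univ (b h))] at e1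
      have e2 : ∑ i ∈ Finset.univ.erase (b h), s (h, i) =
          ∑ i ∈ Finset.univ.erase (b h), s' (h, i) :=
        Finset.sum_congr rfl fun i hi => h1 h i (Finset.ne_of_mem_erase hi)
      omega
    · exact h1 h i hi
  have hsne : p.support.Nonempty := support_nonempty.2 hp0
  obtain ⟨s0, hs0, hmin⟩ := Finset.exists_min_image p.support
    (fun s => (cp s).degree) hsne
  set μ := cp s0 with hμ
  have hmin' : ∀ s ∈ p.support, cp s ≤ μ → cp s = μ := by
    intro s hs hle
    have h1 := hmin s hs
    obtain ⟨d, hd⟩ := exists_add_of_le hle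
    have h2 : μ.degree = (cp s).degree + d.degree := by rw [hd, map_add]
    have h3 : d.degree = 0 := by omega
    rw [Finsupp.degree_eq_zero_iff] at h3
    rw [hd, h3, add_zero]
  set F := p.support.filter fun s => cp s = μ with hF
  set p' : MvPolynomial (Fin m) ℤ := ∑ s ∈ F, monomial (ap s) (coeff s p) with hp'
  refine ⟨p', ?_, ?_, ?_, ?_⟩
  · intro h0
    have h1 : coeff (ap s0) p' = coeff s0 p := by
      rw [hp', coeff_sum, Finset.sum_eq_single s0]
      · simp
      · intro s hs hne
        rw [coeff_monomial, if_neg]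
        intro h
        rw [hF, Finset.mem_filter] at hs
        exact hne (hinj s hs.1 s0 hs0 hs.2 h)
      · intro h
        have h2 : s0 ∈ F := by rw [hF, Finset.mem_filter]; exact ⟨hs0, rfl⟩
        exact absurd h2 h
    rw [h0, coeff_zero] at h1
    exact mem_support_iff.1 hs0 h1.symm
  · intro h
    rw [degreeOf_le_iff]
    intro t ht
    rw [hp'] at ht
    obtain ⟨s, hs, hst⟩ := Finset.mem_biUnion.1 (support_sum ht)
    have h1 := support_monomial_subset hst
    rw [Finset.mem_singleton] at h1
    rw [h1, hap_ap, ← hsum s (Finset.mem_filter.1 hs).1 h]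
    exact Finset.single_le_sum (f := fun i => s (h, i)) (fun _ _ => Nat.zero_le _)
      (Finset.mem_univ _)
  · rw [hp']
    refine (l1_sum _ _ _).trans ?_
    simp only [l1_monomial]
    exact Finset.sum_le_sum_of_subset_of_nonneg (Finset.filter_subset _ _)
      fun _ _ _ => apply_nonneg _ _
  -- the linear substitution, with outer variables for the other coordinates
  set ww : Fin m → ι → ℚ := fun h i => (W h i l0 : ℚ) with hww
  have hwa : ∀ h, ww h (a h) ≠ 0 := fun h => by simpa [hww] using hw h
  let K := MvPolynomial (Fin m × ι) (MvPolynomial (Fin m) ℚ)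
  set v : Fin m → ι → K := fun h i => if i = b h then 1 else X (h, i) with hv
  set va : Fin m → K := fun h =>
    -∑ i ∈ Finset.univ.erase (a h), C (C (ww h i / ww h (a h))) * v h i with hva
  set vv : Fin m → ι → K := fun h i => if i = a h then va h else v h i with hvv
  set χ : MvPolynomial (Fin m × ι) ℤ →+* K := (aeval fun x : Fin m × ι =>
    (vv x.1 x.2 + if x.2 = a x.1 then C (X x.1) else 0 : K)).toRingHom with hχ
  set Ψ : MvPolynomial (Fin m × ι) ℤ →+* K := (aeval fun x : Fin m × ι =>
    (if x.2 = l0 then C (X x.1) else ∑ i, C (C ((W x.1 i x.2 : ℤ) : ℚ)) * vv x.1 i : K)).toRingHom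
    with hΨ
  have hcancel : ∀ x y : K, x * -y + x * y = 0 := fun x y => by ring
  have hvw : ∀ h, ∑ i, C (C ((W h i l0 : ℤ) : ℚ)) * vv h i = 0 := by
    intro h
    rw [← Finset.add_sum_erase _ _ (Finset.mem_univ (a h))]
    have e1 : ∑ i ∈ Finset.univ.erase (a h), C (C ((W h i l0 : ℤ) : ℚ)) * vv h i =
        ∑ i ∈ Finset.univ.erase (a h), C (C (ww h (a h))) *
          (C (C (ww h i / ww h (a h))) * v h i) := by
      refine Finset.sum_congr rfl fun i hi => ?_
      rw [hvv]; dsimp only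
      rw [if_neg (Finset.ne_of_mem_erase hi), ← mul_assoc, ← map_mul, ← map_mul,
        mul_div_cancel₀ _ (hwa h)]
    rw [e1, ← Finset.mul_sum, hvv]
    dsimp only
    rw [if_pos rfl, hva]
    dsimp only
    exact hcancel _ _
  have hcomp : ∀ q, χ q = Ψ (bsub (hypMat Y l0 a) q) := by
    intro q
    have : χ = Ψ.comp (bsub (hypMat Y l0 a)).toRingHom := by
      apply MvPolynomial.ringHom_ext
      · intro z
        simp [hχ, hΨ]
      · rintro ⟨h, i⟩
        simp only [hχ, hΨ, AlgHom.toRingHom_eq_coe, RingHom.coe_coe, RingHom.comp_apply, bsub,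
          aeval_X, map_sum, map_mul]
        rw [← Finset.add_sum_erase _ _ (Finset.mem_univ l0), if_pos rfl]
        have e1 : ∑ l ∈ Finset.univ.erase l0,
            (aeval fun x : Fin m × ι => (if x.2 = l0 then C (X x.1) else
              ∑ i, C (C ((W x.1 i x.2 : ℤ) : ℚ)) * vv x.1 i : K)) (C (hypMat Y l0 a h l i)) *
              (if l = l0 then C (X h) else ∑ i, C (C ((W h i l : ℤ) : ℚ)) * vv h i) =
            ∑ l ∈ Finset.univ.erase l0, C (C ((Y h l i : ℤ) : ℚ)) *
              ∑ i, C (C ((W h i l : ℤ) : ℚ)) * vv h i := by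
          refine Finset.sum_congr rfl fun l hl => ?_
          have := Finset.ne_of_mem_erase hl
          rw [if_neg this]
          simp [hypMat, this]
        have e2 : ∑ l, C (C ((Y h l i : ℤ) : ℚ)) *
              (∑ i, C (C ((W h i l : ℤ) : ℚ)) * vv h i : K) = vv h i := by
          simp only [Finset.mul_sum]
          rw [Finset.sum_comm]
          have e3 : ∀ i', ∑ l, (C (C ((Y h l i : ℤ) : ℚ)) * (C (C ((W h i' l : ℤ) : ℚ)) * vv h i') : K)
              = C (C (((W h * Y h) i' i : ℤ) : ℚ)) * vv h i' := by
            intro i'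
            rw [Matrix.mul_apply]
            push_cast
            simp only [map_sum, map_mul, Finset.sum_mul]
            exact Finset.sum_congr rfl fun l _ => by ring
          simp only [e3, hYW]
          rw [Finset.sum_eq_single i]
          · simp
          · intro i' _ hne
            simp [Matrix.one_apply_ne hne]
          · simp
        rw [← Finset.add_sum_erase _ _ (Finset.mem_univ l0), hvw, mul_zero, zero_add] at e2
        rw [e1, e2, add_comm]
        congr 1
        simp only [hypMat, if_true]
        split_ifs <;> simp
    exact RingHom.congr_fun this q
  have hχlow : Low (fun h => 1 / (r h : ℝ)) κ (coeff μ (χ p)) := by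
    have hwn : ∀ h : Fin m, (0 : ℝ) ≤ 1 / (r h : ℝ) := fun h => by positivity
    rw [hcomp]
    set q := bsub (hypMat Y l0 a) p with hq
    have : Ψ q = ∑ u ∈ q.support, C ((coeff u q : ℤ) : MvPolynomial (Fin m) ℚ) *
        (C (∏ h, X h ^ u (h, l0)) * ∏ h, ∏ l ∈ Finset.univ.erase l0,
          (∑ i, C (C ((W h i l : ℤ) : ℚ)) * vv h i : K) ^ u (h, l)) := by
      rw [hΨ]
      change aeval _ q = _
      rw [aeval_def, eval₂_eq']
      refine Finset.sum_congr rfl fun u _ => ?_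
      congr 1
      · rw [Fintype.prod_prod_type, map_prod, ← Finset.prod_mul_distrib]
        refine Finset.prod_congr rfl fun h _ => ?_
        rw [← Finset.mul_prod_erase _ _ (Finset.mem_univ l0), if_pos rfl, map_pow]
        congr 1
        refine Finset.prod_congr rfl fun l hl => ?_
        rw [if_neg (Finset.ne_of_mem_erase hl)]
    rw [this, coeff_sum]
    refine Low.sum _ fun u hu => ?_
    rw [coeff_C_mul, coeff_C_mul]
    have hk := hlow u (mem_support_iff.1 hu)
    have hk' : κ ≤ ∑ h, (u (h, l0) : ℝ) * (1 / r h) := by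
      refine hk.trans (le_of_eq ?_)
      rw [Fintype.sum_prod_type]
      refine Finset.sum_congr rfl fun h _ => ?_
      simp
    have hmon : Low (fun h => 1 / (r h : ℝ)) κ (∏ h, X h ^ u (h, l0) : MvPolynomial (Fin m) ℚ) := by
      have e1 : (∏ h, X h ^ u (h, l0) : MvPolynomial (Fin m) ℚ) =
          monomial (Finsupp.equivFunOnFinite.symm fun h => u (h, l0)) 1 := by
        rw [monomial_eq, Finsupp.prod_fintype _ _ (by simp)]
        simp
      rw [e1]
      intro t ht
      rw [coeff_monomial] at ht
      split_ifs at ht with h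
      · subst h; exact hk'
      · exact absurd rfl ht
    have hz := ((Low.of_nonneg hwn ((coeff u q : ℤ) : MvPolynomial (Fin m) ℚ)).mul
      (hmon.mul (Low.of_nonneg hwn (coeff μ (∏ h, ∏ l ∈ Finset.univ.erase l0,
          (∑ i, C (C ((W h i l : ℤ) : ℚ)) * vv h i : K) ^ u (h, l))))))
    exact hz.mono (by simp)
  convert hχlow using 1
  have hχp : χ p = ∑ s ∈ p.support, C ((coeff s p : ℤ) : MvPolynomial (Fin m) ℚ) *
      (monomial (cp s) 1 * ∏ h, (va h + C (X h)) ^ s (h, a h)) := by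
    rw [hχ]
    change aeval _ p = _
    rw [aeval_def, eval₂_eq']
    refine Finset.sum_congr rfl fun s _ => ?_
    congr 1
    · rw [monomial_eq, Finsupp.prod_fintype _ _ (by simp), map_one, one_mul,
        Fintype.prod_prod_type, Fintype.prod_prod_type, ← Finset.prod_mul_distrib]
      refine Finset.prod_congr rfl fun h _ => ?_
      rw [← Finset.prod_erase_mul _ _ (Finset.mem_univ (a h)),
        ← Finset.prod_erase_mul Finset.univ (fun i => (X (h, i) : K) ^ cp s (h, i))
          (Finset.mem_univ (a h))]
      have e1 : cp s (h, a h) = 0 := by rw [hcp_ap]; simp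
      rw [e1, pow_zero, mul_one]
      congr 1
      · refine Finset.prod_congr rfl fun i hi => ?_
        have hia := Finset.ne_of_mem_erase hi
        rw [if_neg hia, add_zero, hvv]
        dsimp only
        rw [if_neg hia, hcp_ap, hv]
        dsimp only
        by_cases hib : i = b h
        · rw [if_pos hib, if_neg (by tauto)]; simp
        · rw [if_neg hib, if_pos ⟨hia, hib⟩]
      · rw [hvv]; simp
  have hva0 : ∀ h, constantCoeff (va h) = -C (ww h (b h) / ww h (a h)) := by
    intro h
    rw [hva]
    simp only [map_neg, map_sum, map_mul, constantCoeff_C]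
    congr 1
    rw [Finset.sum_eq_single (b h)]
    · simp [hv]
    · intro i _ hi
      rw [hv]; simp [hi]
    · intro hn
      exact absurd (Finset.mem_erase.2 ⟨(hab h).symm, Finset.mem_univ _⟩) hn
  rw [hχp, coeff_sum, hp', map_sum, map_sum, hF, Finset.sum_filter]
  refine Finset.sum_congr rfl fun s hs => ?_
  rw [coeff_C_mul, coeff_monomial_mul']
  by_cases hsμ : cp s = μ
  · rw [if_pos hsμ, if_pos hsμ.le, hsμ, tsub_self, one_mul, ← constantCoeff_eq, map_prod,
      map_monomial, shift]
    simp only [map_pow, map_add, hva0, constantCoeff_C]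
    rw [aeval_monomial, Finsupp.prod_fintype _ _ (by simp)]
    congr 1
    · refine Finset.prod_congr rfl fun h _ => ?_
      rw [hap_ap]
      congr 1
      rw [hww, map_neg, add_comm]
  · rw [if_neg hsμ, if_neg fun hle => hsμ (hmin' s hs hle), mul_zero]

end Van

end APC

namespace APC

open MvPolynomial

/-! ### The penultimate minimum -/

section PT
variable {ι : Type*} [Fintype ι] [DecidableEq ι]

lemma det_bound (A : Matrix ι ι ℝ) (u v : ι → ℝ)
    (h : ∀ i j, |A i j| ≤ u i * v j) :
    |A.det| ≤ (Fintype.card ι).factorial * ((∏ i, u i) * ∏ j, v j) := by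
  rw [Matrix.det_apply]
  refine (Finset.abs_sum_le_sum_abs _ _).trans ?_
  have : ∀ σ ∈ (Finset.univ : Finset (Equiv.Perm ι)),
      |Equiv.Perm.sign σ • ∏ i, A (σ i) i| ≤ (∏ i, u i) * ∏ j, v j := by
    intro σ _
    have h1 : |Equiv.Perm.sign σ • ∏ i, A (σ i) i| = ∏ i, |A (σ i) i| := by
      rcases Int.units_eq_one_or (Equiv.Perm.sign σ) with h | h <;> rw [h] <;>
        simp [Finset.abs_prod]
    rw [h1]
    refine (Finset.prod_le_prod (fun i _ => abs_nonneg _) fun i _ => h (σ i) i).trans ?_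
    rw [Finset.prod_mul_distrib, Equiv.prod_comp σ u]
  refine (Finset.sum_le_sum this).trans ?_
  rw [Finset.sum_const, Finset.card_univ, Fintype.card_perm, nsmul_eq_mul]

/-- Real algebraic integers are represented by commuting integral matrices with a common
eigenvector. -/
lemma exists_rep (μ : ι → ℝ) (hμ : ∀ i, IsIntegral ℤ (μ i)) :
    ∃ (D : ℕ) (ρ : ι → Matrix (Fin D) (Fin D) ℤ) (v : Fin D → ℝ), 0 < D ∧ (∀ x, v x ≠ 0) ∧
      (∀ i y, ∑ x, v x * (ρ i x y : ℝ) = μ i * v y) ∧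
      ∀ w : ι → ℤ, ∑ i, (w i : ℝ) * μ i ≠ 0 → (∑ i, w i • ρ i).det ≠ 0 := by
  classical
  have h1 := Algebra.finite_adjoin_of_finite_of_isIntegral (R := ℤ) (Set.finite_range μ)
    (by rintro _ ⟨i, rfl⟩; exact hμ i)
  have h2 : Module.Free ℤ (Algebra.adjoin ℤ (Set.range μ)) :=
    Module.free_of_finite_type_torsion_free'
  let bb := Module.finBasis ℤ (Algebra.adjoin ℤ (Set.range μ))
  let μ' : ι → Algebra.adjoin ℤ (Set.range μ) := fun i => ⟨μ i, Algebra.subset_adjoin ⟨i, rfl⟩⟩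
  refine ⟨Module.finrank ℤ (Algebra.adjoin ℤ (Set.range μ)),
    fun i => Algebra.leftMulMatrix bb (μ' i), fun x => (bb x : ℝ), Module.finrank_pos, ?_, ?_, ?_⟩
  · intro x h
    exact bb.ne_zero x (Subtype.ext h)
  · intro i y
    have e1 : μ' i * bb y = ∑ x, Algebra.leftMulMatrix bb (μ' i) x y • bb x := by
      rw [← bb.sum_repr (μ' i * bb y)]
      simp only [Algebra.leftMulMatrix_eq_repr_mul]
    have e2 := congrArg (fun z : Algebra.adjoin ℤ (Set.range μ) => (z : ℝ)) e1
    push_cast at e2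
    change μ i * _ = _ at e2
    rw [e2]
    refine Finset.sum_congr rfl fun x _ => ?_
    rw [zsmul_eq_mul, mul_comm]
  · intro w hw
    have hα0 : ∑ i, (w i) • μ' i ≠ 0 := by
      intro h
      apply hw
      have := congrArg (fun z : Algebra.adjoin ℤ (Set.range μ) => (z : ℝ)) h
      push_cast at this
      simpa using this
    have := (Algebra.norm_ne_zero_iff (R := ℤ)).2 hα0
    rw [Algebra.norm_eq_matrix_det bb, map_sum] at this
    simpa only [map_zsmul] using this

/-- Liouville's inequality for integral combinations of real algebraic integers. -/
lemma liouville (μ : ι → ℝ) (hμ : ∀ i, IsIntegral ℤ (μ i)) :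
    ∃ (c : ℝ) (D : ℕ), 0 < c ∧ 0 < D ∧ ∀ (H : ℝ) (w : ι → ℤ), 1 ≤ H → (∀ i, |(w i : ℝ)| ≤ H) →
      ∑ i, (w i : ℝ) * μ i ≠ 0 → c ≤ |∑ i, (w i : ℝ) * μ i| * H ^ D := by
  classical
  obtain ⟨D, ρ, v, hDpos, hv0, hvρ, hdet0⟩ := exists_rep μ hμ
  set C1 : ℝ := 1 + ∑ i, ∑ x, ∑ y, |((ρ i x y : ℤ) : ℝ)| with hC1
  have hC1' : 1 ≤ C1 := by
    rw [hC1]; linarith [show (0:ℝ) ≤ ∑ i, ∑ x, ∑ y, |((ρ i x y : ℤ) : ℝ)| by positivity]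
  refine ⟨1 / (D * (D.factorial * C1 ^ D)), D, by positivity, hDpos, ?_⟩
  intro H w hH hw hne
  set α : ℝ := ∑ i, (w i : ℝ) * μ i with hα
  have hdet := hdet0 w hne
  set A : Matrix (Fin D) (Fin D) ℝ := (∑ i, w i • ρ i).map (Int.cast : ℤ → ℝ) with hA
  have hAe : ∀ x y, A x y = ∑ i, (w i : ℝ) * (ρ i x y : ℤ) := by
    intro x y
    rw [hA, Matrix.map_apply, Matrix.sum_apply]
    push_cast
    simp
  have hent : ∀ x y, |A x y| ≤ H * C1 := by
    intro x y
    rw [hAe]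
    refine (Finset.abs_sum_le_sum_abs _ _).trans ?_
    have : ∀ i ∈ (Finset.univ : Finset ι), |(w i : ℝ) * (ρ i x y : ℤ)| ≤
        H * ∑ x, ∑ y, |((ρ i x y : ℤ) : ℝ)| := by
      intro i _
      rw [abs_mul]
      refine mul_le_mul (hw i) ?_ (abs_nonneg _) (by linarith)
      refine le_trans ?_ (Finset.single_le_sum (f := fun x => ∑ y, |((ρ i x y : ℤ) : ℝ)|)
        (fun _ _ => by positivity) (Finset.mem_univ x))
      exact Finset.single_le_sum (f := fun y => |((ρ i x y : ℤ) : ℝ)|)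
        (fun _ _ => by positivity) (Finset.mem_univ y)
    refine (Finset.sum_le_sum this).trans ?_
    rw [← Finset.mul_sum]
    exact mul_le_mul_of_nonneg_left (by rw [hC1]; linarith) (by linarith)
  have hHC : 1 ≤ H * C1 := one_le_mul_of_one_le_of_one_le hH hC1'
  have hadj : ∀ x y, |A.adjugate x y| ≤ D.factorial * (H * C1) ^ D := by
    intro x y
    rw [Matrix.adjugate_apply]
    have := det_bound (A.updateRow y (Pi.single x 1)) (fun _ => H * C1) (fun _ => 1) (by
      intro i j
      rw [Matrix.updateRow_apply, mul_one]
      split_ifs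
      · rw [Pi.single_apply]; split_ifs
        · simpa using hHC
        · simp; linarith
      · exact hent i j)
    simpa using this
  have hvA : Matrix.vecMul v A = α • v := by
    ext y
    simp only [Matrix.vecMul, dotProduct, Pi.smul_apply, smul_eq_mul, hAe, hα, Finset.sum_mul,
      Finset.mul_sum]
    rw [Finset.sum_comm]
    refine Finset.sum_congr rfl fun i _ => ?_
    rw [mul_assoc, ← hvρ, Finset.mul_sum]
    exact Finset.sum_congr rfl fun x _ => by ring
  have hkey : (A.det) • v = α • Matrix.vecMul v A.adjugate := by
    rw [← Matrix.smul_vecMul, ← hvA, Matrix.vecMul_vecMul, Matrix.mul_adjugate, Matrix.vecMul_smul,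
      Matrix.vecMul_one]
  have hdetA : 1 ≤ |A.det| := by
    have : A.det = (((∑ i, w i • ρ i).det : ℤ) : ℝ) := by
      rw [hA]; exact ((Int.castRingHom ℝ).map_det (∑ i, w i • ρ i)).symm
    rw [this]
    exact_mod_cast Int.one_le_abs hdet
  have hDn : Nonempty (Fin D) := ⟨⟨0, hDpos⟩⟩
  obtain ⟨y, hy⟩ := Finite.exists_max fun x => |v x|
  have hvy : 0 < |v y| := abs_pos.2 (hv0 y)
  have e3 := congrFun hkey y
  simp only [Pi.smul_apply, smul_eq_mul] at e3
  have e4 : |Matrix.vecMul v A.adjugate y| ≤ D * (|v y| * (D.factorial * (H * C1) ^ D)) := by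
    rw [Matrix.vecMul, dotProduct]
    refine (Finset.abs_sum_le_sum_abs _ _).trans ?_
    have : ∀ x ∈ (Finset.univ : Finset (Fin D)), |v x * A.adjugate x y| ≤
        |v y| * (D.factorial * (H * C1) ^ D) := by
      intro x _
      rw [abs_mul]
      exact mul_le_mul (hy x) (hadj x y) (abs_nonneg _) (abs_nonneg _)
    refine (Finset.sum_le_sum this).trans ?_
    simp
  have e5 : |v y| ≤ |α| * (D * (|v y| * (D.factorial * (H * C1) ^ D))) := by
    calc |v y| ≤ |A.det| * |v y| := le_mul_of_one_le_left (abs_nonneg _) hdetA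
      _ = |α| * |Matrix.vecMul v A.adjugate y| := by rw [← abs_mul, e3, abs_mul]
      _ ≤ _ := by gcongr
  rw [div_le_iff₀ (by positivity)]
  rw [mul_pow] at e5
  have e6 : |v y| * 1 ≤ |v y| * (|α| * H ^ D * (D * (D.factorial * C1 ^ D))) := by
    calc _ = |v y| := mul_one _
      _ ≤ _ := e5
      _ = _ := by ring
  exact le_of_mul_le_mul_left e6 hvy

lemma exists_lacunary {q : ℕ → ℝ} (hq : Filter.Tendsto q Filter.atTop Filter.atTop) {Q0 B : ℝ}
    (hQ0 : 0 < Q0) (hB : 1 ≤ B) :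
    ∃ g : ℕ → ℕ, (∀ n, Q0 ≤ q (g n)) ∧ ∀ n n', n < n' → B * q (g n) ≤ q (g n') := by
  have hex : ∀ x : ℝ, ∃ j, x ≤ q j := fun x => (hq.eventually_ge_atTop x).exists
  choose φ hφ using hex
  let g : ℕ → ℕ := fun n => Nat.rec (φ Q0) (fun _ k => φ (B * q k)) n
  have hg0 : g 0 = φ Q0 := rfl
  have hgs : ∀ n, g (n + 1) = φ (B * q (g n)) := fun n => rfl
  have h1 : ∀ n, Q0 ≤ q (g n) := by
    intro n
    induction n with
    | zero => rw [hg0]; exact hφ _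
    | succ n ih =>
      rw [hgs]
      refine le_trans ?_ (hφ _)
      nlinarith
  have h2 : ∀ n, B * q (g n) ≤ q (g (n + 1)) := fun n => by rw [hgs]; exact hφ _
  refine ⟨g, h1, ?_⟩
  intro n n' h
  induction n', h using Nat.le_induction with
  | base => exact h2 n
  | succ k _ ih =>
    refine ih.trans (le_trans ?_ (h2 k))
    have := h1 k
    nlinarith

/-- A primitive vector with a large entry `w a` has a quotient `w b / w a` with large
denominator. -/
lemma exists_large_den (y w : ι → ℤ) (hyw : ∑ i, y i * w i = 1) (a : ι) {x : ℝ} (hx : 0 < x)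
    (hw : Real.exp x ≤ |(w a : ℝ)|) :
    ∃ b, a ≠ b ∧ x / Fintype.card ι ≤ Real.log (-(w b / w a : ℚ)).den := by
  classical
  have hwa : w a ≠ 0 := by
    intro h; rw [h] at hw; simp at hw; linarith [Real.exp_pos x]
  have hwaQ : (w a : ℚ) ≠ 0 := by exact_mod_cast hwa
  have hN : (0 : ℝ) < Fintype.card ι := by
    exact_mod_cast Fintype.card_pos_iff.2 ⟨a⟩
  by_contra hcon
  push Not at hcon
  set den : ι → ℕ := fun b => ((w b / w a : ℚ)).den with hden
  set D : ℕ := ∏ b ∈ Finset.univ.erase a, den b with hD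
  have hinteg : ∀ b, ∃ z : ℤ, (D : ℚ) * (w b / w a) = z := by
    intro b
    by_cases hb : b = a
    · subst hb
      exact ⟨D, by rw [div_self hwaQ]; simp⟩
    · obtain ⟨t, ht⟩ : den b ∣ D :=
        Finset.dvd_prod_of_mem _ (Finset.mem_erase.2 ⟨hb, Finset.mem_univ _⟩)
      refine ⟨t * (w b / w a : ℚ).num, ?_⟩
      have := Rat.den_mul_eq_num (w b / w a : ℚ)
      rw [ht]
      push_cast
      rw [← this]
      ring
  choose z hz using hinteg
  have hdvd : (w a) ∣ (D : ℤ) := by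
    refine ⟨∑ i, y i * z i, ?_⟩
    have : (D : ℚ) = w a * ∑ i, (y i : ℚ) * z i := by
      have e1 : (∑ i, (y i : ℚ) * w i) = 1 := by exact_mod_cast hyw
      calc (D : ℚ) = D * ∑ i, (y i : ℚ) * w i := by rw [e1, mul_one]
        _ = w a * ∑ i, (y i : ℚ) * ((D : ℚ) * ((w i : ℚ) / w a)) := by
          rw [Finset.mul_sum, Finset.mul_sum]
          refine Finset.sum_congr rfl fun i _ => ?_
          field_simp
        _ = _ := by simp only [hz]
    exact_mod_cast this
  have hDpos : 0 < D := Finset.prod_pos fun b _ => Rat.den_pos _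
  have h1 : |w a| ≤ (D : ℤ) := by
    have := Int.le_of_dvd (by exact_mod_cast hDpos) ((abs_dvd _ _).2 hdvd)
    exact this
  have h2 : Real.exp x ≤ D := hw.trans (by exact_mod_cast h1)
  have h3 : x ≤ Real.log D := (Real.le_log_iff_exp_le (by exact_mod_cast hDpos)).2 h2
  rw [hD] at h3
  push_cast at h3
  rw [Real.log_prod (fun b _ => by
    have : den b ≠ 0 := (Rat.den_pos _).ne'
    exact_mod_cast this)] at h3
  have h4 : ∑ b ∈ Finset.univ.erase a, Real.log (den b) ≤
      ∑ b ∈ Finset.univ.erase a, x / Fintype.card ι := by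
    refine Finset.sum_le_sum fun b hb => ?_
    have := hcon b (Finset.ne_of_mem_erase hb).symm
    rw [Rat.neg_den] at this
    exact this.le
  rw [Finset.sum_const, Finset.card_erase_of_mem (Finset.mem_univ a), Finset.card_univ,
    nsmul_eq_mul, Nat.cast_sub (Fintype.card_pos_iff.2 ⟨a⟩)] at h4
  have h5 : ((Fintype.card ι : ℝ) - ((1 : ℕ) : ℝ)) * (x / Fintype.card ι) =
      x - x / Fintype.card ι := by
    field_simp
    push_cast
    ring
  rw [h5] at h4
  have : 0 < x / Fintype.card ι := by positivity
  linarith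

set_option maxHeartbeats 1000000 in
/-- The case of the penultimate minimum in which the vectors `w` grow. -/
theorem pt_core (L M : Matrix ι ι ℝ) (hML : M * L = 1) (hM : ∀ i k, IsIntegral ℤ (M i k))
    (e : ι → ℝ) (he : ∑ k, e k < 0) (l0 : ι) (Y W : ℕ → Matrix ι ι ℤ) (hWY : ∀ j, W j * Y j = 1)
    (q : ℕ → ℝ) (hq : Filter.Tendsto q Filter.atTop Filter.atTop)
    (hY : ∀ j l, l ≠ l0 → ∀ k, |∑ i, (Y j l i : ℝ) * L k i| ≤ Real.exp (q j * e k))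
    {c : ℝ} (hc : 0 < c) (hw : ∀ j, ∃ a, Real.exp (c * q j) ≤ |(W j a l0 : ℝ)|) : False := by
  classical
  have hN : (0 : ℝ) < Fintype.card ι := by
    exact_mod_cast Fintype.card_pos_iff.2 ⟨l0⟩
  have hN1 : (1 : ℝ) ≤ Fintype.card ι := by
    exact_mod_cast Fintype.card_pos_iff.2 ⟨l0⟩
  set N : ℝ := (Fintype.card ι : ℝ) with hNdef
  set δ : ℝ := -(∑ k, e k) / (2 * N) with hδ
  have hδ0 : 0 < δ := div_pos (by linarith) (by linarith)
  set e' : ι → ℝ := fun k => e k + δ with he'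
  have he's : ∑ k, e' k < 0 := by
    rw [he', Finset.sum_add_distrib, Finset.sum_const, Finset.card_univ, nsmul_eq_mul, ← hNdef, hδ]
    have : N * (-(∑ k, e k) / (2 * N)) = -(∑ k, e k) / 2 := by field_simp
    rw [this]; linarith
  obtain ⟨m, cc, C, hm, hcc, hC, haux⟩ := aux_poly M hM e' he's
  have hm0 : (0 : ℝ) < m := by exact_mod_cast hm
  set E : ℝ := 1 + ∑ k, |e' k| with hE
  have hE0 : 0 < E := by positivity
  have heE : ∀ k, |e' k| ≤ E := fun k => by
    have := Finset.single_le_sum (f := fun k => |e' k|) (fun _ _ => abs_nonneg _)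
      (Finset.mem_univ k)
    rw [hE]; linarith
  set Λ : ℝ := ∑ k, ∑ i, |L k i| with hΛ
  have hΛ0 : 0 ≤ Λ := by positivity
  have hΛle : ∀ k i, |L k i| ≤ Λ := fun k i =>
    (Finset.single_le_sum (f := fun i => |L k i|) (fun _ _ => abs_nonneg _)
      (Finset.mem_univ i)).trans (Finset.single_le_sum (f := fun k => ∑ i, |L k i|)
        (fun _ _ => by positivity) (Finset.mem_univ k))
  set κ : ℝ := cc * m with hκ
  have hκ0 : 0 < κ := by positivity
  obtain ⟨ω, K, hω, hK, hroth⟩ := roth m (κ / (2 * E)) (by positivity)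
  set B : ℝ := max 1 (2 / ω) with hB
  have hB1 : 1 ≤ B := le_max_left _ _
  have hBω : 2 / ω ≤ B := le_max_right _ _
  have hlogC : 0 ≤ Real.log C := Real.log_nonneg hC
  have hCN : 1 ≤ C * (N + Λ) := one_le_mul_of_one_le_of_one_le hC (by linarith)
  have hlogCN : 0 ≤ Real.log (C * (N + Λ)) := Real.log_nonneg hCN
  set Q0 : ℝ := 1 + (K + m * Real.log C) * (2 * N) / (ω * c) +
    2 * m * Real.log (C * (N + Λ)) / κ with hQ0
  have ht1 : 0 ≤ (K + m * Real.log C) * (2 * N) / (ω * c) := by positivity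
  have ht2 : 0 ≤ 2 * m * Real.log (C * (N + Λ)) / κ := by positivity
  have hQ01 : 1 ≤ Q0 := by linarith
  have hQ0a : (K + m * Real.log C) * (2 * N) ≤ ω * c * Q0 := by
    have : (K + m * Real.log C) * (2 * N) / (ω * c) ≤ Q0 := by linarith
    rw [div_le_iff₀ (by positivity)] at this
    linarith
  have hQ0b : 2 * m * Real.log (C * (N + Λ)) < κ * Q0 := by
    have : 2 * m * Real.log (C * (N + Λ)) / κ < Q0 := by linarith
    rw [div_lt_iff₀ hκ0] at this
    linarith
  obtain ⟨g, hgQ, hgB⟩ := exists_lacunary hq (show 0 < Q0 by linarith) hB1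
  -- larger indices in Roth's lemma correspond to smaller heights
  set J : Fin m → ℕ := fun h => g (Fin.rev h : ℕ) with hJ
  set q0 : Fin m → ℝ := fun h => q (J h) with hq0
  have hq0Q : ∀ h, Q0 ≤ q0 h := fun h => hgQ _
  have hq0pos : ∀ h, 0 < q0 h := fun h => by linarith [hq0Q h]
  have hq0B : ∀ h h', h < h' → B * q0 h' ≤ q0 h := by
    intro h h' hlt
    apply hgB
    exact_mod_cast Fin.rev_lt_rev.2 hlt
  set S : ℝ := 2 + ∑ k, |e k| / δ with hS
  have hS2 : 2 ≤ S := by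
    rw [hS]; linarith [show (0:ℝ) ≤ ∑ k, |e k| / δ by positivity]
  set T : ℝ := (∑ h, q0 h) * (S + 1) with hT
  have hTge : ∀ h, q0 h * (S + 1) ≤ T := fun h =>
    mul_le_mul_of_nonneg_right (Finset.single_le_sum (f := q0) (fun i _ => (hq0pos i).le)
      (Finset.mem_univ h)) (by linarith)
  have hTpos : 0 < T := by
    have := hTge ⟨0, hm⟩
    have := hq0pos ⟨0, hm⟩
    nlinarith
  set r : Fin m → ℕ := fun h => ⌊T / q0 h⌋₊ with hr
  have hrle : ∀ h, (r h : ℝ) ≤ T / q0 h := fun h =>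
    Nat.floor_le (div_nonneg hTpos.le (hq0pos h).le)
  have hrlt : ∀ h, T / q0 h < r h + 1 := fun h => Nat.lt_floor_add_one _
  have hTq : ∀ h, S + 1 ≤ T / q0 h := fun h => by
    rw [le_div_iff₀ (hq0pos h)]; linarith [hTge h]
  have hrS : ∀ h, S ≤ r h := fun h => by linarith [hrlt h, hTq h]
  have hr1 : ∀ h, 1 ≤ r h := fun h => by
    have : (1 : ℝ) ≤ r h := by linarith [hrS h]
    exact_mod_cast this
  have hr0 : ∀ h, (0 : ℝ) < r h := fun h => by linarith [hrS h]
  have hrhalf : ∀ h, T / 2 ≤ r h * q0 h := by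
    intro h
    have h1 : T < (r h + 1) * q0 h := (div_lt_iff₀ (hq0pos h)).1 (hrlt h)
    have h2 := hrS h
    have h3 := hq0pos h
    nlinarith
  have hrT : ∀ h, r h * q0 h ≤ T := fun h => (le_div_iff₀ (hq0pos h)).1 (hrle h)
  set R : ℝ := T / Q0 with hR
  have hQ0pos : 0 < Q0 := by linarith
  have hRle : ∀ h, (r h : ℝ) ≤ R := fun h =>
    (hrle h).trans (div_le_div_of_nonneg_left hTpos.le hQ0pos (hq0Q h))
  have hR1 : 1 ≤ R := by
    have h1 := hRle ⟨0, hm⟩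
    have h2 := hrS ⟨0, hm⟩
    linarith
  have hsumr : ((∑ h, r h : ℕ) : ℝ) ≤ m * R := by
    push_cast
    calc ∑ h, (r h : ℝ) ≤ ∑ _h : Fin m, R := Finset.sum_le_sum fun h _ => hRle h
      _ = m * R := by simp
  have hRQ : R * Q0 = T := div_mul_cancel₀ _ hQ0pos.ne'
  choose a ha using hw
  have hYW : ∀ j, Y j * W j = 1 := fun j => mul_eq_one_comm.1 (hWY j)
  have hden : ∀ h, ∃ b, a (J h) ≠ b ∧
      c * q0 h / N ≤ Real.log (-(W (J h) b l0 / W (J h) (a (J h)) l0 : ℚ)).den := by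
    intro h
    refine exists_large_den (fun i => Y (J h) l0 i) (fun i => W (J h) i l0) ?_ (a (J h))
      (mul_pos hc (hq0pos h)) (ha _)
    have := congrFun (congrFun (hYW (J h)) l0) l0
    rwa [Matrix.mul_apply, Matrix.one_apply_eq] at this
  choose b hab hb using hden
  obtain ⟨p, hp0, hphom, hpl1, hplM, hpsupp⟩ := haux r hr1
  have hvan := vanish (m := m) L M hML e' hE0 heE hΛle l0 r hr1 (fun h => T / r h) T
    (fun h => div_nonneg hTpos.le (hr0 h).le) hTpos.le
    (fun h => div_mul_cancel₀ _ (hr0 h).ne') (fun h => Y (J h)) (fun h => a (J h))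
    (by
      intro h l hl k
      refine (hY (J h) l hl k).trans (Real.exp_le_exp.2 ?_)
      change q0 h * e k ≤ T / r h * (e k + δ)
      have h1 : q0 h ≤ T / r h := by
        rw [le_div_iff₀ (hr0 h)]; linarith [hrT h]
      have h2 : T / r h ≤ q0 h * (1 + 1 / r h) := by
        rw [div_le_iff₀ (hr0 h)]
        have := (div_lt_iff₀ (hq0pos h)).1 (hrlt h)
        have e1 : q0 h * (1 + 1 / r h) * r h = q0 h * (r h + 1) := by
          have := (hr0 h).ne'
          field_simp
        rw [e1]; linarith
      have h3 : |e k| / δ ≤ r h := by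
        refine le_trans ?_ (hrS h)
        have := Finset.single_le_sum (f := fun k => |e k| / δ) (fun _ _ => by positivity)
          (Finset.mem_univ k)
        rw [hS]; linarith
      rw [div_le_iff₀ hδ0] at h3
      have h4 : q0 h * (1 / r h) * |e k| ≤ q0 h * δ := by
        have : 1 / (r h : ℝ) * |e k| ≤ δ := by
          rw [one_div, inv_mul_le_iff₀ (hr0 h)]; exact h3
        rw [mul_assoc]
        exact mul_le_mul_of_nonneg_left this (hq0pos h).le
      have h5 : -((T / r h - q0 h) * |e k|) ≤ (T / r h - q0 h) * e k := by
        have := neg_abs_le (e k)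
        have := mul_le_mul_of_nonneg_left this (sub_nonneg.2 h1)
        linarith
      have h6 : (T / r h - q0 h) * |e k| ≤ q0 h * (1 / r h) * |e k| :=
        mul_le_mul_of_nonneg_right (by linarith) (abs_nonneg _)
      have h7 : q0 h * δ ≤ T / r h * δ := mul_le_mul_of_nonneg_right h1 hδ0.le
      linarith)
    p hphom (κ := κ) hplM (by intro s hs; have := hpsupp s hs; rw [hκ]; linarith)
    (by
      rw [← mul_pow]
      change (C * (N + Λ)) ^ _ < _
      rw [← Real.exp_log (show 0 < C * (N + Λ) by linarith), ← Real.exp_nat_mul, Real.exp_lt_exp]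
      calc ((∑ h, r h : ℕ) : ℝ) * Real.log (C * (N + Λ)) ≤ m * R * Real.log (C * (N + Λ)) :=
            mul_le_mul_of_nonneg_right hsumr hlogCN
        _ = R / 2 * (2 * m * Real.log (C * (N + Λ))) := by ring
        _ < R / 2 * (κ * Q0) := mul_lt_mul_of_pos_left hQ0b (by linarith)
        _ = T * κ / 2 := by rw [← hRQ]; ring)
  obtain ⟨p', hp'0, hp'deg, hp'l1, hp'low⟩ := reduce l0 r (fun h => Y (J h)) (fun h => W (J h))
    (fun h => hWY _) (fun h => a (J h)) b hab (fun h h0 => by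
      have := ha (J h)
      rw [h0] at this
      simp at this
      linarith [Real.exp_pos (c * q (J h))]) p hp0 hphom hvan
  refine hroth p' r _ (c * T / (2 * N)) R hp'0 hr1 hp'deg ?_ hRle hR1 ?_ ?_ hp'low
  · intro h h' hlt
    have h1 : (r h : ℝ) * q0 h ≤ 2 * (r h' * q0 h') := by linarith [hrT h, hrhalf h']
    have h2 := hq0B h h' hlt
    have h3 : 2 / ω * q0 h' ≤ q0 h := (mul_le_mul_of_nonneg_right hBω (hq0pos h').le).trans h2
    have h4 : (r h : ℝ) * (2 / ω * q0 h') ≤ 2 * (r h' * q0 h') :=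
      (mul_le_mul_of_nonneg_left h3 (hr0 h).le).trans h1
    have h5 : (r h : ℝ) * (2 / ω * q0 h') = (2 * q0 h') * (r h / ω) := by ring
    have h6 : (2 * q0 h') * (r h / ω) ≤ (2 * q0 h') * r h' := by
      rw [← h5]; linarith
    have h7 := le_of_mul_le_mul_left h6 (by linarith [hq0pos h'])
    rw [div_le_iff₀ hω] at h7
    linarith
  · intro h
    calc c * T / (2 * N) = c / N * (T / 2) := by ring
      _ ≤ c / N * (r h * q0 h) := mul_le_mul_of_nonneg_left (hrhalf h) (by positivity)
      _ = r h * (c * q0 h / N) := by ring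
      _ ≤ _ := mul_le_mul_of_nonneg_left (hb h) (hr0 h).le
  · have h1 : Real.log (l1 (normRingSeminorm ℤ) p') ≤ m * R * Real.log C := by
      have h2 : l1 (normRingSeminorm ℤ) p' ≤ C ^ (∑ h, r h) := hp'l1.trans hpl1
      rcases (l1_nonneg (normRingSeminorm ℤ) p').eq_or_lt with h0 | h0
      · rw [← h0, Real.log_zero]; positivity
      · refine (Real.log_le_log h0 h2).trans ?_
        rw [Real.log_pow]
        exact mul_le_mul_of_nonneg_right hsumr hlogC
    calc K * R + Real.log (l1 (normRingSeminorm ℤ) p') ≤ K * R + m * R * Real.log C := by linarith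
      _ ≤ (K + m * Real.log C) * (2 * N) * (R / (2 * N)) := by
          apply le_of_eq; field_simp
      _ ≤ ω * c * Q0 * (R / (2 * N)) := mul_le_mul_of_nonneg_right hQ0a (by positivity)
      _ = ω * (c * T / (2 * N)) := by rw [← hRQ]; ring

/-- The vectors `w` determined by the penultimate minimum cannot be pairwise distinct. -/
theorem pt (L M : Matrix ι ι ℝ) (hML : M * L = 1) (hM : ∀ i k, IsIntegral ℤ (M i k))
    (e : ι → ℝ) (he : ∑ k, e k < 0) (l0 : ι) (Y W : ℕ → Matrix ι ι ℤ) (hWY : ∀ j, W j * Y j = 1)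
    (q : ℕ → ℝ) (hq : Filter.Tendsto q Filter.atTop Filter.atTop)
    (hY : ∀ j l, l ≠ l0 → ∀ k, |∑ i, (Y j l i : ℝ) * L k i| ≤ Real.exp (q j * e k))
    (hinj : Function.Injective fun j => fun i => W j i l0) : False := by
  classical
  choose c0 D0 hc0 hD0 hliou using fun k => liouville (fun i => M i k) (fun i => hM i k)
  set D : ℕ := ∑ k, D0 k with hD
  have hDle : ∀ k, D0 k ≤ D := fun k =>
    Finset.single_le_sum (f := D0) (fun _ _ => Nat.zero_le _) (Finset.mem_univ k)
  have hDpos : (0 : ℝ) < D := by exact_mod_cast (hD0 l0).trans_le (hDle l0)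
  set δ : ℝ := -∑ k, e k with hδ
  have hδ0 : 0 < δ := by linarith
  set c : ℝ := δ / (4 * D) with hc
  have hcpos : 0 < c := by positivity
  by_cases hbad : ∃ᶠ j in Filter.atTop, ∀ a, |(W j a l0 : ℝ)| < Real.exp (c * q j)
  swap
  · rw [Filter.not_frequently, Filter.eventually_atTop] at hbad
    obtain ⟨j0, hj0⟩ := hbad
    refine pt_core L M hML hM e he l0 (fun j => Y (j + j0)) (fun j => W (j + j0))
      (fun j => hWY _) (fun j => q (j + j0)) (hq.comp (Filter.tendsto_add_atTop_nat j0))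
      (fun j => hY _) hcpos fun j => ?_
    have := hj0 (j + j0) (Nat.le_add_left _ _)
    push Not at this
    exact this
  have hLM : L * M = 1 := mul_eq_one_comm.1 hML
  have hYW : ∀ j, Y j * W j = 1 := fun j => mul_eq_one_comm.1 (hWY j)
  have hdetL : L.det ≠ 0 := by
    intro h
    have := congrArg Matrix.det hML
    rw [Matrix.det_mul, h, mul_zero, Matrix.det_one] at this
    exact zero_ne_one this
  set α : ℕ → ι → ℝ := fun j k => ∑ i, (W j i l0 : ℝ) * M i k with hα
  set C1 : ℝ := (Fintype.card ι).factorial / |L.det| with hC1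
  have hC1pos : 0 < C1 := by have := abs_pos.2 hdetL; positivity
  have hup : ∀ j k, |α j k| ≤ C1 * Real.exp (q j * (-δ - e k)) := by
    intro j k
    set YR : Matrix ι ι ℝ := (Y j).map (Int.cast : ℤ → ℝ) with hYR
    set WR : Matrix ι ι ℝ := (W j).map (Int.cast : ℤ → ℝ) with hWR
    have hYWR : YR * WR = 1 := by
      have h1 := congrArg (fun A : Matrix ι ι ℤ => A.map (Int.castRingHom ℝ)) (hYW j)
      simp only [Matrix.map_mul, Matrix.map_one _ (map_zero _) (map_one _)] at h1
      exact h1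
    set G : Matrix ι ι ℝ := YR * L.transpose with hG
    have hGinv : G * (M.transpose * WR) = 1 := by
      rw [hG, ← Matrix.mul_assoc, Matrix.mul_assoc YR, ← Matrix.transpose_mul, hML,
        Matrix.transpose_one, Matrix.mul_one, hYWR]
    have hdetY : |YR.det| = 1 := by
      have h1 : YR.det = ((Y j).det : ℝ) := ((Int.castRingHom ℝ).map_det (Y j)).symm
      have h2 : IsUnit (Y j).det := by
        rw [← Matrix.isUnit_iff_isUnit_det]
        exact IsUnit.of_mul_eq_one _ (hYW j)
      rw [h1]
      rcases Int.isUnit_iff.1 h2 with h | h <;> rw [h] <;> simp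
    have hdetG : |G.det| = |L.det| := by
      rw [hG, Matrix.det_mul, Matrix.det_transpose, abs_mul, hdetY, one_mul]
    have hadj : G.adjugate = G.det • (M.transpose * WR) := by
      calc G.adjugate = G.adjugate * (G * (M.transpose * WR)) := by rw [hGinv, Matrix.mul_one]
        _ = _ := by rw [← Matrix.mul_assoc, Matrix.adjugate_mul, Matrix.smul_mul, Matrix.one_mul]
    have hαe : (M.transpose * WR) k l0 = α j k := by
      rw [Matrix.mul_apply, hα]
      exact Finset.sum_congr rfl fun i _ => by simp [hWR, mul_comm]
    have h1 : |G.adjugate k l0| = |L.det| * |α j k| := by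
      rw [hadj, Matrix.smul_apply, hαe, smul_eq_mul, abs_mul, hdetG]
    have hGlk : ∀ l k, G l k = ∑ i, (Y j l i : ℝ) * L k i := by
      intro l k
      rw [hG, Matrix.mul_apply]; rfl
    have h2 := det_bound (G.updateRow l0 (Pi.single k 1))
      (fun l => if l = l0 then Real.exp (-(q j * e k)) else 1) (fun k' => Real.exp (q j * e k')) (by
        intro l k'
        rw [Matrix.updateRow_apply]
        split_ifs with h
        · rw [Pi.single_apply]
          split_ifs with h'
          · subst h'; rw [← Real.exp_add]; simp
          · simp only [abs_zero]; positivity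
        · rw [one_mul, hGlk]
          exact hY j l h k')
    rw [← Matrix.adjugate_apply, h1, Finset.prod_ite_eq' , if_pos (Finset.mem_univ _),
      ← Real.exp_sum, ← Real.exp_add, ← Finset.mul_sum] at h2
    have h3 : -(q j * e k) + q j * ∑ k, e k = q j * (-δ - e k) := by rw [hδ]; ring
    rw [h3] at h2
    rw [hC1, div_mul_eq_mul_div, le_div_iff₀ (abs_pos.2 hdetL)]
    linarith
  -- for large bad indices the coefficients live on the negative exponents
  have hsupp : ∀ᶠ j in Filter.atTop, (∀ a, |(W j a l0 : ℝ)| < Real.exp (c * q j)) →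
      ∀ k, α j k ≠ 0 → e k ≤ -(δ / 2) := by
    have hev : ∀ k, ∀ᶠ j in Filter.atTop, C1 * Real.exp (-(q j * (δ / 4))) < c0 k := by
      intro k
      have h1 : Filter.Tendsto (fun j => q j * (δ / 4)) Filter.atTop Filter.atTop :=
        hq.atTop_mul_const (by positivity)
      have h2 := (Real.tendsto_exp_neg_atTop_nhds_zero.comp h1).const_mul C1
      rw [mul_zero] at h2
      exact h2.eventually_lt_const (hc0 k)
    filter_upwards [Filter.eventually_all.2 hev, hq.eventually_ge_atTop 0] with j hj hqj hb k hk
    by_contra hcon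
    push Not at hcon
    have h1 := hliou k (Real.exp (c * q j)) (fun i => W j i l0)
      (Real.one_le_exp (by positivity)) (fun i => (hb i).le) hk
    have h2 : Real.exp (c * q j) ^ D0 k ≤ Real.exp (q j * (δ / 4)) := by
      rw [← Real.exp_nat_mul, Real.exp_le_exp]
      calc (D0 k : ℝ) * (c * q j) ≤ D * (c * q j) :=
            mul_le_mul_of_nonneg_right (by exact_mod_cast hDle k) (by positivity)
        _ = q j * (δ / 4) := by rw [hc]; field_simp
    have h3 : c0 k ≤ C1 * Real.exp (q j * (-δ - e k)) * Real.exp (q j * (δ / 4)) :=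
      h1.trans (mul_le_mul (hup j k) h2 (by positivity) (by positivity))
    rw [mul_assoc, ← Real.exp_add] at h3
    have h4 : Real.exp (q j * (-δ - e k) + q j * (δ / 4)) ≤ Real.exp (-(q j * (δ / 4))) := by
      rw [Real.exp_le_exp]; nlinarith
    have := mul_le_mul_of_nonneg_left h4 hC1pos.le
    linarith [hj k]
  obtain ⟨i0, hi0b, hi0s⟩ := (hbad.and_eventually hsupp).exists
  have hi0 := hi0s hi0b
  set w : ι → ℤ := fun i => W i0 i l0 with hw
  have hwα : ∀ x, (w x : ℝ) = ∑ k, α i0 k * L k x := by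
    intro x
    simp only [hα, Finset.sum_mul]
    rw [Finset.sum_comm]
    simp only [mul_assoc, ← Finset.mul_sum]
    have : ∀ i, ∑ k, M i k * L k x = (1 : Matrix ι ι ℝ) i x := fun i => by
      rw [← hML, Matrix.mul_apply]
    simp only [this, Matrix.one_apply]
    simp [hw]
  have hev : ∀ᶠ j in Filter.atTop, ∀ i, W j i l0 = w i ∨ W j i l0 = - w i := by
    have h1 : Filter.Tendsto (fun j => q j * (δ / 2)) Filter.atTop Filter.atTop :=
      hq.atTop_mul_const (by positivity)
    have h2 := (Real.tendsto_exp_neg_atTop_nhds_zero.comp h1).const_mul (∑ k, |α i0 k|)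
    rw [mul_zero] at h2
    filter_upwards [h2.eventually_lt_const one_pos, hq.eventually_ge_atTop 0] with j hj hqj
    have hzero : ∀ l, l ≠ l0 → ∑ x, Y j l x * w x = 0 := by
      intro l hl
      have e1 : ((∑ x, Y j l x * w x : ℤ) : ℝ) =
          ∑ k, α i0 k * ∑ x, (Y j l x : ℝ) * L k x := by
        push_cast
        simp only [hwα, Finset.mul_sum]
        rw [Finset.sum_comm]
        exact Finset.sum_congr rfl fun k _ => Finset.sum_congr rfl fun x _ => by ring
      have e2 : |((∑ x, Y j l x * w x : ℤ) : ℝ)| < 1 := by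
        rw [e1]
        refine lt_of_le_of_lt (Finset.abs_sum_le_sum_abs _ _) (lt_of_le_of_lt ?_ hj)
        rw [Finset.sum_mul]
        refine Finset.sum_le_sum fun k _ => ?_
        rw [abs_mul]
        by_cases hk : α i0 k = 0
        · rw [hk]; simp
        · refine mul_le_mul_of_nonneg_left ((hY j l hl k).trans ?_) (abs_nonneg _)
          rw [Function.comp_apply, Real.exp_le_exp]
          have := mul_le_mul_of_nonneg_left (hi0 k hk) hqj
          linarith
      have e3 : |∑ x, Y j l x * w x| < 1 := by exact_mod_cast e2
      exact Int.abs_lt_one_iff.1 e3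
    set t : ℤ := ∑ x, Y j l0 x * w x with ht
    have hwt : ∀ i, w i = W j i l0 * t := by
      intro i
      have e1 : w i = ∑ x, (W j * Y j) i x * w x := by
        rw [hWY]; simp [Matrix.one_apply]
      rw [e1]
      simp only [Matrix.mul_apply, Finset.sum_mul]
      rw [Finset.sum_comm, Finset.sum_eq_single l0]
      · rw [ht, Finset.mul_sum]
        exact Finset.sum_congr rfl fun x _ => by ring
      · intro l _ hl
        simp only [mul_assoc, ← Finset.mul_sum]
        rw [hzero l hl, mul_zero]
      · simp
    have htu : t ∣ 1 := by
      refine ⟨∑ i, Y i0 l0 i * W j i l0, ?_⟩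
      have e1 := congrFun (congrFun (hYW i0) l0) l0
      rw [Matrix.mul_apply, Matrix.one_apply_eq] at e1
      rw [← e1, Finset.mul_sum]
      refine Finset.sum_congr rfl fun i _ => ?_
      have := hwt i
      rw [hw] at this
      dsimp only at this
      rw [this]; ring
    intro i
    rcases Int.isUnit_iff.1 (isUnit_of_dvd_one htu) with h | h
    · left; rw [hwt i, h, mul_one]
    · right; rw [hwt i, h]; ring
  have hfr := hbad.and_eventually hev
  rw [Nat.frequently_atTop_iff_infinite] at hfr
  refine hfr ?_
  refine Set.Finite.of_finite_image (f := fun j => fun i => W j i l0) ?_ hinj.injOn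
  refine (Set.Finite.pi' (t := fun i => ({w i, -w i} : Set ℤ)) fun i => Set.toFinite _).subset ?_
  rintro _ ⟨j, hj, rfl⟩ i
  rcases hj.2 i with h | h <;> simp [h]

end PT

end APC

namespace APC

/-! ### Davenport's lemma -/

/-- The integer block matrix `[[T, 0], [z, 1]]`. -/
def blkLow {n : ℕ} (T : Matrix (Fin n) (Fin n) ℤ) (z : Fin n → ℤ) :
    Matrix (Fin (n + 1)) (Fin (n + 1)) ℤ :=
  Matrix.of (Fin.snoc (α := fun _ => Fin (n + 1) → ℤ)
    (fun j => Fin.snoc (α := fun _ => ℤ) (T j) 0) (Fin.snoc (α := fun _ => ℤ) z 1))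

lemma blkLow_cc {n : ℕ} (T : Matrix (Fin n) (Fin n) ℤ) (z : Fin n → ℤ) (i j : Fin n) :
    blkLow T z i.castSucc j.castSucc = T i j := by simp [blkLow]

lemma blkLow_cl {n : ℕ} (T : Matrix (Fin n) (Fin n) ℤ) (z : Fin n → ℤ) (i : Fin n) :
    blkLow T z i.castSucc (Fin.last n) = 0 := by simp [blkLow]

lemma blkLow_lc {n : ℕ} (T : Matrix (Fin n) (Fin n) ℤ) (z : Fin n → ℤ) (j : Fin n) :
    blkLow T z (Fin.last n) j.castSucc = z j := by simp [blkLow]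

lemma blkLow_ll {n : ℕ} (T : Matrix (Fin n) (Fin n) ℤ) (z : Fin n → ℤ) :
    blkLow T z (Fin.last n) (Fin.last n) = 1 := by simp [blkLow]

lemma blkLow_mul {n : ℕ} (T S : Matrix (Fin n) (Fin n) ℤ) (h : T * S = 1) (z : Fin n → ℤ) :
    blkLow T (fun i => - ∑ j, z j * T j i) * blkLow S z = 1 := by
  ext i j
  rw [Matrix.mul_apply, Fin.sum_univ_castSucc]
  induction i using Fin.lastCases with
  | last =>
    induction j using Fin.lastCases with
    | last => simp [blkLow_cc, blkLow_cl, blkLow_lc, blkLow_ll]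
    | cast j =>
      simp only [blkLow_cc, blkLow_cl, blkLow_lc, blkLow_ll]
      have : ∑ x, (∑ k, z k * T k x) * S x j = z j := by
        simp only [Finset.sum_mul, mul_assoc]
        rw [Finset.sum_comm]
        simp only [← Finset.mul_sum, ← Matrix.mul_apply, h]
        simp [Matrix.one_apply]
      simp only [neg_mul, Finset.sum_neg_distrib, this]
      rw [Matrix.one_apply_ne (Fin.castSucc_lt_last j).ne']
      ring
  | cast i =>
    induction j using Fin.lastCases with
    | last =>
      simp only [blkLow_cc, blkLow_cl, blkLow_lc, blkLow_ll]
      rw [Matrix.one_apply_ne (Fin.castSucc_lt_last i).ne]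
      simp
    | cast j =>
      simp only [blkLow_cc, blkLow_cl, blkLow_lc, blkLow_ll]
      rw [← Matrix.mul_apply, h]
      simp [Matrix.one_apply]

/-- Davenport's lemma in dimension `n` with constant `C`: if row `j` of an invertible `G` is bounded
by `ν j`, an integral unimodular change of rows makes column `i` bounded by `C ν (π i)` for some
permutation `π`. -/
def Dav (n : ℕ) (C : ℝ) : Prop :=
  ∀ (G : Matrix (Fin n) (Fin n) ℝ) (ν : Fin n → ℝ), G.det ≠ 0 → Monotone ν → (∀ j, 0 ≤ ν j) →
    (∀ j i, |G j i| ≤ ν j) → ∃ (π : Equiv.Perm (Fin n)) (T S : Matrix (Fin n) (Fin n) ℤ),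
      T * S = 1 ∧ ∀ j i, |(T.map (Int.cast : ℤ → ℝ) * G) j i| ≤ C * ν (π i)

/-- The linear relation `a` between the columns of the first `n` rows, normalised so that its largest
coefficient is `a i0 = 1`; column `i0` is dropped and the statement in dimension `n` applied to the
remaining square block. -/
lemma dav_aux {n : ℕ} {C : ℝ} (hD : Dav n C) (G : Matrix (Fin (n + 1)) (Fin (n + 1)) ℝ)
    (ν : Fin n → ℝ) (hG : G.det ≠ 0) (hν : Monotone ν) (hν0 : ∀ j, 0 ≤ ν j)
    (hb : ∀ (j : Fin n) i, |G j.castSucc i| ≤ ν j) :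
    ∃ (i0 : Fin (n + 1)) (a : Fin (n + 1) → ℝ) (π : Equiv.Perm (Fin n))
      (T S : Matrix (Fin n) (Fin n) ℤ), a i0 = 1 ∧ (∀ i, |a i| ≤ 1) ∧
      (∀ j : Fin n, ∑ i, G j.castSucc i * a i = 0) ∧
      (G.submatrix Fin.castSucc i0.succAbove).det ≠ 0 ∧ T * S = 1 ∧
      ∀ j i, |(T.map (Int.cast : ℤ → ℝ) * G.submatrix Fin.castSucc i0.succAbove) j i|
        ≤ C * ν (π i) := by
  classical
  obtain ⟨a, ha, haG⟩ : ∃ a : Fin (n + 1) → ℝ, a ≠ 0 ∧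
      ∀ j : Fin n, ∑ i, G j.castSucc i * a i = 0 := by
    have h1 : G.mulVec (G⁻¹.mulVec (Pi.single (Fin.last n) 1)) = Pi.single (Fin.last n) 1 := by
      rw [Matrix.mulVec_mulVec, Matrix.mul_nonsing_inv _ (isUnit_iff_ne_zero.2 hG),
        Matrix.one_mulVec]
    refine ⟨G⁻¹.mulVec (Pi.single (Fin.last n) 1), ?_, ?_⟩
    · intro h
      rw [h, Matrix.mulVec_zero] at h1
      have := congrFun h1 (Fin.last n)
      simp at this
    · intro j
      have := congrFun h1 j.castSucc
      rw [Pi.single_eq_of_ne (Fin.castSucc_lt_last j).ne] at this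
      exact this
  obtain ⟨i0, -, hi0⟩ := Finset.exists_max_image Finset.univ (fun i => |a i|) ⟨0, by simp⟩
  have hai0 : a i0 ≠ 0 := by
    intro h
    apply ha
    funext i
    have := hi0 i (by simp)
    rw [h, abs_zero] at this
    exact abs_nonpos_iff.1 this
  have hrel : ∀ j : Fin n, ∑ i, G j.castSucc i * (a i / a i0) = 0 := by
    intro j
    simp only [mul_div_assoc', ← Finset.sum_div]
    rw [haG j, zero_div]
  have hdet : (G.submatrix Fin.castSucc i0.succAbove).det ≠ 0 := by
    intro h0
    obtain ⟨v, hv, hv0⟩ := Matrix.exists_vecMul_eq_zero_iff.2 h0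
    have h1 : ∀ i, ∑ j, v j * G j.castSucc (i0.succAbove i) = 0 := fun i => congrFun hv0 i
    have h2 : ∑ j, v j * G j.castSucc i0 = 0 := by
      have e1 : ∑ j, v j * ∑ i, G j.castSucc i * (a i / a i0) = 0 := by simp [hrel]
      simp only [Finset.mul_sum, ← mul_assoc] at e1
      rw [Finset.sum_comm] at e1
      simp only [← Finset.sum_mul] at e1
      rw [Fin.sum_univ_succAbove _ i0] at e1
      simpa [h1, hai0] using e1
    have h3 : ∃ w : Fin (n + 1) → ℝ, w ≠ 0 ∧ Matrix.vecMul w G = 0 := by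
      refine ⟨Fin.snoc (α := fun _ => ℝ) v 0, ?_, ?_⟩
      · intro h
        apply hv
        funext j
        have := congrFun h j.castSucc
        simpa using this
      · funext i
        change ∑ j : Fin (n + 1), _ * _ = _
        rw [Fin.sum_univ_castSucc]
        simp only [Fin.snoc_castSucc, Fin.snoc_last, zero_mul, add_zero]
        rcases Fin.eq_self_or_eq_succAbove i0 i with rfl | ⟨i, rfl⟩
        · exact h2
        · exact h1 i
    exact hG (Matrix.exists_vecMul_eq_zero_iff.1 h3)
  obtain ⟨π, T, S, hTS, hb'⟩ := hD _ ν hdet hν hν0 (fun j i => hb j _)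
  refine ⟨i0, fun i => a i / a i0, π, T, S, div_self hai0, ?_, hrel, hdet, hTS, hb'⟩
  intro i
  rw [abs_div]
  exact div_le_one_of_le₀ (hi0 i (by simp)) (abs_nonneg _)

/-- Extension of a permutation of `Fin n` to `Fin (n + 1)` sending `i0` to the last element. -/
def extPerm {n : ℕ} (i0 : Fin (n + 1)) (π : Equiv.Perm (Fin n)) : Equiv.Perm (Fin (n + 1)) :=
  (finSuccEquiv' i0).trans ((Equiv.optionCongr π).trans (finSuccEquiv' (Fin.last n)).symm)

lemma extPerm_self {n : ℕ} (i0 : Fin (n + 1)) (π : Equiv.Perm (Fin n)) :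
    extPerm i0 π i0 = Fin.last n := by simp [extPerm]

lemma extPerm_succAbove {n : ℕ} (i0 : Fin (n + 1)) (π : Equiv.Perm (Fin n)) (i : Fin n) :
    extPerm i0 π (i0.succAbove i) = (π i).castSucc := by simp [extPerm]

/-- The entries of the transformed matrix in the exceptional column `i0`, which the relation `a`
expresses through the other columns. -/
lemma dav_rows {n : ℕ} {C : ℝ} (hC : 0 ≤ C) (G : Matrix (Fin (n + 1)) (Fin (n + 1)) ℝ)
    (ν : Fin n → ℝ) (μ : ℝ) (hμ : ∀ j, ν j ≤ μ)
    (i0 : Fin (n + 1)) (a : Fin (n + 1) → ℝ) (π : Equiv.Perm (Fin n))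
    (T : Matrix (Fin n) (Fin n) ℤ) (h1 : a i0 = 1) (h2 : ∀ i, |a i| ≤ 1)
    (h3 : ∀ j : Fin n, ∑ i, G j.castSucc i * a i = 0)
    (hb : ∀ j i, |(T.map (Int.cast : ℤ → ℝ) * G.submatrix Fin.castSucc i0.succAbove) j i|
        ≤ C * ν (π i)) (j : Fin n) :
    |∑ k : Fin n, (T j k : ℝ) * G k.castSucc i0| ≤ n * C * μ := by
  have e1 : ∑ k : Fin n, (T j k : ℝ) * G k.castSucc i0 =
      - ∑ i, (∑ k, (T j k : ℝ) * G k.castSucc (i0.succAbove i)) * a (i0.succAbove i) := by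
    have e2 : ∑ k, (T j k : ℝ) * ∑ i, G k.castSucc i * a i = 0 := by simp [h3]
    simp only [Finset.mul_sum, ← mul_assoc] at e2
    rw [Finset.sum_comm] at e2
    simp only [← Finset.sum_mul] at e2
    rw [Fin.sum_univ_succAbove _ i0, h1] at e2
    linarith
  rw [e1, abs_neg]
  refine (Finset.abs_sum_le_sum_abs _ _).trans ?_
  have : ∀ i ∈ (Finset.univ : Finset (Fin n)),
      |(∑ k, (T j k : ℝ) * G k.castSucc (i0.succAbove i)) * a (i0.succAbove i)| ≤ C * μ := by
    intro i _
    rw [abs_mul]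
    have := hb j i
    rw [Matrix.mul_apply] at this
    calc _ ≤ (C * ν (π i)) * 1 := mul_le_mul this (h2 _) (abs_nonneg _) ((abs_nonneg _).trans this)
      _ ≤ C * μ := by rw [mul_one]; exact mul_le_mul_of_nonneg_left (hμ _) hC
  refine (Finset.sum_le_card_nsmul _ _ _ this).trans ?_
  simp [mul_assoc]

/-- The form of Davenport's lemma in which the last row is not transformed: the largest bound is
replaced by any `μ` dominating the bounds of the other rows. -/
lemma dav_capped {n : ℕ} {C : ℝ} (hC : 0 ≤ C) (hD : Dav n C)
    (G : Matrix (Fin (n + 1)) (Fin (n + 1)) ℝ)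
    (ν : Fin n → ℝ) (μ : ℝ) (hμ : ∀ j, ν j ≤ μ) (hμ0 : 0 ≤ μ)
    (hG : G.det ≠ 0) (hν : Monotone ν) (hν0 : ∀ j, 0 ≤ ν j)
    (hb : ∀ (j : Fin n) i, |G j.castSucc i| ≤ ν j) :
    ∃ (π : Equiv.Perm (Fin (n + 1))) (T S : Matrix (Fin (n + 1)) (Fin (n + 1)) ℤ),
      T * S = 1 ∧ (∀ i, S i (Fin.last n) = if i = Fin.last n then 1 else 0) ∧
      ∀ j i, j ≠ Fin.last n → |(T.map (Int.cast : ℤ → ℝ) * G) j i| ≤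
        ((n + 1) * C) * Fin.snoc (α := fun _ => ℝ) ν μ (π i) := by
  obtain ⟨i0, a, π, T, S, h1, h2, h3, h4, hTS, h5⟩ := dav_aux hD G ν hG hν hν0 hb
  refine ⟨extPerm i0 π, blkLow T (fun i => - ∑ j, (0 : Fin n → ℤ) j * T j i), blkLow S 0,
    blkLow_mul T S hTS 0, ?_, ?_⟩
  · intro i
    induction i using Fin.lastCases with
    | last => simp [blkLow_ll]
    | cast i => rw [blkLow_cl, if_neg (Fin.castSucc_lt_last i).ne]
  · intro j i hj
    induction j using Fin.lastCases with
    | last => exact absurd rfl hj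
    | cast j =>
      rw [Matrix.mul_apply, Fin.sum_univ_castSucc]
      simp only [Matrix.map_apply, blkLow_cc, blkLow_cl, Int.cast_zero, zero_mul, add_zero]
      rcases Fin.eq_self_or_eq_succAbove i0 i with rfl | ⟨i, rfl⟩
      · rw [extPerm_self, Fin.snoc_last]
        refine (dav_rows hC G ν μ hμ i a π T h1 h2 h3 h5 j).trans ?_
        have : 0 ≤ C * μ := mul_nonneg hC hμ0
        nlinarith
      · rw [extPerm_succAbove, Fin.snoc_castSucc]
        have := h5 j i
        rw [Matrix.mul_apply] at this
        refine this.trans ?_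
        have h6 : 0 ≤ C * ν (π i) := mul_nonneg hC (hν0 _)
        have : (0 : ℝ) ≤ n := n.cast_nonneg
        nlinarith

/-- The rows other than the last are treated by `dav_aux`; the last row is reduced modulo them by
rounding its coordinates. -/
lemma dav_succ {n : ℕ} {C : ℝ} (hC : 0 ≤ C) (hD : Dav n C) :
    Dav (n + 1) ((n + 1) * (n + 1) * (C + 1)) := by
  intro G ν hG hν hν0 hb
  obtain ⟨i0, a, π, T, S, h1, h2, h3, h4, hTS, h5⟩ := dav_aux hD G (fun j => ν j.castSucc) hG
    (fun i j h => hν (Fin.castSucc_le_castSucc_iff.2 h)) (fun _ => hν0 _) (fun j i => hb _ _)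
  set μ := ν (Fin.last n) with hμ
  have hμ0 : 0 ≤ μ := hν0 _
  have hμl : ∀ j : Fin n, ν j.castSucc ≤ μ := fun j => hν (Fin.le_last _)
  have hn : (0 : ℝ) ≤ n := n.cast_nonneg
  set H := T.map (Int.cast : ℤ → ℝ) * G.submatrix Fin.castSucc i0.succAbove with hH
  have hHdet : H.det ≠ 0 := by
    have hTd : (T.map (Int.cast : ℤ → ℝ)).det ≠ 0 := by
      have e : T.map (Int.cast : ℤ → ℝ) * S.map (Int.cast : ℤ → ℝ) = 1 := by
        have := congrArg (fun M : Matrix (Fin n) (Fin n) ℤ => M.map (Int.castRingHom ℝ)) hTS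
        rw [Matrix.map_mul] at this
        simpa using this
      intro h0
      have := congrArg Matrix.det e
      rw [Matrix.det_mul, h0, zero_mul, Matrix.det_one] at this
      exact zero_ne_one this
    rw [hH, Matrix.det_mul]
    exact mul_ne_zero hTd h4
  -- the last row is a combination of the others off column `i0`
  obtain ⟨s, hs⟩ : ∃ s : Fin n → ℝ, ∀ i, ∑ j, s j * H j i = G (Fin.last n) (i0.succAbove i) := by
    refine ⟨Matrix.vecMul (fun i => G (Fin.last n) (i0.succAbove i)) H⁻¹, fun i => ?_⟩
    have := Matrix.vecMul_vecMul (fun i => G (Fin.last n) (i0.succAbove i)) H⁻¹ H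
    rw [Matrix.nonsing_inv_mul _ (isUnit_iff_ne_zero.2 hHdet), Matrix.vecMul_one] at this
    exact congrFun this i
  have hrow := dav_rows hC G (fun j => ν j.castSucc) μ hμl i0 a π T h1 h2 h3 h5
  have hround : ∀ j, |s j - round (s j)| ≤ 1 := fun j => (abs_sub_round _).trans (by norm_num)
  set R : Fin n → ℝ := fun j => ∑ k : Fin n, (T j k : ℝ) * G k.castSucc i0 with hR
  have hRe : ∀ j, R j = - ∑ i, H j i * a (i0.succAbove i) := by
    intro j
    have e2 : ∑ k, (T j k : ℝ) * ∑ i, G k.castSucc i * a i = 0 := by simp [h3]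
    simp only [Finset.mul_sum, ← mul_assoc] at e2
    rw [Finset.sum_comm] at e2
    simp only [← Finset.sum_mul] at e2
    rw [Fin.sum_univ_succAbove _ i0, h1] at e2
    rw [hR, hH]
    simp only [Matrix.mul_apply, Matrix.map_apply, Matrix.submatrix_apply]
    linarith
  refine ⟨extPerm i0 π, blkLow T (fun i => - ∑ j, (fun j => round (s j)) j * T j i), blkLow S _,
    blkLow_mul T S hTS _, ?_⟩
  intro j i
  rw [Matrix.mul_apply, Fin.sum_univ_castSucc]
  simp only [Matrix.map_apply]
  induction j using Fin.lastCases with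
  | cast j =>
    simp only [Matrix.map_apply, blkLow_cc, blkLow_cl, Int.cast_zero, zero_mul, add_zero]
    rcases Fin.eq_self_or_eq_succAbove i0 i with rfl | ⟨i, rfl⟩
    · rw [extPerm_self]
      refine (hrow j).trans ?_
      refine mul_le_mul_of_nonneg_right ?_ hμ0
      nlinarith [mul_nonneg hn hC, mul_nonneg (mul_nonneg hn hn) hC, mul_nonneg hn hn]
    · rw [extPerm_succAbove]
      have := h5 j i
      rw [hH, Matrix.mul_apply] at this
      refine this.trans ?_
      refine mul_le_mul_of_nonneg_right ?_ (hν0 _)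
      nlinarith [mul_nonneg hn hC, mul_nonneg (mul_nonneg hn hn) hC, mul_nonneg hn hn]
  | last =>
    simp only [blkLow_lc, blkLow_ll, Int.cast_one, one_mul]
    have key : ∀ x, ∑ k : Fin n, ((- ∑ j, round (s j) * T j k : ℤ) : ℝ) * G k.castSucc x =
        - ∑ j, (round (s j) : ℝ) * ∑ k, (T j k : ℝ) * G k.castSucc x := by
      intro x
      push_cast
      simp only [neg_mul, Finset.sum_neg_distrib, Finset.sum_mul, Finset.mul_sum, mul_assoc]
      rw [Finset.sum_comm]
    rw [key]
    rcases Fin.eq_self_or_eq_succAbove i0 i with rfl | ⟨i, rfl⟩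
    · rw [extPerm_self]
      have e3 : ∑ j, s j * R j = - ∑ x, G (Fin.last n) (i.succAbove x) * a (i.succAbove x) := by
        simp only [hRe, mul_neg, Finset.sum_neg_distrib, Finset.mul_sum, ← hs, Finset.sum_mul]
        rw [Finset.sum_comm]
        simp only [mul_assoc]
      have e4 : -∑ j, (round (s j) : ℝ) * R j + G (Fin.last n) i =
          ∑ j, (s j - round (s j)) * R j + (G (Fin.last n) i +
            ∑ x, G (Fin.last n) (i.succAbove x) * a (i.succAbove x)) := by
        simp only [sub_mul, Finset.sum_sub_distrib]
        rw [e3]; ring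
      rw [e4]
      have b1 : |∑ j, (s j - round (s j)) * R j| ≤ n * (n * C * μ) := by
        refine (Finset.abs_sum_le_sum_abs _ _).trans
          ((Finset.sum_le_card_nsmul _ _ (n * C * μ) fun j _ => ?_).trans (by simp))
        rw [abs_mul]
        calc _ ≤ 1 * (n * C * μ) := mul_le_mul (hround j) (hrow j) (abs_nonneg _) zero_le_one
          _ = _ := one_mul _
      have b2 : |∑ x, G (Fin.last n) (i.succAbove x) * a (i.succAbove x)| ≤ n * μ := by
        refine (Finset.abs_sum_le_sum_abs _ _).trans
          ((Finset.sum_le_card_nsmul _ _ μ fun j _ => ?_).trans (by simp))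
        rw [abs_mul]
        calc _ ≤ μ * 1 := mul_le_mul (hb _ _) (h2 _) (abs_nonneg _) hμ0
          _ = _ := mul_one _
      have b3 := hb (Fin.last n) i
      refine (abs_add_le _ _).trans ((add_le_add b1 ((abs_add_le _ _).trans
        (add_le_add b3 b2))).trans ?_)
      rw [← hμ]
      have q1 := mul_nonneg hn hμ0
      have q2 := mul_nonneg hC hμ0
      have q3 := mul_nonneg hn q2
      have q4 := mul_nonneg hn q1
      nlinarith
    · rw [extPerm_succAbove]
      have e4 : -∑ j, (round (s j) : ℝ) * H j i + G (Fin.last n) (i0.succAbove i) =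
          ∑ j, (s j - round (s j)) * H j i := by
        simp only [sub_mul, Finset.sum_sub_distrib]
        rw [hs]; ring
      have e5 : ∀ j, ∑ k, (T j k : ℝ) * G k.castSucc (i0.succAbove i) = H j i := by
        intro j; rw [hH, Matrix.mul_apply]; rfl
      simp only [e5]
      rw [e4]
      have b1 : |∑ j, (s j - round (s j)) * H j i| ≤ n * (C * ν (π i).castSucc) := by
        refine (Finset.abs_sum_le_sum_abs _ _).trans
          ((Finset.sum_le_card_nsmul _ _ (C * ν (π i).castSucc) fun j _ => ?_).trans (by simp))
        rw [abs_mul]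
        calc _ ≤ 1 * (C * ν (π i).castSucc) :=
              mul_le_mul (hround j) (h5 j i) (abs_nonneg _) zero_le_one
          _ = _ := one_mul _
      refine b1.trans ?_
      rw [← mul_assoc]
      refine mul_le_mul_of_nonneg_right ?_ (hν0 _)
      nlinarith [mul_nonneg hn hC, mul_nonneg (mul_nonneg hn hn) hC, mul_nonneg hn hn]

lemma davenport (n : ℕ) : ∃ C : ℝ, 0 ≤ C ∧ Dav n C := by
  induction n with
  | zero =>
    refine ⟨0, le_rfl, fun G ν _ _ _ _ => ⟨1, 1, 1, by simp, fun j => j.elim0⟩⟩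
  | succ n ih =>
    obtain ⟨C, hC, hD⟩ := ih
    exact ⟨_, by positivity, dav_succ hC hD⟩

end APC

namespace APC

/-! ### Hermite reduction -/

open Matrix in
/-- The quadratic form attached to `S`. -/
def qf {n : ℕ} (S : Matrix (Fin n) (Fin n) ℝ) (x : Fin n → ℝ) : ℝ := x ⬝ᵥ (S *ᵥ x)

/-- Positive definiteness of a symmetric real matrix, with an explicit lower bound. -/
def PD {n : ℕ} (S : Matrix (Fin n) (Fin n) ℝ) : Prop :=
  S.transpose = S ∧ ∃ c : ℝ, 0 < c ∧ ∀ x, c * ∑ i, x i ^ 2 ≤ qf S x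

lemma sq_sum_vecMul_le {n : ℕ} (M N : Matrix (Fin n) (Fin n) ℝ) (h : M * N = 1) :
    ∃ K : ℝ, 0 < K ∧ ∀ x : Fin n → ℝ, ∑ i, x i ^ 2 ≤ K * ∑ i, (Matrix.vecMul x M i) ^ 2 := by
  refine ⟨1 + ∑ i, ∑ j, N j i ^ 2, by positivity, fun x => ?_⟩
  have hx : ∀ i, x i = ∑ j, Matrix.vecMul x M j * N j i := by
    intro i
    have := Matrix.vecMul_vecMul x M N
    rw [h, Matrix.vecMul_one] at this
    exact (congrFun this i).symm
  have h1 : ∀ i, x i ^ 2 ≤ (∑ j, N j i ^ 2) * ∑ j, (Matrix.vecMul x M j) ^ 2 := by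
    intro i
    rw [hx i, mul_comm]
    exact Finset.sum_mul_sq_le_sq_mul_sq _ _ _
  calc _ ≤ ∑ i, (∑ j, N j i ^ 2) * ∑ j, (Matrix.vecMul x M j) ^ 2 :=
        Finset.sum_le_sum fun i _ => h1 i
    _ ≤ _ := by
        rw [← Finset.sum_mul]
        refine mul_le_mul_of_nonneg_right (by linarith) (by positivity)

lemma qf_conj {n : ℕ} (S B : Matrix (Fin n) (Fin n) ℝ) (x : Fin n → ℝ) :
    qf (B * S * B.transpose) x = qf S (Matrix.vecMul x B) := by
  unfold qf
  rw [← Matrix.mulVec_mulVec, ← Matrix.mulVec_mulVec, Matrix.mulVec_transpose,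
    Matrix.dotProduct_mulVec]

lemma PD.conj {n : ℕ} {S : Matrix (Fin n) (Fin n) ℝ} (hS : PD S) (B C : Matrix (Fin n) (Fin n) ℝ)
    (hBC : B * C = 1) : PD (B * S * B.transpose) := by
  obtain ⟨h1, c, hc, h2⟩ := hS
  obtain ⟨K, hK, h3⟩ := sq_sum_vecMul_le B C hBC
  refine ⟨by simp [Matrix.transpose_mul, h1, Matrix.mul_assoc], c / K, by positivity, fun x => ?_⟩
  rw [qf_conj]
  refine le_trans ?_ (h2 _)
  rw [div_mul_eq_mul_div, div_le_iff₀ hK]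
  nlinarith [mul_le_mul_of_nonneg_left (h3 x) hc.le]

lemma cast_mul_eq_one {ι : Type*} [Fintype ι] [DecidableEq ι] {B C : Matrix ι ι ℤ}
    (h : B * C = 1) : B.map (Int.cast : ℤ → ℝ) * C.map (Int.cast : ℤ → ℝ) = 1 := by
  have := congrArg (fun M : Matrix ι ι ℤ => M.map (Int.castRingHom ℝ)) h
  rw [Matrix.map_mul] at this
  simpa using this

/-- The Schur complement of the upper left entry. -/
noncomputable def schur {n : ℕ} (S : Matrix (Fin (n + 1)) (Fin (n + 1)) ℝ) : Matrix (Fin n) (Fin n) ℝ :=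
  Matrix.of fun i j => S i.succ j.succ - S i.succ 0 * S 0 j.succ / S 0 0

/-- Completing the square. -/
lemma qf_cons {n : ℕ} (S : Matrix (Fin (n + 1)) (Fin (n + 1)) ℝ) (hS : S.transpose = S)
    (h0 : S 0 0 ≠ 0) (t : ℝ) (y : Fin n → ℝ) :
    qf S (Fin.cons t y) = S 0 0 * (t + (∑ i, y i * S i.succ 0) / S 0 0) ^ 2 + qf (schur S) y := by
  have hs : ∀ i : Fin n, S 0 i.succ = S i.succ 0 := fun i => by
    conv_lhs => rw [← hS]
    rfl
  have e1 : qf S (Fin.cons t y) = S 0 0 * t ^ 2 + 2 * t * (∑ i, y i * S i.succ 0) +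
      ∑ i, y i * ∑ j, S i.succ j.succ * y j := by
    simp only [qf, dotProduct, Matrix.mulVec, Fin.sum_univ_succ, Fin.cons_zero, Fin.cons_succ,
      hs, mul_add, Finset.sum_add_distrib]
    have : ∑ i, t * (S (Fin.succ i) 0 * y i) = ∑ i, y i * (S i.succ 0 * t) :=
      Finset.sum_congr rfl fun i _ => by ring
    rw [Finset.mul_sum, this]
    have : 2 * t * ∑ i, y i * S i.succ 0 = 2 * ∑ i, y i * (S i.succ 0 * t) := by
      rw [mul_assoc, Finset.mul_sum]
      congr 1
      exact Finset.sum_congr rfl fun i _ => by ring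
    rw [this]; ring
  have e2 : qf (schur S) y = ∑ i, y i * ∑ j, S i.succ j.succ * y j -
      (∑ i, y i * S i.succ 0) ^ 2 / S 0 0 := by
    simp only [qf, dotProduct, Matrix.mulVec, schur, Matrix.of_apply, sub_mul,
      Finset.sum_sub_distrib, mul_sub]
    congr 1
    rw [sq, Finset.sum_mul, Finset.sum_div]
    refine Finset.sum_congr rfl fun i _ => ?_
    rw [Finset.mul_sum, Finset.mul_sum, Finset.sum_div]
    refine Finset.sum_congr rfl fun j _ => ?_
    rw [hs]; ring
  rw [e1, e2]
  field_simp
  ring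

lemma det_schur {n : ℕ} (S : Matrix (Fin (n + 1)) (Fin (n + 1)) ℝ) (h0 : S 0 0 ≠ 0) :
    S.det = S 0 0 * (schur S).det := by
  have h1 : S.det = (Matrix.of (Fin.cons (α := fun _ => Fin (n + 1) → ℝ) (S 0)
      (fun i j => S i.succ j - S i.succ 0 / S 0 0 * S 0 j))).det := by
    refine Matrix.det_eq_of_forall_row_eq_smul_add_const
      (Fin.cons (α := fun _ => ℝ) 0 fun i => S i.succ 0 / S 0 0) 0 (by simp) ?_
    intro i j
    refine Fin.cases ?_ (fun i => ?_) i
    · simp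
    · simp
  rw [h1, Matrix.det_succ_column_zero, Fin.sum_univ_succ]
  have h2 : ∀ i : Fin n, S i.succ 0 - S i.succ 0 / S 0 0 * S 0 0 = 0 := fun i => by
    field_simp; ring
  simp only [Matrix.of_apply, Fin.cons_zero, Fin.cons_succ, h2]
  simp only [mul_zero, zero_mul, Finset.sum_const_zero, add_zero]
  simp only [Fin.val_zero, pow_zero, one_mul]
  congr 2
  ext i j
  simp [schur, div_mul_eq_mul_div]

lemma PD.diag_pos {n : ℕ} {S : Matrix (Fin (n + 1)) (Fin (n + 1)) ℝ} (hS : PD S) : 0 < S 0 0 := by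
  obtain ⟨h1, c, hc, h2⟩ := hS
  have := h2 (Pi.single 0 1)
  have e : qf S (Pi.single 0 1) = S 0 0 := by simp [qf]
  rw [e] at this
  refine lt_of_lt_of_le ?_ this
  have : ∑ i, (Pi.single (0 : Fin (n + 1)) (1 : ℝ) : Fin (n + 1) → ℝ) i ^ 2 = 1 := by
    rw [Finset.sum_eq_single 0] <;> simp +contextual [Pi.single_apply]
  rw [this, mul_one]; exact hc

lemma PD.schur {n : ℕ} {S : Matrix (Fin (n + 1)) (Fin (n + 1)) ℝ} (hS : PD S) :
    PD (schur S) := by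
  have h0 := hS.diag_pos
  obtain ⟨h1, c, hc, h2⟩ := hS
  have hs : ∀ i j, S i j = S j i := fun i j => by
    conv_lhs => rw [← h1]
    rfl
  refine ⟨?_, c, hc, fun y => ?_⟩
  · ext i j
    simp only [Matrix.transpose_apply, APC.schur, Matrix.of_apply]
    rw [hs j.succ i.succ, hs j.succ 0, hs 0 i.succ]; ring
  · have := h2 (Fin.cons (-((∑ i, y i * S i.succ 0) / S 0 0)) y)
    rw [qf_cons S h1 h0.ne'] at this
    rw [Fin.sum_univ_succ] at this
    simp only [Fin.cons_zero, Fin.cons_succ, neg_add_cancel] at this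
    nlinarith [mul_nonneg hc.le (sq_nonneg (-((∑ i, y i * S i.succ 0) / S 0 0)))]

lemma qf_int_lower {n : ℕ} {S : Matrix (Fin n) (Fin n) ℝ} (hS : PD S) :
    ∃ c : ℝ, 0 < c ∧ ∀ x : Fin n → ℤ, x ≠ 0 → c ≤ qf S (fun i => (x i : ℝ)) := by
  obtain ⟨h1, c, hc, h2⟩ := hS
  refine ⟨c, hc, fun x hx => ?_⟩
  refine le_trans ?_ (h2 _)
  obtain ⟨i, hi⟩ := Function.ne_iff.1 hx
  have h3 : (1 : ℤ) ≤ x i ^ 2 := by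
    have : 0 < x i ^ 2 := sq_pos_of_ne_zero hi
    omega
  have h4 : (1 : ℝ) ≤ (x i : ℝ) ^ 2 := by exact_mod_cast h3
  have h5 : (x i : ℝ) ^ 2 ≤ ∑ i, (x i : ℝ) ^ 2 :=
    Finset.single_le_sum (f := fun i => (x i : ℝ) ^ 2) (fun _ _ => sq_nonneg _) (Finset.mem_univ i)
  nlinarith

/-- Hermite's inequality in dimension `n` with constant `C`. -/
def Herm (n : ℕ) (C : ℝ) : Prop :=
  ∀ S : Matrix (Fin n) (Fin n) ℝ, PD S → ∃ B B' : Matrix (Fin n) (Fin n) ℤ, B * B' = 1 ∧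
    ∏ i, qf S (fun k => (B i k : ℝ)) ≤ C * S.det

/-- The integer block matrix `[[1, 0], [z, T]]`. -/
def blkUp {n : ℕ} (T : Matrix (Fin n) (Fin n) ℤ) (z : Fin n → ℤ) :
    Matrix (Fin (n + 1)) (Fin (n + 1)) ℤ :=
  Matrix.of (Fin.cons (α := fun _ => Fin (n + 1) → ℤ) (Fin.cons (α := fun _ => ℤ) 1 0)
    (fun j => Fin.cons (α := fun _ => ℤ) (z j) (T j)))

lemma blkUp_mul {n : ℕ} (T S : Matrix (Fin n) (Fin n) ℤ) (h : T * S = 1) (z : Fin n → ℤ) :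
    blkUp T z * blkUp S (fun i => - ∑ j, S i j * z j) = 1 := by
  ext i j
  rw [Matrix.mul_apply, Fin.sum_univ_succ]
  refine Fin.cases ?_ (fun i => ?_) i <;> refine Fin.cases ?_ (fun j => ?_) j
  · simp [blkUp]
  · simp [blkUp, Matrix.one_apply, (Fin.succ_ne_zero j).symm]
  · have : ∑ x, T i x * ∑ k, S x k * z k = z i := by
      simp only [Finset.mul_sum, ← mul_assoc]
      rw [Finset.sum_comm]
      simp only [← Finset.sum_mul, ← Matrix.mul_apply, h]
      simp [Matrix.one_apply]
    simp [blkUp, this, Matrix.one_apply]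
  · have := congrFun (congrFun h i) j
    rw [Matrix.mul_apply] at this
    simp [blkUp, this, Matrix.one_apply]

lemma submatrix_mul_eq_one {ι R : Type*} [Fintype ι] [DecidableEq ι] [CommRing R]
    {A B : Matrix ι ι R} (h : A * B = 1) (e : ι ≃ ι) :
    A.submatrix e id * B.submatrix id e = 1 := by
  rw [← Matrix.submatrix_mul _ _ _ _ _ Function.bijective_id, h, Matrix.submatrix_one_equiv]

/-- The induction step of Hermite's inequality for a form whose first diagonal entry is within a
factor two of the minimum over primitive vectors: reduce the Schur complement, then shear so that
the first coordinates have absolute value at most one half. -/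
lemma herm_core {n : ℕ} {C : ℝ} (hC : 0 ≤ C) (hH : Herm n C)
    (S : Matrix (Fin (n + 1)) (Fin (n + 1)) ℝ) (hS : PD S)
    (hmin : ∀ B B' : Matrix (Fin (n + 1)) (Fin (n + 1)) ℤ, B * B' = 1 →
      S 0 0 ≤ 2 * qf S (fun k => (B 0 k : ℝ))) :
    ∃ B B' : Matrix (Fin (n + 1)) (Fin (n + 1)) ℤ, B * B' = 1 ∧
    ∏ i, qf S (fun k => (B i k : ℝ)) ≤ (2 ^ n * C) * S.det := by
  have h0 := hS.diag_pos
  obtain ⟨T, T', hT, hb⟩ := hH _ hS.schur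
  set s := S 0 0 with hs
  set w : Fin n → ℝ := fun i => (∑ k, (T i k : ℝ) * S k.succ 0) / s with hw
  set z : Fin n → ℤ := fun i => - round (w i) with hz
  refine ⟨blkUp T z, _, blkUp_mul T T' hT z, ?_⟩
  have e0 : qf S (fun k => ((blkUp T z) 0 k : ℝ)) = s := by
    have : (fun k => ((blkUp T z) 0 k : ℝ)) = Pi.single 0 1 := by
      funext k
      refine Fin.cases ?_ (fun k => ?_) k <;> simp [blkUp]
    rw [this]; simp [qf, hs]
  have e1 : ∀ i : Fin n, qf S (fun k => ((blkUp T z) i.succ k : ℝ)) =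
      s * (w i - round (w i)) ^ 2 + qf (schur S) (fun k => (T i k : ℝ)) := by
    intro i
    have : (fun k => ((blkUp T z) i.succ k : ℝ)) = Fin.cons (α := fun _ => ℝ) ((z i : ℤ) : ℝ)
        (fun k => (T i k : ℝ)) := by
      funext k
      refine Fin.cases ?_ (fun k => ?_) k <;> simp [blkUp]
    rw [this, qf_cons S hS.1 h0.ne']
    congr 2
    rw [hz, hw]
    push_cast
    ring
  have e2 : ∀ i : Fin n, qf S (fun k => ((blkUp T z) i.succ k : ℝ)) ≤
      2 * qf (schur S) (fun k => (T i k : ℝ)) := by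
    intro i
    have h1 := hmin ((blkUp T z).submatrix (Equiv.swap 0 i.succ) id)
      ((blkUp T' (fun i => - ∑ j, T' i j * z j)).submatrix id (Equiv.swap 0 i.succ))
      (submatrix_mul_eq_one (blkUp_mul T T' hT z) _)
    simp only [Matrix.submatrix_apply, Equiv.swap_apply_left, id] at h1
    rw [e1] at h1 ⊢
    have h2 : (w i - round (w i)) ^ 2 ≤ 1 / 4 := by
      have := abs_sub_round (w i)
      rw [← sq_abs]
      nlinarith [abs_nonneg (w i - round (w i))]
    nlinarith
  have hnn : ∀ i, 0 ≤ qf S (fun k => ((blkUp T z) i k : ℝ)) := by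
    obtain ⟨c, hc, h2⟩ := hS.2
    exact fun i => le_trans (by positivity) (h2 _)
  rw [Fin.prod_univ_succ, e0, det_schur S h0.ne']
  calc _ ≤ s * ∏ i : Fin n, 2 * qf (schur S) (fun k => (T i k : ℝ)) :=
        mul_le_mul_of_nonneg_left (Finset.prod_le_prod (fun i _ => hnn _) fun i _ => e2 i) h0.le
    _ = s * 2 ^ n * ∏ i : Fin n, qf (schur S) (fun k => (T i k : ℝ)) := by
        rw [Finset.prod_mul_distrib]; simp [mul_assoc]
    _ ≤ s * 2 ^ n * (C * (schur S).det) := mul_le_mul_of_nonneg_left hb (by positivity)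
    _ = _ := by ring

lemma herm_succ {n : ℕ} {C : ℝ} (hC : 0 ≤ C) (hH : Herm n C) : Herm (n + 1) (2 ^ n * C) := by
  intro S hS
  obtain ⟨c, hc, hlow⟩ := qf_int_lower hS
  set A : Set ℝ := {t | ∃ B B' : Matrix (Fin (n + 1)) (Fin (n + 1)) ℤ, B * B' = 1 ∧
    t = qf S (fun k => (B 0 k : ℝ))} with hA
  have hrow : ∀ B B' : Matrix (Fin (n + 1)) (Fin (n + 1)) ℤ, B * B' = 1 → B 0 ≠ 0 := by
    intro B B' h h0
    have := congrFun (congrFun h 0) 0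
    rw [Matrix.mul_apply] at this
    simp [h0] at this
  have hAl : ∀ t ∈ A, c ≤ t := by
    rintro t ⟨B, B', h, rfl⟩
    exact hlow _ (hrow B B' h)
  have hAne : A.Nonempty := ⟨_, 1, 1, by simp, rfl⟩
  have hm : c ≤ sInf A := le_csInf hAne hAl
  obtain ⟨_, ⟨B0, B0', hB0, rfl⟩, hlt⟩ := exists_lt_of_csInf_lt hAne
    (show sInf A < 2 * sInf A by linarith)
  have hle : ∀ B B' : Matrix (Fin (n + 1)) (Fin (n + 1)) ℤ, B * B' = 1 →
      sInf A ≤ qf S (fun k => (B 0 k : ℝ)) := fun B B' h =>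
    csInf_le ⟨c, fun t ht => hAl t ht⟩ ⟨B, B', h, rfl⟩
  set b := B0.map (Int.cast : ℤ → ℝ) with hb
  have hvec : ∀ (B : Matrix (Fin (n + 1)) (Fin (n + 1)) ℤ) i,
      qf (b * S * b.transpose) (fun k => (B i k : ℝ)) = qf S (fun k => ((B * B0) i k : ℝ)) := by
    intro B i
    rw [qf_conj]
    congr 1
    funext k
    rw [Matrix.mul_apply]
    push_cast
    rfl
  have h00 : (b * S * b.transpose) 0 0 = qf S (fun k => (B0 0 k : ℝ)) := by
    have := hvec 1 0
    rw [one_mul] at this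
    rw [← this]
    have : (fun k => (((1 : Matrix (Fin (n + 1)) (Fin (n + 1)) ℤ) 0 k : ℤ) : ℝ)) =
        Pi.single 0 1 := by
      funext k
      rw [Pi.single_apply, Matrix.one_apply]
      simp [eq_comm]
    rw [this]; simp [qf]
  have hprod : ∀ B B' : Matrix (Fin (n + 1)) (Fin (n + 1)) ℤ, B * B' = 1 →
      (B * B0) * (B0' * B') = 1 := by
    intro B B' h
    rw [Matrix.mul_assoc, ← Matrix.mul_assoc B0, hB0, one_mul, h]
  obtain ⟨B, B', hBB, hfin⟩ := herm_core hC hH (b * S * b.transpose)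
    (hS.conj b (B0'.map (Int.cast : ℤ → ℝ)) (cast_mul_eq_one hB0)) (by
      intro B B' h
      rw [h00, hvec]
      have := hle _ _ (hprod B B' h)
      linarith)
  refine ⟨B * B0, B0' * B', hprod B B' hBB, ?_⟩
  simp only [hvec] at hfin
  have hdet : (b * S * b.transpose).det = S.det := by
    rw [Matrix.det_mul, Matrix.det_mul, Matrix.det_transpose]
    have h1 : b.det = (B0.det : ℝ) := by
      rw [hb]; exact ((Int.castRingHom ℝ).map_det B0).symm
    have h2 : B0.det * B0'.det = 1 := by rw [← Matrix.det_mul, hB0, Matrix.det_one]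
    have h3 : B0.det * B0.det = 1 := Int.isUnit_mul_self (IsUnit.of_mul_eq_one _ h2)
    have h4 : b.det * b.det = 1 := by rw [h1]; exact_mod_cast h3
    calc b.det * S.det * b.det = (b.det * b.det) * S.det := by ring
      _ = _ := by rw [h4, one_mul]
  rwa [hdet] at hfin

lemma hermite (n : ℕ) : ∃ C : ℝ, 0 ≤ C ∧ Herm n C := by
  induction n with
  | zero => exact ⟨1, zero_le_one, fun S _ => ⟨1, 1, by simp, by simp⟩⟩
  | succ n ih =>
    obtain ⟨C, hC, hD⟩ := ih
    exact ⟨_, by positivity, herm_succ hC hD⟩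

/-- Hermite's inequality for the lattice `g ℤⁿ`. -/
lemma hermite_lattice (n : ℕ) : ∃ C : ℝ, 0 ≤ C ∧ ∀ g : Matrix (Fin n) (Fin n) ℝ, g.det ≠ 0 →
    ∃ B B' : Matrix (Fin n) (Fin n) ℤ, B * B' = 1 ∧
      ∏ i, ∑ k, (∑ l, g k l * (B i l : ℝ)) ^ 2 ≤ C * g.det ^ 2 := by
  obtain ⟨C, hC, hH⟩ := hermite n
  refine ⟨C, hC, fun g hg => ?_⟩
  have hI : PD (1 : Matrix (Fin n) (Fin n) ℝ) :=
    ⟨by simp, 1, one_pos, fun x => by simp [qf, dotProduct, sq]⟩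
  have hPD := hI.conj g.transpose g⁻¹.transpose (by
    rw [← Matrix.transpose_mul, Matrix.nonsing_inv_mul _ (isUnit_iff_ne_zero.2 hg),
      Matrix.transpose_one])
  obtain ⟨B, B', hB, h⟩ := hH _ hPD
  refine ⟨B, B', hB, ?_⟩
  have e : (g.transpose * 1 * g.transpose.transpose).det = g.det ^ 2 := by
    simp [Matrix.det_mul, sq]
  rw [e] at h
  refine le_trans (le_of_eq ?_) h
  refine Finset.prod_congr rfl fun i _ => ?_
  rw [qf_conj]
  rw [qf, Matrix.one_mulVec]
  simp [dotProduct, sq, Matrix.vecMul_transpose, Matrix.mulVec]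

end APC

namespace APC

/-! ### Compound matrices -/

/-- The increasing enumeration of a `k`-subset. -/
noncomputable def emb {N k : ℕ} (s : Set.powersetCard (Fin N) k) : Fin k ↪o Fin N :=
  Set.powersetCard.ofFinEmbEquiv.symm s

/-- The `k`-th compound matrix: the matrix of `k × k` minors. -/
noncomputable def compound {R : Type*} [CommRing R] {N : ℕ} (k : ℕ) (A : Matrix (Fin N) (Fin N) R) :
    Matrix (Set.powersetCard (Fin N) k) (Set.powersetCard (Fin N) k) R :=
  Matrix.of fun s t => (A.submatrix (emb s) (emb t)).det

lemma compound_eq_toMatrix {R : Type*} [CommRing R] {N : ℕ} (k : ℕ) (A : Matrix (Fin N) (Fin N) R) :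
    compound k A = LinearMap.toMatrix ((Pi.basisFun R (Fin N)).exteriorPower k)
      ((Pi.basisFun R (Fin N)).exteriorPower k) (exteriorPower.map k (Matrix.toLin' A)) := by
  ext s t
  rw [LinearMap.toMatrix_apply, exteriorPower.basis_apply, exteriorPower.basis_repr_apply,
    exteriorPower.ιMulti_family, exteriorPower.map_apply_ιMulti,
    exteriorPower.ιMultiDual_apply_ιMulti, ← Matrix.det_transpose]
  simp only [compound, Matrix.of_apply]
  congr 1
  ext i j
  simp [emb]

lemma compound_mul {R : Type*} [CommRing R] {N : ℕ} (k : ℕ) (A B : Matrix (Fin N) (Fin N) R) :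
    compound k (A * B) = compound k A * compound k B := by
  rw [compound_eq_toMatrix, compound_eq_toMatrix, compound_eq_toMatrix, Matrix.toLin'_mul,
    exteriorPower.map_comp, LinearMap.toMatrix_comp _ ((Pi.basisFun R (Fin N)).exteriorPower k)]

lemma compound_one {R : Type*} [CommRing R] {N : ℕ} (k : ℕ) :
    compound k (1 : Matrix (Fin N) (Fin N) R) = 1 := by
  rw [compound_eq_toMatrix, Matrix.toLin'_one, exteriorPower.map_id, LinearMap.toMatrix_id]

lemma compound_map {R S : Type*} [CommRing R] [CommRing S] {N : ℕ} (k : ℕ)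
    (A : Matrix (Fin N) (Fin N) R) (f : R →+* S) :
    compound k (A.map f) = (compound k A).map f := by
  ext s t
  simp only [compound, Matrix.of_apply, Matrix.map_apply]
  rw [f.map_det]
  rfl

/-- The number of `k`-subsets of `Fin N` containing a given element. -/
def cnt (N k : ℕ) : ℕ := Nat.choose (N - 1) (k - 1)

lemma sum_emb {N k : ℕ} (x : Fin N → ℝ) (s : Set.powersetCard (Fin N) k) :
    ∑ i, x (emb s i) = ∑ j ∈ s.val, x j := by
  have : s.val = Finset.univ.map (emb s).toEmbedding := by
    ext j
    have := Set.powersetCard.mem_range_ofFinEmbEquiv_symm_iff_mem s j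
    simp only [Finset.mem_map, Finset.mem_univ, true_and]
    exact this.symm
  rw [this, Finset.sum_map]
  rfl

/-- Every index lies in the same number of `k`-subsets. -/
lemma sum_compound {N k : ℕ} : ∃ m : ℕ, ∀ x : Fin N → ℝ,
    ∑ s : Set.powersetCard (Fin N) k, ∑ i, x (emb s i) = m * ∑ j, x j := by
  classical
  rcases Nat.eq_zero_or_pos k with rfl | hk
  · exact ⟨0, fun x => by simp⟩
  refine ⟨cnt N k, fun x => ?_⟩
  simp only [sum_emb]
  have h1 : ∑ s : Set.powersetCard (Fin N) k, ∑ j ∈ s.val, x j =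
      ∑ s ∈ Finset.powersetCard k (Finset.univ : Finset (Fin N)), ∑ j ∈ s, x j := by
    refine (Finset.sum_subtype (Finset.powersetCard k (Finset.univ : Finset (Fin N)))
      (p := fun s => s ∈ Set.powersetCard (Fin N) k) (fun s => ?_) (fun s => ∑ j ∈ s, x j)).symm
    simp [Set.powersetCard]
  rw [h1]
  have h2 : ∀ s : Finset (Fin N), ∑ j ∈ s, x j = ∑ j, if j ∈ s then x j else 0 := by
    intro s; simp
  rw [Finset.sum_congr rfl fun s _ => h2 s]
  rw [Finset.sum_comm, Finset.mul_sum]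
  refine Finset.sum_congr rfl fun j _ => ?_
  rw [← Finset.sum_filter, Finset.sum_const, nsmul_eq_mul]
  congr 2
  have := Finset.card_filter_powersetCard_subset {j} (Finset.univ : Finset (Fin N)) k
    (by simp)
  simpa [cnt] using this (by simpa using Nat.succ_le_of_lt hk)

/-- The `k`-subset of the first `k` elements. -/
noncomputable def firstSet {N k : ℕ} (h : k ≤ N) : Set.powersetCard (Fin N) k :=
  Set.powersetCard.ofFinEmbEquiv (Fin.castLEOrderEmb h)

lemma emb_firstSet {N k : ℕ} (h : k ≤ N) (i : Fin k) : emb (firstSet h) i = Fin.castLE h i := by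
  simp [emb, firstSet]

/-- A nonzero Plücker vector `w` of a space of dimension `k < N` determines a nonzero linear form
vanishing on that space. -/
lemma pluecker {N k : ℕ} (hk : k < N) (w : Set.powersetCard (Fin N) k → ℤ) (hw : w ≠ 0) :
    ∃ ψ : Fin N → ℤ, ψ ≠ 0 ∧ ∀ A : Matrix (Fin N) (Fin N) ℤ,
      (∀ s, compound k A s (firstSet hk.le) = w s) → ∀ (x : Fin N → ℤ) (t : Fin k → ℤ),
      (∀ l, x l = ∑ i, t i * A l (Fin.castLE hk.le i)) → ∑ l, ψ l * x l = 0 := by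
  classical
  obtain ⟨s, hs⟩ := Function.ne_iff.1 hw
  obtain ⟨r, hr⟩ : ∃ r, r ∉ s.val := by
    by_contra h
    push Not at h
    have h1 : s.val = Finset.univ := Finset.eq_univ_iff_forall.2 h
    have h2 : s.val.card = k := s.prop
    rw [h1, Finset.card_univ, Fintype.card_fin] at h2
    omega
  have hcard : (insert r s.val).card = k + 1 := by
    rw [Finset.card_insert_of_notMem hr]
    congr 1
    exact s.prop
  set R : Fin (k + 1) ↪o Fin N := (insert r s.val).orderEmbOfFin hcard with hR
  obtain ⟨i0, hi0⟩ : ∃ i, R i = r := by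
    have : r ∈ Set.range R := by rw [hR, Finset.range_orderEmbOfFin]; simp
    exact this
  set D : Fin (k + 1) → Set.powersetCard (Fin N) k := fun i =>
    Set.powersetCard.ofFinEmbEquiv ((Fin.succAboveOrderEmb i).trans R) with hD
  have hDi0 : D i0 = s := by
    refine Subtype.ext ?_
    ext v
    change v ∈ D i0 ↔ v ∈ s.val
    rw [hD]
    simp only [Set.powersetCard.mem_ofFinEmbEquiv_iff_mem_range]
    constructor
    · rintro ⟨i, rfl⟩
      have h1 : R (i0.succAbove i) ∈ insert r s.val := by
        rw [hR]; exact Finset.orderEmbOfFin_mem _ _ _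
      rcases Finset.mem_insert.1 h1 with h | h
      · exact absurd (R.injective (h.trans hi0.symm)) (Fin.succAbove_ne i0 i)
      · exact h
    · intro hv
      have h1 : v ∈ Set.range R := by rw [hR, Finset.range_orderEmbOfFin]; exact Finset.mem_coe.2 (Finset.mem_insert_of_mem hv)
      obtain ⟨i, rfl⟩ := h1
      rcases Fin.eq_self_or_eq_succAbove i0 i with h | ⟨i', h⟩
      · rw [h, hi0] at hv; exact absurd hv hr
      · exact ⟨i', by rw [h]; rfl⟩
  have hembD : ∀ i j, emb (D i) j = R (i.succAbove j) := by
    intro i j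
    simp [emb, hD]
  set ψ : Fin N → ℤ := fun v => ∑ i, if R i = v then (-1) ^ (i : ℕ) * w (D i) else 0 with hψ
  have hsum : ∀ x : Fin N → ℤ, ∑ l, ψ l * x l = ∑ i : Fin (k + 1), (-1) ^ (i : ℕ) * w (D i) * x (R i) := by
    intro x
    rw [hψ]
    simp only [Finset.sum_mul]
    rw [Finset.sum_comm]
    refine Finset.sum_congr rfl fun i _ => ?_
    simp [ite_mul]
  refine ⟨ψ, ?_, ?_⟩
  · intro h0
    have h1 := hsum (Pi.single r 1)
    rw [h0] at h1
    simp only [Pi.zero_apply, zero_mul, Finset.sum_const_zero] at h1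
    rw [Finset.sum_eq_single i0] at h1
    · rw [hi0, hDi0, Pi.single_eq_same, mul_one] at h1
      have := (mul_eq_zero.1 h1.symm).resolve_left (pow_ne_zero _ (by norm_num))
      exact hs this
    · intro i _ hi
      rw [Pi.single_eq_of_ne, mul_zero]
      intro h; exact hi (R.injective (h.trans hi0.symm))
    · simp
  · intro A hA x t hx
    rw [hsum]
    set M : Matrix (Fin (k + 1)) (Fin (k + 1)) ℤ := Matrix.of fun i =>
      Fin.cons (α := fun _ => ℤ) (x (R i)) (fun j => A (R i) (Fin.castLE hk.le j)) with hM
    have hdet : M.det = 0 := by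
      refine Matrix.exists_mulVec_eq_zero_iff.1 ⟨Fin.cons (α := fun _ => ℤ) (-1) t, ?_, ?_⟩
      · intro h
        have := congrFun h 0
        simp at this
      · funext i
        change ∑ j : Fin (k + 1), _ * _ = _
        rw [Fin.sum_univ_succ]
        simp only [hM, Matrix.of_apply, Fin.cons_zero, Fin.cons_succ, hx (R i)]
        simp only [mul_neg, mul_one, Pi.zero_apply, mul_comm (A _ _)]
        ring
    rw [← hdet, Matrix.det_succ_column_zero]
    refine Finset.sum_congr rfl fun i _ => ?_
    have h1 : M i 0 = x (R i) := by simp [hM]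
    have h2 : (M.submatrix i.succAbove Fin.succ).det = w (D i) := by
      rw [← hA, compound, Matrix.of_apply]
      congr 1
      ext a b
      simp [hM, hembD, emb_firstSet]
    rw [h1, h2]; ring

end APC

namespace APC

/-! ### The subspace argument in limit form -/

/-- Along a sequence with finite fibres there is a subsequence on which `f` is injective and a
finite-valued `g` is constant. -/
lemma exists_good_subseq {α β : Type*} [Finite β] (f : ℕ → α) (g : ℕ → β)
    (hf : ∀ a, {j | f j = a}.Finite) :
    ∃ (φ : ℕ → ℕ) (b : β), StrictMono φ ∧ (∀ j, g (φ j) = b) ∧ Function.Injective (f ∘ φ) := by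
  classical
  obtain ⟨b, hb⟩ := Finite.exists_infinite_fiber g
  have hb' : (g ⁻¹' {b}).Infinite := Set.infinite_coe_iff.1 hb
  obtain ⟨φ, h1, h2⟩ := exists_seq_of_forall_finset_exists (fun y => g y = b)
    (fun x y => x < y ∧ f x ≠ f y) (by
      intro s hs
      have hfin : ((⋃ x ∈ s, {j | f j = f x}) ∪ (⋃ x ∈ s, {j | j ≤ x})).Finite := by
        refine Set.Finite.union ?_ ?_
        · exact Set.Finite.biUnion s.finite_toSet fun x _ => hf _
        · exact Set.Finite.biUnion s.finite_toSet fun x _ => Set.finite_Iic x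
      obtain ⟨y, hy, hy'⟩ := (hb'.diff hfin).nonempty
      refine ⟨y, hy, fun x hx => ?_⟩
      simp only [Set.mem_union, Set.mem_iUnion, Set.mem_setOf_eq, not_or, not_exists] at hy'
      exact ⟨not_le.1 (hy'.2 x hx), fun h => hy'.1 x hx h.symm⟩)
  refine ⟨φ, b, fun m n h => (h2 m n h).1, h1, fun m n h => ?_⟩
  rcases lt_trichotomy m n with h' | h' | h'
  · exact absurd h (h2 m n h').2
  · exact h'
  · exact absurd h.symm (h2 n m h').2

lemma exists_sorted_equiv {ι : Type*} [Fintype ι] {n : ℕ} (hn : Fintype.card ι = n + 1)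
    (F : ι → ℝ) (l0 : ι) (h : ∀ l, l ≠ l0 → F l < F l0) :
    ∃ e : Fin (n + 1) ≃ ι, e (Fin.last n) = l0 ∧ Monotone (F ∘ e) := by
  classical
  let e0 : Fin (n + 1) ≃ ι := (Fintype.equivFinOfCardEq hn).symm
  let e : Fin (n + 1) ≃ ι := (Tuple.sort (F ∘ e0)).trans e0
  have hm : Monotone (F ∘ e) := Tuple.monotone_sort (F ∘ e0)
  refine ⟨e, ?_, hm⟩
  by_contra hne
  have h1 := h _ hne
  have h2 := hm (Fin.le_last (e.symm l0))
  simp only [Function.comp_apply, Equiv.apply_symm_apply] at h2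
  linarith

/-- If the first `k` values of `l` lie below the others with a gap `δ`, then `firstSet` minimises the sum
of `l` over `k`-subsets, with the same gap. -/
lemma firstSet_min {N k : ℕ} (hk : k ≤ N) (l : Fin N → ℝ) (θ δ : ℝ) (hδ : 0 < δ)
    (h1 : ∀ i : Fin N, (i : ℕ) < k → l i ≤ θ) (h2 : ∀ i : Fin N, k ≤ (i : ℕ) → θ + δ ≤ l i)
    (s : Set.powersetCard (Fin N) k) (hs : s ≠ firstSet hk) :
    (∑ i, l (emb (firstSet hk) i)) + δ ≤ ∑ i, l (emb s i) := by
  classical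
  rw [sum_emb, sum_emb]
  set A := (firstSet hk).val with hA
  set S := s.val with hS
  have hmem : ∀ v, v ∈ A ↔ (v : ℕ) < k := by
    intro v
    rw [hA]
    change v ∈ Set.powersetCard.ofFinEmbEquiv (Fin.castLEOrderEmb hk) ↔ _
    rw [Set.powersetCard.mem_ofFinEmbEquiv_iff_mem_range]
    constructor
    · rintro ⟨i, rfl⟩; simp
    · intro h; exact ⟨⟨v, h⟩, by ext; simp⟩
  have hcA : A.card = k := (firstSet hk).prop
  have hcS : S.card = k := s.prop
  have hne : (S \ A).Nonempty := by
    rw [Finset.sdiff_nonempty]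
    intro hsub
    exact hs (Subtype.ext (Finset.eq_of_subset_of_card_le hsub (by rw [hcA, hcS])))
  have hcard : (S \ A).card = (A \ S).card := by
    have e1 := Finset.card_sdiff_add_card_inter S A
    have e2 := Finset.card_sdiff_add_card_inter A S
    rw [Finset.inter_comm] at e2
    omega
  have s1 : ∑ i ∈ S, l i = ∑ i ∈ S \ A, l i + ∑ i ∈ S ∩ A, l i := by
    rw [add_comm, Finset.sum_inter_add_sum_sdiff]
  have s2 : ∑ i ∈ A, l i = ∑ i ∈ A \ S, l i + ∑ i ∈ S ∩ A, l i := by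
    rw [add_comm, Finset.inter_comm, Finset.sum_inter_add_sum_sdiff]
  have b1 : (S \ A).card • (θ + δ) ≤ ∑ i ∈ S \ A, l i :=
    Finset.card_nsmul_le_sum _ _ _ fun i hi => h2 i (by
      have := (Finset.mem_sdiff.1 hi).2
      rw [hmem] at this; omega)
  have b2 : ∑ i ∈ A \ S, l i ≤ (A \ S).card • θ :=
    Finset.sum_le_card_nsmul _ _ _ fun i hi => h1 i ((hmem i).1 (Finset.mem_sdiff.1 hi).1)
  have hc1 : (1 : ℝ) ≤ (S \ A).card := by exact_mod_cast hne.card_pos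
  rw [nsmul_eq_mul] at b1 b2
  rw [← hcard] at b2
  rw [s1, s2]
  nlinarith

lemma compound_bound {N k : ℕ} (A : Matrix (Fin N) (Fin N) ℝ) (q ε : ℝ) (l c : Fin N → ℝ)
    (h : ∀ a i, |A a i| ≤ Real.exp (q * (ε - l a - c i))) (s t : Set.powersetCard (Fin N) k) :
    |compound k A s t| ≤ k.factorial *
      Real.exp (q * (k * ε - (∑ i, l (emb s i)) - ∑ i, c (emb t i))) := by
  have := det_bound (A.submatrix (emb s) (emb t)) (fun i => Real.exp (q * (ε - l (emb s i))))
    (fun i => Real.exp (- (q * c (emb t i)))) (by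
      intro i j
      rw [← Real.exp_add]
      refine (h _ _).trans (le_of_eq ?_)
      congr 1; ring)
  rw [Fintype.card_fin, ← Real.exp_sum, ← Real.exp_sum, ← Real.exp_add] at this
  refine this.trans (le_of_eq ?_)
  congr 2
  simp only [mul_sub, Finset.sum_sub_distrib, ← Finset.mul_sum, Finset.sum_neg_distrib,
    Finset.sum_const, Finset.card_univ, Fintype.card_fin, nsmul_eq_mul]
  ring

/-- The theorem of the penultimate minimum applied to `k`-th compounds.  A gap between the exponents
`l` of the successive minima at `k` singles out one smallest minor, so Davenport's lemma
produces a system to which `pt` applies; the Plücker coordinates of the first `k` basis vectors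
therefore cannot take infinitely many values. -/
lemma subspace_core {N k : ℕ} (hk : k < N) (L Li : Matrix (Fin N) (Fin N) ℝ) (hL : L * Li = 1)
    (hinteg : ∀ i j, IsIntegral ℤ (L i j)) (c l : Fin N → ℝ) (θ δ : ℝ) (hδ : 0 < δ)
    (h1 : ∀ i : Fin N, (i : ℕ) < k → l i ≤ θ) (h2 : ∀ i : Fin N, k ≤ (i : ℕ) → θ + δ ≤ l i)
    (hsum : 0 ≤ ∑ i, l i + ∑ i, c i)
    (B B' : ℕ → Matrix (Fin N) (Fin N) ℤ) (hB : ∀ j, B j * B' j = 1)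
    (q : ℕ → ℝ) (hq : Filter.Tendsto q Filter.atTop Filter.atTop)
    (hb : ∀ ε > 0, ∀ᶠ j in Filter.atTop, ∀ a i,
      |((B' j).map (Int.cast : ℤ → ℝ) * Li) a i| ≤ Real.exp (q j * (ε - l a - c i)))
    (hfib : ∀ w, {j | (fun s => compound k (B j) s (firstSet hk.le)) = w}.Finite) : False := by
  classical
  set J0 : Set.powersetCard (Fin N) k := firstSet hk.le with hJ0
  obtain ⟨n, hn⟩ : ∃ n, Fintype.card (Set.powersetCard (Fin N) k) = n + 1 :=
    Nat.exists_eq_succ_of_ne_zero (Fintype.card_pos_iff.2 ⟨J0⟩).ne'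
  set lJ : Set.powersetCard (Fin N) k → ℝ := fun s => ∑ i, l (emb s i) with hlJ
  set cJ : Set.powersetCard (Fin N) k → ℝ := fun s => ∑ i, c (emb s i) with hcJ
  have hmin : ∀ s, s ≠ J0 → lJ J0 + δ ≤ lJ s := fun s hs =>
    firstSet_min hk.le l θ δ hδ h1 h2 s hs
  obtain ⟨e, he0, hemono⟩ := exists_sorted_equiv hn (fun s => - lJ s) J0 (fun s hs => by
    have := hmin s hs; linarith)
  have heJ : ∀ a : Fin (n + 1), a ≠ Fin.last n → lJ J0 + δ ≤ lJ (e a) := fun a ha =>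
    hmin _ fun h => ha (e.injective (h.trans he0.symm))
  obtain ⟨C, hC, hD⟩ := davenport n
  obtain ⟨m, hm⟩ := sum_compound (N := N) (k := k)
  obtain ⟨ε, hε, hεδ⟩ : ∃ ε : ℝ, 0 < ε ∧ (n + 1) * ((k + 3) * ε) < δ := by
    refine ⟨δ / ((n + 1) * (k + 3) + 1), by positivity, ?_⟩
    rw [← mul_assoc, mul_div_assoc', div_lt_iff₀ (by positivity)]
    nlinarith
  -- a bounded constant is eventually absorbed into `exp (q ε)`
  have habs : ∀ K : ℝ, ∀ᶠ j in Filter.atTop, K ≤ Real.exp (q j * ε) := fun K =>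
    ((Real.tendsto_exp_atTop.comp (hq.atTop_mul_const hε))).eventually_ge_atTop K
  set base : Fin (n + 1) → ℝ := Fin.snoc (α := fun _ => ℝ)
    (fun a : Fin n => - lJ (e a.castSucc)) (- lJ J0 - δ) with hbase
  have hev : ∀ᶠ j in Filter.atTop, ∃ (π : Equiv.Perm (Fin (n + 1)))
      (T S : Matrix (Fin (n + 1)) (Fin (n + 1)) ℤ), T * S = 1 ∧
      (∀ i, S i (Fin.last n) = if i = Fin.last n then 1 else 0) ∧
      ∀ a b, a ≠ Fin.last n →
        |(T.map (Int.cast : ℤ → ℝ) * (compound k ((B' j).map (Int.cast : ℤ → ℝ) * Li)).submatrix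
          e e) a b| ≤ Real.exp (q j * ((k + 2) * ε + base (π b) - cJ (e b))) := by
    filter_upwards [hb ε hε, habs k.factorial, habs ((n + 1) * C),
      hq.eventually_ge_atTop 0] with j hj hk1 hk2 hq0
    set Z := compound k ((B' j).map (Int.cast : ℤ → ℝ) * Li) with hZ
    have hZb : ∀ s t, |Z s t| ≤ Real.exp (q j * ((k + 1) * ε - lJ s - cJ t)) := by
      intro s t
      refine (compound_bound _ (q j) ε l c hj s t).trans ?_
      refine (mul_le_mul_of_nonneg_right hk1 (Real.exp_nonneg _)).trans (le_of_eq ?_)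
      rw [← Real.exp_add]
      congr 1
      simp only [hlJ, hcJ]
      ring
    have hZdet : (Z.submatrix e e).det ≠ 0 := by
      rw [Matrix.det_submatrix_equiv_self]
      have e1 : ((B' j).map (Int.cast : ℤ → ℝ) * Li) * (L * (B j).map (Int.cast : ℤ → ℝ)) = 1 := by
        rw [Matrix.mul_assoc, ← Matrix.mul_assoc Li, mul_eq_one_comm.1 hL, one_mul]
        exact cast_mul_eq_one (mul_eq_one_comm.1 (hB j))
      have e2 := congrArg (compound k) e1
      rw [compound_mul, compound_one] at e2
      intro h0
      have := congrArg Matrix.det e2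
      rw [Matrix.det_mul, ← hZ, h0, zero_mul, Matrix.det_one] at this
      exact zero_ne_one this
    set G : Matrix (Fin (n + 1)) (Fin (n + 1)) ℝ := Matrix.of fun a b =>
      Real.exp (q j * cJ (e b)) * (Z.submatrix e e) a b with hG
    have hGdet : G.det ≠ 0 := by
      rw [hG, Matrix.det_mul_row]
      exact mul_ne_zero (Finset.prod_ne_zero_iff.2 fun _ _ => (Real.exp_pos _).ne') hZdet
    set ν : Fin n → ℝ := fun a => Real.exp (q j * ((k + 1) * ε - lJ (e a.castSucc))) with hν
    set μ : ℝ := Real.exp (q j * ((k + 1) * ε - lJ J0 - δ)) with hμ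
    obtain ⟨π, T, S, hTS, hS, hfin⟩ := dav_capped hC hD G ν μ (by
        intro a
        rw [hν, hμ]
        refine Real.exp_le_exp.2 (mul_le_mul_of_nonneg_left ?_ hq0)
        have := heJ a.castSucc (Fin.castSucc_lt_last a).ne
        linarith) (Real.exp_nonneg _) hGdet (by
        intro a b hab
        rw [hν]
        refine Real.exp_le_exp.2 (mul_le_mul_of_nonneg_left ?_ hq0)
        have := hemono (Fin.castSucc_le_castSucc_iff.2 hab)
        simp only [Function.comp_apply] at this
        linarith) (fun _ => Real.exp_nonneg _) (by
        intro a b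
        rw [hG, Matrix.of_apply, abs_mul, abs_of_pos (Real.exp_pos _)]
        refine (mul_le_mul_of_nonneg_left (hZb _ _) (Real.exp_nonneg _)).trans (le_of_eq ?_)
        rw [← Real.exp_add, hν]
        congr 1; ring)
    refine ⟨π, T, S, hTS, hS, fun a b ha => ?_⟩
    have h3 := hfin a b ha
    have h4 : (T.map (Int.cast : ℤ → ℝ) * G) a b = Real.exp (q j * cJ (e b)) *
        (T.map (Int.cast : ℤ → ℝ) * Z.submatrix e e) a b := by
      simp only [Matrix.mul_apply, hG, Matrix.of_apply, Finset.mul_sum]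
      exact Finset.sum_congr rfl fun _ _ => by ring
    have h5 : Fin.snoc (α := fun _ => ℝ) ν μ (π b) =
        Real.exp (q j * ((k + 1) * ε + base (π b))) := by
      generalize π b = x
      induction x using Fin.lastCases with
      | last =>
        simp only [hbase, Fin.snoc_last]
        rw [hμ]; congr 2; ring
      | cast x =>
        simp only [hbase, Fin.snoc_castSucc]
        rw [hν]; congr 2
    rw [h4, abs_mul, abs_of_pos (Real.exp_pos _), h5] at h3
    have h6 := h3.trans (mul_le_mul_of_nonneg_right hk2 (Real.exp_nonneg _))
    rw [← le_div_iff₀' (Real.exp_pos _), ← Real.exp_add, ← Real.exp_sub] at h6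
    refine h6.trans (le_of_eq ?_)
    congr 1; ring
  obtain ⟨j0, hj0⟩ := Filter.eventually_atTop.1 hev
  choose π T S hTS hS hT using fun j => hj0 (j + j0) (Nat.le_add_left _ _)
  obtain ⟨φ, p, hφ, hφp, hφi⟩ := exists_good_subseq
    (fun j => fun s => compound k (B (j + j0)) s J0) π (fun w =>
      Set.Finite.preimage (f := fun j => j + j0) (fun x _ y _ h => by simpa using h) (hfib w))
  have hYW : ∀ j, ((compound k (B j)).submatrix e e) * ((compound k (B' j)).submatrix e e) = 1 := by
    intro j
    rw [Matrix.submatrix_mul_equiv, ← compound_mul, hB, compound_one, Matrix.submatrix_one_equiv]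
  refine pt (((compound k Li).submatrix e e).transpose) (((compound k L).submatrix e e).transpose)
    ?_ ?_ (fun b => (k + 2) * ε + base (p b) - cJ (e b)) ?_ (Fin.last n)
    (fun j => T (φ j) * (compound k (B' (φ j + j0))).submatrix e e)
    (fun j => (compound k (B (φ j + j0))).submatrix e e * S (φ j)) ?_
    (fun j => q (φ j + j0)) ?_ ?_ ?_
  · rw [← Matrix.transpose_mul, Matrix.submatrix_mul_equiv, ← compound_mul, mul_eq_one_comm.1 hL,
      compound_one, Matrix.submatrix_one_equiv, Matrix.transpose_one]
  · intro a b
    simp only [Matrix.transpose_apply, Matrix.submatrix_apply, compound, Matrix.of_apply]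
    exact IsIntegral.det fun _ _ => hinteg _ _
  · have s1 : ∑ b, base (p b) = ∑ b, base b := Equiv.sum_comp p base
    have s2 : ∑ b, base b = - ∑ s, lJ s - δ := by
      rw [hbase, Fin.sum_univ_castSucc]
      simp only [Fin.snoc_castSucc, Fin.snoc_last]
      rw [← Equiv.sum_comp e lJ, Fin.sum_univ_castSucc, he0, Finset.sum_neg_distrib]
      ring
    have s3 : ∑ b, cJ (e b) = ∑ s, cJ s := Equiv.sum_comp e cJ
    rw [Finset.sum_sub_distrib, Finset.sum_add_distrib, s1, s2, s3]
    have s4 := hm l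
    have s5 := hm c
    simp only [hlJ, hcJ]
    rw [s4, s5]
    simp only [Finset.sum_const, Finset.card_univ, Fintype.card_fin, nsmul_eq_mul]
    push_cast
    have s6 : 0 ≤ (m : ℝ) * (∑ i, l i + ∑ i, c i) := mul_nonneg m.cast_nonneg hsum
    nlinarith [mul_pos (show (0 : ℝ) < n + 1 by positivity) hε]
  · intro j
    rw [Matrix.mul_assoc, ← Matrix.mul_assoc (S (φ j)), mul_eq_one_comm.1 (hTS _), one_mul]
    exact hYW _
  · exact hq.comp ((Filter.tendsto_add_atTop_nat j0).comp hφ.tendsto_atTop)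
  · intro j a ha b
    have := hT (φ j) a b ha
    rw [hφp] at this
    refine le_trans (le_of_eq ?_) this
    congr 1
    rw [compound_mul]
    have e1 : compound k ((B' (φ j + j0)).map (Int.cast : ℤ → ℝ)) =
        (compound k (B' (φ j + j0))).map (Int.cast : ℤ → ℝ) :=
      compound_map k (B' (φ j + j0)) (Int.castRingHom ℝ)
    rw [e1, ← Matrix.submatrix_mul_equiv _ _ e e e, ← Matrix.mul_assoc, Matrix.mul_apply]
    refine Finset.sum_congr rfl fun i _ => ?_
    simp only [Matrix.transpose_apply, Matrix.submatrix_apply, Matrix.mul_apply, Matrix.map_apply]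
    push_cast
    rfl
  · intro j j' h
    apply hφi
    funext s
    have e1 : ∀ j i, ((compound k (B (φ j + j0))).submatrix e e * S (φ j)) i (Fin.last n) =
        compound k (B (φ j + j0)) (e i) J0 := by
      intro j i
      rw [Matrix.mul_apply]
      simp [hS, he0]
    have := congrFun h (e.symm s)
    dsimp only at this
    rw [e1, e1, Equiv.apply_symm_apply] at this
    exact this

end APC

/-! ### Reduced lattice bases -/

namespace APC

/-- Entries of an inverse matrix, estimated through cofactors, when the columns nearly attain
Hadamard's bound. -/
lemma inv_bound {N : ℕ} (A A' : Matrix (Fin N) (Fin N) ℝ) (hA : A * A' = 1) (lam : Fin N → ℝ)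
    (hl : ∀ i, 0 < lam i) (h : ∀ k i, |A k i| ≤ lam i) (C : ℝ)
    (hC : ∏ i, lam i ≤ C * |A.det|) (j i : Fin N) :
    |A' j i| ≤ N.factorial * C / lam j := by
  have hdet : A.det ≠ 0 := by
    intro h0
    have := congrArg Matrix.det hA
    rw [Matrix.det_mul, h0, zero_mul, Matrix.det_one] at this
    exact zero_ne_one this
  have e1 : A.adjugate = A.det • A' := by
    calc A.adjugate = A.adjugate * (A * A') := by rw [hA, mul_one]
      _ = A.det • A' := by rw [← Matrix.mul_assoc, Matrix.adjugate_mul, Matrix.smul_mul, one_mul]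
  have e2 : A.det * A' j i = (A.transpose.updateRow j (Pi.single i 1)).det := by
    have := congrArg (fun M : Matrix (Fin N) (Fin N) ℝ => M j i) e1
    rw [Matrix.smul_apply, smul_eq_mul] at this
    rw [← this, ← Matrix.adjugate_apply, ← Matrix.adjugate_transpose, Matrix.transpose_apply]
  have e3 := det_bound (A.transpose.updateRow j (Pi.single i 1))
    (fun m => if m = j then 1 else lam m) (fun _ => 1) (by
      intro a b
      simp only [mul_one]
      by_cases haj : a = j
      · subst haj
        rw [Matrix.updateRow_self, if_pos rfl, Pi.single_apply]
        split_ifs <;> simp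
      · rw [Matrix.updateRow_ne haj, if_neg haj]
        exact h b a)
  have e4 : (∏ m, if m = j then 1 else lam m) * lam j = ∏ m, lam m := by
    rw [← Finset.mul_prod_erase _ _ (Finset.mem_univ j), if_pos rfl, one_mul,
      ← Finset.mul_prod_erase Finset.univ lam (Finset.mem_univ j), mul_comm]
    congr 1
    exact Finset.prod_congr rfl fun m hm => if_neg (Finset.ne_of_mem_erase hm)
  simp only [Finset.prod_const_one, mul_one, Fintype.card_fin] at e3
  rw [← e2, abs_mul] at e3
  rw [le_div_iff₀ (hl j)]
  have hd : 0 < |A.det| := abs_pos.2 hdet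
  have hf : (0 : ℝ) ≤ N.factorial := by positivity
  have e5 : |A.det| * (|A' j i| * lam j) ≤ |A.det| * (N.factorial * C) := by
    calc |A.det| * (|A' j i| * lam j) = (|A.det| * |A' j i|) * lam j := by ring
      _ ≤ (N.factorial * ∏ m, if m = j then 1 else lam m) * lam j :=
        mul_le_mul_of_nonneg_right e3 (hl j).le
      _ = N.factorial * ∏ m, lam m := by rw [mul_assoc, e4]
      _ ≤ N.factorial * (C * |A.det|) := mul_le_mul_of_nonneg_left hC hf
      _ = _ := by ring
  exact le_of_mul_le_mul_left e5 hd

/-- A basis `B` of `ℤᴺ` reduced with respect to the parallelepiped `|L k x| ≤ exp (q c k)`, with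
approximate successive minima `lam` and dual bounds for the inverse basis `B'`. -/
lemma reduced (N : ℕ) : ∃ C : ℝ, 0 < C ∧ ∀ (L Li : Matrix (Fin N) (Fin N) ℝ), L * Li = 1 →
    ∀ (c : Fin N → ℝ) (q : ℝ), ∃ (B B' : Matrix (Fin N) (Fin N) ℤ) (lam : Fin N → ℝ),
      B * B' = 1 ∧ (∀ i, 0 < lam i) ∧ Monotone lam ∧
      (∀ k i, |(L * B.map (Int.cast : ℤ → ℝ)) k i| ≤ Real.exp (q * c k) * lam i) ∧
      (∀ a i, |(B'.map (Int.cast : ℤ → ℝ) * Li) a i| ≤ C / lam a * Real.exp (-(q * c i))) ∧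
      |L.det| * Real.exp (-(q * ∑ i, c i)) ≤ N.factorial * ∏ i, lam i := by
  obtain ⟨C, hC, hH⟩ := hermite_lattice N
  refine ⟨N.factorial * (Real.sqrt C) + 1, by positivity, fun L Li hL c q => ?_⟩
  set g : Matrix (Fin N) (Fin N) ℝ := Matrix.of fun k l => Real.exp (-(q * c k)) * L k l with hg
  have hLdet : L.det ≠ 0 := by
    intro h0
    have := congrArg Matrix.det hL
    rw [Matrix.det_mul, h0, zero_mul, Matrix.det_one] at this
    exact zero_ne_one this
  have hgd : g.det = Real.exp (-(q * ∑ i, c i)) * L.det := by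
    rw [hg, Matrix.det_mul_column, ← Real.exp_sum, Finset.sum_neg_distrib, Finset.mul_sum]
  have hgdet : g.det ≠ 0 := by rw [hgd]; exact mul_ne_zero (Real.exp_pos _).ne' hLdet
  obtain ⟨B0, B0', hB0, hprod⟩ := hH g hgdet
  set lam0 : Fin N → ℝ := fun i => Real.sqrt (∑ k, (∑ l, g k l * (B0 i l : ℝ)) ^ 2) with hlam0
  set e := Tuple.sort lam0 with he
  have hmono := Tuple.monotone_sort lam0
  set B1 := B0.submatrix e id with hB1
  set B1' := B0'.submatrix id e with hB1'
  have hBB : B1 * B1' = 1 := submatrix_mul_eq_one hB0 e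
  set lam := lam0 ∘ e with hlam
  have hlam' : ∀ i, lam i = Real.sqrt (∑ k, (∑ l, g k l * (B1 i l : ℝ)) ^ 2) := fun i => rfl
  have hT : B1.transpose * B1'.transpose = 1 := by
    rw [← Matrix.transpose_mul, mul_eq_one_comm.1 hBB, Matrix.transpose_one]
  have hA : ∀ k i, |(g * B1.transpose.map (Int.cast : ℤ → ℝ)) k i| ≤ lam i := by
    intro k i
    rw [hlam', Matrix.mul_apply]
    refine Real.abs_le_sqrt ?_
    exact Finset.single_le_sum (f := fun k => (∑ l, g k l * (B1 i l : ℝ)) ^ 2)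
      (fun _ _ => sq_nonneg _) (Finset.mem_univ k)
  have hBdet : |(B1.transpose.map (Int.cast : ℤ → ℝ)).det| = 1 := by
    have h1 := congrArg Matrix.det hT
    rw [Matrix.det_mul, Matrix.det_one] at h1
    have h2 : |B1.transpose.det| = 1 := Int.isUnit_iff_abs_eq.1 (IsUnit.of_mul_eq_one _ h1)
    have h3 : (B1.transpose.map (Int.cast : ℤ → ℝ)).det = (B1.transpose.det : ℝ) :=
      ((Int.castRingHom ℝ).map_det B1.transpose).symm
    rw [h3, ← Int.cast_abs, h2, Int.cast_one]
  have hAdet : |(g * B1.transpose.map (Int.cast : ℤ → ℝ)).det| = |g.det| := by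
    rw [Matrix.det_mul, abs_mul, hBdet, mul_one]
  have hlow : |g.det| ≤ N.factorial * ∏ i, lam i := by
    have := det_bound (g * B1.transpose.map (Int.cast : ℤ → ℝ)) (fun _ => 1) lam (by
      intro i j; rw [one_mul]; exact hA i j)
    rw [hAdet] at this
    simpa using this
  have hpp : ∏ i, lam i ≤ Real.sqrt C * |g.det| := by
    have h1 : ∏ i, lam i = ∏ i, lam0 i := Equiv.prod_comp e lam0
    have h2 : (∏ i, lam0 i) ^ 2 ≤ C * g.det ^ 2 := by
      rw [← Finset.prod_pow]
      refine le_trans (le_of_eq ?_) hprod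
      exact Finset.prod_congr rfl fun i _ => Real.sq_sqrt (Finset.sum_nonneg fun _ _ => sq_nonneg _)
    rw [h1, ← Real.sqrt_sq_eq_abs, ← Real.sqrt_mul hC]
    exact Real.le_sqrt_of_sq_le h2
  have hpos : ∀ i, 0 < lam i := by
    have h1 : ∏ i, lam i ≠ 0 := by
      intro h0
      rw [h0, mul_zero] at hlow
      exact hgdet (abs_eq_zero.1 (le_antisymm hlow (abs_nonneg _)))
    intro i
    exact lt_of_le_of_ne (Real.sqrt_nonneg _) (Finset.prod_ne_zero_iff.1 h1 i (Finset.mem_univ _)).symm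
  refine ⟨B1.transpose, B1'.transpose, lam, hT, hpos, hmono, ?_, ?_, ?_⟩
  · intro k i
    have h1 := hA k i
    have h2 : (g * B1.transpose.map (Int.cast : ℤ → ℝ)) k i =
        Real.exp (-(q * c k)) * (L * B1.transpose.map (Int.cast : ℤ → ℝ)) k i := by
      simp only [Matrix.mul_apply, hg, Matrix.of_apply, Finset.mul_sum]
      exact Finset.sum_congr rfl fun _ _ => by ring
    rw [h2, abs_mul, abs_of_pos (Real.exp_pos _), Real.exp_neg, inv_mul_le_iff₀ (Real.exp_pos _)] at h1
    exact h1
  · intro a i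
    set A' : Matrix (Fin N) (Fin N) ℝ := Matrix.of fun a i =>
      (B1'.transpose.map (Int.cast : ℤ → ℝ) * Li) a i * Real.exp (q * c i) with hA'
    have hg1 : g = Matrix.diagonal (fun k => Real.exp (-(q * c k))) * L := by
      ext k l; rw [Matrix.diagonal_mul, hg, Matrix.of_apply]
    have hA1 : A' = (B1'.transpose.map (Int.cast : ℤ → ℝ) * Li) *
        Matrix.diagonal (fun k => Real.exp (q * c k)) := by
      ext k l; rw [Matrix.mul_diagonal, hA', Matrix.of_apply]
    have hone : (g * B1.transpose.map (Int.cast : ℤ → ℝ)) * A' = 1 := by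
      have hc : B1.transpose.map (Int.cast : ℤ → ℝ) * B1'.transpose.map (Int.cast : ℤ → ℝ) = 1 :=
        cast_mul_eq_one hT
      rw [hA1, hg1]
      calc _ = Matrix.diagonal (fun k => Real.exp (-(q * c k))) * (L *
            ((B1.transpose.map (Int.cast : ℤ → ℝ) * B1'.transpose.map (Int.cast : ℤ → ℝ)) * Li)) *
            Matrix.diagonal (fun k => Real.exp (q * c k)) := by simp only [Matrix.mul_assoc]
        _ = 1 := by
          rw [hc, one_mul, hL, mul_one, Matrix.diagonal_mul_diagonal, ← Matrix.diagonal_one]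
          congr 1
          ext k
          rw [← Real.exp_add, neg_add_cancel, Real.exp_zero]
    have := inv_bound _ A' hone lam hpos hA (Real.sqrt C) (by rw [hAdet]; exact hpp) a i
    rw [hA', Matrix.of_apply, abs_mul, abs_of_pos (Real.exp_pos _), ← le_div_iff₀ (Real.exp_pos _)]
      at this
    refine this.trans ?_
    rw [Real.exp_neg, ← div_eq_mul_inv]
    have := hpos a
    gcongr
    linarith
  · rw [← abs_of_pos (Real.exp_pos (-(q * ∑ i, c i))), ← abs_mul, mul_comm L.det, ← hgd]
    exact hlow

lemma exists_one_le_col {N : ℕ} {B B' : Matrix (Fin N) (Fin N) ℤ} (h : B * B' = 1) (i : Fin N) :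
    ∃ l, (1 : ℝ) ≤ |((B l i : ℤ) : ℝ)| := by
  by_contra hcon
  push Not at hcon
  have hz : ∀ l, B l i = 0 := by
    intro l
    have := hcon l
    rw [← Int.cast_abs] at this
    exact Int.abs_lt_one_iff.1 (by exact_mod_cast this)
  have := congrArg (fun M : Matrix (Fin N) (Fin N) ℤ => M i i) (mul_eq_one_comm.1 h)
  rw [Matrix.mul_apply, Matrix.one_apply_eq] at this
  simp [hz] at this

end APC

/-! ### The subspace theorem over the reals -/

namespace APC

/-- If the first minimum is bounded and the product of the minima is large, two consecutive minima
have a large ratio. -/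
lemma gap_exists {N : ℕ} (hN : 0 < N) (lam : Fin N → ℝ) (C2 ρ M : ℝ) (hC2 : 0 < C2) (hρ : 1 ≤ ρ)
    (hpos : ∀ i, 0 < lam i) (h0 : lam ⟨0, hN⟩ ≤ C2)
    (hbig : C2 ^ N * ρ ^ (N * N) < ∏ i, lam i) :
    ∃ k : Fin N, 0 < (k : ℕ) ∧ C2 < lam k ∧ ρ * lam ⟨k - 1, by omega⟩ ≤ lam k := by
  by_contra hcon
  push Not at hcon
  have hind : ∀ k (hk : k < N), lam ⟨k, hk⟩ ≤ ρ ^ k * C2 := by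
    intro k
    induction k with
    | zero => intro hk; simpa using h0
    | succ k ih =>
      intro hk
      by_cases hc : C2 < lam ⟨k + 1, hk⟩
      · have h1 := hcon ⟨k + 1, hk⟩ (Nat.succ_pos _) hc
        simp only [Nat.add_sub_cancel] at h1
        have h2 := ih (by omega)
        calc lam ⟨k + 1, hk⟩ ≤ ρ * lam ⟨k, by omega⟩ := h1.le
          _ ≤ ρ * (ρ ^ k * C2) := by gcongr
          _ = _ := by ring
      · push Not at hc
        have : 1 ≤ ρ ^ (k + 1) := one_le_pow₀ hρ
        nlinarith
  have h2 : ∏ i, lam i ≤ ∏ i : Fin N, (ρ ^ N * C2) := by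
    refine Finset.prod_le_prod (fun i _ => (hpos i).le) fun i _ => (hind i i.2).trans ?_
    have : ρ ^ (i : ℕ) ≤ ρ ^ N := pow_le_pow_right₀ hρ i.2.le
    gcongr
  rw [Finset.prod_const, Finset.card_univ, Fintype.card_fin, mul_pow, ← pow_mul, mul_comm] at h2
  linarith

/-- The subspace theorem for real linear forms with algebraic integer coefficients: integral points
with `|L_i(x)| ≤ exp (q c_i)`, `∑ c_i < 0`, cannot meet every rational hyperplane finitely often. -/
theorem subspace_real {N : ℕ} (L : Matrix (Fin N) (Fin N) ℝ) (hdet : L.det ≠ 0)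
    (hinteg : ∀ i j, IsIntegral ℤ (L i j)) (c : Fin N → ℝ) (hc : ∑ i, c i < 0)
    (x : ℕ → Fin N → ℤ) (q : ℕ → ℝ) (hq : Filter.Tendsto q Filter.atTop Filter.atTop)
    (hx : ∀ᶠ j in Filter.atTop, ∀ i, |∑ l, L i l * (x j l : ℝ)| ≤ Real.exp (q j * c i))
    (hψ : ∀ ψ : Fin N → ℤ, ψ ≠ 0 → {j | ∑ l, ψ l * x j l = 0}.Finite) : False := by
  classical
  have hN : 0 < N := by
    rcases Nat.eq_zero_or_pos N with h | h
    · subst h; simp at hc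
    · exact h
  have hNr : (0 : ℝ) < N := by exact_mod_cast hN
  obtain ⟨Li, hL⟩ : ∃ Li, L * Li = 1 := ⟨L⁻¹, Matrix.mul_nonsing_inv _ (isUnit_iff_ne_zero.2 hdet)⟩
  have hL' : Li * L = 1 := mul_eq_one_comm.1 hL
  obtain ⟨C, hC, hred⟩ := reduced N
  choose B B' lam hBB hpos hmono hup hdual hlow using fun j => hred L Li hL c (q j)
  set δ := -∑ i, c i with hδ
  have hδ0 : 0 < δ := by rw [hδ]; linarith
  set δ' := δ / (2 * (N * N)) with hδ'
  have hδ'0 : 0 < δ' := by positivity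
  set C2 := N * C with hC2
  have hC20 : 0 < C2 := by positivity
  -- coordinates of `x j` in the reduced basis
  set t : ℕ → Fin N → ℤ := fun j => (B' j).mulVec (x j) with ht
  have hxt : ∀ j l, x j l = ∑ i, t j i * B j l i := by
    intro j l
    have : (B j).mulVec (t j) = x j := by rw [ht]; simp only [Matrix.mulVec_mulVec, hBB, Matrix.one_mulVec]
    rw [← this, Matrix.mulVec, dotProduct]
    exact Finset.sum_congr rfl fun _ _ => mul_comm _ _
  have htb : ∀ᶠ j in Filter.atTop, ∀ a, C2 < lam j a → t j a = 0 := by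
    filter_upwards [hx] with j hj a ha
    have e1 : (t j a : ℝ) = ∑ i, ((B' j).map (Int.cast : ℤ → ℝ) * Li) a i *
        ∑ l, L i l * (x j l : ℝ) := by
      have : ((B' j).map (Int.cast : ℤ → ℝ)).mulVec (fun l => (x j l : ℝ)) =
          ((B' j).map (Int.cast : ℤ → ℝ) * Li).mulVec (L.mulVec (fun l => (x j l : ℝ))) := by
        rw [Matrix.mulVec_mulVec, Matrix.mul_assoc, hL', Matrix.mul_one]
      have h2 := congrFun this a
      simp only [Matrix.mulVec, dotProduct, Matrix.map_apply] at h2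
      rw [ht]
      simp only [Matrix.mulVec, dotProduct]
      push_cast
      exact h2
    have e2 : |(t j a : ℝ)| ≤ C2 / lam j a := by
      rw [e1]
      refine (Finset.abs_sum_le_sum_abs _ _).trans ?_
      have : ∀ i ∈ (Finset.univ : Finset (Fin N)), |((B' j).map (Int.cast : ℤ → ℝ) * Li) a i *
        ∑ l, L i l * (x j l : ℝ)| ≤ C / lam j a := by
        intro i _
        rw [abs_mul]
        refine (mul_le_mul (hdual j a i) (hj i) (abs_nonneg _) ?_).trans (le_of_eq ?_)
        · have := hpos j a; positivity
        · rw [mul_assoc, ← Real.exp_add, neg_add_cancel, Real.exp_zero, mul_one]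
      refine (Finset.sum_le_card_nsmul _ _ _ this).trans (le_of_eq ?_)
      rw [Finset.card_univ, Fintype.card_fin, nsmul_eq_mul, hC2, mul_div_assoc]
    have e3 : |(t j a : ℝ)| < 1 := e2.trans_lt ((div_lt_one (hpos j a)).2 ha)
    rw [← Int.cast_abs] at e3
    exact Int.abs_lt_one_iff.1 (by exact_mod_cast e3)
  have hxne : ∀ᶠ j in Filter.atTop, x j ≠ 0 := by
    have hf := hψ (Pi.single ⟨0, hN⟩ 1) (by
      intro h
      have := congrFun h ⟨0, hN⟩
      simp at this)
    have := hf.eventually_cofinite_notMem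
    rw [Nat.cofinite_eq_atTop] at this
    filter_upwards [this] with j hj h0
    apply hj
    simp [h0]
  have habs : ∀ ε > 0, ∀ K : ℝ, ∀ᶠ j in Filter.atTop, K ≤ Real.exp (q j * ε) := fun ε hε K =>
    ((Real.tendsto_exp_atTop.comp (hq.atTop_mul_const hε))).eventually_ge_atTop K
  have hdpos : 0 < |L.det| := abs_pos.2 hdet
  have hgap : ∀ᶠ j in Filter.atTop, ∃ k : Fin N, 0 < (k : ℕ) ∧ C2 < lam j k ∧
      Real.exp (q j * δ') * lam j ⟨k - 1, by omega⟩ ≤ lam j k := by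
    filter_upwards [htb, hxne, habs (δ / 2) (by positivity)
      ((N.factorial * C2 ^ N + 1) / |L.det|), hq.eventually_ge_atTop 0] with j h1 h2 h3 h4
    refine gap_exists hN (lam j) C2 _ 0 hC20 (Real.one_le_exp (by positivity)) (hpos j) ?_ ?_
    · by_contra hcon
      push Not at hcon
      apply h2
      ext l
      rw [hxt, Pi.zero_apply]
      refine Finset.sum_eq_zero fun i _ => ?_
      rw [h1 i (hcon.trans_le (hmono j (Fin.mk_le_of_le_val (Nat.zero_le _)))), zero_mul]
    · have h5 := hlow j
      rw [← Real.exp_nat_mul]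
      have h6 : ((N * N : ℕ) : ℝ) * (q j * δ') = q j * (δ / 2) := by
        rw [hδ']; push_cast; field_simp
      rw [h6]
      set E := Real.exp (q j * (δ / 2)) with hE
      have h7 : Real.exp (-(q j * ∑ i, c i)) = E * E := by
        rw [hE, ← Real.exp_add, hδ]; congr 1; ring
      rw [h7] at h5
      rw [div_le_iff₀ hdpos] at h3
      have hE0 : 0 < E := Real.exp_pos _
      have hf : (0 : ℝ) < N.factorial := by positivity
      have : N.factorial * (C2 ^ N * E) < N.factorial * ∏ i, lam j i := by
        calc N.factorial * (C2 ^ N * E) < (N.factorial * C2 ^ N + 1) * E := by nlinarith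
          _ ≤ (E * |L.det|) * E := by gcongr
          _ = |L.det| * (E * E) := by ring
          _ ≤ _ := h5
      exact lt_of_mul_lt_mul_left this hf.le
  -- the logarithms of the successive minima have polynomial size
  obtain ⟨E, hE, hbox⟩ : ∃ E : ℝ, 0 < E ∧ ∀ᶠ j in Filter.atTop, ∀ i,
      |Real.log (lam j i)| ≤ q j * E := by
    set E0 := ∑ i, |c i| with hE0
    have hcE : ∀ i, |c i| ≤ E0 := fun i =>
      Finset.single_le_sum (f := fun i => |c i|) (fun _ _ => abs_nonneg _) (Finset.mem_univ i)
    have hE00 : 0 ≤ E0 := Finset.sum_nonneg fun _ _ => abs_nonneg _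
    set K := ∑ a, ∑ b, |Li a b| + C * ∑ a, ∑ b, |L a b| with hK
    have hK1 : ∀ a, ∑ b, |Li a b| ≤ K := fun a => by
      have := Finset.single_le_sum (f := fun a => ∑ b, |Li a b|)
        (fun _ _ => Finset.sum_nonneg fun _ _ => abs_nonneg _) (Finset.mem_univ a)
      have h2 : 0 ≤ C * ∑ a, ∑ b, |L a b| := mul_nonneg hC.le
        (Finset.sum_nonneg fun _ _ => Finset.sum_nonneg fun _ _ => abs_nonneg _)
      rw [hK]; linarith
    have hK2 : ∀ b, C * ∑ a, |L a b| ≤ K := fun b => by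
      have h1 := Finset.single_le_sum (f := fun b => ∑ a, |L a b|)
        (fun _ _ => Finset.sum_nonneg fun _ _ => abs_nonneg _) (Finset.mem_univ b)
      rw [Finset.sum_comm] at h1
      have h2 : 0 ≤ ∑ a, ∑ b, |Li a b| :=
        (Finset.sum_nonneg fun _ _ => Finset.sum_nonneg fun _ _ => abs_nonneg _)
      rw [hK]
      have := mul_le_mul_of_nonneg_left h1 hC.le
      linarith
    refine ⟨E0 + 1, by linarith, ?_⟩
    filter_upwards [habs 1 one_pos K, hq.eventually_ge_atTop 0] with j h1 h2 i
    have hlp := hpos j i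
    have hexp : ∀ k, Real.exp (q j * c k) ≤ Real.exp (q j * E0) := fun k =>
      Real.exp_le_exp.2 (mul_le_mul_of_nonneg_left ((le_abs_self _).trans (hcE k)) h2)
    have hexp' : ∀ k, Real.exp (-(q j * c k)) ≤ Real.exp (q j * E0) := fun k =>
      Real.exp_le_exp.2 (by
        rw [← mul_neg]
        exact mul_le_mul_of_nonneg_left ((neg_le_abs _).trans (hcE k)) h2)
    have hsplit : Real.exp (q j * (E0 + 1)) = Real.exp (q j * 1) * Real.exp (q j * E0) := by
      rw [← Real.exp_add]; congr 1; ring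
    rw [abs_le]
    constructor
    · obtain ⟨l, hl⟩ := exists_one_le_col (hBB j) i
      have e1 : ((B j l i : ℤ) : ℝ) = ∑ k, Li l k * (L * (B j).map (Int.cast : ℤ → ℝ)) k i := by
        have : (B j).map (Int.cast : ℤ → ℝ) = Li * (L * (B j).map (Int.cast : ℤ → ℝ)) := by
          rw [← Matrix.mul_assoc, hL', Matrix.one_mul]
        have h3 := congrArg (fun M : Matrix (Fin N) (Fin N) ℝ => M l i) this
        rwa [Matrix.map_apply, Matrix.mul_apply] at h3
      have e2 : (1 : ℝ) ≤ Real.exp (q j * (E0 + 1)) * lam j i := by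
        refine hl.trans ?_
        rw [e1]
        refine (Finset.abs_sum_le_sum_abs _ _).trans ?_
        calc _ ≤ ∑ k, |Li l k| * (Real.exp (q j * E0) * lam j i) := by
              refine Finset.sum_le_sum fun k _ => ?_
              rw [abs_mul]
              refine mul_le_mul_of_nonneg_left ((hup j k i).trans ?_) (abs_nonneg _)
              exact mul_le_mul_of_nonneg_right (hexp k) hlp.le
          _ = (∑ k, |Li l k|) * (Real.exp (q j * E0) * lam j i) := by rw [Finset.sum_mul]
          _ ≤ Real.exp (q j * 1) * (Real.exp (q j * E0) * lam j i) := by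
              refine mul_le_mul_of_nonneg_right ((hK1 l).trans h1) ?_
              positivity
          _ = _ := by rw [hsplit]; ring
      have e3 := Real.log_le_log one_pos e2
      rw [Real.log_one, Real.log_mul (Real.exp_pos _).ne' hlp.ne', Real.log_exp] at e3
      linarith
    · obtain ⟨l, hl⟩ := exists_one_le_col (B := (B' j).transpose) (B' := (B j).transpose)
        (by rw [← Matrix.transpose_mul, hBB, Matrix.transpose_one]) i
      rw [Matrix.transpose_apply] at hl
      have e1 : ((B' j i l : ℤ) : ℝ) = ∑ k, ((B' j).map (Int.cast : ℤ → ℝ) * Li) i k * L k l := by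
        have : (B' j).map (Int.cast : ℤ → ℝ) = ((B' j).map (Int.cast : ℤ → ℝ) * Li) * L := by
          rw [Matrix.mul_assoc, hL', Matrix.mul_one]
        have h3 := congrArg (fun M : Matrix (Fin N) (Fin N) ℝ => M i l) this
        rwa [Matrix.map_apply, Matrix.mul_apply] at h3
      have e2 : lam j i ≤ Real.exp (q j * (E0 + 1)) := by
        have : (1 : ℝ) ≤ Real.exp (q j * (E0 + 1)) / lam j i := by
          refine hl.trans ?_
          rw [e1]
          refine (Finset.abs_sum_le_sum_abs _ _).trans ?_
          calc _ ≤ ∑ k, |L k l| * (C / lam j i * Real.exp (q j * E0)) := by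
                refine Finset.sum_le_sum fun k _ => ?_
                rw [abs_mul, mul_comm]
                refine mul_le_mul_of_nonneg_left ((hdual j i k).trans ?_) (abs_nonneg _)
                exact mul_le_mul_of_nonneg_left (hexp' k) (by positivity)
            _ = (C * ∑ k, |L k l|) * (Real.exp (q j * E0) / lam j i) := by
                rw [← Finset.sum_mul]; ring
            _ ≤ Real.exp (q j * 1) * (Real.exp (q j * E0) / lam j i) := by
                refine mul_le_mul_of_nonneg_right ((hK2 l).trans h1) ?_
                positivity
            _ = _ := by rw [hsplit]; ring
        rwa [le_div_iff₀ hlp, one_mul] at this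
      have e3 := Real.log_le_log hlp e2
      rwa [Real.log_exp] at e3
  obtain ⟨j0, hj0⟩ := Filter.eventually_atTop.1 (((hgap.and hbox).and htb).and
    (hq.eventually_gt_atTop 0))
  choose kk hk0 hkC hkgap using fun j => (hj0 (j + j0) (Nat.le_add_left _ _)).1.1.1
  have hbox' := fun j => (hj0 (j + j0) (Nat.le_add_left _ _)).1.1.2
  have htb' := fun j => (hj0 (j + j0) (Nat.le_add_left _ _)).1.2
  have hq0 := fun j => (hj0 (j + j0) (Nat.le_add_left _ _)).2
  set y : ℕ → Fin N × (Fin N → ℝ) := fun j =>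
    (kk j, fun i => Real.log (lam (j + j0) i) / q (j + j0)) with hy
  obtain ⟨⟨k, l⟩, -, φ, hφ, hlim⟩ := IsCompact.tendsto_subseq
    (s := (Set.univ : Set (Fin N)) ×ˢ Set.Icc (fun _ => -E) (fun _ => E))
    (isCompact_univ.prod isCompact_Icc) (x := y) (by
      intro j
      refine ⟨trivial, fun i => ?_, fun i => ?_⟩
      · have := (abs_le.1 (hbox' j i)).1
        simp only [hy]
        rw [le_div_iff₀ (hq0 j)]; linarith
      · have := (abs_le.1 (hbox' j i)).2
        simp only [hy]
        rw [div_le_iff₀ (hq0 j)]; linarith)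
  have hlimk : ∀ᶠ j in Filter.atTop, kk (φ j) = k := by
    have := (Prod.tendsto_iff _ _).1 hlim |>.1
    rw [nhds_discrete] at this
    exact this.eventually (p := fun z => z = k) (Filter.eventually_pure.2 rfl)
  have hliml : ∀ i, Filter.Tendsto (fun j => Real.log (lam (φ j + j0) i) / q (φ j + j0))
      Filter.atTop (nhds (l i)) := fun i =>
    (tendsto_pi_nhds.1 ((Prod.tendsto_iff _ _).1 hlim |>.2)) i
  have hkpos : 0 < (k : ℕ) := by
    obtain ⟨j, hj⟩ := hlimk.exists
    rw [← hj]; exact hk0 _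
  have hqφ : Filter.Tendsto (fun j => q (φ j + j0)) Filter.atTop Filter.atTop :=
    hq.comp ((Filter.tendsto_add_atTop_nat j0).comp hφ.tendsto_atTop)
  have hlmono : Monotone l := by
    intro i i' hii
    refine le_of_tendsto_of_tendsto' (hliml i) (hliml i') fun j => ?_
    exact div_le_div_of_nonneg_right (Real.log_le_log (hpos _ _) (hmono _ hii)) (hq0 _).le
  obtain ⟨j1, hj1⟩ := Filter.eventually_atTop.1 hlimk
  have hsub : (k : ℕ) - 1 < N := by omega
  have hlgap : l ⟨k - 1, hsub⟩ + δ' ≤ l k := by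
    refine le_of_tendsto_of_tendsto ((hliml _).add_const _) (hliml k) ?_
    filter_upwards [hlimk] with j hj
    have h1 := hkgap (φ j)
    have h1' : Real.exp (q (φ j + j0) * δ') * lam (φ j + j0) ⟨k - 1, hsub⟩ ≤ lam (φ j + j0) k := by
      simp only [hj] at h1; exact h1
    have h2 := Real.log_le_log (mul_pos (Real.exp_pos _) (hpos _ _)) h1'
    rw [Real.log_mul (Real.exp_pos _).ne' (hpos _ _).ne', Real.log_exp] at h2
    have h3 := hq0 (φ j)
    rw [div_add' _ _ _ h3.ne']
    refine div_le_div_of_nonneg_right ?_ h3.le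
    linarith
  have hs : 0 ≤ ∑ i, l i + ∑ i, c i := by
    have hl1 : Filter.Tendsto (fun j => ∑ i, Real.log (lam (φ j + j0) i) / q (φ j + j0))
      Filter.atTop (nhds (∑ i, l i)) := tendsto_finsetSum _ fun i _ => hliml i
    have hl2 : Filter.Tendsto (fun j => (Real.log |L.det| - Real.log N.factorial) / q (φ j + j0) +
      δ) Filter.atTop (nhds (0 + δ)) := (hqφ.const_div_atTop _).add_const _
    have := le_of_tendsto_of_tendsto' hl2 hl1 (fun j => by
      have h3 := hq0 (φ j)
      have h1 := Real.log_le_log (mul_pos hdpos (Real.exp_pos _)) (hlow (φ j + j0))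
      rw [Real.log_mul hdpos.ne' (Real.exp_pos _).ne', Real.log_exp,
        Real.log_mul (by positivity) (Finset.prod_ne_zero_iff.2 fun i _ => (hpos _ i).ne'),
        Real.log_prod fun i _ => (hpos _ i).ne'] at h1
      rw [← Finset.sum_div, div_add' _ _ _ h3.ne']
      refine div_le_div_of_nonneg_right ?_ h3.le
      rw [hδ]; linarith)
    rw [hδ] at this; linarith
  refine subspace_core k.2 L Li hL hinteg c l (l ⟨k - 1, hsub⟩) δ' hδ'0 ?_ ?_ hs
    (fun j => B (φ (j + j1) + j0)) (fun j => B' (φ (j + j1) + j0)) (fun j => hBB _)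
    (fun j => q (φ (j + j1) + j0)) (hqφ.comp (Filter.tendsto_add_atTop_nat j1)) ?_ ?_
  · intro i hi
    exact hlmono (Fin.mk_le_mk.2 (by omega : (i : ℕ) ≤ k - 1))
  · intro i hi
    exact hlgap.trans (hlmono hi)
  · intro ε hε
    have h1 : ∀ᶠ j in Filter.atTop, ∀ a, l a - ε / 2 < Real.log (lam (φ j + j0) a) / q (φ j + j0) :=
      Filter.eventually_all.2 fun a => (hliml a).eventually_const_lt (by linarith)
    have h2 : ∀ᶠ j in Filter.atTop, C ≤ Real.exp (q (φ j + j0) * (ε / 2)) :=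
      ((Filter.tendsto_add_atTop_nat j0).comp hφ.tendsto_atTop).eventually
        (habs (ε / 2) (by positivity) C)
    refine (Filter.tendsto_add_atTop_nat j1).eventually
      (p := fun j => ∀ a i, |((B' (φ j + j0)).map (Int.cast : ℤ → ℝ) * Li) a i| ≤
        Real.exp (q (φ j + j0) * (ε - l a - c i))) ?_
    filter_upwards [h1, h2] with j hj1 hj2 a i
    refine (hdual _ a i).trans ?_
    have h3 := hq0 (φ j)
    have h4 : Real.exp (q (φ j + j0) * (l a - ε / 2)) ≤ lam (φ j + j0) a := by
      rw [← Real.le_log_iff_exp_le (hpos _ _)]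
      have := hj1 a
      rw [lt_div_iff₀ h3] at this
      linarith
    calc _ ≤ Real.exp (q (φ j + j0) * (ε / 2)) / Real.exp (q (φ j + j0) * (l a - ε / 2)) *
        Real.exp (-(q (φ j + j0) * c i)) := by
          refine mul_le_mul_of_nonneg_right ?_ (Real.exp_nonneg _)
          exact div_le_div₀ (Real.exp_nonneg _) hj2 (Real.exp_pos _) h4
      _ = _ := by
        rw [← Real.exp_sub, ← Real.exp_add]; congr 1; ring
  · intro w
    by_contra hinf
    have hinf : {j | (fun s => compound (k : ℕ) (B (φ (j + j1) + j0)) s (firstSet k.2.le)) = w}.Infinite := hinf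
    obtain ⟨j2, hj2⟩ := hinf.nonempty
    have hw : w ≠ 0 := by
      intro h0
      have e2 := congrArg (compound (k : ℕ)) (mul_eq_one_comm.1 (hBB (φ (j2 + j1) + j0)))
      rw [compound_mul, compound_one] at e2
      have e3 := congrArg (fun M : Matrix _ _ ℤ => M (firstSet k.2.le) (firstSet k.2.le)) e2
      rw [Matrix.mul_apply, Matrix.one_apply_eq] at e3
      have hj3 : ∀ s, compound (k : ℕ) (B (φ (j2 + j1) + j0)) s (firstSet k.2.le) = 0 := by
        intro s
        have := congrFun hj2 s
        rw [h0] at this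
        exact this
      simp [hj3] at e3
    obtain ⟨ψ, hψ0, hψ1⟩ := pluecker k.2 w hw
    have hfin := hψ ψ hψ0
    refine hinf ((hfin.preimage (f := fun j => φ (j + j1) + j0) ?_).subset ?_)
    · intro a _ b _ hab
      have : φ (a + j1) = φ (b + j1) := by simpa using hab
      have := hφ.injective this
      omega
    · intro j hj
      refine hψ1 (B (φ (j + j1) + j0)) (fun s => congrFun hj s) _
        (fun i => t (φ (j + j1) + j0) (Fin.castLE k.2.le i)) fun l => ?_
      rw [hxt]
      have hkj := hj1 (j + j1) (Nat.le_add_left _ _)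
      have hz : ∀ i : Fin N, (k : ℕ) ≤ i → t (φ (j + j1) + j0) i = 0 := by
        intro i hi
        refine htb' _ i (lt_of_lt_of_le ?_ (hmono _ (show k ≤ i from hi)))
        have := hkC (φ (j + j1))
        rwa [hkj] at this
      symm
      refine Finset.sum_of_injOn (Fin.castLE k.2.le) (Fin.castLE_injective _).injOn
        (fun _ _ => Finset.mem_coe.2 (Finset.mem_univ _)) ?_ (fun _ _ => rfl)
      intro i _ hi
      rw [hz i, zero_mul]
      by_contra hlt
      push Not at hlt
      exact hi ⟨⟨i, hlt⟩, Finset.mem_coe.2 (Finset.mem_univ _), by ext; simp⟩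

end APC

/-! ### The subspace theorem over a number field and the splitting of relations -/

namespace APC

lemma two_re_integral {z : ℂ} (h : IsIntegral ℤ z) : IsIntegral ℤ (2 * z.re) := by
  have h2 : IsIntegral ℤ ((starRingEnd ℂ) z) := h.map (starRingEnd ℂ).toIntAlgHom
  have h3 : IsIntegral ℤ (((2 * z.re : ℝ) : ℂ)) := by
    rw [← Complex.add_conj]; exact h.add h2
  exact (isIntegral_algebraMap_iff (B := ℂ) (algebraMap ℝ ℂ).injective).1 h3

lemma integral_I : IsIntegral ℤ Complex.I := by
  refine ⟨Polynomial.X ^ 2 + 1, ?_, ?_⟩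
  · have := Polynomial.monic_X_pow_add_C (R := ℤ) 1 (n := 2) (by norm_num)
    simpa using this
  · simp

lemma two_im_integral {z : ℂ} (h : IsIntegral ℤ z) : IsIntegral ℤ (2 * z.im) := by
  have h2 : IsIntegral ℤ (-(Complex.I * z)) := (integral_I.mul h).neg
  have := two_re_integral h2
  simpa using this

/-- The complex case reduces to the real one: by multilinearity of the determinant, the real or the
imaginary part of each form can be chosen so that the resulting forms stay independent. -/
theorem subspace_complex {N : ℕ} (L : Matrix (Fin N) (Fin N) ℂ) (hdet : L.det ≠ 0)
    (hinteg : ∀ i j, IsIntegral ℤ (L i j)) (c : Fin N → ℝ) (hc : ∑ i, c i < 0)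
    (x : ℕ → Fin N → ℤ) (q : ℕ → ℝ) (hq : Filter.Tendsto q Filter.atTop Filter.atTop)
    (hx : ∀ ε > 0, ∀ᶠ j in Filter.atTop, ∀ i,
      ‖∑ l, L i l * (x j l : ℂ)‖ ≤ Real.exp (q j * (c i + ε)))
    (hψ : ∀ ψ : Fin N → ℤ, ψ ≠ 0 → {j | ∑ l, ψ l * x j l = 0}.Finite) : False := by
  classical
  have hN : 0 < N := by
    rcases Nat.eq_zero_or_pos N with h | h
    · subst h; simp at hc
    · exact h
  have hNr : (0 : ℝ) < N := by exact_mod_cast hN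
  set R : Matrix (Fin N) (Fin N) ℂ := Matrix.of fun i l => (((L i l).re : ℝ) : ℂ) with hR
  set J : Matrix (Fin N) (Fin N) ℂ := Matrix.of fun i l => (((L i l).im : ℝ) : ℂ) * Complex.I with hJ
  have hsum : Matrix.of (fun i => R i + J i) = L := by
    ext i l
    simp only [Matrix.of_apply, Pi.add_apply, hR, hJ]
    exact Complex.re_add_im _
  obtain ⟨s, hs⟩ : ∃ s : Finset (Fin N), Matrix.det (Matrix.of (s.piecewise (fun i => R i) (fun i => J i))) ≠ 0 := by
    by_contra hcon
    push Not at hcon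
    apply hdet
    have := (Matrix.detRowAlternating (n := Fin N) (R := ℂ)).toMultilinearMap.map_add_univ
      (fun i => R i) (fun i => J i)
    have h2 : Matrix.det (Matrix.of (fun i => R i + J i)) = ∑ s : Finset (Fin N),
      Matrix.det (Matrix.of (s.piecewise (fun i => R i) (fun i => J i))) := this
    rw [← hsum, h2]
    exact Finset.sum_eq_zero fun s _ => hcon s
  set L' : Matrix (Fin N) (Fin N) ℝ := Matrix.of fun i l =>
    if i ∈ s then 2 * (L i l).re else 2 * (L i l).im with hL'
  have hL'c : L'.map (Complex.ofRealHom) = Matrix.of (fun i l => (if i ∈ s then 2 else -2 * Complex.I) *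
      (Matrix.of (s.piecewise (fun i => R i) (fun i => J i))) i l) := by
    ext i l
    by_cases hi : i ∈ s
    · simp [hL', hi, hR]
    · simp [hL', hi, hJ]
      linear_combination (2 * ((L i l).im : ℂ)) * Complex.I_mul_I
  have hdet' : L'.det ≠ 0 := by
    intro h0
    have h1 := (Complex.ofRealHom).map_det L'
    rw [h0, map_zero] at h1
    have h2 : (L'.map (Complex.ofRealHom)).det = 0 := h1.symm
    rw [hL'c, Matrix.det_mul_column] at h2
    rcases mul_eq_zero.1 h2 with h | h
    · obtain ⟨i, _, hi⟩ := Finset.prod_eq_zero_iff.1 h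
      split_ifs at hi <;> simp at hi
    · exact hs h
  set ε : ℝ := (-∑ i, c i) / (4 * N) with hε
  have hε0 : 0 < ε := by
    have : 0 < -∑ i, c i := by linarith
    positivity
  refine subspace_real L' hdet' ?_ (fun i => c i + 2 * ε) ?_ x q hq ?_ hψ
  · intro i l
    simp only [hL', Matrix.of_apply]
    split_ifs
    · exact two_re_integral (hinteg _ _)
    · exact two_im_integral (hinteg _ _)
  · rw [Finset.sum_add_distrib, Finset.sum_const, Finset.card_univ, Fintype.card_fin, nsmul_eq_mul]
    have : (N : ℝ) * (2 * ε) = (-∑ i, c i) / 2 := by rw [hε]; field_simp; ring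
    rw [this]; linarith
  · filter_upwards [hx ε hε0, ((Real.tendsto_exp_atTop.comp
      (hq.atTop_mul_const hε0))).eventually_ge_atTop 2] with j h1 h2 i
    have h3 : |∑ l, L' i l * (x j l : ℝ)| ≤ 2 * ‖∑ l, L i l * (x j l : ℂ)‖ := by
      by_cases hi : i ∈ s
      · have : ∑ l, L' i l * (x j l : ℝ) = 2 * (∑ l, L i l * (x j l : ℂ)).re := by
          rw [Complex.re_sum, Finset.mul_sum]
          refine Finset.sum_congr rfl fun l _ => ?_
          simp [hL', hi]; ring
        rw [this, abs_mul, abs_two]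
        gcongr
        exact Complex.abs_re_le_norm _
      · have : ∑ l, L' i l * (x j l : ℝ) = 2 * (∑ l, L i l * (x j l : ℂ)).im := by
          rw [Complex.im_sum, Finset.mul_sum]
          refine Finset.sum_congr rfl fun l _ => ?_
          simp [hL', hi]; ring
        rw [this, abs_mul, abs_two]
        gcongr
        exact Complex.abs_im_le_norm _
    refine h3.trans ?_
    refine (mul_le_mul h2 (h1 i) (norm_nonneg _) (Real.exp_nonneg _)).trans (le_of_eq ?_)
    simp only [Function.comp_apply]
    rw [← Real.exp_add]; congr 1; ring

/-- The form used over a number field `K` at the embedding `φ`; denominators of the coefficients are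
absorbed by the error `ε`. -/
theorem subspace_field {K : Type*} [Field K] [NumberField K] {N : ℕ}
    (R : Matrix (Fin N) (Fin N) K) (hdet : R.det ≠ 0) (φ : K →+* ℂ) (c : Fin N → ℝ)
    (x : ℕ → Fin N → ℤ) (q : ℕ → ℝ) (hq : Filter.Tendsto q Filter.atTop Filter.atTop)
    (hx : ∀ ε > 0, ∀ᶠ j in Filter.atTop, ∀ i,
      ‖φ (∑ l, R i l * (x j l : K))‖ ≤ Real.exp (q j * (c i + ε)))
    (hψ : ∀ ψ : Fin N → ℤ, ψ ≠ 0 → {j | ∑ l, ψ l * x j l = 0}.Finite) : 0 ≤ ∑ i, c i := by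
  classical
  by_contra hc
  push Not at hc
  obtain ⟨D, hD0, hD⟩ : ∃ D : ℤ, D ≠ 0 ∧ ∀ i l, IsIntegral ℤ ((D : K) * R i l) := by
    have halg : ∀ z : K, ∃ y : ℤ, y ≠ 0 ∧ IsIntegral ℤ ((y : K) * z) := by
      intro z
      have hz : IsAlgebraic ℤ z := 
        (IsFractionRing.isAlgebraic_iff ℤ ℚ K).2 (IsAlgebraic.of_finite ℚ z)
      obtain ⟨y, hy, h⟩ := hz.exists_integral_multiple
      exact ⟨y, hy, by simpa [zsmul_eq_mul] using h⟩
    choose y hy hyi using halg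
    refine ⟨∏ i, ∏ l, y (R i l), Finset.prod_ne_zero_iff.2 fun i _ =>
      Finset.prod_ne_zero_iff.2 fun l _ => hy _, fun i l => ?_⟩
    have h1 : y (R i l) ∣ ∏ i, ∏ l, y (R i l) :=
      (Finset.dvd_prod_of_mem (fun l => y (R i l)) (Finset.mem_univ l)).trans
        (Finset.dvd_prod_of_mem (fun i => ∏ l, y (R i l)) (Finset.mem_univ i))
    obtain ⟨t, ht⟩ := h1
    rw [ht]
    push_cast
    rw [mul_comm (y (R i l) : K), mul_assoc]
    exact (isIntegral_algebraMap (R := ℤ) (A := K) (x := t)).mul (hyi _)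
  set L : Matrix (Fin N) (Fin N) ℂ := ((D : K) • R).map φ with hL
  refine subspace_complex L ?_ ?_ c hc x q hq ?_ hψ
  · rw [hL]
    have : (((D : K) • R).map φ).det = φ ((D : K) • R).det := (φ.map_det _).symm
    rw [this, Matrix.det_smul]
    refine (map_ne_zero φ).2 (mul_ne_zero (pow_ne_zero _ (by exact_mod_cast hD0)) hdet)
  · intro i l
    have := (hD i l).map φ.toIntAlgHom
    simpa [hL] using this
  · intro ε hε
    filter_upwards [hx (ε / 2) (by positivity), ((Real.tendsto_exp_atTop.comp
      (hq.atTop_mul_const (half_pos hε)))).eventually_ge_atTop ‖(D : ℂ)‖] with j h1 h2 i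
    have : ∑ l, L i l * (x j l : ℂ) = (D : ℂ) * φ (∑ l, R i l * (x j l : K)) := by
      rw [map_sum, Finset.mul_sum]
      refine Finset.sum_congr rfl fun l _ => ?_
      simp [hL]; ring
    rw [this, norm_mul]
    refine (mul_le_mul h2 (h1 i) (norm_nonneg _) (Real.exp_nonneg _)).trans (le_of_eq ?_)
    simp only [Function.comp_apply]
    rw [← Real.exp_add]; congr 1; ring

lemma exists_frame {K : Type*} [Field K] {E : Type*} [Fintype E] {M : ℕ} (Λ : E → Fin M → K)
    (hsep : ∀ v : Fin M → K, (∀ e, ∑ l, Λ e l * v l = 0) → v = 0) :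
    ∃ s : Fin M → E, (Matrix.of fun i l => Λ (s i) l).det ≠ 0 := by
  classical
  obtain ⟨κ, a, ha, hspan, hli⟩ := exists_linearIndependent' K Λ
  have htop : Submodule.span K (Set.range Λ) = ⊤ := by
    by_contra hne
    obtain ⟨g, hg, hle⟩ := Submodule.exists_le_ker_of_lt_top _ (lt_top_iff_ne_top.2 hne)
    apply hg
    have hgv : ∀ v : Fin M → K, g v = ∑ l, v l * g (Pi.single l 1) := by
      intro v
      conv_lhs => rw [pi_eq_sum_univ' v, map_sum]
      refine Finset.sum_congr rfl fun l _ => ?_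
      rw [map_smul, smul_eq_mul]
    have := hsep (fun l => g (Pi.single l 1)) (fun e => by
      rw [← hgv]
      exact hle (Submodule.subset_span ⟨e, rfl⟩))
    ext l
    simpa using congrFun this l
  rw [htop] at hspan
  let b := Module.Basis.mk hli hspan.ge
  have hfin : Finite κ := Module.Finite.finite_basis b
  have : Fintype κ := Fintype.ofFinite κ
  have hcard : Fintype.card κ = M := by
    rw [← Module.finrank_eq_card_basis b]; simp
  let e : Fin M ≃ κ := (Fintype.equivFinOfCardEq hcard).symm
  refine ⟨a ∘ e, ?_⟩
  have h1 : LinearIndependent K (fun i => Λ (a (e i))) := hli.comp e e.injective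
  have h2 : IsUnit (Matrix.of fun i l => Λ (a (e i)) l) := by
    rw [← Matrix.linearIndependent_rows_iff_isUnit]
    exact h1
  exact ((Matrix.isUnit_iff_isUnit_det _).1 h2).ne_zero

/-- The case of `split_relation` in which no rational hyperplane contains infinitely many points.
By `subspace_field` the weights of any `M` independent forms have nonnegative sum at every embedding,
and summing over the embeddings gives equality; exchanging forms between frames then shows that a
linear relation can only involve forms of equal weight. -/
lemma split_base {K : Type*} [Field K] [NumberField K] {E : Type*} [Fintype E] {M : ℕ}
    (Λ : E → Fin M → K) (hsep : ∀ v : Fin M → K, (∀ e, ∑ l, Λ e l * v l = 0) → v = 0)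
    (w : E → (K →+* ℂ) → ℝ) (hw : ∀ e, ∑ φ, w e φ = 0)
    (x : ℕ → Fin M → ℤ) (q : ℕ → ℝ) (hq : Filter.Tendsto q Filter.atTop Filter.atTop)
    (hb : ∀ ε > 0, ∀ᶠ j in Filter.atTop, ∀ e φ,
      ‖φ (∑ l, Λ e l * (x j l : K))‖ ≤ Real.exp (q j * (w e φ + ε)))
    (hψ : ∀ ψ : Fin M → ℤ, ψ ≠ 0 → {j | ∑ l, ψ l * x j l = 0}.Finite)
    (c : E → K) (hc : ∀ j, ∑ e, c e * ∑ l, Λ e l * (x j l : K) = 0) (χ : (K →+* ℂ) → ℝ) (j : ℕ) :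
    ∑ e, (if w e = χ then c e else 0) * ∑ l, Λ e l * (x j l : K) = 0 := by
  classical
  -- the weights of any frame sum to zero at every embedding
  have hframe : ∀ s : Fin M → E, (Matrix.of fun i l => Λ (s i) l).det ≠ 0 →
      ∀ φ, ∑ i, w (s i) φ = 0 := by
    intro s hs
    have hnn : ∀ φ, 0 ≤ ∑ i, w (s i) φ := fun φ =>
      subspace_field (Matrix.of fun i l => Λ (s i) l) hs φ (fun i => w (s i) φ) x q hq
        (fun ε hε => by
          filter_upwards [hb ε hε] with j hj i
          exact hj (s i) φ) hψ
    have htot : ∑ φ, ∑ i, w (s i) φ = 0 := by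
      rw [Finset.sum_comm]
      exact Finset.sum_eq_zero fun i _ => hw _
    exact fun φ => (Finset.sum_eq_zero_iff_of_nonneg fun φ _ => hnn φ).1 htot φ (Finset.mem_univ _)
  obtain ⟨s, hs⟩ := exists_frame Λ hsep
  set R : Matrix (Fin M) (Fin M) K := Matrix.of fun i l => Λ (s i) l with hR
  have hunit : IsUnit R.det := isUnit_iff_ne_zero.2 hs
  set a : E → Fin M → K := fun e => Matrix.vecMul (Λ e) R⁻¹ with ha
  have hΛ : ∀ e, Λ e = ∑ i, a e i • R i := by
    intro e
    have : Matrix.vecMul (a e) R = Λ e := by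
      rw [ha, Matrix.vecMul_vecMul, Matrix.nonsing_inv_mul _ hunit, Matrix.vecMul_one]
    rw [← this, Matrix.vecMul_eq_sum]
  have hexch : ∀ e i, a e i ≠ 0 → w e = w (s i) := by
    intro e i hi
    have h1 : (Matrix.of fun i' l => Λ (Function.update s i e i') l) = R.updateRow i (Λ e) := by
      ext i' l
      by_cases h : i' = i
      · subst h; simp [Matrix.updateRow_self]
      · simp [Matrix.updateRow_ne h, Function.update_of_ne h, hR]
    have h2 := hframe (Function.update s i e) (by
      rw [h1, hΛ e, Matrix.det_updateRow_sum]
      exact mul_ne_zero hi hs)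
    funext φ
    have h3 := hframe s hs φ
    have h4 := h2 φ
    rw [← Finset.add_sum_erase _ _ (Finset.mem_univ i)] at h3 h4
    rw [Function.update_self] at h4
    have h5 : ∑ i' ∈ Finset.univ.erase i, w (Function.update s i e i') φ =
        ∑ i' ∈ Finset.univ.erase i, w (s i') φ :=
      Finset.sum_congr rfl fun i' hi' => by
        rw [Function.update_of_ne (Finset.ne_of_mem_erase hi')]
    rw [h5] at h4
    linarith
  -- the relation holds identically
  have hrel : ∀ l, ∑ e, c e * Λ e l = 0 := by
    set v : Fin M → K := fun l => ∑ e, c e * Λ e l with hv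
    have hvx : ∀ j, ∑ l, v l * (x j l : K) = 0 := by
      intro j
      rw [← hc j]
      simp only [hv, Finset.sum_mul, Finset.mul_sum]
      rw [Finset.sum_comm]
      exact Finset.sum_congr rfl fun _ _ => Finset.sum_congr rfl fun _ _ => by ring
    let b := Module.finBasis ℚ K
    have hz : ∀ i l, b.repr (v l) i = 0 := by
      intro i
      by_contra hcon
      set u : Fin M → ℚ := fun l => b.repr (v l) i with hu
      have hux : ∀ j, ∑ l, u l * (x j l : ℚ) = 0 := by
        intro j
        have h1 := congrArg (fun z => b.repr z i) (hvx j)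
        simp only [map_sum, map_zero, Finsupp.coe_zero, Pi.zero_apply, Finsupp.coe_finsetSum,
          Finset.sum_apply] at h1
        rw [← h1]
        refine Finset.sum_congr rfl fun l _ => ?_
        have : v l * (x j l : K) = (x j l : ℚ) • v l := by
          rw [Algebra.smul_def]; simp [mul_comm]
        rw [this, map_smul, Finsupp.smul_apply, smul_eq_mul, mul_comm]
      -- clear denominators
      set D : ℕ := ∏ l, (u l).den with hD
      have hD0 : D ≠ 0 := Finset.prod_ne_zero_iff.2 fun l _ => (u l).den_nz
      have hinteg : ∀ l, ∃ z : ℤ, (z : ℚ) = D * u l := by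
        intro l
        obtain ⟨t, ht⟩ : (u l).den ∣ D := Finset.dvd_prod_of_mem (fun l => (u l).den) (Finset.mem_univ l)
        refine ⟨t * (u l).num, ?_⟩
        rw [ht]
        push_cast
        rw [mul_comm ((u l).den : ℚ), mul_assoc, Rat.den_mul_eq_num]
      choose ψ hψe using hinteg
      have hψ0 : ψ ≠ 0 := by
        intro h0
        apply hcon
        intro l
        have := hψe l
        rw [h0] at this
        simp only [Pi.zero_apply, Int.cast_zero] at this
        rcases mul_eq_zero.1 this.symm with h | h
        · exact absurd h (by exact_mod_cast hD0)
        · exact h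
      have hall : {j | ∑ l, ψ l * x j l = 0} = Set.univ := by
        ext j
        simp only [Set.mem_ofPred_eq, Set.mem_univ, iff_true]
        have : ((∑ l, ψ l * x j l : ℤ) : ℚ) = 0 := by
          push_cast
          simp only [hψe, mul_assoc]
          rw [← Finset.mul_sum, hux, mul_zero]
        exact_mod_cast this
      have := hψ ψ hψ0
      rw [hall] at this
      exact Set.infinite_univ this
    intro l
    have : b.repr (v l) = 0 := by ext i; simpa using hz i l
    exact (b.repr.map_eq_zero_iff).1 this
  have hcoef : ∀ i, ∑ e, c e * a e i = 0 := by
    have h1 : Matrix.vecMul (fun i => ∑ e, c e * a e i) R = 0 := by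
      ext l
      rw [Pi.zero_apply, ← hrel l]
      simp only [Matrix.vecMul, dotProduct, Finset.sum_mul]
      rw [Finset.sum_comm]
      refine Finset.sum_congr rfl fun e _ => ?_
      rw [hΛ e, Finset.sum_apply, Finset.mul_sum]
      exact Finset.sum_congr rfl fun i _ => by simp [mul_assoc]
    have h2 := congrArg (fun v => Matrix.vecMul v R⁻¹) h1
    rw [Matrix.vecMul_vecMul, Matrix.mul_nonsing_inv _ hunit, Matrix.vecMul_one,
      Matrix.zero_vecMul] at h2
    exact fun i => congrFun h2 i
  have hcoef' : ∀ i, ∑ e, (if w e = χ then c e else 0) * a e i = 0 := by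
    intro i
    by_cases hi : w (s i) = χ
    · rw [← hcoef i]
      refine Finset.sum_congr rfl fun e _ => ?_
      by_cases hae : a e i = 0
      · simp [hae]
      · rw [if_pos ((hexch e i hae).trans hi)]
    · refine Finset.sum_eq_zero fun e _ => ?_
      by_cases hae : a e i = 0
      · simp [hae]
      · rw [if_neg (by rw [hexch e i hae]; exact hi), zero_mul]
  calc ∑ e, (if w e = χ then c e else 0) * ∑ l, Λ e l * (x j l : K)
      = ∑ i, (∑ e, (if w e = χ then c e else 0) * a e i) * ∑ l, R i l * (x j l : K) := by
        simp only [Finset.sum_mul]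
        rw [Finset.sum_comm]
        refine Finset.sum_congr rfl fun e _ => ?_
        have : ∑ l, Λ e l * (x j l : K) = ∑ i, a e i * ∑ l, R i l * (x j l : K) := by
          conv_lhs => rw [hΛ e]
          simp only [Finset.sum_apply, Finset.sum_mul, Finset.mul_sum, Pi.smul_apply, smul_eq_mul]
          rw [Finset.sum_comm]
          exact Finset.sum_congr rfl fun _ _ => Finset.sum_congr rfl fun _ _ => by ring
        rw [this, Finset.mul_sum]
        exact Finset.sum_congr rfl fun _ _ => by ring
    _ = 0 := Finset.sum_eq_zero fun i _ => by rw [hcoef', zero_mul]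

/-- A linear relation between the values of linear forms at integral points splits, along a
subsequence, into relations between forms with the same growth vector `w e`.  If infinitely many points
lie on a rational hyperplane, the dimension `M` drops; otherwise `split_base` applies. -/
theorem split_relation {K : Type*} [Field K] [NumberField K] {E : Type*} [Fintype E]
    (w : E → (K →+* ℂ) → ℝ) (hw : ∀ e, ∑ φ, w e φ = 0) (c : E → K) (M : ℕ) :
    ∀ (Λ : E → Fin M → K) (hsep : ∀ v : Fin M → K, (∀ e, ∑ l, Λ e l * v l = 0) → v = 0)
    (x : ℕ → Fin M → ℤ) (q : ℕ → ℝ) (hq : Filter.Tendsto q Filter.atTop Filter.atTop)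
    (hb : ∀ ε > 0, ∀ᶠ j in Filter.atTop, ∀ e φ,
      ‖φ (∑ l, Λ e l * (x j l : K))‖ ≤ Real.exp (q j * (w e φ + ε)))
    (hc : ∀ j, ∑ e, c e * ∑ l, Λ e l * (x j l : K) = 0),
    ∃ θ : ℕ → ℕ, StrictMono θ ∧ ∀ (χ : (K →+* ℂ) → ℝ) (j : ℕ),
      ∑ e, (open Classical in if w e = χ then c e else 0) * ∑ l, Λ e l * (x (θ j) l : K) = 0 := by
  classical
  induction M with
  | zero =>
    intro Λ hsep x q hq hb hc
    exact ⟨id, strictMono_id, fun χ j => by simp⟩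
  | succ M ih =>
    intro Λ hsep x q hq hb hc
    by_cases hψ : ∀ ψ : Fin (M + 1) → ℤ, ψ ≠ 0 → {j | ∑ l, ψ l * x j l = 0}.Finite
    · exact ⟨id, strictMono_id, fun χ j => split_base Λ hsep w hw x q hq hb hψ c hc χ j⟩
    push Not at hψ
    obtain ⟨ψ, hψ0, hinf⟩ := hψ
    have hinf : {j | ∑ l, ψ l * x j l = 0}.Infinite := hinf
    obtain ⟨l0, hl0⟩ : ∃ l0, ψ l0 ≠ 0 := Function.ne_iff.1 hψ0
    have hl0K : (ψ l0 : K) ≠ 0 := by exact_mod_cast hl0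
    obtain ⟨θ0, hθ0, hθψ⟩ := Filter.extraction_of_frequently_atTop
      (Nat.frequently_atTop_iff_infinite.2 hinf)
    set Λ' : E → Fin M → K := fun e l =>
      Λ e (l0.succAbove l) - Λ e l0 * (ψ (l0.succAbove l) : K) / (ψ l0 : K) with hΛ'
    have key : ∀ (e : E) (v : Fin (M + 1) → K), ∑ l, (ψ l : K) * v l = 0 →
        ∑ l, Λ e l * v l = ∑ l, Λ' e l * v (l0.succAbove l) := by
      intro e v hv
      rw [Fin.sum_univ_succAbove _ l0] at hv ⊢
      have h1 : v l0 = -(∑ l, (ψ (l0.succAbove l) : K) * v (l0.succAbove l)) / (ψ l0 : K) := by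
        rw [eq_div_iff hl0K]; linear_combination hv
      rw [h1]
      simp only [hΛ', sub_mul, Finset.sum_sub_distrib]
      rw [neg_div, Finset.sum_div, mul_neg, Finset.mul_sum, sub_eq_neg_add]
      congr 2
      exact Finset.sum_congr rfl fun _ _ => by ring
    have keyx : ∀ e j, ∑ l, Λ e l * (x (θ0 j) l : K) =
        ∑ l, Λ' e l * (x (θ0 j) (l0.succAbove l) : K) := fun e j =>
      key e (fun l => (x (θ0 j) l : K)) (by exact_mod_cast congrArg (Int.cast : ℤ → K) (hθψ j))
    obtain ⟨θ, hθ, hres⟩ := ih Λ' (by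
        intro v hv
        set v' : Fin (M + 1) → K := l0.insertNth
          (-(∑ l, (ψ (l0.succAbove l) : K) * v l) / (ψ l0 : K)) v with hv'
        have h1 : ∑ l, (ψ l : K) * v' l = 0 := by
          rw [Fin.sum_univ_succAbove _ l0]
          simp only [hv', Fin.insertNth_apply_same, Fin.insertNth_apply_succAbove]
          field_simp
          ring
        have h2 := hsep v' (fun e => by
          rw [key e v' h1]
          simp only [hv', Fin.insertNth_apply_succAbove]
          exact hv e)
        ext l
        have := congrFun h2 (l0.succAbove l)
        simpa [hv'] using this)
      (fun j l => x (θ0 j) (l0.succAbove l)) (fun j => q (θ0 j)) (hq.comp hθ0.tendsto_atTop)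
      (by
        intro ε hε
        filter_upwards [hθ0.tendsto_atTop.eventually (hb ε hε)] with j hj e φ
        rw [← keyx]
        exact hj e φ)
      (by
        intro j
        simp only [← keyx]
        exact hc _)
    refine ⟨θ0 ∘ θ, hθ0.comp hθ, fun χ j => ?_⟩
    simp only [Function.comp_apply, keyx]
    exact hres χ j

end APC

/-! ### Spectral decomposition of a recurrence sequence -/

namespace APC
open Polynomial

/-- The shift operator `u ↦ (n ↦ u (n + 1))` on two-sided sequences. -/
def seqShift (K : Type*) [Field K] : Module.End K (ℤ → K) := LinearMap.funLeft K K (fun n => n + 1)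

section
variable {K : Type*} [Field K]

lemma seqShift_apply (u : ℤ → K) (n : ℤ) : seqShift K u n = u (n + 1) := rfl

lemma seqShift_pow_apply (u : ℤ → K) (i : ℕ) (n : ℤ) : (seqShift K ^ i) u n = u (n + i) := by
  induction i generalizing n with
  | zero => simp
  | succ i ih =>
    rw [pow_succ', Module.End.mul_apply, seqShift_apply, ih]
    congr 1; push_cast; ring

lemma aeval_shift (g : K[X]) (N : ℕ) (hN : g.natDegree < N) (u : ℤ → K) (n : ℤ) :
    aeval (seqShift K) g u n = ∑ i ∈ Finset.range N, g.coeff i * u (n + i) := by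
  rw [aeval_eq_sum_range' hN, LinearMap.sum_apply, Finset.sum_apply]
  refine Finset.sum_congr rfl fun i _ => ?_
  rw [LinearMap.smul_apply, Pi.smul_apply, seqShift_pow_apply, smul_eq_mul]

lemma aeval_shift_mul (g h : K[X]) (u : ℤ → K) :
    aeval (seqShift K) (g * h) u = aeval (seqShift K) g (aeval (seqShift K) h u) := by
  rw [map_mul, Module.End.mul_apply]

/-- Every polynomial is a difference `p'(n + 1) - p'(n)`. -/
lemma antidiff [CharZero K] (p : K[X]) :
    ∃ p' : K[X], ∀ n : ℤ, p'.eval ((n : K) + 1) - p'.eval (n : K) = p.eval (n : K) := by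
  induction p using Polynomial.induction_on' with
  | add p r hp hr =>
    obtain ⟨p', hp'⟩ := hp
    obtain ⟨r', hr'⟩ := hr
    refine ⟨p' + r', fun n => ?_⟩
    rw [eval_add, eval_add, eval_add, ← hp', ← hr']; ring
  | monomial k a =>
    refine ⟨C (a / ((k : K) + 1)) * (Polynomial.bernoulli (k + 1)).map (algebraMap ℚ K), fun n => ?_⟩
    have h1 := Polynomial.bernoulli_eval_one_add (k + 1) (n : ℚ)
    have h2 := congrArg (algebraMap ℚ K) h1
    have h3 : ∀ z : ℚ, eval (algebraMap ℚ K z) ((Polynomial.bernoulli (k + 1)).map (algebraMap ℚ K)) =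
        algebraMap ℚ K ((Polynomial.bernoulli (k + 1)).eval z) := fun z => by
      rw [eval_map, eval₂_at_apply]
    have h4 : ((n : K) + 1) = algebraMap ℚ K (1 + (n : ℚ)) := by simp [add_comm]
    have h5 : (n : K) = algebraMap ℚ K (n : ℚ) := by simp
    rw [eval_mul, eval_mul, eval_C, eval_C, h4, h5, h3, h3, h2, ← h5, eval_monomial]
    have : (k : K) + 1 ≠ 0 := by exact_mod_cast Nat.succ_ne_zero k
    simp
    field_simp
    ring

/-- Sequences killed by `(S - α)^m` are of the form `α^n p(n)` with `p` a polynomial. -/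
lemma exp_poly [CharZero K] (α : K) (hα : α ≠ 0) (m : ℕ) :
    ∀ u : ℤ → K, aeval (seqShift K) ((X - C α) ^ m) u = 0 →
      ∃ p : K[X], ∀ n : ℤ, u n = α ^ n * p.eval (n : K) := by
  induction m with
  | zero =>
    intro u hu
    refine ⟨0, fun n => ?_⟩
    have := congrFun hu n
    simpa using this
  | succ m ih =>
    intro u hu
    rw [pow_succ, aeval_shift_mul] at hu
    obtain ⟨p, hp⟩ := ih _ hu
    have hp' : ∀ n, u (n + 1) - α * u n = α ^ n * p.eval (n : K) := by
      intro n
      rw [← hp n]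
      simp [seqShift_apply, Module.algebraMap_end_apply]
    obtain ⟨p', hpp⟩ := antidiff p
    set v : ℤ → K := fun n => u n / α ^ n - α⁻¹ * p'.eval (n : K) with hv
    have hvs : ∀ n, v (n + 1) = v n := by
      intro n
      have h1 := hp' n
      have h2 := hpp n
      have h3 : u (n + 1) = α * u n + α ^ n * p.eval (n : K) := by linear_combination h1
      have h4 : α ^ n ≠ 0 := zpow_ne_zero _ hα
      simp only [hv]
      rw [h3, ← h2, zpow_add_one₀ hα]
      push_cast
      field_simp
      ring
    have hvc : ∀ n, v n = v 0 := by
      intro n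
      induction n using Int.induction_on with
      | zero => rfl
      | succ i hi => rw [hvs, hi]
      | pred i hi => rw [← hvs, sub_add_cancel, hi]
    refine ⟨C (v 0) + C α⁻¹ * p', fun n => ?_⟩
    have h4 : α ^ n ≠ 0 := zpow_ne_zero _ hα
    rw [eval_add, eval_mul, eval_C, eval_C, ← hvc n]
    simp only [hv]
    field_simp
    ring

end

/-- Spectral decomposition of a linear recurrence sequence. The linear forms `Λ (α, i)` applied to
windows of `f` give sequences `α^n p(n)`, they separate points, and `f` itself is the sum over the
roots of components `α^n p(n)` with `p ≠ 0`. -/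
theorem spectral {K : Type*} [Field K] [CharZero K] (d : ℕ) (hd : 1 ≤ d) (Q : K[X])
    (hQd : Q.natDegree = d) (s : Finset K)
    (mu : K → ℕ) (hQ : Q = ∏ α ∈ s, (X - C α) ^ mu α) (hmu : ∀ α ∈ s, 0 < mu α)
    (h0 : ∀ α ∈ s, α ≠ 0) (f : ℤ → K) (hf : aeval (seqShift K) Q f = 0)
    (hmin : ∀ α ∈ s, ∀ G, Q = (X - C α) * G → aeval (seqShift K) G f ≠ 0) :
    ∃ (Λ : s × Fin d → Fin d → K) (c : s × Fin d → K),
      (∀ v : Fin d → K, (∀ e, ∑ l, Λ e l * v l = 0) → v = 0) ∧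
      (∀ e, ∃ p : K[X], ∀ n : ℤ, ∑ l : Fin d, Λ e l * f (n + (l : ℕ)) = (e.1 : K) ^ n * p.eval (n : K)) ∧
      (∀ n, ∑ e, c e * ∑ l : Fin d, Λ e l * f (n + (l : ℕ)) = f n) ∧
      (∀ α : s, ∃ p : K[X], p ≠ 0 ∧ ∀ n : ℤ,
        ∑ i, c (α, i) * ∑ l : Fin d, Λ (α, i) l * f (n + (l : ℕ)) = (α : K) ^ n * p.eval (n : K)) := by
  classical
  set G : K → K[X] := fun α => ∏ β ∈ s.erase α, (X - C β) ^ mu β with hG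
  have hGm : ∀ α, (G α).Monic := fun α => monic_prod_of_monic _ _ fun β _ => (monic_X_sub_C β).pow _
  have hQG : ∀ α ∈ s, Q = (X - C α) ^ mu α * G α := fun α hα => by
    rw [hQ, ← Finset.mul_prod_erase _ _ hα]
  have hQm : Q.Monic := by rw [hQ]; exact monic_prod_of_monic _ _ fun β _ => (monic_X_sub_C β).pow _
  have hQdeg : Q.degree = d := by rw [degree_eq_natDegree hQm.ne_zero, hQd]
  have hdegG : ∀ α ∈ s, mu α + (G α).natDegree = d := fun α hα => by
    have h1 := congrArg natDegree (hQG α hα)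
    rw [hQd, ((monic_X_sub_C α).pow _).natDegree_mul (hGm α), (monic_X_sub_C α).natDegree_pow,
      natDegree_X_sub_C, mul_one] at h1
    exact h1.symm
  have hmud : ∀ α ∈ s, mu α ≤ d := fun α hα => by have := hdegG α hα; omega
  set g : s × Fin d → K[X] := fun e => if (e.2 : ℕ) < mu e.1 then X ^ (e.2 : ℕ) * G e.1 else 0 with hg
  have hgdeg : ∀ e, (g e).natDegree < d := by
    intro e
    simp only [hg]
    split_ifs with h
    · rw [(monic_X_pow _).natDegree_mul (hGm _), natDegree_X_pow]
      have := hdegG e.1 e.1.2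
      omega
    · rw [natDegree_zero]; omega
  -- partial fractions
  have hpf : ∀ k : ℕ, k < d → ∃ r : K → K[X], (∀ α ∈ s, (r α).degree < (mu α : ℕ)) ∧
      (X : K[X]) ^ k = ∑ α ∈ s, r α * G α := by
    intro k hk
    obtain ⟨q, r, hr, hX⟩ := eq_quo_mul_prod_add_sum_rem_mul_prod (s := s) ((X : K[X]) ^ k)
      (g := fun α => (X - C α) ^ mu α) (fun α _ => (monic_X_sub_C α).pow _)
      (fun α _ β _ hab => (isCoprime_X_sub_C_of_isUnit_sub (sub_ne_zero.2 hab).isUnit).pow)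
    have hr' : ∀ α ∈ s, (r α).degree < (mu α : ℕ) := fun α hα => by
      have := hr α hα
      rwa [degree_pow, degree_X_sub_C, nsmul_one] at this
    rw [← hQ] at hX
    have hsum : (∑ α ∈ s, r α * G α).degree < d := by
      rw [← mem_degreeLT]
      refine Submodule.sum_mem _ fun α hα => ?_
      rw [mem_degreeLT]
      by_cases hrz : r α = 0
      · rw [hrz, zero_mul, degree_zero]; exact WithBot.bot_lt_coe d
      rw [degree_mul, degree_eq_natDegree (hGm α).ne_zero, degree_eq_natDegree hrz]
      have h1 := hr' α hα
      rw [degree_eq_natDegree hrz] at h1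
      have h2 : (r α).natDegree < mu α := by exact_mod_cast h1
      have h3 := hdegG α hα
      exact_mod_cast (by omega : (r α).natDegree + (G α).natDegree < d)
    have hq : q = 0 := by
      by_contra hq
      have h1 : q * Q = X ^ k - ∑ α ∈ s, r α * G α := by rw [hX]; ring
      have h2 : (q * Q).degree < d := by
        rw [h1]
        refine (degree_sub_le _ _).trans_lt (max_lt ?_ hsum)
        rw [degree_X_pow]; exact_mod_cast hk
      rw [degree_mul, hQdeg, degree_eq_natDegree hq] at h2
      have : q.natDegree + d < d := by exact_mod_cast h2
      omega
    rw [hq, zero_mul, zero_add] at hX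
    exact ⟨r, hr', hX⟩
  choose! r hr hX using hpf
  set cc : ℕ → s × Fin d → K := fun k e => (r k e.1).coeff e.2 with hcc
  have hcomp : ∀ k, k < d → ∀ α : s, ∑ i : Fin d, C (cc k (α, i)) * g (α, i) = r k α * G α := by
    intro k hk α
    have hrd : (r k α).natDegree < d := by
      by_cases hz : r k α = 0
      · rw [hz, natDegree_zero]; omega
      have h1 := hr k hk α α.2
      rw [degree_eq_natDegree hz] at h1
      have h2 : (r k α).natDegree < mu α := by exact_mod_cast h1
      exact h2.trans_le (hmud α α.2)
    conv_rhs => rw [(r k α).as_sum_range' d hrd, Finset.sum_mul,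
      ← Fin.sum_univ_eq_sum_range (fun i => monomial i ((r k α).coeff i) * G α) d]
    refine Finset.sum_congr rfl fun i _ => ?_
    simp only [hcc, hg]
    split_ifs with h
    · rw [← C_mul_X_pow_eq_monomial]; ring
    · have : (r k α).coeff i = 0 := coeff_eq_zero_of_degree_lt
        ((hr k hk α α.2).trans_le (by exact_mod_cast not_lt.1 h))
      rw [this]; simp
  have hXk : ∀ k, k < d → (X : K[X]) ^ k = ∑ e, C (cc k e) * g e := by
    intro k hk
    rw [Fintype.sum_prod_type]
    simp only [hcomp k hk]
    rw [hX k hk, ← Finset.sum_coe_sort s (fun α => r k α * G α)]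
  have hwin : ∀ e n, ∑ l : Fin d, (g e).coeff l * f (n + (l : ℕ)) = aeval (seqShift K) (g e) f n := by
    intro e n
    rw [aeval_shift _ d (hgdeg e), Fin.sum_univ_eq_sum_range (fun l => (g e).coeff l * f (n + (l : ℕ)))]
  have hkill : ∀ α ∈ s, ∀ t : K[X], aeval (seqShift K) ((X - C α) ^ mu α) (aeval (seqShift K) (t * G α) f) = 0 := by
    intro α hα t
    rw [← aeval_shift_mul]
    have : (X - C α) ^ mu α * (t * G α) = t * Q := by rw [hQG α hα]; ring
    rw [this, aeval_shift_mul, hf, map_zero]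
  refine ⟨fun e l => (g e).coeff l, cc 0, ?_, ?_, ?_, ?_⟩
  · intro v hv
    ext k
    have h1 : ∀ l : Fin d, (if (l : ℕ) = k then (1 : K) else 0) = ∑ e, cc k e * (g e).coeff l := by
      intro l
      have := congrArg (fun z => coeff z (l : ℕ)) (hXk k k.2)
      simpa [coeff_X_pow, finsetSum_coeff] using this
    have h2 : v k = ∑ l : Fin d, (if (l : ℕ) = k then (1 : K) else 0) * v l := by
      simp only [ite_mul, one_mul, zero_mul, Fin.val_eq_val]
      simp
    rw [h2]
    simp only [h1, Finset.sum_mul]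
    rw [Finset.sum_comm]
    refine Finset.sum_eq_zero fun e _ => ?_
    simp only [mul_assoc]
    rw [← Finset.mul_sum, hv e, mul_zero]
  · intro e
    simp only [hwin]
    refine exp_poly (e.1 : K) (h0 _ e.1.2) (mu e.1) _ ?_
    simp only [hg]
    split_ifs with h
    · exact hkill _ e.1.2 _
    · simp
  · intro n
    simp only [hwin]
    have h1 := congrArg (fun z => aeval (seqShift K) z f n) (hXk 0 hd)
    simp only [pow_zero, map_one, Module.End.one_apply, map_sum, map_mul, LinearMap.sum_apply,
      Finset.sum_apply, Module.End.mul_apply, aeval_C, Module.algebraMap_end_apply, Pi.smul_apply,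
      smul_eq_mul] at h1
    exact h1.symm
  · intro α
    simp only [hwin]
    have h1 : ∀ n, ∑ i, cc 0 (α, i) * aeval (seqShift K) (g (α, i)) f n =
        aeval (seqShift K) (r 0 α * G α) f n := by
      intro n
      rw [← hcomp 0 hd α]
      simp only [map_sum, map_mul, LinearMap.sum_apply,
        Finset.sum_apply, Module.End.mul_apply, aeval_C, Module.algebraMap_end_apply, Pi.smul_apply,
        smul_eq_mul]
    simp only [h1]
    obtain ⟨p, hp⟩ := exp_poly (α : K) (h0 _ α.2) (mu α) _ (hkill α α.2 (r 0 α))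
    refine ⟨p, ?_, hp⟩
    rintro rfl
    have hz : aeval (seqShift K) (r 0 α * G α) f = 0 := by
      ext n; rw [hp n]; simp
    have hGf : aeval (seqShift K) (G α) f = 0 := by
      have h2 : G α = ∑ β ∈ s, G α * (r 0 β * G β) := by
        rw [← Finset.mul_sum, ← hX 0 hd, pow_zero, mul_one]
      rw [h2, map_sum, LinearMap.sum_apply]
      refine Finset.sum_eq_zero fun β hβ => ?_
      by_cases hab : β = α
      · subst hab
        rw [aeval_shift_mul, hz, map_zero]
      · obtain ⟨t, ht⟩ : (X - C β) ^ mu β ∣ G α :=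
          Finset.dvd_prod_of_mem (fun β => (X - C β) ^ mu β) (Finset.mem_erase.2 ⟨hab, hβ⟩)
        have : G α * (r 0 β * G β) = (t * r 0 β) * Q := by
          rw [hQG β hβ, ht]; ring
        rw [this, aeval_shift_mul, hf, map_zero]
    obtain ⟨k, hk⟩ : ∃ k, mu α = k + 1 := Nat.exists_eq_succ_of_ne_zero (hmu α α.2).ne'
    refine hmin α α.2 ((X - C (α : K)) ^ k * G α) (by rw [hQG α α.2, hk]; ring) ?_
    rw [aeval_shift_mul, hGf, map_zero]

end APC

/-! ### Algebraic units and growth of exponential polynomials -/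

namespace APC
open Polynomial Filter Topology

/-- The roots of the companion polynomial of an integer-valued two-sided recurrence of minimal
order are algebraic units: a suitable image `u` of `f` is a nonzero eigenvector of the shift, whose
values `α ^ n * u 0`, `n ∈ ℤ`, all lie in a finitely generated group. -/
lemma root_integral {K : Type*} [Field K] (f : ℤ → ℤ) (α : K) (hα : α ≠ 0) (G : K[X])
    (hf : aeval (seqShift K) ((X - C α) * G) (fun n => (f n : K)) = 0)
    (hG : aeval (seqShift K) G (fun n => (f n : K)) ≠ 0) :
    IsIntegral ℤ α ∧ IsIntegral ℤ α⁻¹ := by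
  set u := aeval (seqShift K) G (fun n => (f n : K)) with hu
  have h1 : ∀ n, u (n + 1) = α * u n := by
    intro n
    rw [aeval_shift_mul, ← hu] at hf
    have := congrFun hf n
    simp [seqShift_apply, Module.algebraMap_end_apply] at this
    linear_combination this
  have h2 : ∀ n, u n = α ^ n * u 0 := by
    intro n
    induction n using Int.induction_on with
    | zero => simp
    | succ i hi => rw [h1, hi, zpow_add_one₀ hα]; ring
    | pred i hi =>
      have := h1 (-(i : ℤ) - 1)
      rw [sub_add_cancel, hi] at this
      rw [zpow_sub_one₀ hα]
      field_simp
      linear_combination -this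
  have hu0 : u 0 ≠ 0 := fun h => hG (funext fun n => by rw [h2, h, mul_zero]; rfl)
  set L : Submodule ℤ K := Submodule.span ℤ (G.coeff '' (Finset.range (G.natDegree + 1))) with hL
  have hLfg : L.FG := by
    refine Submodule.fg_span ?_
    exact (Finset.finite_toSet _).image _
  have hmem : ∀ n, u n ∈ L := by
    intro n
    rw [hu, aeval_shift G _ (Nat.lt_succ_self _)]
    refine Submodule.sum_mem _ fun i hi => ?_
    have : G.coeff i * (f (n + i) : K) = f (n + i) • G.coeff i := by
      rw [zsmul_eq_mul, mul_comm]
    rw [this]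
    exact Submodule.smul_mem _ _ (Submodule.subset_span ⟨i, hi, rfl⟩)
  set N : Submodule ℤ K := Submodule.span ℤ (Set.range u) with hN
  have hNL : N ≤ L := Submodule.span_le.2 (by rintro _ ⟨n, rfl⟩; exact hmem n)
  have hNfg : N.FG := by
    have : Module.Finite ℤ L := Module.Finite.iff_fg.2 hLfg
    have := isNoetherian_submodule.1 (isNoetherian_of_isNoetherianRing_of_finite ℤ L) N hNL
    exact this
  have hNb : N ≠ ⊥ := by
    intro h
    have : u 0 ∈ N := Submodule.subset_span ⟨0, rfl⟩
    rw [h] at this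
    exact hu0 (by simpa using this)
  have key : ∀ (β : K) (δ : ℤ), (∀ n, β * u n = u (n + δ)) → IsIntegral ℤ β := by
    intro β δ hβ
    refine isIntegral_of_smul_mem_submodule N hNb hNfg β fun n hn => ?_
    induction hn using Submodule.span_induction with
    | mem x hx =>
      obtain ⟨n, rfl⟩ := hx
      rw [smul_eq_mul, hβ]
      exact Submodule.subset_span ⟨_, rfl⟩
    | zero => simp
    | add x y _ _ hx hy => rw [smul_add]; exact add_mem hx hy
    | smul c x _ hx => rw [smul_comm]; exact Submodule.smul_mem _ _ hx
  refine ⟨key α 1 fun n => (h1 n).symm, key α⁻¹ (-1) fun n => ?_⟩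
  have := h1 (n + -1)
  rw [neg_add_cancel_right] at this
  rw [this]; field_simp

variable {K : Type*} [Field K] [NumberField K]

/-- The product formula for an algebraic unit. -/
lemma sum_log_unit {α : K} (h0 : α ≠ 0) (h1 : IsIntegral ℤ α) (h2 : IsIntegral ℤ α⁻¹) :
    ∑ φ : K →+* ℂ, Real.log ‖φ α‖ = 0 := by
  let U : (NumberField.RingOfIntegers K)ˣ := ⟨⟨α, h1⟩, ⟨α⁻¹, h2⟩,
    Subtype.ext (mul_inv_cancel₀ h0), Subtype.ext (inv_mul_cancel₀ h0)⟩
  have hn : |Algebra.norm ℚ α| = 1 := NumberField.Units.norm (K := K) U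
  have h3 : ∏ φ : K →+* ℂ, ‖φ α‖ = 1 := by
    have := congr_arg (‖·‖) (Algebra.norm_eq_prod_embeddings ℚ ℂ α)
    rw [norm_prod, ← Fintype.prod_equiv (RingHom.equivRatAlgHom K ℂ) (fun f => ‖f α‖)
      (fun φ => ‖φ α‖) fun _ => by simp [RingHom.equivRatAlgHom_apply]] at this
    rw [← this, eq_ratCast, ← Complex.ofReal_ratCast, Complex.norm_real, Real.norm_eq_abs, ← Rat.cast_abs, hn]
    simp
  rw [← Real.log_prod, h3, Real.log_one]
  intro φ _
  simpa using h0

/-- Kronecker's theorem applied to the quotient `α / β`. -/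
lemma root_unity_of_norm_eq {α β : K} (h0 : β ≠ 0) (h1 : IsIntegral ℤ α) (h2 : IsIntegral ℤ β⁻¹)
    (h : ∀ φ : K →+* ℂ, ‖φ α‖ = ‖φ β‖) : ∃ l, 0 < l ∧ (α / β) ^ l = 1 := by
  have h3 : IsIntegral ℤ (α / β) := by rw [div_eq_mul_inv]; exact h1.mul h2
  obtain ⟨n, hn, h⟩ := NumberField.Embeddings.pow_eq_one_of_norm_eq_one K ℂ h3 fun φ => by
    rw [map_div₀, norm_div, h, div_self]
    simpa using h0
  exact ⟨n, hn, h⟩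

/-- Kronecker's theorem: an algebraic integer all of whose conjugates lie in the closed unit disc is
zero or a root of unity. -/
lemma exists_norm_gt_one {α : K} (h0 : α ≠ 0) (h1 : IsIntegral ℤ α)
    (h : ∀ l : ℕ, 0 < l → α ^ l ≠ 1) : ∃ φ : K →+* ℂ, 1 < ‖φ α‖ := by
  by_contra! hc
  obtain ⟨n, hn, h'⟩ := NumberField.Embeddings.pow_eq_one_of_norm_le_one K ℂ h0 h1 hc
  exact h n hn h'

lemma exists_norm_lt_one {α : K} (h0 : α ≠ 0) (hs : ∑ φ : K →+* ℂ, Real.log ‖φ α‖ = 0)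
    (h : ∃ φ : K →+* ℂ, 1 < ‖φ α‖) : ∃ φ : K →+* ℂ, ‖φ α‖ < 1 := by
  by_contra! hc
  obtain ⟨φ, hφ⟩ := h
  have h1 := (Finset.sum_eq_zero_iff_of_nonneg fun ψ _ => Real.log_nonneg (hc ψ)).1 hs φ (Finset.mem_univ _)
  exact (Real.log_pos hφ).ne' h1

lemma poly_growth (p : ℂ[X]) (ε : ℝ) (hε : 0 < ε) :
    ∀ᶠ q : ℝ in atTop, ∀ n : ℤ, 0 ≤ n → (n : ℝ) ≤ q → ‖p.eval (n : ℂ)‖ ≤ Real.exp (ε * q) := by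
  have h1 : (fun q : ℝ => ∑ i ∈ Finset.range (p.natDegree + 1), ‖p.coeff i‖ * q ^ i) =o[atTop]
      fun q => Real.exp (ε * q) := by
    have := Asymptotics.IsLittleO.sum (s := Finset.range (p.natDegree + 1))
      (A := fun i q => ‖p.coeff i‖ * q ^ i) (g' := fun q : ℝ => Real.exp (ε * q)) (l := atTop)
      fun i _ => (isLittleO_pow_exp_pos_mul_atTop i hε).const_mul_left _
    exact this.congr_left fun q => by simp
  have h2 := h1.bound one_pos
  filter_upwards [h2] with q hq n hn hnq
  rw [one_mul, Real.norm_of_nonneg (Real.exp_pos _).le] at hq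
  refine le_trans ?_ ((le_abs_self _).trans hq)
  rw [eval_eq_sum_range]
  refine (norm_sum_le _ _).trans (Finset.sum_le_sum fun i _ => ?_)
  rw [norm_mul, norm_pow]
  have h0 : (0 : ℝ) ≤ n := by exact_mod_cast hn
  have h3 : ‖(n : ℂ)‖ ≤ q := by
    rw [Complex.norm_intCast, abs_of_nonneg h0]; exact hnq
  gcongr

lemma poly_lead (p : ℂ[X]) (q : ℕ → ℝ) (hq : Tendsto q atTop atTop) (u : ℕ → ℤ)
    (hu : Tendsto (fun j => (u j : ℝ) / q j) atTop (𝓝 1)) :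
    Tendsto (fun j => p.eval (u j : ℂ) / (q j : ℂ) ^ p.natDegree) atTop (𝓝 p.leadingCoeff) := by
  have hur : Tendsto (fun j => (u j : ℝ)) atTop atTop := by
    have := hu.pos_mul_atTop one_pos hq
    refine this.congr' ?_
    filter_upwards [hq.eventually_gt_atTop 0] with j hj
    field_simp
  have h1 : Tendsto (fun j => ((u j : ℂ))⁻¹) atTop (𝓝 0) := by
    have := (Complex.continuous_ofReal.tendsto 0).comp (tendsto_inv_atTop_zero.comp hur)
    simpa [Function.comp_def] using this
  have h2 : Tendsto (fun j => (p.reverse).eval ((u j : ℂ))⁻¹) atTop (𝓝 p.leadingCoeff) := by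
    have := (p.reverse.continuous.tendsto 0).comp h1
    rwa [← coeff_zero_eq_eval_zero, coeff_zero_reverse] at this
  have h3 : Tendsto (fun j => ((u j : ℂ) / (q j : ℂ)) ^ p.natDegree) atTop (𝓝 1) := by
    have := ((Complex.continuous_ofReal.tendsto 1).comp hu).pow p.natDegree
    simpa [Function.comp_def] using this
  have h4 := h2.mul h3
  rw [mul_one] at h4
  refine h4.congr' ?_
  filter_upwards [hur.eventually_gt_atTop 0] with j hj
  have hne : (u j : ℂ) ≠ 0 := by exact_mod_cast hj.ne'
  let _ := invertibleOfNonzero hne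
  have := eval₂_reverse_mul_pow (RingHom.id ℂ) (u j : ℂ) p
  rw [invOf_eq_inv] at this
  change eval _ _ * _ = eval _ _ at this
  rw [← this, div_pow]; ring

end APC

/-! ### Relations between spectral components -/

namespace APC
open Polynomial Filter Topology

/-- A subsequence along which the indices, divided by their maximum `q`, converge. -/
lemma exists_ratio_subseq (nn : ℕ → Fin 3 → ℤ) (hinj : Function.Injective nn)
    (hpos : ∀ j h, 0 < nn j h) :
    ∃ (θ : ℕ → ℕ) (q : ℕ → ℝ) (τ : Fin 3 → ℝ), StrictMono θ ∧ Tendsto q atTop atTop ∧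
      (∀ j h, (nn (θ j) h : ℝ) ≤ q j) ∧
      (∀ h, Tendsto (fun j => (nn (θ j) h : ℝ) / q j) atTop (𝓝 (τ h))) ∧
      (∀ h, 0 ≤ τ h) ∧ (∀ h, τ h ≤ 1) ∧ ∃ h, τ h = 1 := by
  set q : ℕ → ℝ := fun j => Finset.univ.sup' Finset.univ_nonempty (fun h => (nn j h : ℝ)) with hq
  have hle : ∀ j h, (nn j h : ℝ) ≤ q j := fun j h =>
    Finset.le_sup' (fun h => (nn j h : ℝ)) (Finset.mem_univ h)
  have hex : ∀ j, ∃ h, (nn j h : ℝ) = q j := fun j => by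
    obtain ⟨h, _, hh⟩ := Finset.exists_mem_eq_sup' (Finset.univ_nonempty) (fun h => (nn j h : ℝ))
    exact ⟨h, hh.symm⟩
  have hqpos : ∀ j, 0 < q j := fun j => lt_of_lt_of_le (by exact_mod_cast hpos j 0) (hle j 0)
  have hqt : Tendsto q atTop atTop := by
    rw [tendsto_atTop]
    intro b
    rw [← Nat.cofinite_eq_atTop, eventually_cofinite]
    refine ((Set.finite_Icc (fun _ : Fin 3 => (0 : ℤ)) (fun _ => ⌊b⌋)).preimage
      hinj.injOn).subset ?_
    intro j hj
    have hj' : q j < b := not_le.1 hj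
    refine ⟨fun h => (hpos j h).le, fun h => ?_⟩
    exact Int.le_floor.2 ((hle j h).trans hj'.le)
  have hmem : ∀ j, (fun h => (nn j h : ℝ) / q j) ∈ Set.Icc (0 : Fin 3 → ℝ) 1 := by
    intro j
    refine ⟨fun h => ?_, fun h => ?_⟩
    · exact div_nonneg (Int.cast_nonneg (hpos j h).le) (hqpos j).le
    · exact (div_le_one (hqpos j)).2 (hle j h)
  obtain ⟨τ, hτ, θ, hθ, hlim⟩ := isCompact_Icc.tendsto_subseq hmem
  have hlim' := tendsto_pi_nhds.1 hlim
  refine ⟨θ, q ∘ θ, τ, hθ, hqt.comp hθ.tendsto_atTop, fun j h => hle _ h, hlim', hτ.1, hτ.2, ?_⟩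
  have h1 : Tendsto (fun j => ∏ h, (1 - (nn (θ j) h : ℝ) / q (θ j))) atTop (𝓝 (∏ h, (1 - τ h))) :=
    tendsto_finsetProd _ fun h _ => (hlim' h).const_sub 1
  have h2 : ∀ j, ∏ h, (1 - (nn (θ j) h : ℝ) / q (θ j)) = 0 := by
    intro j
    obtain ⟨h, hh⟩ := hex (θ j)
    refine Finset.prod_eq_zero (Finset.mem_univ h) ?_
    rw [hh, div_self (hqpos _).ne', sub_self]
  simp only [h2] at h1
  have h3 := tendsto_nhds_unique h1 tendsto_const_nhds
  obtain ⟨h, _, hh⟩ := Finset.prod_eq_zero_iff.1 h3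
  exact ⟨h, by linarith⟩

variable {K : Type*} [Field K] [NumberField K]

/-- The subspace theorem splits a relation between values of `f` into relations between spectral
components whose growth vectors agree. -/
theorem component_relations (d : ℕ) (s : Finset K) (f : ℤ → ℤ)
    (Λ : s × Fin d → Fin d → K) (c : s × Fin d → K)
    (hsep : ∀ v : Fin d → K, (∀ e, ∑ l, Λ e l * v l = 0) → v = 0)
    (hform : ∀ e, ∃ p : K[X], ∀ n : ℤ, ∑ l : Fin d, Λ e l * (f (n + (l : ℕ)) : K) = (e.1 : K) ^ n * p.eval (n : K))
    (hsum : ∀ n, ∑ e, c e * ∑ l : Fin d, Λ e l * (f (n + (l : ℕ)) : K) = f n)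
    (h0 : ∀ α ∈ s, α ≠ 0) (hlog : ∀ α ∈ s, ∑ φ : K →+* ℂ, Real.log ‖φ α‖ = 0)
    (nn : ℕ → Fin 3 → ℤ) (q : ℕ → ℝ) (τ : Fin 3 → ℝ) (hq : Tendsto q atTop atTop)
    (hpos : ∀ j h, 0 < nn j h) (hle : ∀ j h, (nn j h : ℝ) ≤ q j)
    (hτ : ∀ h, Tendsto (fun j => (nn j h : ℝ) / q j) atTop (𝓝 (τ h)))
    (ε : Fin 3 → ℤ) (hrel : ∀ j, ∑ h, ε h * f (nn j h) = 0) :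
    ∃ θ : ℕ → ℕ, StrictMono θ ∧ ∀ (χ : (K →+* ℂ) → ℝ) (j : ℕ),
      ∑ h, ∑ α : s, (open Classical in if (fun φ : K →+* ℂ => τ h * Real.log ‖φ α‖) = χ then (ε h : K) else 0) *
        ∑ i, c (α, i) * ∑ l : Fin d, Λ (α, i) l * (f (nn (θ j) h + (l : ℕ)) : K) = 0 := by
  classical
  choose p hp using hform
  set σ : Fin 3 × Fin d ≃ Fin (3 * d) := finProdFinEquiv
  set Λ' : Fin 3 × (s × Fin d) → Fin (3 * d) → K :=
    fun e l => if (σ.symm l).1 = e.1 then Λ e.2 (σ.symm l).2 else 0 with hΛ'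
  have hΛ'sum : ∀ e (v : Fin (3 * d) → K), ∑ l, Λ' e l * v l = ∑ i, Λ e.2 i * v (σ (e.1, i)) := by
    intro e v
    rw [← σ.sum_comp, Fintype.sum_prod_type]
    simp only [hΛ', Equiv.symm_apply_apply, ite_mul, zero_mul]
    rw [Finset.sum_comm]
    refine Finset.sum_congr rfl fun i _ => ?_
    simp
  set x : ℕ → Fin (3 * d) → ℤ := fun j l => f (nn j (σ.symm l).1 + ((σ.symm l).2 : ℕ)) with hx
  have hxs : ∀ j e, ∑ l, Λ' e l * (x j l : K) = ∑ i : Fin d, Λ e.2 i * (f (nn j e.1 + (i : ℕ)) : K) := by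
    intro j e
    rw [hΛ'sum]
    simp only [hx, Equiv.symm_apply_apply]
  have hgoal1 : ∀ v : Fin (3 * d) → K, (∀ e, ∑ l, Λ' e l * v l = 0) → v = 0 := by
    intro v hv
    have h1 : ∀ h, (fun i => v (σ (h, i))) = 0 := fun h => hsep _ fun e => by
      rw [← hΛ'sum (h, e)]; exact hv _
    ext l
    have := congrFun (h1 (σ.symm l).1) (σ.symm l).2
    simpa using this
  have hgoal2 : ∀ η > 0, ∀ᶠ j in atTop, ∀ (e : Fin 3 × (s × Fin d)) (φ : K →+* ℂ),
      ‖φ (∑ l, Λ' e l * (x j l : K))‖ ≤ Real.exp (q j * (τ e.1 * Real.log ‖φ (e.2.1 : K)‖ + η)) := by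
    intro η hη
    have hall : ∀ e : Fin 3 × (s × Fin d), ∀ φ : K →+* ℂ, ∀ᶠ j in atTop,
        ‖φ (∑ l, Λ' e l * (x j l : K))‖ ≤ Real.exp (q j * (τ e.1 * Real.log ‖φ (e.2.1 : K)‖ + η)) := by
      intro e φ
      have hA : 0 < ‖φ (e.2.1 : K)‖ := by
        rw [norm_pos_iff]; simpa using h0 _ e.2.1.2
      have h1 := hq.eventually (poly_growth ((p e.2).map φ) (η / 2) (half_pos hη))
      have h2 : ∀ᶠ j in atTop, (nn j e.1 : ℝ) / q j * Real.log ‖φ (e.2.1 : K)‖ <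
          τ e.1 * Real.log ‖φ (e.2.1 : K)‖ + η / 2 :=
        ((hτ e.1).mul_const _).eventually_lt_const (by linarith)
      filter_upwards [h1, h2, hq.eventually_gt_atTop 0] with j h1 h2 h3
      have h4 := h1 (nn j e.1) (hpos j e.1).le (hle j e.1)
      rw [hxs, hp, map_mul, norm_mul, map_zpow₀, norm_zpow]
      have h5 : φ (eval (nn j e.1 : K) (p e.2)) = eval (nn j e.1 : ℂ) ((p e.2).map φ) := by
        rw [eval_map, ← map_intCast φ, eval₂_at_apply]
      have h6 : ‖φ (e.2.1 : K)‖ ^ (nn j e.1) = Real.exp (nn j e.1 * Real.log ‖φ (e.2.1 : K)‖) := by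
        rw [← Real.rpow_intCast, Real.rpow_def_of_pos hA, mul_comm]
      rw [h5, h6]
      calc _ ≤ Real.exp (q j * (τ e.1 * Real.log ‖φ (e.2.1 : K)‖ + η / 2)) * Real.exp (η / 2 * q j) := by
            refine mul_le_mul (Real.exp_le_exp.2 ?_) h4 (norm_nonneg _) (Real.exp_pos _).le
            have := mul_le_mul_of_nonneg_left h2.le h3.le
            refine le_trans (le_of_eq ?_) this
            field_simp
        _ = _ := by rw [← Real.exp_add]; ring_nf
    exact eventually_all.2 fun e => eventually_all.2 fun φ => hall e φ
  have hgoal3 : ∀ j, ∑ e : Fin 3 × (s × Fin d), (ε e.1 : K) * c e.2 * ∑ l, Λ' e l * (x j l : K) = 0 := by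
    intro j
    simp only [hxs]
    rw [Fintype.sum_prod_type]
    have h1 : ∀ h, ∑ e, (ε h : K) * c e * ∑ i : Fin d, Λ e i * (f (nn j h + (i : ℕ)) : K) = ε h * f (nn j h) := by
      intro h
      rw [← hsum, Finset.mul_sum]
      exact Finset.sum_congr rfl fun e _ => by ring
    simp only [h1]
    exact_mod_cast hrel j
  obtain ⟨θ, hθ, hres⟩ := split_relation
    (fun (e : Fin 3 × (s × Fin d)) (φ : K →+* ℂ) => τ e.1 * Real.log ‖φ (e.2.1 : K)‖)
    (fun e => by
      rw [← Finset.mul_sum, hlog _ e.2.1.2, mul_zero])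
    (fun e => (ε e.1 : K) * c e.2) (3 * d) Λ' hgoal1 x q hq hgoal2 hgoal3
  refine ⟨θ, hθ, fun χ j => ?_⟩
  have := hres χ j
  simp only [hxs] at this
  rw [Fintype.sum_prod_type] at this
  refine Eq.trans ?_ this
  refine Finset.sum_congr rfl fun h _ => ?_
  rw [Fintype.sum_prod_type]
  refine Finset.sum_congr rfl fun α _ => ?_
  rw [Finset.mul_sum]
  refine Finset.sum_congr rfl fun i _ => ?_
  split_ifs <;> ring

end APC

/-! ### Relations with one, two and three dominant terms -/

namespace APC
open Polynomial Filter Topology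

lemma map_eval_int {K : Type*} [Field K] (φ : K →+* ℂ) (p : K[X]) (n : ℤ) :
    φ (p.eval (n : K)) = (p.map φ).eval (n : ℂ) := by
  rw [eval_map, ← map_intCast φ, eval₂_at_apply]

/-- If `N0` exceeded both `N1` and `N2` by a large amount, the term `β ^ N0` would dominate. -/
lemma three_bound_aux (β : ℂ) (hβ : 1 < ‖β‖) (r0 r1 r2 : ℕ → ℂ) (L : ℂ) (hL : L ≠ 0)
    (h0 : Tendsto r0 atTop (𝓝 L)) (h1 : Tendsto r1 atTop (𝓝 L)) (h2 : Tendsto r2 atTop (𝓝 L))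
    (N0 N1 N2 : ℕ → ℤ)
    (hrel : ∀ j, β ^ N0 j * r0 j + β ^ N1 j * r1 j = 2 * (β ^ N2 j * r2 j)) :
    ∃ C : ℤ, ∀ᶠ j in atTop, N1 j < N0 j → N0 j - N2 j ≤ C := by
  set A := ‖β‖ with hA
  have hA0 : 0 < A := by linarith
  set l := ‖L‖ with hl
  have hl0 : 0 < l := norm_pos_iff.2 hL
  set η := (A - 1) / (2 * (A + 1)) with hη
  have hη0 : 0 < η := div_pos (by linarith) (by linarith)
  have hη1 : η < 1 := by rw [hη, div_lt_one (by linarith)]; linarith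
  have hη2 : A * (1 - η) - (1 + η) = (A - 1) / 2 := by
    rw [hη]; field_simp; ring
  obtain ⟨C, hC⟩ := pow_unbounded_of_one_lt (8 / (A - 1)) hβ
  refine ⟨C + 1, ?_⟩
  have e0 := h0.norm.eventually_const_lt (show (1 - η) * l < ‖L‖ by nlinarith)
  have e1 := h1.norm.eventually_lt_const (show ‖L‖ < (1 + η) * l by nlinarith)
  have e2 := h2.norm.eventually_lt_const (show ‖L‖ < 2 * l by linarith)
  filter_upwards [e0, e1, e2] with j e0 e1 e2 hlt
  have h3 : A ^ N0 j * ‖r0 j‖ ≤ A ^ N1 j * ‖r1 j‖ + 2 * (A ^ N2 j * ‖r2 j‖) := by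
    have h4 : β ^ N0 j * r0 j = 2 * (β ^ N2 j * r2 j) - β ^ N1 j * r1 j := by
      rw [← hrel]; ring
    have h5 := congrArg norm h4
    have h6 := norm_sub_le (2 * (β ^ N2 j * r2 j)) (β ^ N1 j * r1 j)
    rw [← h5] at h6
    simp only [norm_mul, norm_zpow, Complex.norm_ofNat] at h6
    linarith
  have h4 : A ^ N1 j ≤ A ^ (N0 j - 1) := zpow_le_zpow_right₀ hβ.le (by omega)
  have h5 : A ^ N0 j = A ^ (N0 j - 1) * A := by rw [← zpow_add_one₀ hA0.ne', sub_add_cancel]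
  have hp1 : 0 < A ^ (N0 j - 1) := zpow_pos hA0 _
  have hp2 : 0 < A ^ N2 j := zpow_pos hA0 _
  have h6 : A ^ (N0 j - 1) * A * ((1 - η) * l) ≤ A ^ (N0 j - 1) * ((1 + η) * l) + 2 * (A ^ N2 j * (2 * l)) := by
    calc _ ≤ A ^ N0 j * ‖r0 j‖ := by rw [h5]; gcongr
      _ ≤ _ := h3
      _ ≤ _ := by gcongr
  have h7 : A ^ (N0 j - 1) * ((A - 1) / 2) ≤ 4 * A ^ N2 j := by
    rw [← hη2]
    refine le_of_mul_le_mul_right ?_ hl0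
    linarith
  have h8 : A ^ (N0 j - 1) ≤ A ^ N2 j * (8 / (A - 1)) := by
    have : 0 < A - 1 := by linarith
    rw [mul_div_assoc', le_div_iff₀ this]
    linarith
  have h9 : A ^ (N0 j - 1) < A ^ (N2 j + C) := by
    rw [zpow_add₀ hA0.ne', zpow_natCast]
    exact h8.trans_lt (by gcongr)
  have := (zpow_lt_zpow_iff_right₀ hβ).1 h9
  omega

/-- In a relation `β ^ N0 + β ^ N1 ≈ 2 β ^ N2` with `‖β‖ > 1`, the exponents on the left exceed `N2` by a
bounded amount only. -/
lemma three_bound (β : ℂ) (hβ : 1 < ‖β‖) (r0 r1 r2 : ℕ → ℂ) (L : ℂ) (hL : L ≠ 0)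
    (h0 : Tendsto r0 atTop (𝓝 L)) (h1 : Tendsto r1 atTop (𝓝 L)) (h2 : Tendsto r2 atTop (𝓝 L))
    (N0 N1 N2 : ℕ → ℤ) (hne : ∀ j, N0 j ≠ N1 j)
    (hrel : ∀ j, β ^ N0 j * r0 j + β ^ N1 j * r1 j = 2 * (β ^ N2 j * r2 j)) :
    ∃ C : ℤ, ∀ᶠ j in atTop, N0 j - N2 j ≤ C ∧ N1 j - N2 j ≤ C := by
  obtain ⟨C, hC⟩ := three_bound_aux β hβ r0 r1 r2 L hL h0 h1 h2 N0 N1 N2 hrel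
  obtain ⟨C', hC'⟩ := three_bound_aux β hβ r1 r0 r2 L hL h1 h0 h2 N1 N0 N2
    (fun j => by rw [add_comm]; exact hrel j)
  refine ⟨max C C', ?_⟩
  filter_upwards [hC, hC'] with j hC hC'
  rcases lt_or_gt_of_ne (hne j) with h | h
  · have := hC' h
    have := le_max_right C C'
    omega
  · have := hC h
    have := le_max_left C C'
    omega

variable {K : Type*} [Field K] [NumberField K]

/-- Two dominant terms cannot cancel: summing logarithms over all embeddings removes the unit, so
that the leading constants must agree in size, and then the exponents must agree as well. -/
lemma two_term (α : K) (hα : α ≠ 0) (hlog : ∑ φ : K →+* ℂ, Real.log ‖φ α‖ = 0)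
    (φ₀ : K →+* ℂ) (hφ₀ : 1 < ‖φ₀ α‖) (p : K[X]) (hp : p ≠ 0) (q : ℕ → ℝ)
    (hq : Tendsto q atTop atTop) (u v : ℕ → ℤ)
    (hu : Tendsto (fun j => (u j : ℝ) / q j) atTop (𝓝 1))
    (hv : Tendsto (fun j => (v j : ℝ) / q j) atTop (𝓝 1)) (hne : ∀ j, u j ≠ v j)
    (a b : ℤ) (ha : a ≠ 0) (hb : b ≠ 0)
    (hrel : ∀ j, (a : K) * (α ^ u j * p.eval (u j : K)) + b * (α ^ v j * p.eval (v j : K)) = 0) :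
    False := by
  set r : (K →+* ℂ) → (ℕ → ℤ) → ℕ → ℂ := fun φ u j =>
    (p.map φ).eval (u j : ℂ) / (q j : ℂ) ^ (p.map φ).natDegree with hr
  have hlc : ∀ φ : K →+* ℂ, (p.map φ).leadingCoeff ≠ 0 := fun φ => by
    rw [leadingCoeff_ne_zero]; exact (Polynomial.map_ne_zero_iff φ.injective).2 hp
  have hlim : ∀ φ : K →+* ℂ, Tendsto (fun j => Real.log ‖r φ u j‖ - Real.log ‖r φ v j‖) atTop (𝓝 0) := by
    intro φ
    have h1 := ((poly_lead (p.map φ) q hq u hu).norm.log (norm_ne_zero_iff.2 (hlc φ)))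
    have h2 := ((poly_lead (p.map φ) q hq v hv).norm.log (norm_ne_zero_iff.2 (hlc φ)))
    have h3 := h1.sub h2
    rw [sub_self] at h3
    exact h3
  have hid : ∀ φ : K →+* ℂ, ∀ᶠ j in atTop,
      Real.log |(a : ℝ)| - Real.log |(b : ℝ)| + ((u j : ℝ) - v j) * Real.log ‖φ α‖ +
        (Real.log ‖r φ u j‖ - Real.log ‖r φ v j‖) = 0 := by
    intro φ
    have h1 := (poly_lead (p.map φ) q hq u hu).eventually_ne (hlc φ)
    have h2 := (poly_lead (p.map φ) q hq v hv).eventually_ne (hlc φ)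
    filter_upwards [h1, h2, hq.eventually_gt_atTop 0] with j h1 h2 h3
    have h4 := congrArg φ (hrel j)
    simp only [map_add, map_mul, map_zpow₀, map_intCast, map_zero, map_eval_int] at h4
    have hqn : (q j : ℂ) ^ (p.map φ).natDegree ≠ 0 := pow_ne_zero _ (by exact_mod_cast h3.ne')
    have h5 : (a : ℂ) * (φ α ^ u j * r φ u j) = -(b * (φ α ^ v j * r φ v j)) := by
      simp only [hr]
      field_simp
      linear_combination h4
    have h6 := congrArg (fun z => Real.log ‖z‖) h5
    have hφα : ‖φ α‖ ≠ 0 := by simpa using hα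
    simp only [norm_neg, norm_mul, norm_zpow, Complex.norm_intCast] at h6
    have ha' : |(a : ℝ)| ≠ 0 := by simpa using ha
    have hb' : |(b : ℝ)| ≠ 0 := by simpa using hb
    have hn1 : ‖r φ u j‖ ≠ 0 := norm_ne_zero_iff.2 h1
    have hn2 : ‖r φ v j‖ ≠ 0 := norm_ne_zero_iff.2 h2
    rw [Real.log_mul ha' (mul_ne_zero (zpow_ne_zero _ hφα) hn1), Real.log_mul (zpow_ne_zero _ hφα) hn1,
      Real.log_mul hb' (mul_ne_zero (zpow_ne_zero _ hφα) hn2), Real.log_mul (zpow_ne_zero _ hφα) hn2,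
      Real.log_zpow, Real.log_zpow] at h6
    linarith
  set κ := Real.log |(a : ℝ)| - Real.log |(b : ℝ)| with hκ
  have hκ0 : κ = 0 := by
    have h1 : Tendsto (fun j => ∑ φ : K →+* ℂ, (κ + (Real.log ‖r φ u j‖ - Real.log ‖r φ v j‖))) atTop
        (𝓝 (∑ φ : K →+* ℂ, (κ + 0))) :=
      tendsto_finsetSum _ fun φ _ => (hlim φ).const_add κ
    have h2 : ∀ᶠ j in atTop, ∑ φ : K →+* ℂ, (κ + (Real.log ‖r φ u j‖ - Real.log ‖r φ v j‖)) = 0 := by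
      filter_upwards [eventually_all.2 hid] with j hj
      have h3 := Finset.sum_congr rfl fun φ (_ : φ ∈ Finset.univ) => hj φ
      simp only [Finset.sum_add_distrib, ← Finset.mul_sum, hlog, mul_zero, Finset.sum_const_zero,
        add_zero] at h3 ⊢
      exact h3
    have h3 := tendsto_nhds_unique h1 (tendsto_const_nhds.congr' (h2.mono fun j hj => hj.symm))
    simp only [add_zero, Finset.sum_const, nsmul_eq_mul, mul_eq_zero, Nat.cast_eq_zero] at h3
    rcases h3 with h3 | h3
    · exact absurd h3 (Finset.card_ne_zero.2 ⟨φ₀, Finset.mem_univ _⟩)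
    · exact h3
  have h1 := (hlim φ₀).norm.eventually_lt_const (show ‖(0 : ℝ)‖ < Real.log ‖φ₀ α‖ by
    rw [norm_zero]; exact Real.log_pos hφ₀)
  obtain ⟨j, hj1, hj2⟩ := (h1.and (hid φ₀)).exists
  rw [hκ0, zero_add] at hj2
  have h3 : Real.log ‖r φ₀ u j‖ - Real.log ‖r φ₀ v j‖ = -(((u j : ℝ) - v j) * Real.log ‖φ₀ α‖) := by
    linarith
  rw [h3, norm_neg, norm_mul, Real.norm_eq_abs, Real.norm_eq_abs, abs_of_pos (Real.log_pos hφ₀)] at hj1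
  have h4 : (1 : ℝ) ≤ |(u j : ℝ) - v j| := by
    exact_mod_cast Int.one_le_abs (sub_ne_zero.2 (hne j))
  have := Real.log_pos hφ₀
  nlinarith

lemma one_term (α : K) (hα : α ≠ 0) (φ₀ : K →+* ℂ) (p : K[X]) (hp : p ≠ 0) (q : ℕ → ℝ)
    (hq : Tendsto q atTop atTop) (u : ℕ → ℤ)
    (hu : Tendsto (fun j => (u j : ℝ) / q j) atTop (𝓝 1)) (a : ℤ) (ha : a ≠ 0)
    (hrel : ∀ j, (a : K) * (α ^ u j * p.eval (u j : K)) = 0) : False := by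
  have hlc : (p.map φ₀).leadingCoeff ≠ 0 := by
    rw [leadingCoeff_ne_zero]; exact (Polynomial.map_ne_zero_iff φ₀.injective).2 hp
  obtain ⟨j, hj⟩ := ((poly_lead (p.map φ₀) q hq u hu).eventually_ne hlc).exists
  refine hj ?_
  have ha' : (a : K) ≠ 0 := by exact_mod_cast ha
  have : p.eval (u j : K) = 0 := by
    rcases mul_eq_zero.1 (hrel j) with h | h
    · exact absurd h ha'
    · exact (mul_eq_zero.1 h).resolve_left (zpow_ne_zero _ hα)
  rw [← map_eval_int, this, map_zero, zero_div]

/-- An embedding where `α` is larger than one bounds the differences from above, and one where `α` is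
smaller than one bounds them from below. -/
lemma three_term_bounded (α : K) (hα : α ≠ 0) (φ₀ φ₁ : K →+* ℂ) (hφ₀ : 1 < ‖φ₀ α‖) (hφ₁ : ‖φ₁ α‖ < 1)
    (p : K[X]) (hp : p ≠ 0) (q : ℕ → ℝ) (hq : Tendsto q atTop atTop) (m k n : ℕ → ℤ)
    (hm : Tendsto (fun j => (m j : ℝ) / q j) atTop (𝓝 1))
    (hk : Tendsto (fun j => (k j : ℝ) / q j) atTop (𝓝 1))
    (hn : Tendsto (fun j => (n j : ℝ) / q j) atTop (𝓝 1)) (hne : ∀ j, m j ≠ k j)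
    (hrel : ∀ j, α ^ m j * p.eval (m j : K) + α ^ k j * p.eval (k j : K) =
      2 * (α ^ n j * p.eval (n j : K))) :
    ∃ C : ℤ, ∀ᶠ j in atTop, |m j - n j| ≤ C ∧ |k j - n j| ≤ C := by
  have hlc : ∀ φ : K →+* ℂ, (p.map φ).leadingCoeff ≠ 0 := fun φ => by
    rw [leadingCoeff_ne_zero]; exact (Polynomial.map_ne_zero_iff φ.injective).2 hp
  have hrel' : ∀ (φ : K →+* ℂ) j, φ α ^ m j * ((p.map φ).eval (m j : ℂ) / (q j : ℂ) ^ (p.map φ).natDegree) +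
      φ α ^ k j * ((p.map φ).eval (k j : ℂ) / (q j : ℂ) ^ (p.map φ).natDegree) =
      2 * (φ α ^ n j * ((p.map φ).eval (n j : ℂ) / (q j : ℂ) ^ (p.map φ).natDegree)) := by
    intro φ j
    have h4 := congrArg φ (hrel j)
    simp only [map_add, map_mul, map_zpow₀, map_ofNat, map_eval_int] at h4
    rw [mul_div_assoc', mul_div_assoc', mul_div_assoc', mul_div_assoc', ← add_div, h4]
  obtain ⟨C, hC⟩ := three_bound (φ₀ α) hφ₀ _ _ _ _ (hlc φ₀) (poly_lead _ q hq m hm)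
    (poly_lead _ q hq k hk) (poly_lead _ q hq n hn) m k n hne (hrel' φ₀)
  have hφ₁α : φ₁ α ≠ 0 := by simpa using hα
  obtain ⟨C', hC'⟩ := three_bound (φ₁ α)⁻¹
    (by rw [norm_inv]; exact (one_lt_inv₀ (norm_pos_iff.2 hφ₁α)).2 hφ₁) _ _ _ _ (hlc φ₁)
    (poly_lead _ q hq m hm)
    (poly_lead _ q hq k hk) (poly_lead _ q hq n hn) (fun j => -m j) (fun j => -k j) (fun j => -n j)
    (fun j h => hne j (neg_injective h)) (fun j => by
      simp only [inv_zpow', neg_neg]; exact hrel' φ₁ j)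
  refine ⟨max C C', ?_⟩
  filter_upwards [hC, hC'] with j h1 h2
  have := le_max_left C C'
  have := le_max_right C C'
  rw [abs_le, abs_le]
  refine ⟨⟨?_, ?_⟩, ?_, ?_⟩ <;> omega

end APC

/-! ### The shift identity -/

namespace APC
open Polynomial Filter Topology

variable {K : Type*} [Field K] [NumberField K]

/-- Infinitely many progressions in a recurrence sequence force a progression identity valid at
every index. -/
theorem exists_shift_identity (d : ℕ) (s : Finset K) (hs : s.Nonempty) (f : ℤ → ℤ)
    (Λ : s × Fin d → Fin d → K) (c : s × Fin d → K)
    (hsep : ∀ v : Fin d → K, (∀ e, ∑ l, Λ e l * v l = 0) → v = 0)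
    (hform : ∀ e, ∃ p : K[X], ∀ n : ℤ, ∑ l : Fin d, Λ e l * (f (n + (l : ℕ)) : K) = (e.1 : K) ^ n * p.eval (n : K))
    (hsum : ∀ n, ∑ e, c e * ∑ l : Fin d, Λ e l * (f (n + (l : ℕ)) : K) = f n)
    (hcomp : ∀ α : s, ∃ p : K[X], p ≠ 0 ∧ ∀ n : ℤ,
        ∑ i, c (α, i) * ∑ l : Fin d, Λ (α, i) l * (f (n + (l : ℕ)) : K) = (α : K) ^ n * p.eval (n : K))
    (h0 : ∀ α ∈ s, α ≠ 0) (hlog : ∀ α ∈ s, ∑ φ : K →+* ℂ, Real.log ‖φ α‖ = 0)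
    (hnd : ∀ α ∈ s, ∀ β ∈ s, (∀ φ : K →+* ℂ, ‖φ α‖ = ‖φ β‖) → α = β)
    (hgt : ∀ α ∈ s, ∃ φ : K →+* ℂ, 1 < ‖φ α‖)
    (nn : ℕ → Fin 3 → ℤ) (hinj : Function.Injective nn) (hpos : ∀ j h, 0 < nn j h)
    (hdist : ∀ j, Function.Injective (nn j))
    (hrel : ∀ j, f (nn j 0) + f (nn j 1) = 2 * f (nn j 2)) :
    ∃ x y : ℤ, x ≠ 0 ∧ y ≠ 0 ∧ x ≠ y ∧ ∀ t, f (t + x) + f (t + y) = 2 * f t := by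
  classical
  choose p hp0 hp using hcomp
  obtain ⟨θ, q, τ, hθ, hq, hle, hτ, hτ0, hτ1, h₀, hh₀⟩ := exists_ratio_subseq nn hinj hpos
  set ε : Fin 3 → ℤ := ![1, 1, -2] with hε
  obtain ⟨θ', hθ', hres⟩ := component_relations d s f Λ c hsep hform hsum h0 hlog (fun j => nn (θ j)) q τ hq
    (fun j h => hpos _ h) hle hτ ε (fun j => by
      simp only [hε, Fin.sum_univ_three, Matrix.cons_val_zero, Matrix.cons_val_one, Matrix.cons_val]
      linarith [hrel (θ j)])
  simp only [hp] at hres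
  set N : Fin 3 → ℕ → ℤ := fun h j => nn (θ (θ' j)) h with hN
  set q' := q ∘ θ' with hq'
  have hq't : Tendsto q' atTop atTop := hq.comp hθ'.tendsto_atTop
  have hNτ : ∀ h, Tendsto (fun j => (N h j : ℝ) / q' j) atTop (𝓝 (τ h)) := fun h =>
    (hτ h).comp hθ'.tendsto_atTop
  have hNne : ∀ h h', h ≠ h' → ∀ j, N h j ≠ N h' j := fun h h' hh j e => hh (hdist _ e)
  obtain ⟨β, hβ⟩ := hs
  obtain ⟨ψ, hψ⟩ := hgt β hβ
  have : Nonempty (s × (K →+* ℂ)) := ⟨(⟨β, hβ⟩, ψ)⟩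
  obtain ⟨⟨α₀, φ₀⟩, hmax⟩ := Finite.exists_max (fun z : s × (K →+* ℂ) => ‖z.2 (z.1 : K)‖)
  have hφ₀ : 1 < ‖φ₀ (α₀ : K)‖ := hψ.trans_le (hmax (⟨β, hβ⟩, ψ))
  have hα₀ : (α₀ : K) ≠ 0 := h0 _ α₀.2
  have hnorm : ∀ (α : s) (φ : K →+* ℂ), 0 < ‖φ (α : K)‖ := fun α φ => by
    rw [norm_pos_iff]; simpa using h0 _ α.2
  have hlogeq : ∀ α β : s, (fun φ : K →+* ℂ => Real.log ‖φ (α : K)‖) = (fun φ : K →+* ℂ => Real.log ‖φ (β : K)‖) →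
      α = β := by
    intro α β h
    refine Subtype.ext (hnd _ α.2 _ β.2 fun φ => ?_)
    exact Real.log_injOn_pos (hnorm α φ) (hnorm β φ) (congrFun h φ)
  -- the growth vector of the dominant component is shared by no other component
  have hclass : ∀ h (α : s), ((fun φ : K →+* ℂ => τ h * Real.log ‖φ (α : K)‖) =
      fun φ : K →+* ℂ => Real.log ‖φ (α₀ : K)‖) ↔ (τ h = 1 ∧ α = α₀) := by
    intro h α
    constructor
    · intro he
      have h1 := congrFun he φ₀
      have hM := Real.log_pos hφ₀
      have h2 : Real.log ‖φ₀ (α : K)‖ ≤ Real.log ‖φ₀ (α₀ : K)‖ :=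
        Real.log_le_log (hnorm α φ₀) (hmax (α, φ₀))
      have hone : τ h = 1 := by
        refine le_antisymm (hτ1 h) ?_
        have h3 : τ h * Real.log ‖φ₀ (α : K)‖ ≤ τ h * Real.log ‖φ₀ (α₀ : K)‖ :=
          mul_le_mul_of_nonneg_left h2 (hτ0 h)
        rw [h1] at h3
        by_contra hlt
        nlinarith [not_le.1 hlt]
      refine ⟨hone, hlogeq _ _ ?_⟩
      simpa [hone] using he
    · rintro ⟨h1, rfl⟩
      simp [h1]
  have hdom : ∀ j, ∑ h, (if τ h = 1 then (ε h : K) else 0) * ((α₀ : K) ^ N h j * (p α₀).eval (N h j : K)) = 0 := by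
    intro j
    refine Eq.trans ?_ (hres (fun φ : K →+* ℂ => Real.log ‖φ (α₀ : K)‖) j)
    refine Finset.sum_congr rfl fun h _ => ?_
    simp only [hclass]
    rw [Finset.sum_eq_single α₀]
    · simp [hN]
    · intro b _ hb; simp [hb]
    · simp
  simp only [hε, Fin.sum_univ_three, Matrix.cons_val_zero, Matrix.cons_val_one, Matrix.cons_val] at hdom
  have hall : ∀ h, τ h = 1 := by
    have T2 := fun h h' (hh : h ≠ h') (e : τ h = 1) (e' : τ h' = 1) => two_term (α₀ : K) hα₀ (hlog _ α₀.2) φ₀ hφ₀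
      (p α₀) (hp0 α₀) q' hq't (N h) (N h') (e ▸ hNτ h) (e' ▸ hNτ h') (hNne h h' hh)
    have T1 := fun h (e : τ h = 1) => one_term (α₀ : K) hα₀ φ₀
      (p α₀) (hp0 α₀) q' hq't (N h) (e ▸ hNτ h)
    by_cases c0 : τ 0 = 1 <;> by_cases c1 : τ 1 = 1 <;> by_cases c2 : τ 2 = 1 <;>
      simp only [c0, c1, c2, if_true, if_false, zero_mul, add_zero, zero_add] at hdom
    · intro h; fin_cases h <;> assumption
    · exact (T2 0 1 (by decide) c0 c1 1 1 one_ne_zero one_ne_zero hdom).elim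
    · exact (T2 0 2 (by decide) c0 c2 1 (-2) one_ne_zero (by norm_num) hdom).elim
    · exact (T1 0 c0 1 one_ne_zero hdom).elim
    · exact (T2 1 2 (by decide) c1 c2 1 (-2) one_ne_zero (by norm_num) hdom).elim
    · exact (T1 1 c1 1 one_ne_zero hdom).elim
    · exact (T1 2 c2 (-2) (by norm_num) hdom).elim
    · fin_cases h₀
      · exact (c0 hh₀).elim
      · exact (c1 hh₀).elim
      · exact (c2 hh₀).elim
  have hcomp' : ∀ (α : s) j, (α : K) ^ N 0 j * (p α).eval (N 0 j : K) + (α : K) ^ N 1 j * (p α).eval (N 1 j : K) =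
      2 * ((α : K) ^ N 2 j * (p α).eval (N 2 j : K)) := by
    intro α j
    have h1 := hres (fun φ : K →+* ℂ => Real.log ‖φ (α : K)‖) j
    have h2 : ∀ h, ∑ x : s, (if (fun φ : K →+* ℂ => τ h * Real.log ‖φ (x : K)‖) =
        (fun φ : K →+* ℂ => Real.log ‖φ (α : K)‖) then (ε h : K) else 0) *
        ((x : K) ^ nn (θ (θ' j)) h * eval (nn (θ (θ' j)) h : K) (p x)) =
        ε h * ((α : K) ^ N h j * (p α).eval (N h j : K)) := by
      intro h
      simp only [hall h, one_mul]
      rw [Finset.sum_eq_single α]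
      · simp [hN]
      · intro b _ hb
        rw [if_neg (fun e => hb (hlogeq _ _ e)), zero_mul]
      · simp
    simp only [h2] at h1
    simp only [hε, Fin.sum_univ_three, Matrix.cons_val_zero, Matrix.cons_val_one, Matrix.cons_val] at h1
    push_cast at h1
    linear_combination h1
  obtain ⟨φ₁, hφ₁⟩ := exists_norm_lt_one hα₀ (hlog _ α₀.2) ⟨φ₀, hφ₀⟩
  have hN1 : ∀ h, Tendsto (fun j => (N h j : ℝ) / q' j) atTop (𝓝 1) := fun h => hall h ▸ hNτ h
  obtain ⟨D, hC⟩ := three_term_bounded (α₀ : K) hα₀ φ₀ φ₁ hφ₀ hφ₁ (p α₀) (hp0 α₀) q' hq't (N 0) (N 1) (N 2)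
    (hN1 0) (hN1 1) (hN1 2) (hNne 0 1 (by decide)) (hcomp' α₀)
  -- the two differences take a fixed pair of values infinitely often
  obtain ⟨x, y, hxy⟩ : ∃ x y : ℤ, ∃ᶠ j in atTop, N 0 j - N 2 j = x ∧ N 1 j - N 2 j = y := by
    by_contra! hcon
    have h1 : ∀ z ∈ (Finset.Icc (-D) D ×ˢ Finset.Icc (-D) D : Finset (ℤ × ℤ)),
        ∀ᶠ j in atTop, ¬ (N 0 j - N 2 j = z.1 ∧ N 1 j - N 2 j = z.2) := fun z _ => by
      filter_upwards [hcon z.1 z.2] with j hj hj' using hj hj'.1 hj'.2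
    obtain ⟨j, hj1, hj2⟩ := (((eventually_all_finset _).2 h1).and hC).exists
    refine hj1 (N 0 j - N 2 j, N 1 j - N 2 j) ?_ ⟨rfl, rfl⟩
    rw [Finset.mem_product, Finset.mem_Icc, Finset.mem_Icc]
    exact ⟨abs_le.1 hj2.1, abs_le.1 hj2.2⟩
  have hN2t : Tendsto (fun j => (N 2 j : ℝ)) atTop atTop := by
    refine ((hN1 2).pos_mul_atTop one_pos hq't).congr' ?_
    filter_upwards [hq't.eventually_gt_atTop 0] with j hj
    field_simp
  have hident : ∀ (α : s) (t : ℤ), (α : K) ^ (t + x) * (p α).eval ((t + x : ℤ) : K) +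
      (α : K) ^ (t + y) * (p α).eval ((t + y : ℤ) : K) = 2 * ((α : K) ^ t * (p α).eval (t : K)) := by
    intro α
    have hαne := h0 _ α.2
    set R : K[X] := C ((α : K) ^ x) * (p α).comp (X + C (x : K)) + C ((α : K) ^ y) * (p α).comp (X + C (y : K)) -
      2 * p α with hR
    have hReval : ∀ t : ℤ, (α : K) ^ t * R.eval (t : K) = (α : K) ^ (t + x) * (p α).eval ((t + x : ℤ) : K) +
      (α : K) ^ (t + y) * (p α).eval ((t + y : ℤ) : K) - 2 * ((α : K) ^ t * (p α).eval (t : K)) := by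
      intro t
      rw [zpow_add₀ hαne, zpow_add₀ hαne]
      simp only [hR, eval_sub, eval_add, eval_mul, eval_C, eval_comp, eval_X, eval_ofNat]
      push_cast
      ring
    have hR0 : R = 0 := by
      refine eq_zero_of_infinite_isRoot R ?_
      have hinfset : (Set.range (fun j : {j // N 0 j - N 2 j = x ∧ N 1 j - N 2 j = y} => N 2 j)).Infinite := by
        intro hfin
        obtain ⟨B, hB⟩ := hfin.bddAbove
        obtain ⟨j, hj, hj2⟩ := (hxy.and_eventually (hN2t.eventually_gt_atTop (B : ℝ))).exists
        have := hB ⟨⟨j, hj⟩, rfl⟩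
        have hj3 : B < N 2 j := by exact_mod_cast hj2
        exact absurd this (not_le.2 hj3)
      refine (hinfset.image (f := fun n : ℤ => (n : K)) (Int.cast_injective.injOn)).mono ?_
      rintro _ ⟨_, ⟨⟨j, hj1, hj2⟩, rfl⟩, rfl⟩
      have h1 := hReval (N 2 j)
      have e1 : N 2 j + x = N 0 j := by omega
      have e2 : N 2 j + y = N 1 j := by omega
      rw [e1, e2, hcomp' α j, sub_self] at h1
      exact (mul_eq_zero.1 h1).resolve_left (zpow_ne_zero _ hαne)
    intro t
    have := hReval t
    rw [hR0, eval_zero, mul_zero] at this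
    linear_combination -this
  obtain ⟨j, hj1, hj2⟩ := hxy.exists
  refine ⟨x, y, ?_, ?_, ?_, fun t => ?_⟩
  · rw [← hj1]; exact sub_ne_zero.2 (hNne 0 2 (by decide) j)
  · rw [← hj2]; exact sub_ne_zero.2 (hNne 1 2 (by decide) j)
  · rw [← hj1, ← hj2]; intro h; exact hNne 0 1 (by decide) j (by omega)
  · have hf : ∀ n, (f n : K) = ∑ α : s, (α : K) ^ n * (p α).eval (n : K) := by
      intro n
      rw [← hsum n, Fintype.sum_prod_type]
      exact Finset.sum_congr rfl fun α _ => hp α n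
    have : (f (t + x) : K) + f (t + y) = 2 * f t := by
      rw [hf, hf, hf, ← Finset.sum_add_distrib, Finset.mul_sum]
      exact Finset.sum_congr rfl fun α _ => hident α t
    exact_mod_cast this

end APC

/-! ### The companion polynomial and the criterion -/

namespace APC
open Polynomial Filter Topology

/-- Minimality of the order, tested against polynomials over any subfield of `ℂ`. -/
lemma aeval_ne_zero_of_minimal (d : ℕ) (f : ℤ → ℤ)
    (hmin : ∀ e : ℕ, e < d → ¬∃ b : Fin e → ℂ,
      ∀ n : ℤ, (f (n + (e : ℤ)) : ℂ) = ∑ i : Fin e, b i * (f (n + ((i : ℕ) : ℤ)) : ℂ))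
    {F : Type*} [Field F] (ψ : F →+* ℂ) (G : F[X]) (hG : G ≠ 0) (hdeg : G.natDegree < d) :
    aeval (seqShift F) G (fun n => (f n : F)) ≠ 0 := by
  intro h
  refine hmin G.natDegree hdeg ⟨fun i => -(ψ (G.coeff i) / ψ G.leadingCoeff), fun n => ?_⟩
  have h1 := congrFun h n
  rw [aeval_shift G _ (Nat.lt_succ_self _), Finset.sum_range_succ] at h1
  have h2 := congrArg ψ h1
  have hlc : ψ G.leadingCoeff ≠ 0 := by simpa using hG
  simp only [map_add, map_sum, map_mul, map_intCast, Pi.zero_apply, map_zero] at h2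
  rw [Fin.sum_univ_eq_sum_range (fun i => -(ψ (G.coeff i) / ψ G.leadingCoeff) * (f (n + (i : ℤ)) : ℂ))]
  have h3 : ∑ i ∈ Finset.range G.natDegree, -(ψ (G.coeff i) / ψ G.leadingCoeff) * (f (n + (i : ℤ)) : ℂ) =
      -(∑ i ∈ Finset.range G.natDegree, ψ (G.coeff i) * (f (n + (i : ℤ)) : ℂ)) / ψ G.leadingCoeff := by
    rw [neg_div, Finset.sum_div, ← Finset.sum_neg_distrib]
    exact Finset.sum_congr rfl fun i _ => by ring
  rw [h3, eq_div_iff hlc]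
  rw [coeff_natDegree] at h2
  linear_combination h2

lemma companion_monic (d : ℕ) (a : Fin d → ℚ)
    (P : ℚ[X]) (hP : P = X ^ d - ∑ i : Fin d, C (a i) * X ^ (i : ℕ)) : P.Monic ∧ P.natDegree = d := by
  have hdeg : (∑ i : Fin d, C (a i) * X ^ (i : ℕ) : ℚ[X]).degree < (d : WithBot ℕ) := by
    rw [← mem_degreeLT]
    refine Submodule.sum_mem _ fun i _ => ?_
    rw [mem_degreeLT]
    exact (degree_C_mul_X_pow_le _ _).trans_lt (by exact_mod_cast i.2)
  have hm : P.Monic := by rw [hP]; exact monic_X_pow_sub hdeg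
  refine ⟨hm, ?_⟩
  have : P.degree = d := by
    rw [hP, degree_sub_eq_left_of_degree_lt] <;> rw [degree_X_pow]
    exact hdeg
  exact natDegree_eq_of_degree_eq_some this

lemma companion_kills (d : ℕ) (a : Fin d → ℚ)
    (P : ℚ[X]) (hP : P = X ^ d - ∑ i : Fin d, C (a i) * X ^ (i : ℕ)) (f : ℤ → ℤ)
    (hrec : ∀ n : ℤ, (f (n + (d : ℤ)) : ℚ) = ∑ i : Fin d, a i * (f (n + ((i : ℕ) : ℤ)) : ℚ))
    {F : Type*} [Field F] (ι : ℚ →+* F) :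
    aeval (seqShift F) (P.map ι) (fun n => (f n : F)) = 0 := by
  ext n
  have h := congrArg ι (hrec n)
  simp only [map_sum, map_mul, map_intCast] at h
  rw [hP]
  simp only [Polynomial.map_sub, Polynomial.map_pow, map_X, Polynomial.map_sum, Polynomial.map_mul,
    map_C, map_sub, map_pow, aeval_X, map_sum, map_mul, aeval_C, LinearMap.sub_apply,
    LinearMap.sum_apply, Module.End.mul_apply, Module.algebraMap_end_apply, Pi.sub_apply,
    Finset.sum_apply, Pi.smul_apply, seqShift_pow_apply, smul_eq_mul, Pi.zero_apply]
  rw [h, sub_self]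

lemma companion_coeff_zero (d : ℕ) (hd : 1 ≤ d) (a : Fin d → ℚ)
    (P : ℚ[X]) (hP : P = X ^ d - ∑ i : Fin d, C (a i) * X ^ (i : ℕ)) (ha0 : a ⟨0, hd⟩ ≠ 0) : P.coeff 0 ≠ 0 := by
  have h1 : P.coeff 0 = -a ⟨0, hd⟩ := by
    rw [hP, coeff_sub, coeff_X_pow, if_neg (by omega), finsetSum_coeff, zero_sub, neg_inj,
      Finset.sum_eq_single ⟨0, hd⟩]
    · simp
    · intro b _ hb
      rw [coeff_C_mul, coeff_X_pow, if_neg, mul_zero]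
      intro h
      exact hb (Fin.ext h.symm)
    · simp
  rw [h1]; exact neg_ne_zero.2 ha0

/-- An identity `f(t + i) + f(t + j) = 2 f(t + k)` says that `X ^ i + X ^ j - 2 X ^ k` annihilates `f`, so
its remainder modulo `P` vanishes by minimality of the order. -/
lemma companion_dvd (d : ℕ) (a : Fin d → ℚ)
    (P : ℚ[X]) (hP : P = X ^ d - ∑ i : Fin d, C (a i) * X ^ (i : ℕ)) (f : ℤ → ℤ)
    (hrec : ∀ n : ℤ, (f (n + (d : ℤ)) : ℚ) = ∑ i : Fin d, a i * (f (n + ((i : ℕ) : ℤ)) : ℚ))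
    (hmin : ∀ e : ℕ, e < d → ¬∃ b : Fin e → ℂ,
      ∀ n : ℤ, (f (n + (e : ℤ)) : ℂ) = ∑ i : Fin e, b i * (f (n + ((i : ℕ) : ℤ)) : ℂ))
    (i j k : ℕ) (h : ∀ t : ℤ, f (t + i) + f (t + j) = 2 * f (t + k)) :
    P ∣ X ^ i + X ^ j - 2 * X ^ k := by
  obtain ⟨hm, hdeg⟩ := companion_monic d a P hP
  have hk := companion_kills d a P hP f hrec (RingHom.id ℚ)
  rw [Polynomial.map_id] at hk
  set T : ℚ[X] := X ^ i + X ^ j - 2 * X ^ k with hT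
  have hT0 : aeval (seqShift ℚ) T (fun n => (f n : ℚ)) = 0 := by
    ext n
    have h1 : (f (n + i) : ℚ) + f (n + j) = 2 * f (n + k) := by exact_mod_cast h n
    have h2 : (2 : ℚ[X]) = C 2 := rfl
    simp only [hT, h2, map_sub, map_add, map_pow, aeval_X, map_mul, aeval_C, LinearMap.sub_apply,
      LinearMap.add_apply, Module.End.mul_apply, Module.algebraMap_end_apply, Pi.sub_apply, Pi.add_apply,
      Pi.smul_apply, seqShift_pow_apply, smul_eq_mul, Pi.zero_apply]
    rw [h1, sub_self]
  rw [← modByMonic_eq_zero_iff_dvd hm]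
  by_contra hR
  have hd0 : P.natDegree ≠ 0 := by
    intro h0
    have : P = 1 := eq_one_of_monic_natDegree_zero hm h0
    rw [this, modByMonic_one] at hR
    exact hR rfl
  refine aeval_ne_zero_of_minimal d f hmin (algebraMap ℚ ℂ) (T %ₘ P) hR ?_ ?_
  · rw [← hdeg]
    exact natDegree_modByMonic_lt _ hm (fun h => hd0 (by rw [h, natDegree_one]))
  · have h1 : T %ₘ P = T - (T /ₘ P) * P := by
      rw [modByMonic_eq_sub_mul_div]; ring
    rw [h1, map_sub, LinearMap.sub_apply, hT0, aeval_shift_mul, hk, map_zero, sub_zero]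

/-- The arithmetic content of the criterion, over any number field in which `P` splits: a shift identity,
and roots of `P` on both sides of the unit circle. -/
theorem criterion_of_splits (d : ℕ) (hd : 1 ≤ d) (a : Fin d → ℚ)
    (ha0 : a ⟨0, hd⟩ ≠ 0)
    (P : ℚ[X]) (hP : P = X ^ d - ∑ i : Fin d, C (a i) * X ^ (i : ℕ))
    (f : ℤ → ℤ)
    (hrec : ∀ n : ℤ, (f (n + (d : ℤ)) : ℚ) = ∑ i : Fin d, a i * (f (n + ((i : ℕ) : ℤ)) : ℚ))
    (hmin : ∀ e : ℕ, e < d → ¬∃ b : Fin e → ℂ,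
      ∀ n : ℤ, (f (n + (e : ℤ)) : ℂ) = ∑ i : Fin e, b i * (f (n + ((i : ℕ) : ℤ)) : ℂ))
    (hnondeg : ∀ α β : ℂ, aeval α P = 0 → aeval β P = 0 → α ≠ β →
      ∀ l : ℕ, 0 < l → (α / β) ^ l ≠ 1)
    (hnonunit : ∀ α : ℂ, aeval α P = 0 → ∀ l : ℕ, 0 < l → α ^ l ≠ 1)
    (hinf : {x : ℤ × ℤ × ℤ | 0 < x.1 ∧ 0 < x.2.1 ∧ 0 < x.2.2 ∧
      x.1 ≠ x.2.1 ∧ x.1 ≠ x.2.2 ∧ x.2.1 ≠ x.2.2 ∧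
      f x.2.1 ≠ 0 ∧ f x.1 + f x.2.2 = 2 * f x.2.1}.Infinite)
    (K : Type) [Field K] [NumberField K] (ι : ℚ →+* K) (hsplit : (P.map ι).Splits) :
    (∃ x y : ℤ, x ≠ 0 ∧ y ≠ 0 ∧ x ≠ y ∧ ∀ t, f (t + x) + f (t + y) = 2 * f t) ∧
    (∃ β : ℂ, aeval β P = 0 ∧ 1 < ‖β‖) ∧ (∃ β : ℂ, aeval β P = 0 ∧ ‖β‖ < 1) := by
  classical
  obtain ⟨hm, hdeg⟩ := companion_monic d a P hP
  set Q := P.map ι with hQ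
  have hQm : Q.Monic := hm.map _
  have hQd : Q.natDegree = d := by rw [hQ, natDegree_map, hdeg]
  have hkill : aeval (seqShift K) Q (fun n => (f n : K)) = 0 := companion_kills d a P hP f hrec ι
  obtain ⟨ψ⟩ : Nonempty (K →+* ℂ) := inferInstance
  set s := Q.roots.toFinset with hs
  have hroot : ∀ α ∈ s, Q.IsRoot α := fun α hα => by
    rw [hs, Multiset.mem_toFinset] at hα; exact isRoot_of_mem_roots hα
  have hroots : ∀ α ∈ s, ∀ φ : K →+* ℂ, aeval (φ α) P = 0 := by
    intro α hα φ
    have h1 : P.eval₂ ι α = 0 := by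
      have := hroot α hα; rwa [IsRoot.def, hQ, eval_map] at this
    have h2 := congrArg φ h1
    rw [hom_eval₂, map_zero] at h2
    rw [aeval_def, ← h2]
    congr 1
    exact Subsingleton.elim _ _
  have h0 : ∀ α ∈ s, α ≠ 0 := by
    rintro α hα rfl
    have h1 := hroot 0 hα
    rw [IsRoot.def, ← coeff_zero_eq_eval_zero, hQ, coeff_map] at h1
    exact companion_coeff_zero d hd a P hP ha0 (by simpa using h1)
  have hprod : Q = ∏ α ∈ s, (X - C α) ^ Q.rootMultiplicity α := by
    conv_lhs => rw [hsplit.eq_prod_roots_of_monic hQm]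
    rw [Finset.prod_multiset_map_count]
    simp only [count_roots, hs]
  have hminK : ∀ α ∈ s, ∀ G, Q = (X - C α) * G → aeval (seqShift K) G (fun n => (f n : K)) ≠ 0 := by
    intro α hα G hG
    have hG0 : G ≠ 0 := by rintro rfl; rw [mul_zero] at hG; exact hQm.ne_zero hG
    refine aeval_ne_zero_of_minimal d f hmin ψ G hG0 ?_
    have := congrArg natDegree hG
    rw [natDegree_mul (X_sub_C_ne_zero α) hG0, natDegree_X_sub_C, hQd] at this
    omega
  have hinteg : ∀ α ∈ s, IsIntegral ℤ α ∧ IsIntegral ℤ α⁻¹ := by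
    intro α hα
    obtain ⟨G, hG⟩ := dvd_iff_isRoot.2 (hroot α hα)
    exact root_integral f α (h0 α hα) G (hG ▸ hkill) (hminK α hα G hG)
  have hlog : ∀ α ∈ s, ∑ φ : K →+* ℂ, Real.log ‖φ α‖ = 0 := fun α hα =>
    sum_log_unit (h0 α hα) (hinteg α hα).1 (hinteg α hα).2
  have hgt : ∀ α ∈ s, ∃ φ : K →+* ℂ, 1 < ‖φ α‖ := fun α hα =>
    exists_norm_gt_one (h0 α hα) (hinteg α hα).1 fun l hl h =>
      hnonunit (ψ α) (hroots α hα ψ) l hl (by rw [← map_pow, h, map_one])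
  have hnd : ∀ α ∈ s, ∀ β ∈ s, (∀ φ : K →+* ℂ, ‖φ α‖ = ‖φ β‖) → α = β := by
    intro α hα β hβ h
    by_contra hne
    obtain ⟨l, hl, h1⟩ := root_unity_of_norm_eq (h0 β hβ) (hinteg α hα).1 (hinteg β hβ).2 h
    exact hnondeg (ψ α) (ψ β) (hroots α hα ψ) (hroots β hβ ψ) (fun e => hne (ψ.injective e)) l hl
      (by rw [← map_div₀, ← map_pow, h1, map_one])
  have hsne : s.Nonempty := by
    rw [Finset.nonempty_iff_ne_empty]
    intro he
    rw [he, Finset.prod_empty] at hprod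
    rw [hprod, natDegree_one] at hQd
    omega
  obtain ⟨α, hα⟩ := hsne
  refine ⟨?_, ?_, ?_⟩
  · obtain ⟨Λ, c, hsep, hform, hsum, hcomp⟩ := spectral d hd Q hQd s (fun α => Q.rootMultiplicity α) hprod
      (fun α hα => (rootMultiplicity_pos hQm.ne_zero).2 (hroot α hα)) h0 (fun n => (f n : K)) hkill hminK
    have : Infinite _ := hinf.to_subtype
    let g := Infinite.natEmbedding {x : ℤ × ℤ × ℤ | 0 < x.1 ∧ 0 < x.2.1 ∧ 0 < x.2.2 ∧
      x.1 ≠ x.2.1 ∧ x.1 ≠ x.2.2 ∧ x.2.1 ≠ x.2.2 ∧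
      f x.2.1 ≠ 0 ∧ f x.1 + f x.2.2 = 2 * f x.2.1}
    have hg : ∀ j, 0 < (g j).1.1 ∧ 0 < (g j).1.2.1 ∧ 0 < (g j).1.2.2 ∧
      (g j).1.1 ≠ (g j).1.2.1 ∧ (g j).1.1 ≠ (g j).1.2.2 ∧ (g j).1.2.1 ≠ (g j).1.2.2 ∧
      f (g j).1.2.1 ≠ 0 ∧ f (g j).1.1 + f (g j).1.2.2 = 2 * f (g j).1.2.1 := fun j => (g j).2
    refine exists_shift_identity d s ⟨α, hα⟩ f Λ c hsep hform hsum hcomp h0 hlog hnd hgt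
      (fun j => ![(g j).1.1, (g j).1.2.2, (g j).1.2.1]) ?_ ?_ ?_ ?_
    · intro j j' h
      have e0 := congrFun h 0
      have e1 := congrFun h 1
      have e2 := congrFun h 2
      simp only [Matrix.cons_val_zero, Matrix.cons_val_one, Matrix.cons_val] at e0 e1 e2
      exact g.injective (Subtype.ext (Prod.ext e0 (Prod.ext e2 e1)))
    · intro j h
      obtain ⟨h1, h2, h3, -⟩ := hg j
      fin_cases h
      · exact h1
      · exact h3
      · exact h2
    · intro j h h' e
      obtain ⟨-, -, -, h1, h2, h3, -⟩ := hg j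
      fin_cases h <;> fin_cases h' <;> simp at e ⊢
      · exact h2 e
      · exact h1 e
      · exact h2 e.symm
      · exact h3 e.symm
      · exact h1 e.symm
      · exact h3 e
    · intro j
      exact (hg j).2.2.2.2.2.2.2
  · obtain ⟨φ, hφ⟩ := hgt α hα
    exact ⟨φ α, hroots α hα φ, hφ⟩
  · obtain ⟨φ, hφ⟩ := exists_norm_lt_one (h0 α hα) (hlog α hα) (hgt α hα)
    exact ⟨φ α, hroots α hα φ, hφ⟩

end APC

open Polynomial

/-- A non-degenerate, non-unitary linear recurrence of order `d` defined over the
integers containing infinitely many three-term arithmetic progressions with positive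
indices has companion polynomial `P` such that `(X^gcd(a,b) - 1) * P` divides
`X^a - 2X^b + 1` for some integers `a > b > 0`. -/
theorem integer_recurrence_ap_criterion (d : ℕ) (hd : 1 ≤ d) (a : Fin d → ℚ)
    (ha0 : a ⟨0, hd⟩ ≠ 0)
    (P : ℚ[X]) (hP : P = X ^ d - ∑ i : Fin d, C (a i) * X ^ (i : ℕ))
    (f : ℤ → ℤ)
    (hrec : ∀ n : ℤ, (f (n + (d : ℤ)) : ℚ) = ∑ i : Fin d, a i * (f (n + ((i : ℕ) : ℤ)) : ℚ))
    (hmin : ∀ e : ℕ, e < d → ¬∃ b : Fin e → ℂ,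
      ∀ n : ℤ, (f (n + (e : ℤ)) : ℂ) = ∑ i : Fin e, b i * (f (n + ((i : ℕ) : ℤ)) : ℂ))
    (hnondeg : ∀ α β : ℂ, aeval α P = 0 → aeval β P = 0 → α ≠ β →
      ∀ l : ℕ, 0 < l → (α / β) ^ l ≠ 1)
    (hnonunit : ∀ α : ℂ, aeval α P = 0 → ∀ l : ℕ, 0 < l → α ^ l ≠ 1)
    (hinf : {x : ℤ × ℤ × ℤ | 0 < x.1 ∧ 0 < x.2.1 ∧ 0 < x.2.2 ∧
      x.1 ≠ x.2.1 ∧ x.1 ≠ x.2.2 ∧ x.2.1 ≠ x.2.2 ∧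
      f x.2.1 ≠ 0 ∧ f x.1 + f x.2.2 = 2 * f x.2.1}.Infinite) :
    ∃ A B : ℕ, B < A ∧ 0 < B ∧
      ((X : ℚ[X]) ^ Nat.gcd A B - 1) * P ∣ (X ^ A - 2 * X ^ B + 1) := by
  obtain ⟨⟨x, y, hx, hy, hxy, hid⟩, ⟨β, hβ, hβ1⟩, ⟨γ, hγ, hγ1⟩⟩ :
      (∃ x y : ℤ, x ≠ 0 ∧ y ≠ 0 ∧ x ≠ y ∧ ∀ t, f (t + x) + f (t + y) = 2 * f t) ∧
      (∃ β : ℂ, aeval β P = 0 ∧ 1 < ‖β‖) ∧ (∃ β : ℂ, aeval β P = 0 ∧ ‖β‖ < 1) := by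
    have : NumberField P.SplittingField := { to_charZero := inferInstance, to_finiteDimensional := inferInstance }
    exact APC.criterion_of_splits d hd a ha0 P hP f hrec hmin hnondeg hnonunit hinf P.SplittingField
      _ (SplittingField.splits P)
  have hroot0 : ∀ β : ℂ, aeval β P = 0 → β ≠ 0 := by
    rintro β hβ rfl
    rw [← coeff_zero_eq_aeval_zero'] at hβ
    exact APC.companion_coeff_zero d hd a P hP ha0 (by simpa using hβ)
  have hzp : ∀ β : ℂ, aeval β P = 0 → β ^ x + β ^ y = 2 := by
    intro β hβ
    have hβ0 := hroot0 β hβ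
    set L := x.natAbs + y.natAbs with hL
    have hxL : (((x + L).toNat : ℕ) : ℤ) = x + L := Int.toNat_of_nonneg (by omega)
    have hyL : (((y + L).toNat : ℕ) : ℤ) = y + L := Int.toNat_of_nonneg (by omega)
    obtain ⟨W, hW⟩ := APC.companion_dvd d a P hP f hrec hmin (x + L).toNat (y + L).toNat L fun t => by
      rw [hxL, hyL, ← hid (t + L)]
      congr 2 <;> ring
    have h1 := congrArg (aeval β) hW
    rw [map_mul, hβ, zero_mul] at h1
    simp only [map_sub, map_add, map_pow, aeval_X, map_mul, map_ofNat] at h1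
    rw [← zpow_natCast, ← zpow_natCast, ← zpow_natCast, hxL, hyL, zpow_add₀ hβ0, zpow_add₀ hβ0] at h1
    have h2 : β ^ (L : ℤ) ≠ 0 := zpow_ne_zero _ hβ0
    refine mul_right_cancel₀ h2 ?_
    linear_combination h1
  have hsmall : ∀ z w : ℂ, ‖z‖ < 1 → ‖w‖ < 1 → z + w ≠ 2 := by
    intro z w hz hw h
    have := norm_add_le z w
    rw [h, Complex.norm_ofNat] at this
    linarith
  have hnp : ¬ (0 < x ∧ 0 < y) := fun ⟨h1, h2⟩ => by
    refine hsmall (γ ^ x) (γ ^ y) ?_ ?_ (hzp γ hγ) <;> rw [norm_zpow]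
    · exact zpow_lt_one₀ (norm_pos_iff.2 (hroot0 γ hγ)) hγ1 h1
    · exact zpow_lt_one₀ (norm_pos_iff.2 (hroot0 γ hγ)) hγ1 h2
  have hnn : ¬ (x < 0 ∧ y < 0) := fun ⟨h1, h2⟩ => by
    refine hsmall (β ^ x) (β ^ y) ?_ ?_ (hzp β hβ) <;> rw [norm_zpow]
    · exact zpow_lt_one_of_neg₀ hβ1 h1
    · exact zpow_lt_one_of_neg₀ hβ1 h2
  obtain ⟨A, B, hBA, hB, hAB⟩ : ∃ A B : ℕ, B < A ∧ 0 < B ∧ ∀ t : ℤ, f (t + A) + f (t + (0 : ℕ)) = 2 * f (t + B) := by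
    rcases lt_or_gt_of_ne hx with h | h
    · have h' : 0 < y := by omega
      refine ⟨(y - x).toNat, (-x).toNat, by omega, by omega, fun t => ?_⟩
      rw [Int.toNat_of_nonneg (by omega), Int.toNat_of_nonneg (by omega), ← hid (t + -x), add_comm]
      congr 2 <;> push_cast <;> ring
    · have h' : y < 0 := by omega
      refine ⟨(x - y).toNat, (-y).toNat, by omega, by omega, fun t => ?_⟩
      rw [Int.toNat_of_nonneg (by omega), Int.toNat_of_nonneg (by omega), ← hid (t + -y)]
      congr 2 <;> push_cast <;> ring
  refine ⟨A, B, hBA, hB, ?_⟩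
  have hPd : P ∣ X ^ A - 2 * X ^ B + 1 := by
    have := APC.companion_dvd d a P hP f hrec hmin A 0 B hAB
    rwa [pow_zero, add_sub_right_comm] at this
  have hgd : ((X : ℚ[X]) ^ Nat.gcd A B - 1) ∣ X ^ A - 2 * X ^ B + 1 := by
    have h1 : ∀ n, Nat.gcd A B ∣ n → ((X : ℚ[X]) ^ Nat.gcd A B - 1) ∣ X ^ n - 1 := by
      rintro n ⟨k, rfl⟩
      rw [pow_mul]
      simpa using sub_dvd_pow_sub_pow ((X : ℚ[X]) ^ Nat.gcd A B) 1 k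
    have h2 := dvd_sub (h1 A (Nat.gcd_dvd_left A B)) ((h1 B (Nat.gcd_dvd_right A B)).mul_left 2)
    convert h2 using 1
    ring
  refine IsCoprime.mul_dvd ?_ hgd hPd
  have hg0 : 0 < Nat.gcd A B := Nat.gcd_pos_of_pos_right _ hB
  refine (isCoprime_iff_aeval_ne_zero_of_isAlgClosed ℚ ℂ _ _).2 fun z => ?_
  by_cases hz : aeval z P = 0
  · left
    have := hnonunit z hz _ hg0
    simpa [sub_eq_zero] using this
  · right; exact hz
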